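/- Let α, h ∈ ℝ with α > −2. Assume there exist an open set U ⊆ ℝ² containing (α,h) and a continuously differentiable map u* : U → (0,1) such that for every (a,b) ∈ U the point u*(a,b) is the unique maximizer over [0,1] of u ↦ (a/6)u³ + (b/2)u − (1/2)I(u), and such that the function (a,b) ↦ f_{a,b} is real analytic on U. Set v = 3·u*(α,h)²·∂_α u*(α,h). Then, as n → ∞, the law under P̂_{n;α,h} of the random variable √6·(T(x)/n − Ê_{n;α,h}(T(x)/n))/n converges weakly to the centered Gaussian distribution N(0, v). -/

import Mathlib

/-!
Write `u = u*(α,h)` and `M = A - u(J - 1)`, with `A` the adjacency matrix of `x` and `J` the all-ones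
matrix, so that `M` has entries `x_ij - u` off the diagonal and zeros on it.  Almost all of the work
is done under the edge-triangle measure `P`, the Gibbs measure of `ham`, whose Hamiltonian has
`T/n` in place of `⌊T/n⌋`; the measure `P̂` has density proportional to `exp(-α {T/n})` with respect
to `P` (`exp_hamHat`).

*Variational input.*  The stationarity equation at `u` reads `u = sigmoid (h + α u²)`.
Differentiating it along the `C¹` family `u*` shows that the maximum is nondegenerate,
`2αu²(1-u) < 1`, and that `3u² ∂_α u* = 6u⁴ β`, where `β = u(1-u) / (2(1 - 2αu²(1-u)))`
(`vpkg_of_hyp`).  As the maximiser is unique, the variational functional then lies below its maximum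
by at least a multiple of the squared distance to `u`.

*Concentration.*  A symmetric matrix `K` with bounded entries satisfies
`tr K³ ≤ 3‖B‖⟨K,B⟩ - 2‖B‖³ + o(n³)` for some `B` in a net of `exp(o(n²))` low-rank matrices (`net`).
Linearising the triangle term in this way makes the edges independent, and the variational bound
gives exponential moments of all linear statistics of `M` up to a factor `exp(o(n²))` (`mgf_global`).
For `α ≥ 0` this is applied to `K = A`; for `-2 < α < 0` it is applied to `K = -M`, and Pinsker's
inequality takes the place of the variational bound.  Hence the operator norm of `M` is `o(n)`
outside an event of exponentially small probability (`op_ldp`).  On that event, the star of a vertex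
is close to a mean-field model when it is resampled given the rest of the graph, so its linear
statistics, in particular degrees and codegrees, concentrate as well (`star_ldp`).  Together:
configurations that are not `Good` have probability smaller than any power of `n` (`gp_of_vpkg`).

*Second-order analysis.*  Given the other edges, `x_ij` is Bernoulli with parameter
`σ_ij = sigmoid (h + α codeg_ij / n)`.  The resulting integration by parts formula (`ibp`), combined
with a Taylor expansion of `σ_ij` around `u` on `Good` configurations, bounds
`Θ = 1 + Σ_i d_i²/n² + tr M⁴/n³` in mean, where `d_i` are the row sums of `M` (`Theta_bdd`), and
yields laws of large numbers for `Σ_i d_i²/n²`, `tr M⁴/n³` and `tr M³/n²` (`l1o_dd`, `l1o_qq`,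
`l1o_tr3`).  For the recentred and rescaled edge count `Z`, the same formula turns into an
approximate differential equation `φ' = -βtφ + o(1)` for the characteristic function, so
`Z → N(0, β)` (`clt`).

*From `P` to `P̂`.*  Flipping the edge `ij` multiplies `exp(iτT/n)` by `exp(iτ codeg_ij / n)`, a phase
close to `exp(iτu²)`.  If that phase differs from `1`, integration by parts against the constant
function gives `E exp(i(τT/n + tZ)) → 0` for `τ ≠ 0`.  If it equals `1`, the next order term
`exp(iτ (M²)_ij / n)` is detected by integrating by parts against `(M²)_ij`, because the
off-diagonal part of `tr M⁴/n³` has a positive limit (`equi`).  Thus `T/n` is asymptotically uniform modulo one and independent of `Z`,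
and reweighting by `exp(-α {T/n})` does not change the limit law of `Z` (`clt_hat`).

*Triangles.*  Expanding `tr A³` (`triangle_expand`) and inserting the laws of large numbers,
`T/n² = u² Z + a_n + o(1)` in mean, with deterministic `a_n` (`tri_lin`).  Uniform integrability of
`Z` (`zn_ui`) allows centring by the mean, so the variable in the statement is `√6 u² Z + o(1)`, of
limiting variance `6u⁴β` (`charfun_W`), and Lévy's continuity theorem concludes.
-/

open MeasureTheory Filter ProbabilityTheory Topology

noncomputable section

/-- The edge set of the complete graph on `n` vertices: unordered pairs of distinct vertices. -/
abbrev Edge (n : ℕ) := {e : Sym2 (Fin n) // ¬ e.IsDiag}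

/-- A configuration `x ∈ {0,1}^{E_n}`, i.e. a simple graph on `[n]`. -/
abbrev Config (n : ℕ) := Edge n → Bool

/-- `E(x)`: the number of edges of the configuration `x`. -/
def edgeCount (n : ℕ) (x : Config n) : ℕ :=
  (Finset.univ.filter fun e : Edge n => x e).card

/-- `T(x)`: the number of triangles of the configuration `x` (one for each 3-element
set of vertices all of whose connecting edges are present). -/
def triangleCount (n : ℕ) (x : Config n) : ℕ :=
  ((Finset.powersetCard 3 (Finset.univ : Finset (Fin n))).filter
    (fun s => ∀ e : Edge n, (∀ v ∈ (e : Sym2 (Fin n)), v ∈ s) → x e)).card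

/-- `⌊T(x)/n⌋` as a real number (natural division is floor division). -/
def floorTn (n : ℕ) (x : Config n) : ℝ := ((triangleCount n x / n : ℕ) : ℝ)

/-- `{T(x)/n}`: the fractional part of `T(x)/n`. -/
def fracTn (n : ℕ) (x : Config n) : ℝ :=
  (triangleCount n x : ℝ) / n - floorTn n x

/-- The modified Hamiltonian `Ĥ_{n;α,h}(x) = α⌊T(x)/n⌋ + h E(x)`. -/
def hamHat (n : ℕ) (α h : ℝ) (x : Config n) : ℝ :=
  α * floorTn n x + h * (edgeCount n x : ℝ)

/-- The edge-triangle Hamiltonian `H_{n;α,h}(x) = (α/n) T(x) + h E(x)`. -/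
def ham (n : ℕ) (α h : ℝ) (x : Config n) : ℝ :=
  (α / n) * (triangleCount n x : ℝ) + h * (edgeCount n x : ℝ)

/-- The partition function `Ẑ_{n;α,h}`. -/
def Zhat (n : ℕ) (α h : ℝ) : ℝ := ∑ x : Config n, Real.exp (hamHat n α h x)

/-- The partition function `Z_{n;α,h}`. -/
def Zet (n : ℕ) (α h : ℝ) : ℝ := ∑ x : Config n, Real.exp (ham n α h x)

/-- Expectation `Ê_{n;α,h}` with respect to the Gibbs measure of `Ĥ`. -/
def expHat (n : ℕ) (α h : ℝ) (f : Config n → ℝ) : ℝ :=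
  (∑ x : Config n, f x * Real.exp (hamHat n α h x)) / Zhat n α h

/-- Expectation `E_{n;α,h}` with respect to the Gibbs measure of `H`. -/
def expEt (n : ℕ) (α h : ℝ) (f : Config n → ℝ) : ℝ :=
  (∑ x : Config n, f x * Real.exp (ham n α h x)) / Zet n α h

/-- Variance `V̂ar_{n;α,h}` with respect to the Gibbs measure of `Ĥ`. -/
def varHat (n : ℕ) (α h : ℝ) (f : Config n → ℝ) : ℝ :=
  expHat n α h (fun x => (f x - expHat n α h f) ^ 2)

/-- Probability of an event under the Gibbs measure of `Ĥ`. -/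
def probHat (n : ℕ) (α h : ℝ) (A : Config n → Prop) : ℝ :=
  expHat n α h (fun x => Set.indicator {y | A y} (fun _ => (1 : ℝ)) x)

/-- `I(u) = u ln u + (1-u) ln (1-u)` (with the convention `ln 0 = 0`, so `I(0)=I(1)=0`). -/
def Ifun (u : ℝ) : ℝ := u * Real.log u + (1 - u) * Real.log (1 - u)

/-- The variational functional `u ↦ (a/6)u³ + (b/2)u − (1/2)I(u)`. -/
def phiET (a b u : ℝ) : ℝ := a / 6 * u ^ 3 + b / 2 * u - 1 / 2 * Ifun u

/-- The limiting free energy `f_{a,b} = sup_{u∈[0,1]} φ_{a,b}(u)`. -/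
def freeEnergy (a b : ℝ) : ℝ := sSup (phiET a b '' Set.Icc 0 1)

/-- `W_n` built from the integer part of the normalized triangle count. -/
def Wfl (n : ℕ) (α h : ℝ) (x : Config n) : ℝ :=
  Real.sqrt 6 * (floorTn n x - expHat n α h (floorTn n)) / n

/-- `√6 (T(x)/n − Ê(T/n))/n`, the normalized fluctuation of the triangle density. -/
def Wre (n : ℕ) (α h : ℝ) (x : Config n) : ℝ :=
  Real.sqrt 6 * ((triangleCount n x : ℝ) / n
    - expHat n α h (fun y => (triangleCount n y : ℝ) / n)) / n

/-- The scaled cumulant generating function of `⌊T/n⌋`. -/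
def cgf (n : ℕ) (α h : ℝ) (t : ℝ) : ℝ :=
  6 / (n : ℝ) ^ 2 * Real.log (expHat n α h (fun x => Real.exp (t * floorTn n x)))

/-! ### Configurations, adjacency matrices and triangle counts -/

namespace TriCLT

variable {n : ℕ}

/-- Adjacency matrix of a configuration, with real entries. -/
def adj (x : Config n) : Matrix (Fin n) (Fin n) ℝ := fun i j =>
  if h : i = j then 0 else if x ⟨s(i, j), by simpa using h⟩ then 1 else 0

/-- The configuration `x` with the status of the edge `ij` replaced by `b`. -/
def setE (x : Config n) (i j : Fin n) (b : Bool) : Config n := fun e =>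
  if (e : Sym2 (Fin n)) = s(i, j) then b else x e

/-- The real number `1` or `0` encoding a Boolean. -/
def bv (b : Bool) : ℝ := if b then 1 else 0

/-- The symmetric matrix supported on the two entries `ij` and `ji`. -/
def J (i j : Fin n) : Matrix (Fin n) (Fin n) ℝ := Matrix.single i j 1 + Matrix.single j i 1

lemma adj_symm (x : Config n) (i j : Fin n) : adj x i j = adj x j i := by
  unfold adj
  by_cases h : i = j
  · simp [h]
  · have h' : ¬ j = i := fun e => h e.symm
    simp only [h, h', dite_false]
    have : (⟨s(i, j), by simpa using h⟩ : Edge n) = ⟨s(j, i), by simpa using h'⟩ :=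
      Subtype.ext Sym2.eq_swap
    rw [this]

lemma adj_diag (x : Config n) (i : Fin n) : adj x i i = 0 := by simp [adj]

lemma adj_zero_or_one (x : Config n) (i j : Fin n) : adj x i j = 0 ∨ adj x i j = 1 := by
  unfold adj
  split_ifs <;> simp

lemma adj_nonneg (x : Config n) (i j : Fin n) : 0 ≤ adj x i j := by
  rcases adj_zero_or_one x i j with h | h <;> simp [h]

lemma adj_le_one (x : Config n) (i j : Fin n) : adj x i j ≤ 1 := by
  rcases adj_zero_or_one x i j with h | h <;> simp [h]

lemma adj_sq (x : Config n) (i j : Fin n) : adj x i j * adj x i j = adj x i j := by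
  rcases adj_zero_or_one x i j with h | h <;> simp [h]

lemma adj_ne (x : Config n) {i j : Fin n} (h : i ≠ j) :
    adj x i j = bv (x ⟨s(i, j), by simpa using h⟩) := by
  simp [adj, h, bv]

lemma adj_setE (x : Config n) {i j : Fin n} (h : i ≠ j) (b : Bool) (k l : Fin n) :
    adj (setE x i j b) k l = if s(k, l) = s(i, j) then bv b else adj x k l := by
  by_cases hkl : k = l
  · subst hkl
    have : ¬ (s(k, k) = s(i, j)) := by
      intro e
      have := Sym2.eq_iff.1 e
      grind
    rw [if_neg this, adj_diag, adj_diag]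
  · rw [adj_ne _ hkl, adj_ne _ hkl]
    unfold setE
    by_cases e : s(k, l) = s(i, j)
    · simp [e]
    · simp [e]

lemma adj_setE_self (x : Config n) {i j : Fin n} (h : i ≠ j) (b : Bool) :
    adj (setE x i j b) i j = bv b := by rw [adj_setE x h]; simp

lemma adj_setE_true (x : Config n) {i j : Fin n} (h : i ≠ j) :
    adj (setE x i j true) = adj (setE x i j false) + J i j := by
  ext k l
  rw [Matrix.add_apply, adj_setE x h, adj_setE x h]
  unfold J
  rw [Matrix.add_apply]
  simp only [Matrix.single_apply]
  by_cases e : s(k, l) = s(i, j)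
  · rw [if_pos e, if_pos e]
    rcases Sym2.eq_iff.1 e with ⟨rfl, rfl⟩ | ⟨rfl, rfl⟩ <;> simp [bv, h, h.symm]
  · rw [if_neg e, if_neg e]
    have e' := Sym2.eq_iff.not.1 e
    rw [if_neg (by grind), if_neg (by grind)]
    simp

lemma setE_setE (x : Config n) (i j : Fin n) (b c : Bool) :
    setE (setE x i j b) i j c = setE x i j c := by
  funext e; unfold setE; split_ifs <;> rfl

lemma setE_eq_self (x : Config n) {i j : Fin n} (h : i ≠ j) {b : Bool}
    (hb : x ⟨s(i, j), by simpa using h⟩ = b) : setE x i j b = x := by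
  funext e
  unfold setE
  split_ifs with he
  · rw [← hb]; congr 1; exact Subtype.ext he.symm
  · rfl

/-- Flipping the status of the edge `ij`. -/
def flipE (x : Config n) {i j : Fin n} (h : i ≠ j) : Config n :=
  setE x i j (!x ⟨s(i, j), by simpa using h⟩)

lemma flipE_invol {i j : Fin n} (h : i ≠ j) :
    Function.Involutive (fun x : Config n => flipE x h) := by
  intro x
  have h1 : setE x i j (!x ⟨s(i, j), by simpa using h⟩) ⟨s(i, j), by simpa using h⟩
    = !x ⟨s(i, j), by simpa using h⟩ := by simp [setE]
  show flipE (flipE x h) h = x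
  unfold flipE
  rw [setE_setE, h1, Bool.not_not]
  exact setE_eq_self x h rfl

/-- Summing over all configurations by pairing those that differ only at the edge `ij`. -/
lemma sum_set {V : Type*} [AddCommMonoid V] {i j : Fin n} (h : i ≠ j)
    (f : Config n → V) :
    ∑ x, f x + ∑ x, f x = ∑ x, (f (setE x i j true) + f (setE x i j false)) := by
  have h1 : ∀ x : Config n, f (setE x i j true) + f (setE x i j false) = f x + f (flipE x h) := by
    intro x
    rcases hb : x ⟨s(i, j), by simpa using h⟩ with _ | _
    · rw [setE_eq_self x h hb, flipE, hb, add_comm]; rfl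
    · rw [setE_eq_self x h hb, flipE, hb]; rfl
  simp_rw [h1]
  rw [Finset.sum_add_distrib]
  congr 1
  exact (Equiv.sum_comp (flipE_invol h).toPerm f).symm

/-- Summation over edges is half of summation over ordered pairs of distinct vertices. -/
lemma sum_pairs (g : Edge n → ℝ) (G : Fin n → Fin n → ℝ)
    (hd : ∀ i, G i i = 0) (hG : ∀ i j (h : i ≠ j), G i j = g ⟨s(i, j), by simpa using h⟩) :
    ∑ i, ∑ j, G i j = 2 * ∑ e, g e := by
  have h1 : ∀ i j, G i j = ∑ e : Edge n, if s(i, j) = (e : Sym2 (Fin n)) then g e else 0 := by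
    intro i j
    by_cases h : i = j
    · subst h
      rw [hd, Finset.sum_eq_zero]
      intro e _
      rw [if_neg]
      intro he
      exact e.2 (he ▸ by simp)
    · rw [hG i j h, Finset.sum_eq_single ⟨s(i, j), by simpa using h⟩]
      · simp
      · intro e _ he
        rw [if_neg]
        intro h2
        exact he (Subtype.ext h2.symm)
      · simp
  simp_rw [h1]
  have : ∀ i : Fin n, ∑ j : Fin n, ∑ e : Edge n, (if s(i, j) = (e : Sym2 (Fin n)) then g e else 0)
      = ∑ e : Edge n, ∑ j : Fin n, (if s(i, j) = (e : Sym2 (Fin n)) then g e else 0) :=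
    fun i => Finset.sum_comm
  simp_rw [this]
  rw [Finset.sum_comm, Finset.mul_sum]
  refine Finset.sum_congr rfl fun e _ => ?_
  obtain ⟨e, he⟩ := e
  induction e using Sym2.ind with
  | _ a b =>
    have hab : a ≠ b := by simpa using he
    have h2 : ∀ i j : Fin n, (if s(i, j) = s(a, b) then g ⟨s(a, b), he⟩ else 0)
        = (if i = a then (if j = b then g ⟨s(a, b), he⟩ else 0) else 0)
        + (if i = b then (if j = a then g ⟨s(a, b), he⟩ else 0) else 0) := by
      intro i j
      simp only [Sym2.eq_iff]
      split_ifs <;> grind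
    simp only [h2, Finset.sum_add_distrib]
    simp [two_mul]

lemma edgeCount_eq (x : Config n) : (edgeCount n x : ℝ) = (∑ i, ∑ j, adj x i j) / 2 := by
  rw [sum_pairs (fun e => bv (x e)) (adj x) (adj_diag x) (fun i j h => adj_ne x h)]
  unfold edgeCount bv
  rw [Finset.card_filter]
  push_cast
  simp

lemma perm_three {a b c i j k : Fin n} (hij : i ≠ j) (hjk : j ≠ k) (hki : k ≠ i)
    (hi : i = a ∨ i = b ∨ i = c) (hj : j = a ∨ j = b ∨ j = c) (hk : k = a ∨ k = b ∨ k = c) :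
    i = a ∧ j = b ∧ k = c ∨ i = a ∧ j = c ∧ k = b ∨ i = b ∧ j = a ∧ k = c ∨
      i = b ∧ j = c ∧ k = a ∨ i = c ∧ j = a ∧ k = b ∨ i = c ∧ j = b ∧ k = a := by
  grind

set_option maxHeartbeats 1000000 in
lemma triangleCount_eq (x : Config n) :
    6 * (triangleCount n x : ℝ) = Matrix.trace (adj x * adj x * adj x) := by
  classical
  have h1 : Matrix.trace (adj x * adj x * adj x)
      = ∑ t : Fin n × Fin n × Fin n, adj x t.1 t.2.1 * adj x t.2.1 t.2.2 * adj x t.2.2 t.1 := by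
    rw [Fintype.sum_prod_type]
    simp only [Matrix.trace, Matrix.diag, Matrix.mul_apply, Finset.sum_mul]
    refine Finset.sum_congr rfl fun i _ => ?_
    rw [Fintype.sum_prod_type, Finset.sum_comm]
  set S := (Finset.powersetCard 3 (Finset.univ : Finset (Fin n))).filter
    (fun s => ∀ e : Edge n, (∀ v ∈ (e : Sym2 (Fin n)), v ∈ s) → x e) with hS
  set A := (Finset.univ : Finset (Fin n × Fin n × Fin n)).filter
    (fun t => adj x t.1 t.2.1 = 1 ∧ adj x t.2.1 t.2.2 = 1 ∧ adj x t.2.2 t.1 = 1) with hA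
  have h2 : ∑ t : Fin n × Fin n × Fin n, adj x t.1 t.2.1 * adj x t.2.1 t.2.2 * adj x t.2.2 t.1
      = (A.card : ℝ) := by
    rw [hA, Finset.card_filter]
    push_cast
    refine Finset.sum_congr rfl fun t _ => ?_
    rcases adj_zero_or_one x t.1 t.2.1 with a | a <;>
      rcases adj_zero_or_one x t.2.1 t.2.2 with b | b <;>
      rcases adj_zero_or_one x t.2.2 t.1 with c | c <;> simp [a, b, c]
  have hne : ∀ i j, adj x i j = 1 → i ≠ j := by
    rintro i j h rfl
    simp [adj_diag] at h
  have hone : ∀ i j (h : i ≠ j), adj x i j = 1 ↔ x ⟨s(i, j), by simpa using h⟩ = true := by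
    intro i j h
    rw [adj_ne x h, bv]
    split_ifs with h3 <;> simp [h3]
  have hmap : ∀ t ∈ A, ({t.1, t.2.1, t.2.2} : Finset (Fin n)) ∈ S := by
    rintro ⟨i, j, k⟩ ht
    simp only [hA, Finset.mem_filter, Finset.mem_univ, true_and] at ht
    obtain ⟨a, b, c⟩ := ht
    have hij := hne _ _ a
    have hjk := hne _ _ b
    have hki := hne _ _ c
    simp only [hS, Finset.mem_filter, Finset.mem_powersetCard, Finset.subset_univ, true_and]
    refine ⟨Finset.card_eq_three.2 ⟨i, j, k, hij, hki.symm, hjk, rfl⟩, ?_⟩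
    rintro ⟨e, he⟩ hv
    induction e using Sym2.ind with
    | _ p q =>
      have hpq : p ≠ q := by simpa using he
      rw [← hone p q hpq]
      have hp := hv p (by simp)
      have hq := hv q (by simp)
      simp only [Finset.mem_insert, Finset.mem_singleton] at hp hq
      have a' := (adj_symm x j i).trans a
      have b' := (adj_symm x k j).trans b
      have c' := (adj_symm x i k).trans c
      rcases hp with rfl | rfl | rfl <;> rcases hq with rfl | rfl | rfl <;> first
        | assumption
        | exact absurd rfl hpq
  have hfib : ∀ s ∈ S, (A.filter fun t => ({t.1, t.2.1, t.2.2} : Finset (Fin n)) = s).card = 6 := by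
    intro s hs
    simp only [hS, Finset.mem_filter, Finset.mem_powersetCard, Finset.subset_univ, true_and] at hs
    obtain ⟨hc, he⟩ := hs
    obtain ⟨a, b, c, hab, hac, hbc, rfl⟩ := Finset.card_eq_three.1 hc
    have hadj : ∀ p q, p ≠ q → p ∈ ({a, b, c} : Finset (Fin n)) → q ∈ ({a, b, c} : Finset (Fin n))
        → adj x p q = 1 := by
      intro p q hpq hp hq
      rw [hone p q hpq]
      apply he
      intro v hv
      simp only [Sym2.mem_iff] at hv
      rcases hv with rfl | rfl <;> assumption
    have : (A.filter fun t => ({t.1, t.2.1, t.2.2} : Finset (Fin n)) = {a, b, c})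
        = {(a, b, c), (a, c, b), (b, a, c), (b, c, a), (c, a, b), (c, b, a)} := by
      ext ⟨i, j, k⟩
      simp only [hA, Finset.mem_filter, Finset.mem_univ, true_and, Finset.mem_insert,
        Finset.mem_singleton, Prod.mk.injEq]
      constructor
      · rintro ⟨⟨h1, h2, h3⟩, h4⟩
        have hij := hne _ _ h1
        have hjk := hne _ _ h2
        have hki := hne _ _ h3
        have hi : i ∈ ({a, b, c} : Finset (Fin n)) := by rw [← h4]; simp
        have hj : j ∈ ({a, b, c} : Finset (Fin n)) := by rw [← h4]; simp
        have hk : k ∈ ({a, b, c} : Finset (Fin n)) := by rw [← h4]; simp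
        simp only [Finset.mem_insert, Finset.mem_singleton] at hi hj hk
        exact perm_three hij hjk hki hi hj hk
      · have ha : a ∈ ({a, b, c} : Finset (Fin n)) := by simp
        have hb : b ∈ ({a, b, c} : Finset (Fin n)) := by simp
        have hc : c ∈ ({a, b, c} : Finset (Fin n)) := by simp
        rintro (⟨rfl, rfl, rfl⟩ | ⟨rfl, rfl, rfl⟩ | ⟨rfl, rfl, rfl⟩ | ⟨rfl, rfl, rfl⟩ |
          ⟨rfl, rfl, rfl⟩ | ⟨rfl, rfl, rfl⟩) <;>
        refine ⟨⟨hadj _ _ ?_ ?_ ?_, hadj _ _ ?_ ?_ ?_, hadj _ _ ?_ ?_ ?_⟩, ?_⟩ <;>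
        first
          | assumption
          | exact Ne.symm ‹_›
          | rfl
          | (ext z; simp only [Finset.mem_insert, Finset.mem_singleton]; tauto)
    rw [this]
    repeat rw [Finset.card_insert_of_notMem (by simp [hab, hac, hbc, hab.symm, hac.symm, hbc.symm])]
    simp
  have h3 : A.card = ∑ s ∈ S, 6 := by
    rw [Finset.card_eq_sum_card_fiberwise (f := fun t => ({t.1, t.2.1, t.2.2} : Finset (Fin n)))
      (t := S) (fun t ht => hmap t ht)]
    exact Finset.sum_congr rfl hfib
  rw [h1, h2, h3]
  simp only [Finset.sum_const, smul_eq_mul]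
  unfold triangleCount
  push_cast
  rw [mul_comm]

end TriCLT

/-! ### The Gibbs measure and integration by parts -/

namespace TriCLT

variable {n : ℕ}

lemma J_symm (i j : Fin n) : J i j = J j i := by unfold J; rw [add_comm]

lemma mul_J_apply (B : Matrix (Fin n) (Fin n) ℝ) (i j k l : Fin n) :
    (B * J i j) k l = (if l = j then B k i else 0) + (if l = i then B k j else 0) := by
  unfold J
  rw [mul_add, Matrix.add_apply]
  congr 1
  · by_cases h : l = j
    · subst h; simp
    · rw [if_neg h, Matrix.mul_single_apply_of_ne _ _ _ _ _ h]
  · by_cases h : l = i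
    · subst h; simp
    · rw [if_neg h, Matrix.mul_single_apply_of_ne _ _ _ _ _ h]

lemma trace_mul_J (B : Matrix (Fin n) (Fin n) ℝ) (i j : Fin n) :
    Matrix.trace (B * J i j) = B j i + B i j := by
  simp [Matrix.trace, mul_J_apply, Finset.sum_add_distrib]

lemma sum_J (i j : Fin n) : ∑ k, ∑ l, J i j k l = 2 := by
  unfold J
  simp only [Matrix.add_apply, Matrix.single_apply, Finset.sum_add_distrib]
  have : ∀ a b : Fin n, ∑ k : Fin n, ∑ l : Fin n, (if a = k ∧ b = l then (1 : ℝ) else 0) = 1 := by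
    intro a b
    simp [ite_and]
  rw [this, this]; norm_num

/-- The number of common neighbours of `i` and `j`. -/
def codeg (x : Config n) (i j : Fin n) : ℝ := (adj x * adj x) i j

lemma adj_setE_other (x : Config n) {i j : Fin n} (h : i ≠ j) (b : Bool) {k l : Fin n}
    (hkl : s(k, l) ≠ s(i, j)) : adj (setE x i j b) k l = adj x k l := by
  rw [adj_setE x h, if_neg hkl]

lemma codeg_setE (x : Config n) {i j : Fin n} (h : i ≠ j) (b : Bool) :
    codeg (setE x i j b) i j = codeg x i j := by
  unfold codeg
  rw [Matrix.mul_apply, Matrix.mul_apply]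
  refine Finset.sum_congr rfl fun k _ => ?_
  by_cases hk : k = i
  · subst hk; simp [adj_diag]
  by_cases hk' : k = j
  · subst hk'; simp [adj_diag]
  rw [adj_setE_other x h, adj_setE_other x h]
  · rw [Ne, Sym2.eq_iff]; grind
  · rw [Ne, Sym2.eq_iff]; grind

lemma edgeCount_set (x : Config n) {i j : Fin n} (h : i ≠ j) :
    (edgeCount n (setE x i j true) : ℝ) = edgeCount n (setE x i j false) + 1 := by
  rw [edgeCount_eq, edgeCount_eq, adj_setE_true x h]
  simp only [Matrix.add_apply, Finset.sum_add_distrib]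
  rw [sum_J]; ring

lemma triangleCount_set (x : Config n) {i j : Fin n} (h : i ≠ j) :
    (triangleCount n (setE x i j true) : ℝ)
      = triangleCount n (setE x i j false) + codeg x i j := by
  set A := adj (setE x i j false) with hA
  have key : Matrix.trace ((A + J i j) * (A + J i j) * (A + J i j))
      = Matrix.trace (A * A * A) + 6 * (A * A) i j := by
    have e : (A + J i j) * (A + J i j) * (A + J i j)
        = A * A * A + (A * A * J i j + A * J i j * A + J i j * (A * A))
          + (A * J i j * J i j + J i j * (A * J i j) + J i j * J i j * A)
          + J i j * J i j * J i j := by noncomm_ring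
    have hs : (A * A) j i = (A * A) i j := by
      rw [Matrix.mul_apply, Matrix.mul_apply]
      refine Finset.sum_congr rfl fun k _ => ?_
      rw [hA, adj_symm _ j k, adj_symm _ k i, mul_comm]
    have t1 : Matrix.trace (A * A * J i j) = 2 * (A * A) i j := by
      rw [trace_mul_J, hs]; ring
    have t2 : Matrix.trace (A * J i j * A) = 2 * (A * A) i j := by
      rw [Matrix.trace_mul_comm, ← mul_assoc, t1]
    have t3 : Matrix.trace (J i j * (A * A)) = 2 * (A * A) i j := by
      rw [Matrix.trace_mul_comm, t1]
    have d : ∀ k, A k k = 0 := fun k => adj_diag _ k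
    have s1 : Matrix.trace (A * J i j * J i j) = 0 := by
      rw [trace_mul_J, mul_J_apply, mul_J_apply]
      simp [h, h.symm, d]
    have s2 : Matrix.trace (J i j * (A * J i j)) = 0 := by
      rw [Matrix.trace_mul_comm, s1]
    have s3 : Matrix.trace (J i j * J i j * A) = 0 := by
      rw [Matrix.trace_mul_comm, ← mul_assoc, s1]
    have s4 : Matrix.trace (J i j * J i j * J i j) = 0 := by
      rw [trace_mul_J, mul_J_apply, mul_J_apply]
      simp [h, h.symm, J]
    rw [e]
    simp only [Matrix.trace_add]
    rw [t1, t2, t3, s1, s2, s3, s4]; ring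
  have h1 := triangleCount_eq (setE x i j true)
  have h0 := triangleCount_eq (setE x i j false)
  rw [adj_setE_true x h, ← hA, key] at h1
  have hc : (A * A) i j = codeg x i j := codeg_setE x h false
  rw [← hA] at h0
  rw [hc] at h1
  linarith

/-- Log-odds of the edge `ij` given all other edges. -/
def lodds (α h : ℝ) (x : Config n) (i j : Fin n) : ℝ := α * (codeg x i j / n) + h

/-- Conditional probability of the edge `ij` given all other edges. -/
def sig (α h : ℝ) (x : Config n) (i j : Fin n) : ℝ := Real.sigmoid (lodds α h x i j)

lemma ham_set (α h : ℝ) (x : Config n) {i j : Fin n} (hij : i ≠ j) :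
    ham n α h (setE x i j true) = ham n α h (setE x i j false) + lodds α h x i j := by
  unfold ham lodds
  rw [triangleCount_set x hij, edgeCount_set x hij]
  ring

lemma sig_setE (α h : ℝ) (x : Config n) {i j : Fin n} (hij : i ≠ j) (b : Bool) :
    sig α h (setE x i j b) i j = sig α h x i j := by
  unfold sig lodds; rw [codeg_setE x hij]

/-- Gibbs weights of the edge-triangle Hamiltonian. -/
def pr (α h : ℝ) (x : Config n) : ℝ := Real.exp (ham n α h x) / Zet n α h

lemma Zet_pos (α h : ℝ) : 0 < Zet n α h :=
  Finset.sum_pos (fun _ _ => Real.exp_pos _) Finset.univ_nonempty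

lemma pr_pos (α h : ℝ) (x : Config n) : 0 < pr α h x := div_pos (Real.exp_pos _) (Zet_pos α h)

lemma sum_pr (α h : ℝ) : ∑ x : Config n, pr α h x = 1 := by
  unfold pr
  rw [← Finset.sum_div]
  exact div_self (Zet_pos α h).ne'

lemma pr_set_true (α h : ℝ) (x : Config n) {i j : Fin n} (hij : i ≠ j) :
    (1 - sig α h x i j) * pr α h (setE x i j true)
      = sig α h x i j * pr α h (setE x i j false) := by
  unfold pr sig
  rw [ham_set α h x hij, Real.exp_add, Real.sigmoid_def, Real.exp_neg]
  have := Real.exp_pos (lodds α h x i j)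
  have hz := (Zet_pos (n := n) α h).ne'
  field_simp
  ring

/-- Expectation of a vector-valued observable under the edge-triangle Gibbs measure. -/
def Ex (α h : ℝ) {V : Type*} [AddCommGroup V] [Module ℝ V] (F : Config n → V) : V :=
  ∑ x, pr α h x • F x

section ibp
variable {V : Type*} [AddCommGroup V] [Module ℝ V]

lemma Ex_pair (α h : ℝ) {i j : Fin n} (hij : i ≠ j) (G : Config n → V) :
    Ex α h (fun x => (adj x i j - sig α h x i j) • G x)
      = Ex α h (fun x => (sig α h x i j * (1 - sig α h x i j)) •
          (G (setE x i j true) - G (setE x i j false))) := by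
  have key : ∀ a b : V, a + a = b + b → a = b := by
    intro a b hab
    have h2 : (2 : ℝ) • a = (2 : ℝ) • b := by rw [two_smul, two_smul, hab]
    have := congrArg (fun v => (2⁻¹ : ℝ) • v) h2
    simpa [smul_smul] using this
  apply key
  unfold Ex
  rw [sum_set hij, sum_set hij]
  refine Finset.sum_congr rfl fun x _ => ?_
  simp only [sig_setE α h x hij, adj_setE_self x hij, setE_setE]
  have h1 := pr_set_true α h x hij
  set σ := sig α h x i j
  set p1 := pr α h (setE x i j true)
  set p0 := pr α h (setE x i j false)
  set G1 := G (setE x i j true)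
  set G0 := G (setE x i j false)
  simp only [bv, if_true, Bool.false_eq_true, if_false, smul_smul, smul_sub]
  have e1 : p1 * (1 - σ) = p1 * (σ * (1 - σ)) + p0 * (σ * (1 - σ)) := by
    linear_combination (1 - σ) * h1
  have e2 : p0 * (0 - σ) = -(p1 * (σ * (1 - σ)) + p0 * (σ * (1 - σ))) := by
    linear_combination σ * h1
  rw [e1, e2]
  simp only [add_smul, neg_smul]
  abel

/-- Edge-centred matrix: `a_ij - σ_ij` off the diagonal, zero on it. -/
def cen (α h : ℝ) (x : Config n) (i j : Fin n) : ℝ :=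
  if i = j then 0 else adj x i j - sig α h x i j

/-- Conditional variance of the edge `ij`, zero on the diagonal. -/
def cvar (α h : ℝ) (x : Config n) (i j : Fin n) : ℝ :=
  if i = j then 0 else sig α h x i j * (1 - sig α h x i j)

lemma Ex_sum {ι : Type*} (s : Finset ι) (α h : ℝ) (F : ι → Config n → V) :
    Ex α h (fun x => ∑ i ∈ s, F i x) = ∑ i ∈ s, Ex α h (F i) := by
  unfold Ex
  simp_rw [Finset.smul_sum]
  exact Finset.sum_comm

/-- Integration by parts (discrete Stein identity) for the Gibbs measure: `H_ij` must not depend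
on the status of the edge `ij`. -/
lemma ibp (α h : ℝ) (H : Config n → Fin n → Fin n → ℝ) (F : Config n → V)
    (hH : ∀ x i j b, i ≠ j → H (setE x i j b) i j = H x i j) :
    Ex α h (fun x => (∑ i, ∑ j, cen α h x i j * H x i j) • F x)
      = Ex α h (fun x => ∑ i, ∑ j, (cvar α h x i j * H x i j) •
          (F (setE x i j true) - F (setE x i j false))) := by
  simp only [Finset.sum_smul]
  rw [Ex_sum, Ex_sum]
  refine Finset.sum_congr rfl fun i _ => ?_
  rw [Ex_sum, Ex_sum]
  refine Finset.sum_congr rfl fun j _ => ?_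
  by_cases hij : i = j
  · simp [cen, cvar, hij]
  · simp only [cen, cvar, hij, if_false]
    have := Ex_pair α h hij (fun x => H x i j • F x)
    simp only [smul_smul, hH _ _ _ _ hij, ← smul_sub] at this
    exact this

end ibp

end TriCLT

/-! ### The centred adjacency matrix and the expansion of the triangle count -/

namespace TriCLT

variable {n : ℕ}

/-- The class of matrices `M = A - u(11ᵀ - 1)` with `A` the adjacency matrix of a graph. -/
structure CenM (u : ℝ) (M : Matrix (Fin n) (Fin n) ℝ) : Prop where
  u0 : 0 < u
  u1 : u < 1
  symm : ∀ i j, M i j = M j i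
  diag : ∀ i, M i i = 0
  sq : ∀ i j, i ≠ j → M i j * M i j = u * (1 - u) + (1 - 2 * u) * M i j
  abs : ∀ i j, |M i j| ≤ 1

/-- Row sums. -/
def rowS (M : Matrix (Fin n) (Fin n) ℝ) (i : Fin n) : ℝ := ∑ j, M i j
/-- Sum of all entries. -/
def totS (M : Matrix (Fin n) (Fin n) ℝ) : ℝ := ∑ i, rowS M i
/-- Squared Euclidean norm of the vector of row sums. -/
def dd (M : Matrix (Fin n) (Fin n) ℝ) : ℝ := ∑ i, rowS M i ^ 2
/-- `tr M⁴`, for symmetric `M`. -/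
def qq (M : Matrix (Fin n) (Fin n) ℝ) : ℝ := ∑ i, ∑ j, (M * M) i j ^ 2
/-- `tr M³`, for symmetric `M`. -/
def tr3 (M : Matrix (Fin n) (Fin n) ℝ) : ℝ := ∑ i, ∑ j, M i j * (M * M) i j
/-- Squared Frobenius norm. -/
def ff (M : Matrix (Fin n) (Fin n) ℝ) : ℝ := ∑ i, ∑ j, M i j ^ 2
/-- `n` times the centred codegree density (meaningful off the diagonal). -/
def ww (u : ℝ) (M : Matrix (Fin n) (Fin n) ℝ) (i j : Fin n) : ℝ :=
  (M * M) i j + u * (rowS M i + rowS M j) - 2 * u * M i j - 2 * u ^ 2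
/-- Centred codegree density, zero on the diagonal. -/
def Lam (u : ℝ) (M : Matrix (Fin n) (Fin n) ℝ) (i j : Fin n) : ℝ :=
  if i = j then 0 else ww u M i j / n
/-- Off-diagonal part of `tr M⁴`. -/
def VV (M : Matrix (Fin n) (Fin n) ℝ) : ℝ := ∑ i, ∑ j, if i = j then 0 else (M * M) i j ^ 2
/-- Weight of the three-step paths from `i` to `j` that avoid the edge `ij`. -/
def PP (M : Matrix (Fin n) (Fin n) ℝ) (i j : Fin n) : ℝ :=
  ∑ k, ∑ l, if k = j ∨ l = i then 0 else M i k * M k l * M l j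

/-- The centred adjacency matrix of `x`. -/
def Mx (u : ℝ) (x : Config n) : Matrix (Fin n) (Fin n) ℝ := fun i j =>
  if i = j then 0 else adj x i j - u

lemma cenM_Mx {u : ℝ} (h0 : 0 < u) (h1 : u < 1) (x : Config n) : CenM u (Mx u x) where
  u0 := h0
  u1 := h1
  symm i j := by
    unfold Mx
    by_cases h : i = j
    · simp [h]
    · rw [if_neg h, if_neg (Ne.symm h), adj_symm]
  diag i := by simp [Mx]
  sq i j h := by
    simp only [Mx, h, if_false]
    have := adj_sq x i j
    linear_combination this
  abs i j := by
    unfold Mx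
    split_ifs
    · simp
    · rw [abs_le]
      have := adj_nonneg x i j
      have := adj_le_one x i j
      constructor <;> linarith

lemma offdiag_sum (g : Fin n → Fin n → ℝ) :
    ∑ i, ∑ j, (if i = j then 0 else g i j) = ∑ i, ∑ j, g i j - ∑ i, g i i := by
  have : ∀ i j, (if i = j then 0 else g i j) = g i j - (if i = j then g i j else 0) := by
    intro i j; split_ifs <;> simp
  simp only [this, Finset.sum_sub_distrib]
  simp

section ident
variable {u : ℝ} {M : Matrix (Fin n) (Fin n) ℝ} (hM : CenM u M)
include hM

lemma M2_symm (i j : Fin n) : (M * M) i j = (M * M) j i := by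
  rw [Matrix.mul_apply, Matrix.mul_apply]
  exact Finset.sum_congr rfl fun k _ => by rw [hM.symm i k, hM.symm k j, mul_comm]

lemma M2_diag_eq (i : Fin n) : (M * M) i i = ∑ j, M i j ^ 2 := by
  rw [Matrix.mul_apply]
  exact Finset.sum_congr rfl fun k _ => by rw [hM.symm k i, sq]

lemma M2_diag (i : Fin n) : (M * M) i i = (n - 1) * (u * (1 - u)) + (1 - 2 * u) * rowS M i := by
  have : ∀ j, M i j * M j i = u * (1 - u) + (1 - 2 * u) * M i j - if i = j then u * (1 - u) else 0 := by
    intro j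
    rw [hM.symm j i]
    split_ifs with h
    · subst h; simp [hM.diag]
    · rw [hM.sq i j h]; ring
  rw [Matrix.mul_apply]
  simp only [this, Finset.sum_sub_distrib, Finset.sum_add_distrib, rowS, ← Finset.mul_sum]
  simp
  ring

lemma ff_eq : ff M = ∑ i, (M * M) i i := by
  unfold ff; exact Finset.sum_congr rfl fun i _ => (M2_diag_eq hM i).symm

lemma ff_eq' : ff M = n * (n - 1) * (u * (1 - u)) + (1 - 2 * u) * totS M := by
  rw [ff_eq hM]
  simp only [M2_diag hM, Finset.sum_add_distrib, ← Finset.mul_sum, totS]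
  simp; ring

lemma colS (j : Fin n) : ∑ i, M i j = rowS M j := by
  unfold rowS; exact Finset.sum_congr rfl fun i _ => hM.symm i j

lemma rowS_M2 (i : Fin n) : ∑ j, (M * M) i j = ∑ k, M i k * rowS M k := by
  simp only [Matrix.mul_apply]
  rw [Finset.sum_comm]
  simp only [rowS, Finset.mul_sum]

lemma sum_M2 : ∑ i, ∑ j, (M * M) i j = dd M := by
  simp only [rowS_M2 hM]
  rw [Finset.sum_comm]
  simp only [← Finset.sum_mul, colS hM, dd, sq]

lemma sum_M2_row : ∑ i, ∑ j, (M * M) i j * rowS M i = ∑ i, ∑ j, rowS M i * M i j * rowS M j := by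
  refine Finset.sum_congr rfl fun i _ => ?_
  rw [← Finset.sum_mul, rowS_M2 hM, Finset.sum_mul]
  exact Finset.sum_congr rfl fun j _ => by ring

lemma VV_eq : VV M = qq M - ∑ i, (M * M) i i ^ 2 := offdiag_sum _

lemma sum_Lam : n * ∑ i, ∑ j, Lam u M i j
    = dd M - ff M + 2 * u * (n - 2) * totS M - 2 * u ^ 2 * (n * (n - 1)) := by
  rcases Nat.eq_zero_or_pos n with rfl | hn
  · simp [dd, ff, totS]
  have hn' : (n : ℝ) ≠ 0 := by positivity
  unfold Lam
  rw [offdiag_sum (fun i j => ww u M i j / n)]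
  simp only [← Finset.sum_div]
  rw [mul_sub, mul_div_cancel₀ _ hn', mul_div_cancel₀ _ hn']
  unfold ww
  simp only [Finset.sum_sub_distrib, Finset.sum_add_distrib, ← Finset.mul_sum, sum_M2 hM, hM.diag,
    ← ff_eq hM]
  have e1 : ∑ i : Fin n, ∑ j : Fin n, rowS M i = n * totS M := by
    simp [totS, Finset.mul_sum]
  have e2 : ∑ i : Fin n, ∑ j : Fin n, rowS M j = n * totS M := by
    simp [totS]
  have e3 : ∑ i : Fin n, ∑ j : Fin n, M i j = totS M := rfl
  have e4 : ∑ i : Fin n, rowS M i = totS M := rfl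
  rw [e1, e2, e3, e4]
  simp
  ring

lemma PP_eq (i j : Fin n) : PP M i j
    = (M * (M * M)) i j - M i j * (M * M) i i - M i j * (M * M) j j + M i j * (M i j * M i j) := by
  have e : ∀ k l, (if k = j ∨ l = i then 0 else M i k * M k l * M l j)
      = M i k * M k l * M l j - (if k = j then M i k * M k l * M l j else 0)
        - (if l = i then M i k * M k l * M l j else 0)
        + (if k = j then (if l = i then M i k * M k l * M l j else 0) else 0) := by
    intro k l
    split_ifs <;> simp_all
  unfold PP
  simp only [e, Finset.sum_sub_distrib, Finset.sum_add_distrib]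
  have t1 : ∑ k, ∑ l, M i k * M k l * M l j = (M * (M * M)) i j := by
    rw [Matrix.mul_apply]
    simp only [Matrix.mul_apply, Finset.mul_sum, mul_assoc]
  have t2 : ∑ k, ∑ l, (if k = j then M i k * M k l * M l j else 0) = M i j * (M * M) j j := by
    rw [Finset.sum_comm]
    simp [Matrix.mul_apply, Finset.mul_sum, mul_assoc]
  have t3 : ∑ k, ∑ l, (if l = i then M i k * M k l * M l j else 0) = M i j * (M * M) i i := by
    simp [Matrix.mul_apply, Finset.mul_sum, mul_assoc, mul_comm]
  have t4 : ∑ k, ∑ l, (if k = j then (if l = i then M i k * M k l * M l j else 0) else 0)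
      = M i j * (M i j * M i j) := by
    rw [Finset.sum_comm]
    simp [hM.symm j i, mul_assoc]
  rw [t1, t2, t3, t4]; ring

lemma qq_eq : qq M = ∑ i, ∑ j, M i j * (M * (M * M)) i j := by
  have h1 : qq M = Matrix.trace ((M * M) * (M * M)) := by
    simp only [qq, Matrix.trace, Matrix.diag]
    refine Finset.sum_congr rfl fun i _ => ?_
    rw [Matrix.mul_apply]
    exact Finset.sum_congr rfl fun j _ => by rw [M2_symm hM j i, sq]
  have h2 : ∑ i, ∑ j, M i j * (M * (M * M)) i j = Matrix.trace ((M * (M * M)) * M) := by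
    simp only [Matrix.trace, Matrix.diag]
    refine Finset.sum_congr rfl fun i _ => ?_
    rw [Matrix.mul_apply]
    exact Finset.sum_congr rfl fun j _ => by rw [hM.symm j i, mul_comm]
  rw [h1, h2]; simp only [mul_assoc]

lemma sum_M_PP : ∑ i, ∑ j, M i j * PP M i j
    = qq M - 2 * ∑ i, (M * M) i i ^ 2 + ∑ i, ∑ j, M i j ^ 4 := by
  have e : ∀ i j, M i j * PP M i j = M i j * (M * (M * M)) i j - M i j ^ 2 * (M * M) i i
      - M i j ^ 2 * (M * M) j j + M i j ^ 4 := by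
    intro i j; rw [PP_eq hM]; ring
  simp only [e, Finset.sum_sub_distrib, Finset.sum_add_distrib, ← qq_eq hM]
  have t1 : ∑ i, ∑ j, M i j ^ 2 * (M * M) i i = ∑ i, (M * M) i i ^ 2 := by
    refine Finset.sum_congr rfl fun i _ => ?_
    rw [← Finset.sum_mul, ← M2_diag_eq hM, sq]
  have t2 : ∑ i, ∑ j, M i j ^ 2 * (M * M) j j = ∑ i, (M * M) i i ^ 2 := by
    rw [Finset.sum_comm, ← t1]
    exact Finset.sum_congr rfl fun i _ => Finset.sum_congr rfl fun j _ => by rw [hM.symm j i]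
  rw [t1, t2]; ring

end ident

/-- The all-ones matrix. -/
def Om (n : ℕ) : Matrix (Fin n) (Fin n) ℝ := fun _ _ => 1

lemma Om_mul_Om : Om n * Om n = (n : ℝ) • Om n := by
  ext i j; simp [Matrix.mul_apply, Om]

lemma trace_mul_Om (B : Matrix (Fin n) (Fin n) ℝ) : Matrix.trace (B * Om n) = ∑ i, ∑ j, B i j := by
  simp [Matrix.trace, Matrix.mul_apply, Om]

lemma adj_eq_Mx (u : ℝ) (x : Config n) : adj x = Mx u x + u • (Om n - 1) := by
  ext i j
  by_cases h : i = j
  · subst h; simp [adj_diag, Mx, Om]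
  · simp [h, Mx, Om]

lemma codeg_eq {u : ℝ} (h0 : 0 < u) (h1 : u < 1) (x : Config n) {i j : Fin n} (hij : i ≠ j) :
    codeg x i j = ww u (Mx u x) i j + n * u ^ 2 := by
  have hM := cenM_Mx h0 h1 x
  unfold codeg ww
  rw [adj_eq_Mx u x]
  set M := Mx u x
  have e : (M + u • (Om n - 1)) * (M + u • (Om n - 1))
      = M * M + u • (M * Om n) + u • (Om n * M) - (2 * u) • M + (u * u) • (Om n * Om n)
        - (2 * u * u) • Om n + (u * u) • (1 : Matrix (Fin n) (Fin n) ℝ) := by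
    have : (2 : ℝ) • M = M + M := two_smul _ _
    simp only [add_mul, mul_add, smul_mul_assoc, mul_smul_comm, sub_mul, mul_sub, one_mul, mul_one,
      smul_sub, smul_smul]
    module
  rw [e, Om_mul_Om]
  have a1 : (M * Om n) i j = rowS M i := by simp [Matrix.mul_apply, Om, rowS]
  have a2 : (Om n * M) i j = rowS M j := by
    simp [Matrix.mul_apply, Om]; exact colS hM j
  simp only [Matrix.add_apply, Matrix.sub_apply, Matrix.smul_apply, a1, a2, smul_eq_mul, Om,
    Matrix.one_apply_ne hij]
  ring

lemma Lam_eq {u : ℝ} (h0 : 0 < u) (h1 : u < 1) (x : Config n) {i j : Fin n} (hij : i ≠ j) :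
    Lam u (Mx u x) i j = codeg x i j / n - u ^ 2 := by
  have hn : (n : ℝ) ≠ 0 := by
    have : 0 < n := i.pos
    positivity
  rw [codeg_eq h0 h1 x hij, Lam, if_neg hij]
  field_simp
  ring

/-- Expansion of `6T = tr A³` for `A = M + u(J - 1)`: the linear term in `M` is the edge count, and
the quadratic and cubic terms turn out to be asymptotically deterministic. -/
lemma triangle_expand {u : ℝ} (h0 : 0 < u) (h1 : u < 1) (x : Config n) :
    6 * (triangleCount n x : ℝ) = u ^ 3 * (n * (n - 1) * (n - 2))
      + 3 * u ^ 2 * (n - 2) * totS (Mx u x) + 3 * u * (dd (Mx u x) - ff (Mx u x))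
      + tr3 (Mx u x) := by
  have hM := cenM_Mx h0 h1 x
  rw [triangleCount_eq, adj_eq_Mx u x]
  set M := Mx u x
  set K : Matrix (Fin n) (Fin n) ℝ := Om n - 1 with hK
  have hK2 : K * K = ((n : ℝ) - 2) • Om n + 1 := by
    rw [hK]
    simp only [mul_sub, sub_mul, Om_mul_Om, one_mul, mul_one]
    module
  have hKK : Matrix.trace (K * K * K) = n * (n - 1) * (n - 2) := by
    rw [hK2, hK]
    simp only [mul_sub, add_mul, smul_mul_assoc, Om_mul_Om, mul_one, one_mul]
    simp [Matrix.trace_sub, Matrix.trace_add, Matrix.trace_smul, Om, Matrix.trace, Matrix.diag]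
    ring
  have t0 : Matrix.trace (M * M * M) = tr3 M := by
    unfold tr3
    simp only [Matrix.trace, Matrix.diag]
    refine Finset.sum_congr rfl fun i _ => ?_
    rw [Matrix.mul_apply]
    exact Finset.sum_congr rfl fun j _ => by rw [hM.symm j i, mul_comm]
  have t1 : Matrix.trace (M * M * K) = dd M - ff M := by
    rw [hK, mul_sub, mul_one, Matrix.trace_sub, trace_mul_Om, sum_M2 hM, ff_eq hM]; rfl
  have t1' : Matrix.trace (M * K * M) = dd M - ff M := by
    rw [Matrix.trace_mul_comm, ← mul_assoc, t1]
  have t1'' : Matrix.trace (K * M * M) = dd M - ff M := by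
    rw [mul_assoc, Matrix.trace_mul_comm, t1]
  have trM : Matrix.trace M = 0 := by simp [Matrix.trace, hM.diag]
  have t2 : Matrix.trace (M * K * K) = (n - 2) * totS M := by
    rw [mul_assoc, hK2, mul_add, mul_one, mul_smul_comm, Matrix.trace_add, Matrix.trace_smul,
      trace_mul_Om, trM]
    simp [totS, rowS]
  have t2' : Matrix.trace (K * M * K) = (n - 2) * totS M := by
    rw [mul_assoc, Matrix.trace_mul_comm, t2]
  have t2'' : Matrix.trace (K * K * M) = (n - 2) * totS M := by
    rw [Matrix.trace_mul_comm, ← mul_assoc, t2]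
  have e : (M + u • K) * (M + u • K) * (M + u • K)
      = M * M * M + u • (M * M * K + M * K * M + K * M * M)
        + u ^ 2 • (M * K * K + K * M * K + K * K * M) + u ^ 3 • (K * K * K) := by
    simp only [add_mul, mul_add, smul_mul_assoc, mul_smul_comm, smul_smul, smul_add]
    module
  rw [e]
  simp only [Matrix.trace_add, Matrix.trace_smul, t0, t1, t1', t1'', t2, t2', t2'', hKK, smul_eq_mul]
  ring

lemma edge_expand (u : ℝ) (x : Config n) :
    2 * (edgeCount n x : ℝ) = u * (n * (n - 1)) + totS (Mx u x) := by
  rw [edgeCount_eq, adj_eq_Mx u x]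
  simp only [Matrix.add_apply, Finset.sum_add_distrib, Matrix.smul_apply, smul_eq_mul, ← Finset.mul_sum,
    Matrix.sub_apply, Finset.sum_sub_distrib, totS, rowS]
  simp [Om, Matrix.one_apply]
  ring

end TriCLT

/-! ### Deterministic estimates on typical configurations -/

namespace TriCLT

variable {n : ℕ}

/-- The typical configurations: spectral norm, row sums and codegrees are all within a factor `δ`
of their trivial bounds. -/
structure Good (u δ : ℝ) (M : Matrix (Fin n) (Fin n) ℝ) : Prop where
  op : ∀ v : Fin n → ℝ, |∑ i, ∑ j, v i * M i j * v j| ≤ δ * n * ∑ i, v i ^ 2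
  row : ∀ i, |rowS M i| ≤ δ * n
  lam : ∀ i j, |Lam u M i j| ≤ δ

/-- The normalised fourth-moment quantity that controls all error terms. -/
def Theta (M : Matrix (Fin n) (Fin n) ℝ) : ℝ := 1 + dd M / n ^ 2 + qq M / n ^ 3

lemma dd_nonneg (M : Matrix (Fin n) (Fin n) ℝ) : 0 ≤ dd M :=
  Finset.sum_nonneg fun _ _ => sq_nonneg _

lemma qq_nonneg (M : Matrix (Fin n) (Fin n) ℝ) : 0 ≤ qq M :=
  Finset.sum_nonneg fun _ _ => Finset.sum_nonneg fun _ _ => sq_nonneg _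

lemma one_le_Theta (M : Matrix (Fin n) (Fin n) ℝ) : 1 ≤ Theta M := by
  unfold Theta
  have := dd_nonneg M
  have := qq_nonneg M
  have h1 : 0 ≤ dd M / n ^ 2 := by positivity
  have h2 : 0 ≤ qq M / n ^ 3 := by positivity
  linarith

lemma abs_sum2_le (g : Fin n → Fin n → ℝ) : |∑ i, ∑ j, g i j| ≤ ∑ i, ∑ j, |g i j| :=
  (Finset.abs_sum_le_sum_abs _ _).trans
    (Finset.sum_le_sum fun _ _ => Finset.abs_sum_le_sum_abs _ _)

/-- Young's inequality summed over all pairs. -/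
lemma young_sum (a b : Fin n → Fin n → ℝ) {t : ℝ} (ht : 0 < t) :
    ∑ i, ∑ j, |a i j| * |b i j|
      ≤ (t * ∑ i, ∑ j, a i j ^ 2 + (∑ i, ∑ j, b i j ^ 2) / t) / 2 := by
  simp only [Finset.mul_sum, Finset.sum_div, ← Finset.sum_add_distrib]
  refine Finset.sum_le_sum fun i _ => Finset.sum_le_sum fun j _ => ?_
  have h := sq_nonneg (t * |a i j| - |b i j|)
  rw [← sq_abs (a i j), ← sq_abs (b i j)]
  rw [le_div_iff₀ (by norm_num)]
  have : |a i j| * |b i j| * 2 * t ≤ (t * |a i j| ^ 2 + |b i j| ^ 2 / t) * t := by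
    rw [add_mul, div_mul_cancel₀ _ ht.ne']
    nlinarith
  exact le_of_mul_le_mul_right this ht

/-- A symmetric matrix with small quadratic form contracts vectors accordingly. -/
lemma op_norm {M : Matrix (Fin n) (Fin n) ℝ} (hs : ∀ i j, M i j = M j i) {r : ℝ} (hr : 0 < r)
    (hop : ∀ v : Fin n → ℝ, |∑ i, ∑ j, v i * M i j * v j| ≤ r * ∑ i, v i ^ 2) (v : Fin n → ℝ) :
    ∑ i, (∑ j, M i j * v j) ^ 2 ≤ r ^ 2 * ∑ i, v i ^ 2 := by
  set w : Fin n → ℝ := fun i => ∑ j, M i j * v j with hw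
  have h1 := hop (fun i => w i + r * v i)
  have h2 := hop (fun i => w i - r * v i)
  have e : ∑ i, ∑ j, (w i + r * v i) * M i j * (w j + r * v j)
      - ∑ i, ∑ j, (w i - r * v i) * M i j * (w j - r * v j) = 4 * r * ∑ i, w i ^ 2 := by
    have e1 : ∑ i, ∑ j, w i * M i j * v j = ∑ i, w i ^ 2 := by
      refine Finset.sum_congr rfl fun i _ => ?_
      rw [sq, hw]
      simp only
      rw [Finset.mul_sum]
      exact Finset.sum_congr rfl fun j _ => by ring
    have e2 : ∑ i, ∑ j, v i * M i j * w j = ∑ i, w i ^ 2 := by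
      rw [Finset.sum_comm, ← e1]
      exact Finset.sum_congr rfl fun i _ => Finset.sum_congr rfl fun j _ => by rw [hs j i]; ring
    have e3 : ∀ i j, (w i + r * v i) * M i j * (w j + r * v j)
      - (w i - r * v i) * M i j * (w j - r * v j)
        = 2 * r * (w i * M i j * v j) + 2 * r * (v i * M i j * w j) := by intro i j; ring
    simp only [← Finset.sum_sub_distrib, e3]
    simp only [Finset.sum_add_distrib, ← Finset.mul_sum, e1, e2]
    ring
  have e4 : ∑ i, (w i + r * v i) ^ 2 + ∑ i, (w i - r * v i) ^ 2
      = 2 * ∑ i, w i ^ 2 + 2 * r ^ 2 * ∑ i, v i ^ 2 := by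
    simp only [Finset.mul_sum, ← Finset.sum_add_distrib]
    exact Finset.sum_congr rfl fun i _ => by ring
  have h3 := (abs_le.1 h1).2
  have h4 := (abs_le.1 h2).1
  have h5 : 4 * r * ∑ i, w i ^ 2 ≤ r * (2 * ∑ i, w i ^ 2 + 2 * r ^ 2 * ∑ i, v i ^ 2) := by
    rw [← e, ← e4]; linarith
  have h6 : 0 ≤ 2 * r * (r ^ 2 * ∑ i, v i ^ 2 - ∑ i, w i ^ 2) := by nlinarith
  have h7 := nonneg_of_mul_nonneg_right h6 (by positivity : (0:ℝ) < 2 * r)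
  linarith

section est
variable {u δ : ℝ} {M : Matrix (Fin n) (Fin n) ℝ}

lemma M2_abs_le (hM : CenM u M) (i j : Fin n) : |(M * M) i j| ≤ n := by
  rw [Matrix.mul_apply]
  refine (Finset.abs_sum_le_sum_abs _ _).trans ?_
  have : ∀ k, |M i k * M k j| ≤ 1 := fun k => by
    rw [abs_mul]
    exact mul_le_one₀ (hM.abs _ _) (abs_nonneg _) (hM.abs _ _)
  calc ∑ k, |M i k * M k j| ≤ ∑ k : Fin n, (1 : ℝ) := Finset.sum_le_sum fun k _ => this k
    _ = n := by simp

lemma rowS_abs_le (hM : CenM u M) (i : Fin n) : |rowS M i| ≤ n := by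
  unfold rowS
  refine (Finset.abs_sum_le_sum_abs _ _).trans ?_
  calc ∑ k, |M i k| ≤ ∑ k : Fin n, (1 : ℝ) := Finset.sum_le_sum fun k _ => hM.abs _ _
    _ = n := by simp

lemma ff_le (hM : CenM u M) : ff M ≤ n ^ 2 := by
  unfold ff
  calc ∑ i, ∑ j, M i j ^ 2 ≤ ∑ i : Fin n, ∑ j : Fin n, (1 : ℝ) :=
        Finset.sum_le_sum fun i _ => Finset.sum_le_sum fun j _ => by
          rw [sq_le_one_iff_abs_le_one]; exact hM.abs _ _
    _ = n ^ 2 := by simp [sq]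

lemma ff_nonneg : 0 ≤ ff M := Finset.sum_nonneg fun _ _ => Finset.sum_nonneg fun _ _ => sq_nonneg _

lemma ww_symm (hM : CenM u M) (i j : Fin n) : ww u M i j = ww u M j i := by
  unfold ww; rw [M2_symm hM i j, hM.symm i j]; ring

lemma ww_diag_abs (hM : CenM u M) (i : Fin n) : |ww u M i i| ≤ 5 * n := by
  have hn : (1 : ℝ) ≤ n := by exact_mod_cast i.pos
  unfold ww
  rw [hM.diag]
  have h1 := abs_le.1 (M2_abs_le hM i i)
  have h2 := abs_le.1 (rowS_abs_le hM i)
  have := hM.u0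
  have := hM.u1
  rw [abs_le]
  constructor <;> nlinarith

/-- Standing numerical conditions for the deterministic estimates. -/
structure Scale (n : ℕ) (δ : ℝ) : Prop where
  pos : 0 < δ
  le1 : δ ≤ 1
  big : 1 ≤ δ ^ 2 * n

variable (hδ : Scale n δ)
include hδ

lemma Scale.n1 : (1 : ℝ) ≤ n := by
  have := hδ.pos; have := hδ.le1; have := hδ.big
  have h2 : δ ^ 2 ≤ 1 := by nlinarith
  have := mul_le_mul_of_nonneg_right h2 (Nat.cast_nonneg n : (0:ℝ) ≤ n)
  linarith

lemma Scale.dn : 1 ≤ δ * n := by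
  have := hδ.pos; have := hδ.le1; have := hδ.big
  have h2 : δ ^ 2 ≤ δ := by nlinarith
  have := mul_le_mul_of_nonneg_right h2 (Nat.cast_nonneg n : (0:ℝ) ≤ n)
  linarith

lemma dd_le : dd M ≤ n ^ 2 * Theta M := by
  have hn := hδ.n1
  have h0 := qq_nonneg M
  have : n ^ 2 * Theta M = n ^ 2 + dd M + qq M / n := by
    unfold Theta; field_simp
  rw [this]
  have : 0 ≤ qq M / n := by positivity
  nlinarith

lemma qq_le : qq M ≤ n ^ 3 * Theta M := by
  have hn := hδ.n1
  have h0 := dd_nonneg M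
  have : n ^ 3 * Theta M = n ^ 3 + n * dd M + qq M := by
    unfold Theta; field_simp
  rw [this]
  have : 0 ≤ n * dd M := by positivity
  have : (0:ℝ) ≤ n ^ 3 := by positivity
  linarith

lemma sum_absM2_le : ∑ i, ∑ j, |(M * M) i j| ≤ δ * n ^ 3 * Theta M := by
  have hn := hδ.n1
  have hd := hδ.pos
  have ht : 0 < δ * n := by positivity
  have h := young_sum (fun _ _ : Fin n => (1 : ℝ)) (fun i j => (M * M) i j) ht
  simp only [abs_one, one_mul] at h
  have e : ∑ i : Fin n, ∑ j : Fin n, (1 : ℝ) ^ 2 = n ^ 2 := by simp [sq]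
  rw [e] at h
  change _ ≤ (_ + qq M / _) / 2 at h
  have h2 : qq M / (δ * n) ≤ δ * n ^ 3 * Theta M := by
    rw [div_le_iff₀ ht]
    have h3 := qq_le hδ (M := M)
    have h4 : δ * n ^ 3 * Theta M * (δ * n) = (δ ^ 2 * n) * (n ^ 3 * Theta M) := by ring
    rw [h4]
    have h5 := one_le_Theta M
    nlinarith [hδ.big, mul_nonneg (by positivity : (0:ℝ) ≤ n ^ 3) (by linarith : 0 ≤ Theta M)]
  have h5 := one_le_Theta M
  have h6 : δ * n * n ^ 2 ≤ δ * n ^ 3 * Theta M := by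
    nlinarith [mul_nonneg hd.le (by positivity : (0:ℝ) ≤ n ^ 3)]
  linarith

lemma scale_aux : (n : ℝ) ^ 2 * Theta M ≤ δ * n ^ 3 * Theta M ∧ (n:ℝ) * Theta M ≤ δ * n ^ 2 * Theta M
    ∧ 0 ≤ δ * n ^ 3 * Theta M ∧ (n : ℝ) ^ 3 * δ ≤ δ * n ^ 3 * Theta M ∧ (n : ℝ) ^ 2 ≤ δ * n ^ 3 * Theta M := by
  have hn := hδ.n1
  have h1 := hδ.dn
  have h5 := one_le_Theta M
  have hd := hδ.pos
  have a1 : (n:ℝ) ^ 2 * Theta M ≤ δ * n ^ 3 * Theta M := by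
    have : δ * n ^ 3 * Theta M = (δ * n) * (n ^ 2 * Theta M) := by ring
    rw [this]
    exact le_mul_of_one_le_left (by positivity) h1
  refine ⟨a1, ?_, by positivity, ?_, ?_⟩
  · have : δ * n ^ 2 * Theta M = (δ * n) * (n * Theta M) := by ring
    rw [this]
    exact le_mul_of_one_le_left (by positivity) h1
  · have : δ * n ^ 3 * Theta M = (n ^ 3 * δ) * Theta M := by ring
    rw [this]
    exact le_mul_of_one_le_right (by positivity) h5
  · refine le_trans ?_ a1
    exact le_mul_of_one_le_right (by positivity) h5

variable (hM : CenM u M)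
include hM

lemma sum_ww_sq_le : ∑ i, ∑ j, ww u M i j ^ 2 ≤ 48 * n ^ 3 * Theta M := by
  have h : ∀ i j, ww u M i j ^ 2
      ≤ 4 * (M * M) i j ^ 2 + 8 * rowS M i ^ 2 + 8 * rowS M j ^ 2 + 32 := by
    intro i j
    unfold ww
    have hm := abs_le.1 (hM.abs i j)
    have hu0 := hM.u0
    have hu1 := hM.u1
    set a := (M * M) i j
    set b := rowS M i
    set c := rowS M j
    set m := M i j
    have h1 : (a + u * (b + c) - 2 * u * m - 2 * u ^ 2) ^ 2
        ≤ 4 * a ^ 2 + 4 * (u * (b + c)) ^ 2 + 4 * (2 * u * m) ^ 2 + 4 * (2 * u ^ 2) ^ 2 := by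
      nlinarith [sq_nonneg (a - u * (b + c)), sq_nonneg (a + 2 * u * m), sq_nonneg (a + 2 * u ^ 2),
        sq_nonneg (u * (b + c) + 2 * u * m), sq_nonneg (u * (b + c) + 2 * u ^ 2),
        sq_nonneg (2 * u * m - 2 * u ^ 2)]
    have hu2 : u ^ 2 ≤ 1 := by nlinarith
    have hm2 : m ^ 2 ≤ 1 := by nlinarith
    have h2 : (u * (b + c)) ^ 2 ≤ 2 * b ^ 2 + 2 * c ^ 2 := by
      rw [mul_pow]
      nlinarith [mul_le_mul_of_nonneg_right hu2 (sq_nonneg (b + c)), sq_nonneg (b - c)]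
    have h3 : (2 * u * m) ^ 2 ≤ 4 := by
      nlinarith [mul_le_mul hu2 hm2 (sq_nonneg m) (by norm_num)]
    have h4 : (2 * u ^ 2) ^ 2 ≤ 4 := by nlinarith [sq_nonneg u]
    linarith
  have h2 : ∑ i, ∑ j, ww u M i j ^ 2 ≤ 4 * qq M + 16 * n * dd M + 32 * n ^ 2 := by
    refine (Finset.sum_le_sum fun i _ => Finset.sum_le_sum fun j _ => h i j).trans (le_of_eq ?_)
    simp only [Finset.sum_add_distrib, ← Finset.mul_sum, qq, dd]
    simp only [Finset.sum_const, Finset.card_univ, Fintype.card_fin, nsmul_eq_mul, ← Finset.mul_sum]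
    ring
  have hn := hδ.n1
  have e : 48 * n ^ 3 * Theta M = 48 * n ^ 3 + 48 * (n * dd M) + 48 * qq M := by
    unfold Theta; field_simp
  rw [e]
  have := qq_nonneg M
  have := dd_nonneg M
  have : (n:ℝ) ^ 2 ≤ n ^ 3 := by nlinarith [sq_nonneg (n:ℝ)]
  have : 0 ≤ n * dd M := by positivity
  nlinarith

lemma sum_Lam_sq_le : ∑ i, ∑ j, Lam u M i j ^ 2 ≤ 48 * n * Theta M := by
  have hn := hδ.n1
  have h1 : ∑ i, ∑ j, Lam u M i j ^ 2 ≤ (∑ i, ∑ j, ww u M i j ^ 2) / n ^ 2 := by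
    simp only [Finset.sum_div]
    refine Finset.sum_le_sum fun i _ => Finset.sum_le_sum fun j _ => ?_
    unfold Lam
    split_ifs
    · simp; positivity
    · rw [div_pow]
  refine h1.trans ?_
  rw [div_le_iff₀ (by positivity)]
  refine (sum_ww_sq_le hδ hM).trans (le_of_eq ?_)
  ring

variable (hG : Good u δ M)
include hG

lemma sum_absrow_le : ∑ i, |rowS M i| ≤ δ * n ^ 2 := by
  calc ∑ i, |rowS M i| ≤ ∑ i : Fin n, δ * n := Finset.sum_le_sum fun i _ => hG.row i
    _ = δ * n ^ 2 := by simp; ring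

lemma totS_abs_le : |totS M| ≤ δ * n ^ 2 :=
  (Finset.abs_sum_le_sum_abs _ _).trans (sum_absrow_le hδ hM hG)

lemma diag_mul_row_le (g : Fin n → ℝ) (K : ℝ) (hg : ∀ i, |g i| ≤ K) :
    |∑ i, g i * rowS M i| ≤ K * (δ * n ^ 2) := by
  rcases Nat.eq_zero_or_pos n with rfl | hn
  · simp
  have hK : 0 ≤ K := (abs_nonneg _).trans (hg ⟨0, hn⟩)
  calc |∑ i, g i * rowS M i| ≤ ∑ i, K * |rowS M i| :=
        (Finset.abs_sum_le_sum_abs _ _).trans (Finset.sum_le_sum fun i _ => by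
          rw [abs_mul]; exact mul_le_mul_of_nonneg_right (hg i) (abs_nonneg _))
    _ = K * ∑ i, |rowS M i| := by rw [Finset.mul_sum]
    _ ≤ _ := mul_le_mul_of_nonneg_left (sum_absrow_le hδ hM hG) hK

lemma sum_M2_row_le : |∑ i, ∑ j, (M * M) i j * rowS M i| ≤ δ * n ^ 3 * Theta M := by
  rw [sum_M2_row hM]
  refine (hG.op _).trans ?_
  change δ * n * dd M ≤ _
  have h := dd_le hδ (M := M)
  have := hδ.pos
  have := hδ.n1
  calc δ * n * dd M ≤ δ * n * (n ^ 2 * Theta M) := by gcongr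
    _ = _ := by ring

lemma M2_off_le {i j : Fin n} (hij : i ≠ j) : |(M * M) i j| ≤ 7 * δ * n := by
  have h1 := abs_le.1 (hG.lam i j)
  have h2 := abs_le.1 (hG.row i)
  have h3 := abs_le.1 (hG.row j)
  have h4 := abs_le.1 (hM.abs i j)
  have hn := hδ.n1
  have hdn := hδ.dn
  have h5 : ww u M i j = n * Lam u M i j := by
    rw [Lam, if_neg hij]; field_simp
  unfold ww at h5
  have hu0 := hM.u0
  have hu1 := hM.u1
  have h6 : (M * M) i j = n * Lam u M i j - u * (rowS M i + rowS M j) + 2 * u * M i j + 2 * u ^ 2 := by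
    linarith
  have h7 : |n * Lam u M i j| ≤ n * δ := by
    rw [abs_mul, abs_of_pos (by linarith)]
    exact mul_le_mul_of_nonneg_left (hG.lam i j) (by linarith)
  have h7' := abs_le.1 h7
  rw [h6, abs_le]
  constructor <;> nlinarith

end est

end TriCLT

/-! ### Pairings with the codegree fluctuations -/

namespace TriCLT

variable {n : ℕ} {u δ : ℝ} {M : Matrix (Fin n) (Fin n) ℝ}

lemma n_mul_Lam_sum (g : Fin n → Fin n → ℝ) (hn : (n : ℝ) ≠ 0) :
    n * ∑ i, ∑ j, Lam u M i j * g i j = ∑ i, ∑ j, ww u M i j * g i j - ∑ i, ww u M i i * g i i := by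
  rw [← offdiag_sum (fun i j => ww u M i j * g i j)]
  simp only [Finset.mul_sum]
  refine Finset.sum_congr rfl fun i _ => Finset.sum_congr rfl fun j _ => ?_
  unfold Lam
  split_ifs
  · simp
  · field_simp

lemma sum_ww_row (hM : CenM u M) : ∑ i, ∑ j, ww u M i j * rowS M i
    = ∑ i, ∑ j, (M * M) i j * rowS M i + u * (n * dd M + totS M ^ 2) - 2 * u * dd M
      - 2 * u ^ 2 * n * totS M := by
  have e : ∀ i j, ww u M i j * rowS M i = (M * M) i j * rowS M i + u * rowS M i ^ 2
      + u * (rowS M i * rowS M j) - 2 * u * (M i j * rowS M i) - 2 * u ^ 2 * rowS M i := by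
    intro i j; unfold ww; ring
  simp only [e, Finset.sum_sub_distrib, Finset.sum_add_distrib, ← Finset.mul_sum]
  have e1 : ∑ i, rowS M i * ∑ j, rowS M j = totS M ^ 2 := by
    rw [← Finset.sum_mul, sq]; rfl
  have e2 : ∑ i, ∑ j, M i j * rowS M i = dd M := by
    unfold dd
    refine Finset.sum_congr rfl fun i _ => ?_
    rw [← Finset.sum_mul, sq]; rfl
  rw [e1, e2]
  simp only [Finset.sum_const, Finset.card_univ, Fintype.card_fin, nsmul_eq_mul, ← Finset.mul_sum]
  change _ = _ + u * (n * (∑ i, rowS M i ^ 2) + _) - _ - 2 * u ^ 2 * n * ∑ i, rowS M i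
  ring

lemma sum_ww_M (hM : CenM u M) : ∑ i, ∑ j, ww u M i j * M i j
    = ∑ i, ∑ j, (M * M) i j * M i j + 2 * u * dd M - 2 * u * ff M - 2 * u ^ 2 * totS M := by
  have e : ∀ i j, ww u M i j * M i j = (M * M) i j * M i j + u * (M i j * rowS M i)
      + u * (M i j * rowS M j) - 2 * u * (M i j ^ 2) - 2 * u ^ 2 * M i j := by
    intro i j; unfold ww; ring
  simp only [e, Finset.sum_sub_distrib, Finset.sum_add_distrib, ← Finset.mul_sum]
  have e2 : ∑ i, ∑ j, M i j * rowS M i = dd M := by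
    unfold dd
    refine Finset.sum_congr rfl fun i _ => ?_
    rw [← Finset.sum_mul, sq]; rfl
  have e3 : ∑ i, ∑ j, M i j * rowS M j = dd M := by
    rw [Finset.sum_comm]
    unfold dd
    refine Finset.sum_congr rfl fun i _ => ?_
    rw [← Finset.sum_mul, colS hM, sq]
  have e4 : ∑ i, ∑ j, M i j = totS M := rfl
  rw [e2, e3, e4]
  unfold ff
  ring

lemma sum_swap_ww (hM : CenM u M) (g : Fin n → ℝ) :
    ∑ i, ∑ j, ww u M i j * g j = ∑ i, ∑ j, ww u M i j * g i := by
  rw [Finset.sum_comm]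
  exact Finset.sum_congr rfl fun i _ => Finset.sum_congr rfl fun j _ => by rw [ww_symm hM]

lemma abs_u_mul (hM : CenM u M) (X : ℝ) : |u * X| ≤ |X| := by
  rw [abs_mul, abs_of_pos hM.u0]
  exact mul_le_of_le_one_left (abs_nonneg _) hM.u1.le

lemma abs_usq_mul (hM : CenM u M) (X : ℝ) : |u ^ 2 * X| ≤ |X| := by
  rw [sq, mul_assoc]; exact (abs_u_mul hM _).trans (abs_u_mul hM _)

section est
variable (hδ : Scale n δ) (hM : CenM u M)
include hδ hM

lemma sum_M2_M_le : |∑ i, ∑ j, (M * M) i j * M i j| ≤ δ * n ^ 3 * Theta M := by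
  refine (abs_sum2_le _).trans (le_trans ?_ (sum_absM2_le hδ))
  refine Finset.sum_le_sum fun i _ => Finset.sum_le_sum fun j _ => ?_
  rw [abs_mul]
  exact mul_le_of_le_one_right (abs_nonneg _) (hM.abs _ _)

variable (hG : Good u δ M)
include hG

/-- Pairing of the codegree fluctuations with `D_i + D_j - 2 M_ij`. -/
lemma approx_row : |∑ i, ∑ j, Lam u M i j * (rowS M i + rowS M j - 2 * M i j)
    - 2 * u * dd M - 2 * u * totS M ^ 2 / n| ≤ 100 * (δ * n ^ 2 * Theta M) := by
  have hn := hδ.n1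
  have hn0 : (n : ℝ) ≠ 0 := by positivity
  have h := n_mul_Lam_sum (u := u) (M := M) (fun i j => rowS M i + rowS M j - 2 * M i j) hn0
  have e : ∑ i, ∑ j, ww u M i j * (rowS M i + rowS M j - 2 * M i j)
      = 2 * ∑ i, ∑ j, ww u M i j * rowS M i - 2 * ∑ i, ∑ j, ww u M i j * M i j := by
    have : ∀ i j, ww u M i j * (rowS M i + rowS M j - 2 * M i j)
        = ww u M i j * rowS M i + ww u M i j * rowS M j - 2 * (ww u M i j * M i j) := by
      intro i j; ring
    simp only [this, Finset.sum_sub_distrib, Finset.sum_add_distrib, ← Finset.mul_sum,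
      sum_swap_ww hM]
    ring
  have e2 : ∑ i, ww u M i i * (rowS M i + rowS M i - 2 * M i i)
      = 2 * ∑ i, ww u M i i * rowS M i := by
    rw [Finset.mul_sum]
    exact Finset.sum_congr rfl fun i _ => by rw [hM.diag]; ring
  rw [e, e2, sum_ww_row hM, sum_ww_M hM] at h
  have b1 := abs_le.1 (sum_M2_row_le hδ hM hG)
  have b2 := abs_le.1 (sum_M2_M_le hδ hM)
  have b3 := abs_le.1 (diag_mul_row_le hδ hM hG (fun i => ww u M i i) _ (fun i => ww_diag_abs hM i))
  have b4 := totS_abs_le hδ hM hG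
  have b5 := abs_le.1 ((abs_u_mul hM (dd M)))
  have b6 := abs_le.1 ((abs_u_mul hM (ff M)))
  have b7 := abs_le.1 ((abs_usq_mul hM (totS M)).trans b4)
  have b8 := dd_le hδ (M := M)
  have b9 := ff_le hM
  have b10 := ff_nonneg (M := M)
  have b11 := dd_nonneg M
  rw [abs_of_nonneg b11] at b5
  rw [abs_of_nonneg b10] at b6
  obtain ⟨s1, s2, s3, s4, s5⟩ := scale_aux hδ (M := M)
  have b12 : n * (u ^ 2 * totS M) ≤ n * (δ * n ^ 2) := by
    exact mul_le_mul_of_nonneg_left b7.2 (by linarith)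
  have b13 : n * -(δ * n ^ 2) ≤ n * (u ^ 2 * totS M) := by
    exact mul_le_mul_of_nonneg_left b7.1 (by linarith)
  have key : |n * (∑ i, ∑ j, Lam u M i j * (rowS M i + rowS M j - 2 * M i j)
    - 2 * u * dd M - 2 * u * totS M ^ 2 / n)| ≤ n * (100 * (δ * n ^ 2 * Theta M)) := by
    have e3 : n * (∑ i, ∑ j, Lam u M i j * (rowS M i + rowS M j - 2 * M i j)
      - 2 * u * dd M - 2 * u * totS M ^ 2 / n)
      = n * (∑ i, ∑ j, Lam u M i j * (rowS M i + rowS M j - 2 * M i j))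
        - 2 * u * n * dd M - 2 * u * totS M ^ 2 := by field_simp
    rw [e3, h]
    have s6 : n * (δ * (n:ℝ) ^ 2) = n ^ 3 * δ := by ring
    have s7 : 5 * (n:ℝ) * (δ * (n:ℝ) ^ 2) = 5 * (n ^ 3 * δ) := by ring
    have s8 : n * (100 * (δ * n ^ 2 * Theta M)) = 100 * (δ * n ^ 3 * Theta M) := by ring
    have s9 : δ * (n:ℝ) ^ 2 ≤ n ^ 3 * δ := by
      have : (n:ℝ) ^ 3 * δ = n * (δ * n ^ 2) := by ring
      rw [this]; exact le_mul_of_one_le_left (by have := hδ.pos; positivity) hn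
    have s10 : n * -(δ * (n:ℝ) ^ 2) = - (n ^ 3 * δ) := by ring
    rw [s7] at b3
    rw [s6] at b12
    rw [s10] at b13
    rw [s8, abs_le]
    constructor <;> nlinarith
  rw [abs_mul, abs_of_pos (by linarith)] at key
  exact le_of_mul_le_mul_left key (by linarith)

lemma approx_diag : |∑ i, (M * M) i i ^ 2 - n ^ 3 * (u * (1 - u)) ^ 2| ≤ 10 * (δ * n ^ 3) := by
  have hn := hδ.n1
  have hdn := hδ.dn
  have hu0 := hM.u0
  have hu1 := hM.u1
  have h : ∀ i, |(M * M) i i ^ 2 - n ^ 2 * (u * (1 - u)) ^ 2| ≤ 10 * (δ * n ^ 2) := by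
    intro i
    have h1 := abs_le.1 (M2_abs_le hM i i)
    have h2 : |(M * M) i i - n * (u * (1 - u))| ≤ 2 * (δ * n) := by
      rw [M2_diag hM]
      have := abs_le.1 (hG.row i)
      have : 0 < u * (1 - u) := by nlinarith
      have : u * (1 - u) ≤ 1 := by nlinarith
      rw [abs_le]; constructor <;> nlinarith
    have e : (M * M) i i ^ 2 - n ^ 2 * (u * (1 - u)) ^ 2
        = ((M * M) i i - n * (u * (1 - u))) * ((M * M) i i + n * (u * (1 - u))) := by ring
    rw [e, abs_mul]
    have h3 : |(M * M) i i + n * (u * (1 - u))| ≤ 5 * n := by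
      have a : 0 < u * (1 - u) := by nlinarith
      have b : u * (1 - u) ≤ 1 := by nlinarith
      have : n * (u * (1 - u)) ≤ n * 1 := by gcongr
      have : 0 ≤ n * (u * (1 - u)) := by positivity
      rw [abs_le]; constructor <;> linarith
    calc _ ≤ 2 * (δ * n) * (5 * n) := mul_le_mul h2 h3 (abs_nonneg _) (by linarith)
      _ = _ := by ring
  have e : ∑ i, (M * M) i i ^ 2 - n ^ 3 * (u * (1 - u)) ^ 2
      = ∑ i, ((M * M) i i ^ 2 - n ^ 2 * (u * (1 - u)) ^ 2) := by
    rw [Finset.sum_sub_distrib]; simp; ring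
  rw [e]
  calc _ ≤ ∑ i : Fin n, 10 * (δ * (n:ℝ) ^ 2) :=
        (Finset.abs_sum_le_sum_abs _ _).trans (Finset.sum_le_sum fun i _ => h i)
    _ = _ := by simp; ring

lemma approx_VV : |VV M - (qq M - n ^ 3 * (u * (1 - u)) ^ 2)| ≤ 10 * (δ * n ^ 3) := by
  have h := approx_diag hδ hM hG
  rw [VV_eq hM]
  have : qq M - ∑ i, (M * M) i i ^ 2 - (qq M - n ^ 3 * (u * (1 - u)) ^ 2)
    = - (∑ i, (M * M) i i ^ 2 - n ^ 3 * (u * (1 - u)) ^ 2) := by ring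
  rw [this, abs_neg]; exact h

lemma approx_MPP : |∑ i, ∑ j, M i j * PP M i j - (qq M - 2 * (n ^ 3 * (u * (1 - u)) ^ 2))|
    ≤ 21 * (δ * n ^ 3) := by
  have h := abs_le.1 (approx_diag hδ hM hG)
  have hn := hδ.n1
  have hdn := hδ.dn
  rw [sum_M_PP hM]
  have h4 : ∑ i, ∑ j, M i j ^ 4 ≤ δ * n ^ 3 := by
    calc ∑ i, ∑ j, M i j ^ 4 ≤ ∑ i : Fin n, ∑ j : Fin n, (1 : ℝ) :=
        Finset.sum_le_sum fun i _ => Finset.sum_le_sum fun j _ => by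
          have := abs_le.1 (hM.abs i j)
          have h1 : M i j ^ 2 ≤ 1 := by nlinarith
          nlinarith [sq_nonneg (M i j)]
    _ = n ^ 2 := by simp [sq]
    _ ≤ δ * n ^ 3 := by nlinarith [sq_nonneg (n : ℝ)]
  have h5 : 0 ≤ ∑ i, ∑ j, M i j ^ 4 :=
    Finset.sum_nonneg fun _ _ => Finset.sum_nonneg fun _ _ => by positivity
  rw [abs_le]; constructor <;> linarith

lemma approx_ff : |ff M - n ^ 2 * (u * (1 - u))| ≤ 2 * (δ * n ^ 2) := by
  have hn := hδ.n1
  have hdn := hδ.dn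
  have hu0 := hM.u0
  have hu1 := hM.u1
  rw [ff_eq' hM]
  have b := abs_le.1 (totS_abs_le hδ hM hG)
  have a : 0 < u * (1 - u) := by nlinarith
  have a2 : u * (1 - u) ≤ 1 := by nlinarith
  have a3 : n * (u * (1 - u)) ≤ n * 1 := by gcongr
  have a4 : 0 ≤ n * (u * (1 - u)) := by positivity
  have a5 : (n:ℝ) ≤ δ * n ^ 2 := by nlinarith
  have a6 : |(1 - 2 * u) * totS M| ≤ δ * n ^ 2 := by
    rw [abs_mul]
    refine le_trans (mul_le_of_le_one_left (abs_nonneg _) ?_) (totS_abs_le hδ hM hG)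
    rw [abs_le]; constructor <;> linarith
  have a7 := abs_le.1 a6
  rw [abs_le]; constructor <;> nlinarith

/-- The pairing of codegree fluctuations with `M²`. -/
lemma approx_LamM2 : |n * ∑ i, ∑ j, Lam u M i j * (M * M) i j - VV M| ≤ 20 * (δ * n ^ 3 * Theta M) := by
  have hn := hδ.n1
  have hn0 : (n : ℝ) ≠ 0 := by positivity
  rw [n_mul_Lam_sum (fun i j => (M * M) i j) hn0, VV_eq hM]
  have e : ∑ i, ∑ j, ww u M i j * (M * M) i j
      = qq M + 2 * (u * ∑ i, ∑ j, (M * M) i j * rowS M i)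
        - 2 * (u * ∑ i, ∑ j, (M * M) i j * M i j) - 2 * (u ^ 2 * dd M) := by
    have e1 : ∀ i j, ww u M i j * (M * M) i j = (M * M) i j ^ 2 + u * ((M * M) i j * rowS M i)
        + u * ((M * M) i j * rowS M j) - 2 * (u * ((M * M) i j * M i j))
        - 2 * (u ^ 2 * (M * M) i j) := by
      intro i j; unfold ww; ring
    have e2 : ∑ i, ∑ j, (M * M) i j * rowS M j = ∑ i, ∑ j, (M * M) i j * rowS M i := by
      rw [Finset.sum_comm]
      exact Finset.sum_congr rfl fun i _ => Finset.sum_congr rfl fun j _ => by rw [M2_symm hM]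
    simp only [e1, Finset.sum_sub_distrib, Finset.sum_add_distrib, ← Finset.mul_sum, e2, sum_M2 hM]
    unfold qq; ring
  have e2 : ∑ i, ww u M i i * (M * M) i i = ∑ i, (M * M) i i ^ 2
      + 2 * (u * ∑ i, (M * M) i i * rowS M i) - 2 * (u ^ 2 * ff M) := by
    have e1 : ∀ i, ww u M i i * (M * M) i i = (M * M) i i ^ 2 + 2 * (u * ((M * M) i i * rowS M i))
        - 2 * (u ^ 2 * (M * M) i i) := by
      intro i; unfold ww; rw [hM.diag]; ring
    simp only [e1, Finset.sum_sub_distrib, Finset.sum_add_distrib, ← Finset.mul_sum, ff_eq hM]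
  rw [e, e2]
  have b1 := abs_le.1 ((abs_u_mul hM _).trans (sum_M2_row_le hδ hM hG))
  have b2 := abs_le.1 ((abs_u_mul hM _).trans (sum_M2_M_le hδ hM))
  have b3 := abs_le.1 ((abs_u_mul hM _).trans
    (diag_mul_row_le hδ hM hG (fun i => (M * M) i i) _ (fun i => M2_abs_le hM i i)))
  have b11 := dd_nonneg M
  have b10 := ff_nonneg (M := M)
  have b5 := abs_le.1 ((abs_usq_mul hM (dd M)).trans (le_of_eq (abs_of_nonneg b11)))
  have b6 := abs_le.1 ((abs_usq_mul hM (ff M)).trans (le_of_eq (abs_of_nonneg b10)))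
  have b8 := dd_le hδ (M := M)
  have b9 := ff_le hM
  obtain ⟨s1, s2, s3, s4, s5⟩ := scale_aux hδ (M := M)
  have s6 : n * (δ * (n:ℝ) ^ 2) = n ^ 3 * δ := by ring
  rw [s6] at b3
  rw [abs_le]; constructor <;> linarith

/-- The sum of the squared codegree fluctuations. -/
lemma approx_Lam2 : |n ^ 2 * ∑ i, ∑ j, Lam u M i j ^ 2
      - (VV M + 2 * u ^ 2 * n * dd M + 2 * u ^ 2 * totS M ^ 2)| ≤ 200 * (δ * n ^ 3 * Theta M) := by
  have hn := hδ.n1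
  have hn0 : (n : ℝ) ≠ 0 := by positivity
  have e0 : n ^ 2 * ∑ i, ∑ j, Lam u M i j ^ 2
      = n * ∑ i, ∑ j, Lam u M i j * ww u M i j := by
    simp only [Finset.mul_sum]
    refine Finset.sum_congr rfl fun i _ => Finset.sum_congr rfl fun j _ => ?_
    unfold Lam
    split_ifs
    · simp
    · field_simp
  have e1 : ∑ i, ∑ j, Lam u M i j * ww u M i j
      = ∑ i, ∑ j, Lam u M i j * (M * M) i j
        + u * (∑ i, ∑ j, Lam u M i j * (rowS M i + rowS M j - 2 * M i j))
        - 2 * (u ^ 2 * ∑ i, ∑ j, Lam u M i j) := by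
    simp only [Finset.mul_sum, ← Finset.sum_add_distrib, ← Finset.sum_sub_distrib]
    refine Finset.sum_congr rfl fun i _ => Finset.sum_congr rfl fun j _ => ?_
    unfold ww; ring
  have a1 := abs_le.1 (approx_LamM2 hδ hM hG)
  have a2 := (abs_u_mul hM _).trans (approx_row hδ hM hG)
  have a3 := sum_Lam hM
  have b4 := totS_abs_le hδ hM hG
  have b8 := dd_le hδ (M := M)
  have b9 := ff_le hM
  have b10 := ff_nonneg (M := M)
  have b11 := dd_nonneg M
  obtain ⟨s1, s2, s3, s4, s5⟩ := scale_aux hδ (M := M)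
  have a4 : |n * ∑ i, ∑ j, Lam u M i j| ≤ 8 * (δ * n ^ 3 * Theta M) := by
    rw [a3]
    have hu0 := hM.u0
    have hu1 := hM.u1
    have c1 : |u * ((n - 2) * totS M)| ≤ 2 * (n ^ 3 * δ) := by
      refine (abs_u_mul hM _).trans ?_
      rw [abs_mul]
      have : |(n:ℝ) - 2| ≤ 2 * n := by rw [abs_le]; constructor <;> linarith
      calc _ ≤ 2 * n * (δ * n ^ 2) := mul_le_mul this b4 (abs_nonneg _) (by linarith)
        _ = _ := by ring
    have c2 : |u ^ 2 * ((n:ℝ) * (n - 1))| ≤ (n:ℝ) ^ 2 := by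
      refine (abs_usq_mul hM _).trans ?_
      rw [abs_of_nonneg (by nlinarith)]; nlinarith
    have c1' := abs_le.1 c1
    have c2' := abs_le.1 c2
    rw [abs_le]; constructor <;> linarith
  have a5 := abs_le.1 ((abs_usq_mul hM _).trans a4)
  rw [e0, e1]
  have a6 : |n * (u * (∑ i, ∑ j, Lam u M i j * (rowS M i + rowS M j - 2 * M i j)
    - 2 * u * dd M - 2 * u * totS M ^ 2 / n))| ≤ 100 * (δ * n ^ 3 * Theta M) := by
    rw [abs_mul, abs_of_pos (by linarith)]
    calc _ ≤ n * (100 * (δ * n ^ 2 * Theta M)) := mul_le_mul_of_nonneg_left a2 (by linarith)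
      _ = _ := by ring
  have a6' := abs_le.1 a6
  have e7 : n * (u * (∑ i, ∑ j, Lam u M i j * (rowS M i + rowS M j - 2 * M i j)
    - 2 * u * dd M - 2 * u * totS M ^ 2 / n))
    = n * (u * (∑ i, ∑ j, Lam u M i j * (rowS M i + rowS M j - 2 * M i j)))
      - 2 * u ^ 2 * n * dd M - 2 * u ^ 2 * totS M ^ 2 := by field_simp
  rw [e7] at a6'
  rw [abs_le]; constructor <;> nlinarith

lemma sum_PP_sq_le : ∑ i, ∑ j, PP M i j ^ 2 ≤ 20 * (δ ^ 2 * n ^ 5 * Theta M) := by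
  have hn := hδ.n1
  have hd := hδ.pos
  have hbig := hδ.big
  have hT := one_le_Theta M
  have h1 : ∀ i j, PP M i j ^ 2 ≤ 2 * (M * (M * M)) i j ^ 2 + 18 * n ^ 2 := by
    intro i j
    rw [PP_eq hM]
    set a := (M * (M * M)) i j
    have hb : |- M i j * (M * M) i i - M i j * (M * M) j j + M i j * (M i j * M i j)| ≤ 3 * n := by
      have m := hM.abs i j
      have m1 := abs_nonneg (M i j)
      have c1 : |M i j * (M * M) i i| ≤ n := by
        rw [abs_mul]; exact (mul_le_of_le_one_left (abs_nonneg _) m).trans (M2_abs_le hM i i)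
      have c2 : |M i j * (M * M) j j| ≤ n := by
        rw [abs_mul]; exact (mul_le_of_le_one_left (abs_nonneg _) m).trans (M2_abs_le hM j j)
      have c3 : |M i j * (M i j * M i j)| ≤ n := by
        rw [abs_mul, abs_mul]
        refine le_trans (mul_le_one₀ m (by positivity) (mul_le_one₀ m m1 m)) hn
      have := abs_le.1 c1
      have := abs_le.1 c2
      have := abs_le.1 c3
      rw [abs_le]; constructor <;> linarith
    set b := - M i j * (M * M) i i - M i j * (M * M) j j + M i j * (M i j * M i j)
    have e : a - M i j * (M * M) i i - M i j * (M * M) j j + M i j * (M i j * M i j) = a + b := by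
      simp only [b]; ring
    rw [e]
    have hb2 : b ^ 2 ≤ (3 * n) ^ 2 := sq_le_sq' (abs_le.1 hb).1 (abs_le.1 hb).2
    nlinarith [sq_nonneg (a - b)]
  have h2 : ∑ i, ∑ j, (M * (M * M)) i j ^ 2 ≤ (δ * n) ^ 2 * qq M := by
    unfold qq
    rw [Finset.sum_comm, Finset.sum_comm (f := fun i j => (M * M) i j ^ 2), Finset.mul_sum]
    refine Finset.sum_le_sum fun j _ => ?_
    have := op_norm hM.symm (r := δ * n) (by positivity) hG.op (fun k => (M * M) k j)
    simpa [Matrix.mul_apply] using this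
  have h3 : ∑ i, ∑ j, PP M i j ^ 2 ≤ 2 * ∑ i, ∑ j, (M * (M * M)) i j ^ 2 + 18 * n ^ 4 := by
    refine (Finset.sum_le_sum fun i _ => Finset.sum_le_sum fun j _ => h1 i j).trans (le_of_eq ?_)
    simp only [Finset.sum_add_distrib, ← Finset.mul_sum]
    simp; ring
  have h4 := qq_le hδ (M := M)
  have h5 : (δ * n) ^ 2 * qq M ≤ δ ^ 2 * n ^ 5 * Theta M := by
    calc _ ≤ (δ * n) ^ 2 * (n ^ 3 * Theta M) := by gcongr
      _ = _ := by ring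
  have h6 : (n:ℝ) ^ 4 ≤ δ ^ 2 * n ^ 5 * Theta M := by
    have : δ ^ 2 * n ^ 5 * Theta M = (δ ^ 2 * n) * n ^ 4 * Theta M := by ring
    rw [this]
    calc (n:ℝ) ^ 4 = 1 * n ^ 4 * 1 := by ring
      _ ≤ _ := by gcongr
  linarith

lemma sum_Lam_PP_le : ∑ i, ∑ j, |Lam u M i j| * |PP M i j| ≤ 50 * (δ * n ^ 3 * Theta M) := by
  have hn := hδ.n1
  have hd := hδ.pos
  have ht : 0 < δ * (n:ℝ) ^ 2 := by positivity
  refine (young_sum _ _ ht).trans ?_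
  have h1 := sum_Lam_sq_le hδ hM
  have h2 := sum_PP_sq_le hδ hM hG
  have h3 : (∑ i, ∑ j, PP M i j ^ 2) / (δ * n ^ 2) ≤ 20 * (δ * n ^ 3 * Theta M) := by
    rw [div_le_iff₀ ht]
    refine h2.trans (le_of_eq ?_); ring
  have h4 : δ * n ^ 2 * ∑ i, ∑ j, Lam u M i j ^ 2 ≤ 48 * (δ * n ^ 3 * Theta M) := by
    calc _ ≤ δ * n ^ 2 * (48 * n * Theta M) := by gcongr
      _ = _ := by ring
  obtain ⟨s1, s2, s3, s4, s5⟩ := scale_aux hδ (M := M)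
  linarith

lemma sum_absPP_le : ∑ i, ∑ j, |PP M i j| ≤ 50 * (δ * n ^ 4 * Theta M) := by
  have hn := hδ.n1
  have hd := hδ.pos
  have hT := one_le_Theta M
  have ht : 0 < δ * (n:ℝ) ^ 2 := by positivity
  have h := young_sum (fun _ _ : Fin n => (1 : ℝ)) (fun i j => PP M i j) ht
  simp only [abs_one, one_mul] at h
  have e : ∑ i : Fin n, ∑ j : Fin n, (1 : ℝ) ^ 2 = n ^ 2 := by simp [sq]
  rw [e] at h
  have h2 := sum_PP_sq_le hδ hM hG
  have h3 : (∑ i, ∑ j, PP M i j ^ 2) / (δ * n ^ 2) ≤ 20 * (δ * n ^ 3 * Theta M) := by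
    rw [div_le_iff₀ ht]
    refine h2.trans (le_of_eq ?_); ring
  have h4 : δ * (n:ℝ) ^ 3 * Theta M ≤ δ * n ^ 4 * Theta M := by
    gcongr
    norm_num
  have h5 : δ * n ^ 2 * (n:ℝ) ^ 2 ≤ δ * n ^ 4 * Theta M := by
    have : δ * n ^ 4 * Theta M = (δ * n ^ 2 * (n:ℝ) ^ 2) * Theta M := by ring
    rw [this]; exact le_mul_of_one_le_right (by positivity) hT
  have : 0 ≤ δ * n ^ 4 * Theta M := by positivity
  linarith

end est

end TriCLT

/-! ### Expansion of the conditional edge probabilities -/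

namespace TriCLT

variable {n : ℕ}

lemma abs_le_of_deriv_le {g g' : ℝ → ℝ} (hg : ∀ y, HasDerivAt g (g' y) y) (h0 : g 0 = 0)
    {C : ℝ} (hC : 0 ≤ C) {k : ℕ} (hb : ∀ y, |g' y| ≤ C * |y| ^ k) (y : ℝ) :
    |g y| ≤ C * |y| ^ (k + 1) := by
  have h := Convex.norm_image_sub_le_of_norm_hasDerivWithin_le (f := g) (f' := g')
    (s := Set.Icc (-|y|) |y|) (C := C * |y| ^ k) (x := 0) (y := y)
    (fun x _ => (hg x).hasDerivWithinAt)
    (fun x hx => by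
      rw [Real.norm_eq_abs]
      refine (hb x).trans ?_
      have : |x| ≤ |y| := abs_le.2 hx
      gcongr)
    (convex_Icc _ _) (by simp) ⟨neg_abs_le y, le_abs_self y⟩
  rw [h0, sub_zero, sub_zero, Real.norm_eq_abs, Real.norm_eq_abs] at h
  rw [pow_succ]; linarith

section sigm
variable (α : ℝ) {u l : ℝ} (hl : Real.sigmoid l = u)
include hl

lemma sigmoid_exp1 (y : ℝ) : |Real.sigmoid (l + α * y) - u| ≤ |α| * |y| := by
  have h := abs_le_of_deriv_le (g := fun y => Real.sigmoid (l + α * y) - u)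
    (g' := fun y => Real.sigmoid (l + α * y) * (1 - Real.sigmoid (l + α * y)) * α)
    (fun y => by
      have h1 : HasDerivAt (fun y => l + α * y) α y := by
        simpa using ((hasDerivAt_id y).const_mul α).const_add l
      exact ((Real.hasDerivAt_sigmoid (l + α * y)).comp y h1).sub_const u)
    (by simp [hl]) (abs_nonneg α) (k := 0)
    (fun y => by
      have a := Real.sigmoid_nonneg (l + α * y)
      have b := Real.sigmoid_le_one (l + α * y)
      rw [abs_mul, pow_zero, mul_one, abs_of_nonneg (by nlinarith)]
      exact mul_le_of_le_one_left (abs_nonneg _) (by nlinarith)) y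
  simpa using h

lemma sigmoid_exp2 (y : ℝ) :
    |Real.sigmoid (l + α * y) - u - α * (u * (1 - u)) * y| ≤ α ^ 2 * |y| ^ 2 := by
  have hu0 : 0 ≤ u := hl ▸ Real.sigmoid_nonneg _
  have hu1 : u ≤ 1 := hl ▸ Real.sigmoid_le_one _
  have h := abs_le_of_deriv_le
    (g := fun y => Real.sigmoid (l + α * y) - u - α * (u * (1 - u)) * y)
    (g' := fun y => Real.sigmoid (l + α * y) * (1 - Real.sigmoid (l + α * y)) * α
      - α * (u * (1 - u)))
    (fun y => by
      have h1 : HasDerivAt (fun y => l + α * y) α y := by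
        simpa using ((hasDerivAt_id y).const_mul α).const_add l
      have h2 : HasDerivAt (fun y => α * (u * (1 - u)) * y) (α * (u * (1 - u))) y := by
        simpa using (hasDerivAt_id y).const_mul (α * (u * (1 - u)))
      exact (((Real.hasDerivAt_sigmoid (l + α * y)).comp y h1).sub_const u).sub h2)
    (by simp [hl]) (sq_nonneg α) (k := 1)
    (fun y => by
      have a := Real.sigmoid_nonneg (l + α * y)
      have b := Real.sigmoid_le_one (l + α * y)
      have c := sigmoid_exp1 α hl y
      set s := Real.sigmoid (l + α * y)
      have e : s * (1 - s) * α - α * (u * (1 - u)) = (α * (s - u)) * (1 - u - s) := by ring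
      rw [e, abs_mul, abs_mul, pow_one]
      have h3 : |1 - u - s| ≤ 1 := by rw [abs_le]; constructor <;> linarith
      calc |α| * |s - u| * |1 - u - s| ≤ |α| * (|α| * |y|) * 1 := by gcongr
        _ = α ^ 2 * |y| := by rw [← sq_abs α]; ring) y
  simpa using h

lemma sigmoid_exp3 (y : ℝ) :
    |Real.sigmoid (l + α * y) - u - α * (u * (1 - u)) * y
      - α ^ 2 * (u * (1 - u)) * (1 - 2 * u) / 2 * y ^ 2| ≤ 2 * |α| ^ 3 * |y| ^ 3 := by
  have hu0 : 0 ≤ u := hl ▸ Real.sigmoid_nonneg _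
  have hu1 : u ≤ 1 := hl ▸ Real.sigmoid_le_one _
  have h := abs_le_of_deriv_le
    (g := fun y => Real.sigmoid (l + α * y) - u - α * (u * (1 - u)) * y
      - α ^ 2 * (u * (1 - u)) * (1 - 2 * u) / 2 * y ^ 2)
    (g' := fun y => Real.sigmoid (l + α * y) * (1 - Real.sigmoid (l + α * y)) * α
      - α * (u * (1 - u)) - α ^ 2 * (u * (1 - u)) * (1 - 2 * u) / 2 * (2 * y))
    (fun y => by
      have h1 : HasDerivAt (fun y => l + α * y) α y := by
        simpa using ((hasDerivAt_id y).const_mul α).const_add l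
      have h2 : HasDerivAt (fun y => α * (u * (1 - u)) * y) (α * (u * (1 - u))) y := by
        simpa using (hasDerivAt_id y).const_mul (α * (u * (1 - u)))
      have h3 : HasDerivAt (fun y : ℝ => α ^ 2 * (u * (1 - u)) * (1 - 2 * u) / 2 * y ^ 2)
          (α ^ 2 * (u * (1 - u)) * (1 - 2 * u) / 2 * (2 * y)) y := by
        have := (hasDerivAt_pow 2 y).const_mul (α ^ 2 * (u * (1 - u)) * (1 - 2 * u) / 2)
        simpa using this
      exact ((((Real.hasDerivAt_sigmoid (l + α * y)).comp y h1).sub_const u).sub h2).sub h3)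
    (by simp [hl]) (by positivity : 0 ≤ 2 * |α| ^ 3) (k := 2)
    (fun y => by
      have c := sigmoid_exp1 α hl y
      have d := sigmoid_exp2 α hl y
      set s := Real.sigmoid (l + α * y)
      have e : s * (1 - s) * α - α * (u * (1 - u)) - α ^ 2 * (u * (1 - u)) * (1 - 2 * u) / 2 * (2 * y)
        = α * (1 - 2 * u) * (s - u - α * (u * (1 - u)) * y) - α * (s - u) ^ 2 := by ring
      rw [e]
      refine (abs_sub _ _).trans ?_
      rw [abs_mul, abs_mul, abs_mul, abs_pow]
      have h3 : |1 - 2 * u| ≤ 1 := by rw [abs_le]; constructor <;> linarith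
      calc _ ≤ |α| * 1 * (α ^ 2 * |y| ^ 2) + |α| * (|α| * |y|) ^ 2 := by gcongr
        _ = _ := by rw [← sq_abs α]; ring) y
  simpa using h

end sigm

/-- The properties of the optimal density `u` used for the second-order analysis. -/
structure Pkg (α h u : ℝ) : Prop where
  u0 : 0 < u
  u1 : u < 1
  stat : Real.sigmoid (h + α * u ^ 2) = u
  kap : 2 * α * u ^ 2 * (1 - u) < 1

/-- Conditional edge probabilities centred at `u`, zero on the diagonal. -/
def sd (α h u : ℝ) (x : Config n) (i j : Fin n) : ℝ := if i = j then 0 else sig α h x i j - u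

lemma cen_eq (α h u : ℝ) (x : Config n) (i j : Fin n) :
    cen α h x i j = Mx u x i j - sd α h u x i j := by
  unfold cen Mx sd; split_ifs <;> ring

section
variable {α h u : ℝ} (hP : Pkg α h u)
include hP

lemma lodds_eq (x : Config n) {i j : Fin n} (hij : i ≠ j) :
    lodds α h x i j = (h + α * u ^ 2) + α * Lam u (Mx u x) i j := by
  rw [Lam_eq hP.u0 hP.u1 x hij]; unfold lodds; ring

lemma sd_exp1 (x : Config n) (i j : Fin n) : |sd α h u x i j| ≤ |α| * |Lam u (Mx u x) i j| := by
  unfold sd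
  split_ifs with hij
  · simp; positivity
  · rw [sig, lodds_eq hP x hij]; exact sigmoid_exp1 α hP.stat _

lemma sd_exp2 (x : Config n) (i j : Fin n) :
    |sd α h u x i j - α * (u * (1 - u)) * Lam u (Mx u x) i j| ≤ α ^ 2 * Lam u (Mx u x) i j ^ 2 := by
  unfold sd
  split_ifs with hij
  · simp [Lam, hij]
  · rw [sig, lodds_eq hP x hij, ← sq_abs (Lam _ _ _ _)]; exact sigmoid_exp2 α hP.stat _

lemma sd_exp3 (x : Config n) (i j : Fin n) :
    |sd α h u x i j - α * (u * (1 - u)) * Lam u (Mx u x) i j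
      - α ^ 2 * (u * (1 - u)) * (1 - 2 * u) / 2 * Lam u (Mx u x) i j ^ 2|
      ≤ 2 * |α| ^ 3 * |Lam u (Mx u x) i j| ^ 3 := by
  unfold sd
  split_ifs with hij
  · simp [Lam, hij]
  · rw [sig, lodds_eq hP x hij]; exact sigmoid_exp3 α hP.stat _

lemma sd_abs_le (x : Config n) (i j : Fin n) : |sd α h u x i j| ≤ 1 := by
  unfold sd
  split_ifs with hij
  · simp
  · have := Real.sigmoid_nonneg (lodds α h x i j)
    have := Real.sigmoid_le_one (lodds α h x i j)
    have := hP.u0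
    have := hP.u1
    unfold sig
    rw [abs_le]; constructor <;> linarith

end

lemma cvar_nonneg (α h : ℝ) (x : Config n) (i j : Fin n) : 0 ≤ cvar α h x i j := by
  unfold cvar sig
  split_ifs
  · rfl
  · have := Real.sigmoid_nonneg (lodds α h x i j)
    have := Real.sigmoid_le_one (lodds α h x i j)
    nlinarith

lemma cvar_le (α h : ℝ) (x : Config n) (i j : Fin n) : cvar α h x i j ≤ 1 := by
  unfold cvar sig
  split_ifs
  · norm_num
  · have := Real.sigmoid_nonneg (lodds α h x i j)
    have := Real.sigmoid_le_one (lodds α h x i j)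
    nlinarith

/-! ### Expectations and negligible observables -/

section Exb
variable {V : Type*} [NormedAddCommGroup V] [NormedSpace ℝ V] (α h : ℝ)

lemma Ex_add (F G : Config n → V) : Ex α h (fun x => F x + G x) = Ex α h F + Ex α h G := by
  simp [Ex, smul_add, Finset.sum_add_distrib]

lemma Ex_sub (F G : Config n → V) : Ex α h (fun x => F x - G x) = Ex α h F - Ex α h G := by
  simp [Ex, smul_sub, Finset.sum_sub_distrib]

lemma Ex_smul (c : ℝ) (F : Config n → V) : Ex α h (fun x => c • F x) = c • Ex α h F := by
  simp only [Ex, Finset.smul_sum, smul_smul, mul_comm c]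

lemma Ex_const (v : V) : Ex α h (fun _ : Config n => v) = v := by
  simp [Ex, ← Finset.sum_smul, sum_pr]

lemma Ex_mono {F G : Config n → ℝ} (hFG : ∀ x, F x ≤ G x) : Ex α h F ≤ Ex α h G :=
  Finset.sum_le_sum fun x _ => mul_le_mul_of_nonneg_left (hFG x) (pr_pos α h x).le

lemma Ex_nonneg {F : Config n → ℝ} (hF : ∀ x, 0 ≤ F x) : 0 ≤ Ex α h F :=
  Finset.sum_nonneg fun x _ => mul_nonneg (pr_pos α h x).le (hF x)

lemma norm_Ex_le (F : Config n → V) : ‖Ex α h F‖ ≤ Ex α h (fun x => ‖F x‖) := by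
  refine (norm_sum_le _ _).trans (Finset.sum_le_sum fun x _ => ?_)
  rw [norm_smul, Real.norm_of_nonneg (pr_pos α h x).le, smul_eq_mul]

lemma Ex_mul (c : ℝ) (F : Config n → ℝ) : Ex α h (fun x => c * F x) = c * Ex α h F :=
  Ex_smul α h c F

lemma abs_Ex_le (F : Config n → ℝ) : |Ex α h F| ≤ Ex α h (fun x => |F x|) := norm_Ex_le α h F

end Exb

open Classical in
/-- Indicator of the atypical configurations. -/
def bad (u δ : ℝ) (x : Config n) : ℝ := if Good u δ (Mx u x) then 0 else 1

/-- Atypical configurations have probability smaller than any power of `n`. -/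
def GP (α h u : ℝ) : Prop := ∀ δ : ℝ, 0 < δ → ∀ K : ℕ, ∀ᶠ n : ℕ in atTop,
  (n : ℝ) ^ K * Ex α h (fun x : Config n => bad u δ x) ≤ 1

/-- A family of observables of at most polynomial size. -/
def Poly (X : ∀ n : ℕ, Config n → ℝ) : Prop :=
  ∃ C : ℝ, ∃ k : ℕ, 0 ≤ C ∧ ∀ n : ℕ, 1 ≤ n → ∀ x : Config n, |X n x| ≤ C * (n : ℝ) ^ k

/-- Negligible observables: of size `O(δ Θ)` on typical configurations, polynomially bounded
elsewhere. -/
structure Sm (u : ℝ) (X : ∀ n : ℕ, Config n → ℝ) : Prop where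
  good : ∃ C : ℝ, 0 ≤ C ∧ ∀ (n : ℕ) (δ : ℝ) (x : Config n), Scale n δ → Good u δ (Mx u x) →
    |X n x| ≤ C * (δ * Theta (Mx u x))
  poly : Poly X

lemma Poly.add {X Y : ∀ n : ℕ, Config n → ℝ} (hX : Poly X) (hY : Poly Y) :
    Poly (fun n x => X n x + Y n x) := by
  obtain ⟨C, k, hC, h⟩ := hX
  obtain ⟨C', k', hC', h'⟩ := hY
  refine ⟨C + C', k + k', by linarith, fun n hn x => ?_⟩
  have hn' : (1 : ℝ) ≤ n := by exact_mod_cast hn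
  refine (abs_add_le _ _).trans ?_
  rw [add_mul]
  refine add_le_add ((h n hn x).trans ?_) ((h' n hn x).trans ?_)
  · gcongr; omega
  · gcongr; omega

lemma Poly.mul {X Y : ∀ n : ℕ, Config n → ℝ} (hX : Poly X) (hY : Poly Y) :
    Poly (fun n x => X n x * Y n x) := by
  obtain ⟨C, k, hC, h⟩ := hX
  obtain ⟨C', k', hC', h'⟩ := hY
  refine ⟨C * C', k + k', by positivity, fun n hn x => ?_⟩
  rw [abs_mul, pow_add]
  calc _ ≤ (C * n ^ k) * (C' * n ^ k') :=
        mul_le_mul (h n hn x) (h' n hn x) (abs_nonneg _) (by positivity)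
    _ = _ := by ring

lemma Poly.of_le {X : ∀ n : ℕ, Config n → ℝ} (C : ℝ) (k : ℕ)
    (h : ∀ n : ℕ, 1 ≤ n → ∀ x : Config n, |X n x| ≤ C * (n : ℝ) ^ k) : Poly X := by
  refine ⟨|C|, k, abs_nonneg _, fun n hn x => (h n hn x).trans ?_⟩
  gcongr; exact le_abs_self C

lemma Poly.const (c : ℝ) : Poly (fun _ _ => c) :=
  Poly.of_le |c| 0 (fun n _ x => by simp)

lemma Poly.npow (k : ℕ) : Poly (fun n _ => (n : ℝ) ^ k) :=
  Poly.of_le 1 k (fun n _ x => by simp)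

lemma Poly.neg {X : ∀ n : ℕ, Config n → ℝ} (hX : Poly X) : Poly (fun n x => - X n x) := by
  simpa using (Poly.const (-1)).mul hX

lemma Poly.sub {X Y : ∀ n : ℕ, Config n → ℝ} (hX : Poly X) (hY : Poly Y) :
    Poly (fun n x => X n x - Y n x) := by
  simpa [sub_eq_add_neg] using hX.add hY.neg

lemma Poly.div_n {X : ∀ n : ℕ, Config n → ℝ} (hX : Poly X) (k : ℕ) :
    Poly (fun n x => X n x / (n : ℝ) ^ k) := by
  obtain ⟨C, m, hC, h⟩ := hX
  refine ⟨C, m, hC, fun n hn x => ?_⟩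
  have hn' : (1 : ℝ) ≤ n := by exact_mod_cast hn
  rw [abs_div, abs_of_pos (by positivity : (0:ℝ) < n ^ k)]
  exact (div_le_self (abs_nonneg _) (one_le_pow₀ hn')).trans (h n hn x)

lemma Poly.sum2 {g : ∀ n : ℕ, Config n → Fin n → Fin n → ℝ} (C : ℝ) (k : ℕ)
    (h : ∀ n : ℕ, 1 ≤ n → ∀ (x : Config n) i j, |g n x i j| ≤ C * (n : ℝ) ^ k) :
    Poly (fun n x => ∑ i, ∑ j, g n x i j) := by
  refine Poly.of_le C (k + 2) fun n hn x => (abs_sum2_le _).trans ?_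
  calc ∑ i, ∑ j, |g n x i j| ≤ ∑ i : Fin n, ∑ j : Fin n, C * (n : ℝ) ^ k :=
        Finset.sum_le_sum fun i _ => Finset.sum_le_sum fun j _ => h n hn x i j
    _ = _ := by simp; ring

lemma Sm.add {u : ℝ} {X Y : ∀ n : ℕ, Config n → ℝ} (hX : Sm u X) (hY : Sm u Y) :
    Sm u (fun n x => X n x + Y n x) := by
  obtain ⟨⟨C, hC, h⟩, p⟩ := hX
  obtain ⟨⟨C', hC', h'⟩, p'⟩ := hY
  refine ⟨⟨C + C', by linarith, fun n δ x hs hg => ?_⟩, p.add p'⟩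
  refine (abs_add_le _ _).trans ?_
  rw [add_mul]
  exact add_le_add (h n δ x hs hg) (h' n δ x hs hg)

lemma Sm.const_mul {u : ℝ} {X : ∀ n : ℕ, Config n → ℝ} (hX : Sm u X) (c : ℝ) :
    Sm u (fun n x => c * X n x) := by
  obtain ⟨⟨C, hC, h⟩, p⟩ := hX
  refine ⟨⟨|c| * C, by positivity, fun n δ x hs hg => ?_⟩, (Poly.const c).mul p⟩
  rw [abs_mul, mul_assoc]
  exact mul_le_mul_of_nonneg_left (h n δ x hs hg) (abs_nonneg _)

lemma Sm.congr {u : ℝ} {X Y : ∀ n : ℕ, Config n → ℝ} (hX : Sm u X)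
    (hXY : ∀ n x, 1 ≤ n → X n x = Y n x) : Sm u Y := by
  obtain ⟨⟨C, hC, h⟩, ⟨C', k, hC', p⟩⟩ := hX
  refine ⟨⟨C, hC, fun n δ x hs hg => ?_⟩, ⟨C', k, hC', fun n hn x => ?_⟩⟩
  · rw [← hXY n x (by exact_mod_cast hs.n1)]; exact h n δ x hs hg
  · rw [← hXY n x hn]; exact p n hn x

lemma bad_nonneg (u δ : ℝ) (x : Config n) : 0 ≤ bad u δ x := by
  unfold bad; split_ifs <;> norm_num

lemma eventually_scale {δ : ℝ} (h0 : 0 < δ) (h1 : δ ≤ 1) : ∀ᶠ n : ℕ in atTop, Scale n δ := by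
  filter_upwards [eventually_ge_atTop (Nat.ceil (1 / δ ^ 2))] with n hn
  refine ⟨h0, h1, ?_⟩
  have : 1 / δ ^ 2 ≤ n := (Nat.le_ceil _).trans (by exact_mod_cast hn)
  rw [div_le_iff₀ (by positivity)] at this
  linarith

/-- Expectation of a negligible observable. -/
lemma Sm.ex_le {α h u : ℝ} (hGP : GP α h u) {X : ∀ n : ℕ, Config n → ℝ} (hX : Sm u X) :
    ∃ C : ℝ, 0 ≤ C ∧ ∀ δ : ℝ, 0 < δ → δ ≤ 1 → ∀ᶠ n : ℕ in atTop,
      Ex α h (fun x : Config n => |X n x|)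
        ≤ C * δ * Ex α h (fun x : Config n => Theta (Mx u x)) + δ := by
  obtain ⟨⟨C, hC, hg⟩, ⟨C', k, hC', hp⟩⟩ := hX
  refine ⟨C, hC, fun δ h0 h1 => ?_⟩
  filter_upwards [eventually_scale h0 h1, hGP δ h0 (k + 1), eventually_ge_atTop 1,
    eventually_ge_atTop (Nat.ceil (C' / δ))] with n hs hb hn hn2
  have hn3 : C' / δ ≤ n := (Nat.le_ceil _).trans (by exact_mod_cast hn2)
  rw [div_le_iff₀ h0] at hn3
  have hn' : (1 : ℝ) ≤ n := by exact_mod_cast hn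
  have key : ∀ x : Config n, |X n x| ≤ (C * δ) * Theta (Mx u x) + (C' * (n:ℝ) ^ k) * bad u δ x := by
    intro x
    have hT := one_le_Theta (Mx u x)
    by_cases hG : Good u δ (Mx u x)
    · have := hg n δ x hs hG
      have e : bad u δ x = 0 := by simp [bad, hG]
      rw [e]; linarith
    · have := hp n hn x
      have e : bad u δ x = 1 := by simp [bad, hG]
      rw [e]
      have : 0 ≤ C * δ * Theta (Mx u x) := by positivity
      linarith
  refine (Ex_mono α h key).trans ?_
  rw [Ex_add, Ex_mul, Ex_mul]
  have hb0 : 0 ≤ Ex α h (fun x : Config n => bad u δ x) := Ex_nonneg α h fun x => bad_nonneg u δ x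
  have : C' * (n:ℝ) ^ k * Ex α h (fun x : Config n => bad u δ x) ≤ δ := by
    calc C' * (n:ℝ) ^ k * Ex α h (fun x : Config n => bad u δ x)
        ≤ (n * δ) * (n:ℝ) ^ k * Ex α h (fun x : Config n => bad u δ x) := by gcongr
      _ = δ * ((n:ℝ) ^ (k + 1) * Ex α h (fun x : Config n => bad u δ x)) := by ring
      _ ≤ δ * 1 := by gcongr
      _ = δ := by ring
  linarith

end TriCLT

namespace TriCLT

variable {n : ℕ}

/-! ### Effect of flipping one edge -/

lemma Mx_setE_other (u : ℝ) (x : Config n) {i j : Fin n} (h : i ≠ j) (b : Bool) {k l : Fin n}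
    (hkl : s(k, l) ≠ s(i, j)) : Mx u (setE x i j b) k l = Mx u x k l := by
  unfold Mx; rw [adj_setE_other x h b hkl]

lemma Mx_setE_true (u : ℝ) (x : Config n) {i j : Fin n} (h : i ≠ j) :
    Mx u (setE x i j true) = Mx u (setE x i j false) + J i j := by
  have e := adj_setE_true x h
  rw [adj_eq_Mx u (setE x i j true), adj_eq_Mx u (setE x i j false)] at e
  have : ∀ A B C D : Matrix (Fin n) (Fin n) ℝ, A + D = B + D + C → A = B + C := by
    intro A B C D h
    have : A + D = B + C + D := by rw [h]; abel
    exact add_right_cancel this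
  exact this _ _ _ _ e

lemma rowS_J (i j k : Fin n) : rowS (J i j) k = (if k = i then 1 else 0) + (if k = j then 1 else 0) := by
  unfold rowS J
  simp only [Matrix.add_apply, Matrix.single_apply, Finset.sum_add_distrib]
  congr 1
  · by_cases hk : k = i
    · simp [hk]
    · have : ¬ i = k := fun e => hk e.symm
      simp [hk, this]
  · by_cases hk : k = j
    · simp [hk]
    · have : ¬ j = k := fun e => hk e.symm
      simp [hk, this]

lemma rowS_add (A B : Matrix (Fin n) (Fin n) ℝ) (k : Fin n) : rowS (A + B) k = rowS A k + rowS B k := by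
  simp [rowS, Finset.sum_add_distrib]

lemma totS_set (u : ℝ) (x : Config n) {i j : Fin n} (h : i ≠ j) :
    totS (Mx u (setE x i j true)) = totS (Mx u (setE x i j false)) + 2 := by
  rw [Mx_setE_true u x h]
  unfold totS
  simp only [rowS_add, rowS_J, Finset.sum_add_distrib]
  simp; ring

section inc
variable {u : ℝ} (h0 : 0 < u) (h1 : u < 1) (x : Config n) {i j : Fin n} (hij : i ≠ j)
include h0 h1 hij

lemma dd_inc : |dd (Mx u (setE x i j true)) - dd (Mx u (setE x i j false))| ≤ 6 * n := by
  have hM := cenM_Mx h0 h1 (setE x i j false)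
  have hn : (1 : ℝ) ≤ n := by exact_mod_cast i.pos
  rw [Mx_setE_true u x hij]
  set M := Mx u (setE x i j false)
  have e : dd (M + J i j) - dd M = 2 * rowS M i + 2 * rowS M j + 2 := by
    unfold dd
    rw [← Finset.sum_sub_distrib]
    have : ∀ k, rowS (M + J i j) k ^ 2 - rowS M k ^ 2
        = (if k = i then 2 * rowS M k + 1 else 0) + (if k = j then 2 * rowS M k + 1 else 0) := by
      intro k
      rw [rowS_add, rowS_J]
      by_cases hk : k = i
      · have : k ≠ j := fun e => hij (hk.symm.trans e)
        simp only [hk, if_true, if_neg hij]; ring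
      · by_cases hk' : k = j
        · simp only [hk', if_true, if_neg (Ne.symm hij)]; ring
        · simp [hk, hk']
    simp only [this, Finset.sum_add_distrib]
    simp; ring
  rw [e]
  have a := abs_le.1 (rowS_abs_le hM i)
  have b := abs_le.1 (rowS_abs_le hM j)
  rw [abs_le]; constructor <;> linarith

lemma sum_abs_mulJ (B : Matrix (Fin n) (Fin n) ℝ) (hB : ∀ k l, |B k l| ≤ 1) :
    ∑ k, ∑ l, |(B * J i j) k l| ≤ 2 * n := by
  have h : ∀ k, ∑ l, |(B * J i j) k l| ≤ 2 := by
    intro k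
    calc ∑ l, |(B * J i j) k l| ≤ ∑ l, ((if l = j then 1 else 0) + (if l = i then 1 else 0) : ℝ) := by
          refine Finset.sum_le_sum fun l _ => ?_
          rw [mul_J_apply]
          refine (abs_add_le _ _).trans ?_
          gcongr
          · split_ifs
            · exact hB _ _
            · simp
          · split_ifs
            · exact hB _ _
            · simp
      _ = 2 := by simp [Finset.sum_add_distrib]; norm_num
  calc _ ≤ ∑ k : Fin n, (2 : ℝ) := Finset.sum_le_sum fun k _ => h k
    _ = 2 * n := by simp; ring

/-- The square of the centred adjacency matrix changes by at most `4n` in `ℓ¹` norm. -/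
lemma sq_inc : ∑ k, ∑ l, |(Mx u (setE x i j true) * Mx u (setE x i j true)) k l
      - (Mx u (setE x i j false) * Mx u (setE x i j false)) k l| ≤ 4 * n := by
  have hM := cenM_Mx h0 h1 (setE x i j false)
  have hM1 := cenM_Mx h0 h1 (setE x i j true)
  have e := Mx_setE_true u x hij
  set M := Mx u (setE x i j false)
  set M1 := Mx u (setE x i j true)
  have hJ : (J i j).transpose = J i j := by
    unfold J; rw [Matrix.transpose_add, Matrix.transpose_single, Matrix.transpose_single, add_comm]
  have hMt : M.transpose = M := by ext k l; exact hM.symm l k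
  have e1 : ∀ k l, (M1 * M1) k l - (M * M) k l = (M1 * J i j) k l + (M * J i j) l k := by
    intro k l
    have : (M * J i j) l k = (J i j * M) k l := by
      rw [← Matrix.transpose_apply (M * J i j), Matrix.transpose_mul, hJ, hMt]
    have e2 : M1 * M1 - M * M = M1 * J i j + J i j * M := by rw [e]; noncomm_ring
    rw [this, ← Matrix.sub_apply, ← Matrix.add_apply, e2]
  simp only [e1]
  calc _ ≤ ∑ k, ∑ l, (|(M1 * J i j) k l| + |(M * J i j) l k|) :=
        Finset.sum_le_sum fun k _ => Finset.sum_le_sum fun l _ => abs_add_le _ _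
    _ = ∑ k, ∑ l, |(M1 * J i j) k l| + ∑ k, ∑ l, |(M * J i j) k l| := by
        simp only [Finset.sum_add_distrib]
        congr 1
        exact Finset.sum_comm
    _ ≤ 2 * n + 2 * n := add_le_add (sum_abs_mulJ h0 h1 hij _ hM1.abs) (sum_abs_mulJ h0 h1 hij _ hM.abs)
    _ = _ := by ring

lemma qq_inc : |qq (Mx u (setE x i j true)) - qq (Mx u (setE x i j false))| ≤ 8 * n ^ 2 := by
  have hM := cenM_Mx h0 h1 (setE x i j false)
  have hM1 := cenM_Mx h0 h1 (setE x i j true)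
  have h := sq_inc h0 h1 x hij
  set M := Mx u (setE x i j false)
  set M1 := Mx u (setE x i j true)
  unfold qq
  simp only [← Finset.sum_sub_distrib]
  refine (abs_sum2_le _).trans ?_
  calc _ ≤ ∑ k, ∑ l, (2 * n) * |(M1 * M1) k l - (M * M) k l| := by
        refine Finset.sum_le_sum fun k _ => Finset.sum_le_sum fun l _ => ?_
        have a := M2_abs_le hM k l
        have b := M2_abs_le hM1 k l
        rw [sq_sub_sq, abs_mul]
        gcongr
        exact (abs_add_le _ _).trans (by linarith)
    _ = (2 * n) * ∑ k, ∑ l, |(M1 * M1) k l - (M * M) k l| := by simp only [Finset.mul_sum]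
    _ ≤ (2 * n) * (4 * n) := by gcongr
    _ = _ := by ring

lemma tr3_inc : |tr3 (Mx u (setE x i j true)) - tr3 (Mx u (setE x i j false))| ≤ 6 * n := by
  have hM := cenM_Mx h0 h1 (setE x i j false)
  have hM1 := cenM_Mx h0 h1 (setE x i j true)
  have h := sq_inc h0 h1 x hij
  have e := Mx_setE_true u x hij
  set M := Mx u (setE x i j false)
  set M1 := Mx u (setE x i j true)
  unfold tr3
  simp only [← Finset.sum_sub_distrib]
  refine (abs_sum2_le _).trans ?_
  have hJ0 : ∀ k l, 0 ≤ J i j k l := by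
    intro k l; unfold J; simp only [Matrix.add_apply, Matrix.single_apply]; positivity
  calc _ ≤ ∑ k, ∑ l, (n * J i j k l + |(M1 * M1) k l - (M * M) k l|) := by
        refine Finset.sum_le_sum fun k _ => Finset.sum_le_sum fun l _ => ?_
        have e2 : M1 k l * (M1 * M1) k l - M k l * (M * M) k l
          = J i j k l * (M1 * M1) k l + M k l * ((M1 * M1) k l - (M * M) k l) := by
          have : M1 k l = M k l + J i j k l := by rw [e]; rfl
          rw [this]; ring
        rw [e2]
        refine (abs_add_le _ _).trans ?_
        rw [abs_mul, abs_mul, abs_of_nonneg (hJ0 k l), mul_comm (J i j k l)]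
        gcongr
        · exact hJ0 k l
        · exact M2_abs_le hM1 k l
        · exact mul_le_of_le_one_left (abs_nonneg _) (hM.abs _ _)
    _ = n * ∑ k, ∑ l, J i j k l + ∑ k, ∑ l, |(M1 * M1) k l - (M * M) k l| := by
        simp only [Finset.mul_sum, Finset.sum_add_distrib]
    _ ≤ n * 2 + 4 * n := by rw [sum_J]; gcongr
    _ = _ := by ring

end inc

/-! ### Test functions not depending on the edge they multiply -/

/-- The degrees of the endpoints of `ij` with the edge `ij` itself removed. -/
def HD (u : ℝ) (x : Config n) (i j : Fin n) : ℝ :=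
  rowS (Mx u x) i + rowS (Mx u x) j - 2 * Mx u x i j

lemma Mx_diag (u : ℝ) (x : Config n) (i : Fin n) : Mx u x i i = 0 := by simp [Mx]

lemma HD_set (u : ℝ) (x : Config n) (i j : Fin n) (b : Bool) (hij : i ≠ j) :
    HD u (setE x i j b) i j = HD u x i j := by
  have key : ∀ y : Config n, HD u y i j = ∑ k, ((if k = j then 0 else Mx u y i k)
      + (if k = i then 0 else Mx u y j k)) := by
    intro y
    have s : Mx u y j i = Mx u y i j := by
      unfold Mx; simp only [hij, hij.symm, if_false]; rw [adj_symm]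
    have a : ∀ k, (if k = j then 0 else Mx u y i k) = Mx u y i k - (if k = j then Mx u y i k else 0) := by
      intro k; split_ifs <;> simp
    have b : ∀ k, (if k = i then 0 else Mx u y j k) = Mx u y j k - (if k = i then Mx u y j k else 0) := by
      intro k; split_ifs <;> simp
    simp only [a, b, Finset.sum_add_distrib, Finset.sum_sub_distrib]
    simp only [Finset.sum_ite_eq', Finset.mem_univ, if_true, s]
    unfold HD rowS; ring
  rw [key, key]
  refine Finset.sum_congr rfl fun k _ => ?_
  congr 1
  · split_ifs with hk
    · rfl
    · exact Mx_setE_other u x hij b (by simp only [ne_eq, Sym2.eq_iff]; grind)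
  · split_ifs with hk
    · rfl
    · exact Mx_setE_other u x hij b (by simp only [ne_eq, Sym2.eq_iff]; grind)

lemma M2_set (u : ℝ) (x : Config n) (i j : Fin n) (b : Bool) (hij : i ≠ j) :
    (Mx u (setE x i j b) * Mx u (setE x i j b)) i j = (Mx u x * Mx u x) i j := by
  rw [Matrix.mul_apply, Matrix.mul_apply]
  refine Finset.sum_congr rfl fun k _ => ?_
  by_cases h1 : k = i
  · subst h1; simp [Mx_diag]
  by_cases h2 : k = j
  · subst h2; simp [Mx_diag]
  rw [Mx_setE_other u x hij b (by simp only [ne_eq, Sym2.eq_iff]; grind),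
    Mx_setE_other u x hij b (by simp only [ne_eq, Sym2.eq_iff]; grind)]

lemma PP_set (u : ℝ) (x : Config n) (i j : Fin n) (b : Bool) (hij : i ≠ j) :
    PP (Mx u (setE x i j b)) i j = PP (Mx u x) i j := by
  unfold PP
  refine Finset.sum_congr rfl fun k _ => Finset.sum_congr rfl fun l _ => ?_
  split_ifs with h
  · rfl
  push Not at h
  by_cases hk : k = i
  · subst hk; simp [Mx_diag]
  rw [Mx_setE_other u x hij b (k := i) (l := k) (by simp only [ne_eq, Sym2.eq_iff]; grind),
    Mx_setE_other u x hij b (k := k) (l := l) (by simp only [ne_eq, Sym2.eq_iff]; grind),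
    Mx_setE_other u x hij b (k := l) (l := j) (by simp only [ne_eq, Sym2.eq_iff]; grind)]

/-! ### Polynomial bounds -/

section polyb
variable {u : ℝ} (h0 : 0 < u) (h1 : u < 1)
include h0 h1

lemma poly_dd : Poly (fun n (x : Config n) => dd (Mx u x)) := by
  refine Poly.of_le 1 3 fun n hn x => ?_
  rw [abs_of_nonneg (dd_nonneg _)]
  have hM := cenM_Mx h0 h1 x
  calc dd (Mx u x) ≤ ∑ i : Fin n, (n : ℝ) ^ 2 :=
        Finset.sum_le_sum fun i _ => sq_le_sq' (abs_le.1 (rowS_abs_le hM i)).1 (abs_le.1 (rowS_abs_le hM i)).2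
    _ = _ := by simp; ring

lemma poly_totS : Poly (fun n (x : Config n) => totS (Mx u x)) :=
  Poly.sum2 1 0 fun n hn x i j => by simpa using (cenM_Mx h0 h1 x).abs i j

lemma poly_qq : Poly (fun n (x : Config n) => qq (Mx u x)) :=
  Poly.sum2 1 2 fun n hn x i j => by
    have := M2_abs_le (cenM_Mx h0 h1 x) i j
    rw [abs_pow, one_mul]; gcongr

lemma poly_tr3 : Poly (fun n (x : Config n) => tr3 (Mx u x)) :=
  Poly.sum2 1 1 fun n hn x i j => by
    rw [abs_mul, one_mul, pow_one]
    exact (mul_le_of_le_one_left (abs_nonneg _) ((cenM_Mx h0 h1 x).abs i j)).trans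
      (M2_abs_le (cenM_Mx h0 h1 x) i j)

lemma poly_ff : Poly (fun n (x : Config n) => ff (Mx u x)) :=
  Poly.of_le 1 2 fun n hn x => by
    rw [abs_of_nonneg ff_nonneg, one_mul]; exact ff_le (cenM_Mx h0 h1 x)

lemma HD_abs_le (x : Config n) (i j : Fin n) : |HD u x i j| ≤ 4 * n := by
  have hn : (1 : ℝ) ≤ n := by exact_mod_cast i.pos
  have hM := cenM_Mx h0 h1 x
  have a := abs_le.1 (rowS_abs_le hM i)
  have b := abs_le.1 (rowS_abs_le hM j)
  have c := abs_le.1 (hM.abs i j)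
  unfold HD
  rw [abs_le]; constructor <;> linarith

lemma PP_abs_le (x : Config n) (i j : Fin n) : |PP (Mx u x) i j| ≤ n ^ 2 := by
  have hM := cenM_Mx h0 h1 x
  unfold PP
  refine (abs_sum2_le _).trans ?_
  calc _ ≤ ∑ k : Fin n, ∑ l : Fin n, (1 : ℝ) := by
        refine Finset.sum_le_sum fun k _ => Finset.sum_le_sum fun l _ => ?_
        split_ifs
        · simp
        · rw [abs_mul, abs_mul]
          exact mul_le_one₀ (mul_le_one₀ (hM.abs _ _) (abs_nonneg _) (hM.abs _ _)) (abs_nonneg _)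
            (hM.abs _ _)
    _ = _ := by simp [sq]

lemma Lam_abs_le (x : Config n) (i j : Fin n) : |Lam u (Mx u x) i j| ≤ 1 := by
  by_cases hij : i = j
  · simp [Lam, hij]
  have hn : (1 : ℝ) ≤ n := by exact_mod_cast i.pos
  rw [Lam_eq h0 h1 x hij]
  have a : 0 ≤ codeg x i j / n := by
    unfold codeg; rw [Matrix.mul_apply]
    exact div_nonneg (Finset.sum_nonneg fun k _ => mul_nonneg (adj_nonneg _ _ _) (adj_nonneg _ _ _))
      (by linarith)
  have b : codeg x i j / n ≤ 1 := by
    rw [div_le_one (by linarith)]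
    unfold codeg; rw [Matrix.mul_apply]
    calc _ ≤ ∑ k : Fin n, (1 : ℝ) := Finset.sum_le_sum fun k _ =>
          mul_le_one₀ (adj_le_one _ _ _) (adj_nonneg _ _ _) (adj_le_one _ _ _)
      _ = n := by simp
  rw [abs_le]; constructor <;> nlinarith

end polyb

end TriCLT

namespace TriCLT

variable {n : ℕ}

/-! ### Negligible observables -/

lemma Sm.of {u : ℝ} {X : ∀ n : ℕ, Config n → ℝ} (k : ℕ) (C : ℝ) (hC : 0 ≤ C) (hp : Poly X)
    (hg : ∀ (n : ℕ) (δ : ℝ) (x : Config n), Scale n δ → Good u δ (Mx u x) →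
      |X n x| ≤ C * (δ * (n : ℝ) ^ k * Theta (Mx u x))) :
    Sm u (fun n x => X n x / (n : ℝ) ^ k) := by
  refine ⟨⟨C, hC, fun n δ x hs hG => ?_⟩, hp.div_n k⟩
  have hn := hs.n1
  rw [abs_div, abs_of_pos (by positivity : (0 : ℝ) < (n : ℝ) ^ k), div_le_iff₀ (by positivity)]
  calc _ ≤ _ := hg n δ x hs hG
    _ = _ := by ring

section
variable {α h u : ℝ} (hP : Pkg α h u)
include hP

lemma sum_sd_sub_le {x : Config n} (g : Fin n → Fin n → ℝ) {K : ℝ}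
    (hg : ∀ i j, i ≠ j → |g i j| ≤ K) :
    |∑ i, ∑ j, sd α h u x i j * g i j - α * (u * (1 - u)) * ∑ i, ∑ j, Lam u (Mx u x) i j * g i j|
      ≤ α ^ 2 * (K * ∑ i, ∑ j, Lam u (Mx u x) i j ^ 2) := by
  simp only [Finset.mul_sum, ← Finset.sum_sub_distrib]
  refine (abs_sum2_le _).trans (Finset.sum_le_sum fun i _ => Finset.sum_le_sum fun j _ => ?_)
  by_cases hij : i = j
  · simp [hij, sd, Lam]
  have e : sd α h u x i j * g i j - α * (u * (1 - u)) * (Lam u (Mx u x) i j * g i j)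
    = (sd α h u x i j - α * (u * (1 - u)) * Lam u (Mx u x) i j) * g i j := by ring
  rw [e, abs_mul]
  calc _ ≤ (α ^ 2 * Lam u (Mx u x) i j ^ 2) * K := by
        gcongr
        · exact sd_exp2 hP x i j
        · exact hg i j hij
    _ = _ := by ring

lemma sm_sdHD : Sm u (fun n x => (∑ i, ∑ j, sd α h u x i j * HD u x i j
    - 2 * α * u ^ 2 * (1 - u) * dd (Mx u x)
    - 2 * α * u ^ 2 * (1 - u) * (totS (Mx u x) ^ 2 / n)) / (n : ℝ) ^ 2) := by
  have hd := poly_dd hP.u0 hP.u1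
  have ht := poly_totS hP.u0 hP.u1
  refine Sm.of 2 (192 * α ^ 2 + 100 * |α * (u * (1 - u))|) (by positivity) ?_ ?_
  · refine ((Poly.sum2 4 1 fun n hn x i j => ?_).sub ((Poly.const _).mul hd)).sub
      ((Poly.const _).mul ?_)
    · rw [abs_mul, pow_one]
      exact (mul_le_of_le_one_left (abs_nonneg _) (sd_abs_le hP x i j)).trans
        (HD_abs_le hP.u0 hP.u1 x i j)
    · simpa [sq] using (ht.mul ht).div_n 1
  · intro n δ x hs hG
    have hM := cenM_Mx hP.u0 hP.u1 x
    have hdn := hs.dn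
    have hn := hs.n1
    have a := sum_sd_sub_le hP (x := x) (HD u x) (K := 4 * (δ * n)) (fun i j _ => by
      have a := abs_le.1 (hG.row i)
      have b := abs_le.1 (hG.row j)
      have c := abs_le.1 (hM.abs i j)
      unfold HD
      rw [abs_le]; constructor <;> linarith)
    have b := approx_row hs hM hG
    have c := sum_Lam_sq_le hs hM
    have hδ := hs.pos
    have c' : α ^ 2 * (4 * (δ * n) * ∑ i, ∑ j, Lam u (Mx u x) i j ^ 2)
      ≤ α ^ 2 * (4 * (δ * n) * (48 * n * Theta (Mx u x))) := by gcongr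
    have b' := mul_le_mul_of_nonneg_left b (abs_nonneg (α * (u * (1 - u))))
    rw [← abs_mul] at b'
    have e : ∑ i, ∑ j, sd α h u x i j * HD u x i j
        - 2 * α * u ^ 2 * (1 - u) * dd (Mx u x)
        - 2 * α * u ^ 2 * (1 - u) * (totS (Mx u x) ^ 2 / n)
      = (∑ i, ∑ j, sd α h u x i j * HD u x i j
          - α * (u * (1 - u)) * ∑ i, ∑ j, Lam u (Mx u x) i j * HD u x i j)
        + (α * (u * (1 - u))) * (∑ i, ∑ j, Lam u (Mx u x) i j *
          (rowS (Mx u x) i + rowS (Mx u x) j - 2 * Mx u x i j)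
          - 2 * u * dd (Mx u x) - 2 * u * totS (Mx u x) ^ 2 / n) := by
      simp only [HD]; ring
    rw [e]
    refine (abs_add_le _ _).trans ((add_le_add (a.trans c') b').trans (le_of_eq ?_))
    ring

lemma sm_sdPP : Sm u (fun n x => (∑ i, ∑ j, sd α h u x i j * PP (Mx u x) i j) / (n : ℝ) ^ 3) := by
  refine Sm.of 3 (50 * |α|) (by positivity) ?_ ?_
  · refine Poly.sum2 1 2 fun n hn x i j => ?_
    rw [abs_mul, one_mul]
    exact (mul_le_of_le_one_left (abs_nonneg _) (sd_abs_le hP x i j)).trans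
        (PP_abs_le hP.u0 hP.u1 x i j)
  · intro n δ x hs hG
    have hM := cenM_Mx hP.u0 hP.u1 x
    have a := sum_Lam_PP_le hs hM hG
    refine (abs_sum2_le _).trans ?_
    calc _ ≤ ∑ i, ∑ j, |α| * (|Lam u (Mx u x) i j| * |PP (Mx u x) i j|) := by
          refine Finset.sum_le_sum fun i _ => Finset.sum_le_sum fun j _ => ?_
          rw [abs_mul, ← mul_assoc]
          gcongr
          exact sd_exp1 hP x i j
      _ = |α| * ∑ i, ∑ j, (|Lam u (Mx u x) i j| * |PP (Mx u x) i j|) := by simp only [Finset.mul_sum]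
      _ ≤ |α| * (50 * (δ * n ^ 3 * Theta (Mx u x))) := by gcongr
      _ = _ := by ring

omit hP in
lemma sm_aux {k : ℕ} {C δ : ℝ} (hC : 0 ≤ C) (hs : Scale n δ) (M : Matrix (Fin n) (Fin n) ℝ) :
    C * (δ * (n : ℝ) ^ k) ≤ C * (δ * (n : ℝ) ^ k * Theta M) := by
  have := one_le_Theta M
  have := hs.pos
  exact mul_le_mul_of_nonneg_left (le_mul_of_one_le_right (by positivity) (one_le_Theta M)) hC

lemma sm_ff : Sm u (fun n x => (ff (Mx u x) - (n : ℝ) ^ 2 * (u * (1 - u))) / (n : ℝ) ^ 2) := by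
  refine Sm.of 2 2 (by positivity) ?_ ?_
  · exact (poly_ff hP.u0 hP.u1).sub ((Poly.npow 2).mul (Poly.const _))
  · intro n δ x hs hG
    exact (approx_ff hs (cenM_Mx hP.u0 hP.u1 x) hG).trans (sm_aux (by norm_num) hs _)

lemma sm_MPP : Sm u (fun n x => (∑ i, ∑ j, Mx u x i j * PP (Mx u x) i j
    - (qq (Mx u x) - 2 * ((n : ℝ) ^ 3 * (u * (1 - u)) ^ 2))) / (n : ℝ) ^ 3) := by
  refine Sm.of 3 21 (by positivity) ?_ ?_
  · refine (Poly.sum2 1 2 fun n hn x i j => ?_).sub ((poly_qq hP.u0 hP.u1).sub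
      ((Poly.const _).mul ((Poly.npow 3).mul (Poly.const _))))
    rw [abs_mul, one_mul]
    exact (mul_le_of_le_one_left (abs_nonneg _) ((cenM_Mx hP.u0 hP.u1 x).abs i j)).trans
        (PP_abs_le hP.u0 hP.u1 x i j)
  · intro n δ x hs hG
    exact (approx_MPP hs (cenM_Mx hP.u0 hP.u1 x) hG).trans (sm_aux (by norm_num) hs _)

lemma sm_absHD : Sm u (fun n x => (∑ i, ∑ j, |HD u x i j|) / (n : ℝ) ^ 3) := by
  refine Sm.of 3 4 (by positivity) ?_ ?_
  · refine Poly.sum2 4 1 fun n hn x i j => ?_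
    rw [abs_abs, pow_one]
    exact HD_abs_le hP.u0 hP.u1 x i j
  · intro n δ x hs hG
    refine le_trans ?_ (sm_aux (by norm_num) hs _)
    have hM := cenM_Mx hP.u0 hP.u1 x
    have hdn := hs.dn
    rw [abs_of_nonneg (Finset.sum_nonneg fun i _ => Finset.sum_nonneg fun j _ => abs_nonneg _)]
    calc _ ≤ ∑ i : Fin n, ∑ j : Fin n, 4 * (δ * n) := by
          refine Finset.sum_le_sum fun i _ => Finset.sum_le_sum fun j _ => ?_
          have a := abs_le.1 (hG.row i)
          have b := abs_le.1 (hG.row j)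
          have c := abs_le.1 (hM.abs i j)
          unfold HD
          rw [abs_le]; constructor <;> linarith
      _ = _ := by simp; ring

lemma sm_absPP : Sm u (fun n x => (∑ i, ∑ j, |PP (Mx u x) i j|) / (n : ℝ) ^ 4) := by
  refine Sm.of 4 50 (by positivity) ?_ ?_
  · refine Poly.sum2 1 2 fun n hn x i j => ?_
    rw [abs_abs, one_mul]
    exact PP_abs_le hP.u0 hP.u1 x i j
  · intro n δ x hs hG
    rw [abs_of_nonneg (Finset.sum_nonneg fun i _ => Finset.sum_nonneg fun j _ => abs_nonneg _)]
    exact sum_absPP_le hs (cenM_Mx hP.u0 hP.u1 x) hG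

lemma sm_absM2 : Sm u (fun n x => (∑ i, ∑ j, |(Mx u x * Mx u x) i j|) / (n : ℝ) ^ 3) := by
  refine Sm.of 3 1 (by positivity) ?_ ?_
  · refine Poly.sum2 1 1 fun n hn x i j => ?_
    rw [abs_abs, one_mul, pow_one]
    exact M2_abs_le (cenM_Mx hP.u0 hP.u1 x) i j
  · intro n δ x hs hG
    rw [abs_of_nonneg (Finset.sum_nonneg fun i _ => Finset.sum_nonneg fun j _ => abs_nonneg _), one_mul]
    exact sum_absM2_le hs

lemma sm_sdM2 : Sm u (fun n x => (∑ i, ∑ j, sd α h u x i j * (Mx u x * Mx u x) i j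
    - α * (u * (1 - u)) * ((qq (Mx u x) - (n : ℝ) ^ 3 * (u * (1 - u)) ^ 2) / n)) / (n : ℝ) ^ 2) := by
  refine Sm.of 2 (336 * α ^ 2 + 30 * |α * (u * (1 - u))|) (by positivity) ?_ ?_
  · refine (Poly.sum2 1 1 fun n hn x i j => ?_).sub ((Poly.const _).mul ?_)
    · rw [abs_mul, one_mul, pow_one]
      exact (mul_le_of_le_one_left (abs_nonneg _) (sd_abs_le hP x i j)).trans
        (M2_abs_le (cenM_Mx hP.u0 hP.u1 x) i j)
    · simpa using ((poly_qq hP.u0 hP.u1).sub ((Poly.npow 3).mul (Poly.const _))).div_n 1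
  · intro n δ x hs hG
    have hM := cenM_Mx hP.u0 hP.u1 x
    have hn := hs.n1
    have hδ := hs.pos
    have a := sum_sd_sub_le hP (x := x) (fun i j => (Mx u x * Mx u x) i j) (K := 7 * δ * n)
      (fun i j hij => M2_off_le hs hM hG hij)
    have c := sum_Lam_sq_le hs hM
    have c' : α ^ 2 * (7 * δ * n * ∑ i, ∑ j, Lam u (Mx u x) i j ^ 2)
      ≤ α ^ 2 * (7 * δ * n * (48 * n * Theta (Mx u x))) := by gcongr
    have b1 := approx_LamM2 hs hM hG
    have b2 := (approx_VV hs hM hG).trans (sm_aux (by norm_num) hs (Mx u x))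
    have b3 : |n * ∑ i, ∑ j, Lam u (Mx u x) i j * (Mx u x * Mx u x) i j
        - (qq (Mx u x) - (n : ℝ) ^ 3 * (u * (1 - u)) ^ 2)| ≤ 30 * (δ * n ^ 3 * Theta (Mx u x)) := by
      have := (abs_sub_le _ (VV (Mx u x)) _).trans (add_le_add b1 b2)
      linarith
    have b4 : |∑ i, ∑ j, Lam u (Mx u x) i j * (Mx u x * Mx u x) i j
        - (qq (Mx u x) - (n : ℝ) ^ 3 * (u * (1 - u)) ^ 2) / n| ≤ 30 * (δ * n ^ 2 * Theta (Mx u x)) := by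
      have e : ∑ i, ∑ j, Lam u (Mx u x) i j * (Mx u x * Mx u x) i j
        - (qq (Mx u x) - (n : ℝ) ^ 3 * (u * (1 - u)) ^ 2) / n
        = (n * ∑ i, ∑ j, Lam u (Mx u x) i j * (Mx u x * Mx u x) i j
        - (qq (Mx u x) - (n : ℝ) ^ 3 * (u * (1 - u)) ^ 2)) / n := by field_simp
      rw [e, abs_div, abs_of_pos (by linarith : (0:ℝ) < n), div_le_iff₀ (by linarith)]
      exact b3.trans (le_of_eq (by ring))
    have b' := mul_le_mul_of_nonneg_left b4 (abs_nonneg (α * (u * (1 - u))))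
    rw [← abs_mul] at b'
    have e : ∑ i, ∑ j, sd α h u x i j * (Mx u x * Mx u x) i j
        - α * (u * (1 - u)) * ((qq (Mx u x) - (n : ℝ) ^ 3 * (u * (1 - u)) ^ 2) / n)
      = (∑ i, ∑ j, sd α h u x i j * (Mx u x * Mx u x) i j
          - α * (u * (1 - u)) * ∑ i, ∑ j, Lam u (Mx u x) i j * (Mx u x * Mx u x) i j)
        + α * (u * (1 - u)) * (∑ i, ∑ j, Lam u (Mx u x) i j * (Mx u x * Mx u x) i j
          - (qq (Mx u x) - (n : ℝ) ^ 3 * (u * (1 - u)) ^ 2) / n) := by ring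
    rw [e]
    refine (abs_add_le _ _).trans ((add_le_add (a.trans c') b').trans (le_of_eq ?_))
    ring

lemma sm_LamM2 : Sm u (fun n x => (∑ i, ∑ j, Lam u (Mx u x) i j * (Mx u x * Mx u x) i j
    - ((qq (Mx u x) - (n : ℝ) ^ 3 * (u * (1 - u)) ^ 2) / n)) / (n : ℝ) ^ 2) := by
  refine Sm.of 2 30 (by positivity) ?_ ?_
  · refine (Poly.sum2 1 1 fun n hn x i j => ?_).sub ?_
    · rw [abs_mul, one_mul, pow_one]
      exact (mul_le_of_le_one_left (abs_nonneg _) (Lam_abs_le hP.u0 hP.u1 x i j)).trans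
        (M2_abs_le (cenM_Mx hP.u0 hP.u1 x) i j)
    · simpa using ((poly_qq hP.u0 hP.u1).sub ((Poly.npow 3).mul (Poly.const _))).div_n 1
  · intro n δ x hs hG
    have hM := cenM_Mx hP.u0 hP.u1 x
    have hn := hs.n1
    have hδ := hs.pos
    have b1 := approx_LamM2 hs hM hG
    have b2 := (approx_VV hs hM hG).trans (sm_aux (by norm_num) hs (Mx u x))
    have b3 : |n * ∑ i, ∑ j, Lam u (Mx u x) i j * (Mx u x * Mx u x) i j
        - (qq (Mx u x) - (n : ℝ) ^ 3 * (u * (1 - u)) ^ 2)| ≤ 30 * (δ * n ^ 3 * Theta (Mx u x)) := by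
      have := (abs_sub_le _ (VV (Mx u x)) _).trans (add_le_add b1 b2)
      linarith
    have e : ∑ i, ∑ j, Lam u (Mx u x) i j * (Mx u x * Mx u x) i j
        - (qq (Mx u x) - (n : ℝ) ^ 3 * (u * (1 - u)) ^ 2) / n
        = (n * ∑ i, ∑ j, Lam u (Mx u x) i j * (Mx u x * Mx u x) i j
        - (qq (Mx u x) - (n : ℝ) ^ 3 * (u * (1 - u)) ^ 2)) / n := by field_simp
    rw [e, abs_div, abs_of_pos (by linarith : (0:ℝ) < n), div_le_iff₀ (by linarith)]
    exact b3.trans (le_of_eq (by ring))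

lemma sm_tot : Sm u (fun n x => totS (Mx u x) / (n : ℝ) ^ 2) := by
  refine Sm.of 2 1 (by positivity) (poly_totS hP.u0 hP.u1) ?_
  intro n δ x hs hG
  exact (totS_abs_le hs (cenM_Mx hP.u0 hP.u1 x) hG).trans
    ((one_mul _).symm.le.trans (sm_aux (by norm_num) hs _))

lemma poly_sumsd : Poly (fun n x => ∑ i, ∑ j, sd α h u (n := n) x i j) :=
  Poly.sum2 1 0 fun n hn x i j => by simpa using sd_abs_le hP x i j

lemma poly_sumLam : Poly (fun n x => ∑ i, ∑ j, Lam u (n := n) (Mx u x) i j) :=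
  Poly.sum2 1 0 fun n hn x i j => by simpa using Lam_abs_le hP.u0 hP.u1 x i j

lemma poly_sumLam2 : Poly (fun n x => ∑ i, ∑ j, Lam u (n := n) (Mx u x) i j ^ 2) :=
  Poly.sum2 1 0 fun n hn x i j => by
    rw [abs_pow, pow_zero, mul_one]
    exact pow_le_one₀ (abs_nonneg _) (Lam_abs_le hP.u0 hP.u1 x i j)

lemma sm_tot_sd : Sm u (fun n x => (totS (Mx u x) * (∑ i, ∑ j, sd α h u x i j
    - 2 * α * u ^ 2 * (1 - u) * totS (Mx u x))) / (n : ℝ) ^ 3) := by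
  have ht := poly_totS hP.u0 hP.u1
  refine Sm.of 3 (48 * α ^ 2 + 8 * |α * (u * (1 - u))|) (by positivity)
    (ht.mul ((poly_sumsd hP).sub ((Poly.const _).mul ht))) ?_
  intro n δ x hs hG
  have hM := cenM_Mx hP.u0 hP.u1 x
  have hn := hs.n1
  have hδ := hs.pos
  have hT := one_le_Theta (Mx u x)
  have a := sum_sd_sub_le hP (x := x) (fun _ _ => 1) (K := 1) (fun i j _ => by simp)
  simp only [mul_one, one_mul] at a
  have c := sum_Lam_sq_le hs hM
  have c' : α ^ 2 * (∑ i, ∑ j, Lam u (Mx u x) i j ^ 2)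
    ≤ α ^ 2 * (48 * n * Theta (Mx u x)) := by gcongr
  have s1 := totS_abs_le hs hM hG
  have s2 : |totS (Mx u x)| ≤ n ^ 2 := s1.trans (mul_le_of_le_one_left (by positivity) hs.le1)
  have s2' := abs_le.1 s2
  have hL := sum_Lam hM
  have d1 := dd_le hs (M := Mx u x)
  have d0 := dd_nonneg (Mx u x)
  have f1 := ff_le hM
  have f0 := ff_nonneg (M := Mx u x)
  have hu0 := hP.u0
  have hu1 := hP.u1
  have b : |∑ i, ∑ j, Lam u (Mx u x) i j - 2 * u * totS (Mx u x)| ≤ 8 * (n * Theta (Mx u x)) := by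
    have e : (n : ℝ) * (∑ i, ∑ j, Lam u (Mx u x) i j - 2 * u * totS (Mx u x))
      = dd (Mx u x) - ff (Mx u x) - 4 * (u * totS (Mx u x)) - 2 * (u ^ 2 * (n * (n - 1))) := by
      rw [mul_sub, hL]; ring
    have a1 := abs_le.1 ((abs_u_mul hM (totS (Mx u x))).trans s2)
    have a2 := abs_le.1 (abs_usq_mul hM ((n : ℝ) * (n - 1)))
    rw [abs_of_nonneg (by nlinarith)] at a2
    have a3 : (n : ℝ) ^ 2 ≤ n ^ 2 * Theta (Mx u x) := le_mul_of_one_le_right (by positivity) hT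
    have : |(n : ℝ) * (∑ i, ∑ j, Lam u (Mx u x) i j - 2 * u * totS (Mx u x))|
        ≤ n * (8 * (n * Theta (Mx u x))) := by
      rw [e, abs_le]
      constructor <;> nlinarith
    rw [abs_mul, abs_of_pos (by linarith : (0:ℝ) < n)] at this
    exact le_of_mul_le_mul_left this (by linarith)
  have b' := mul_le_mul_of_nonneg_left b (abs_nonneg (α * (u * (1 - u))))
  rw [← abs_mul] at b'
  have e : ∑ i, ∑ j, sd α h u x i j - 2 * α * u ^ 2 * (1 - u) * totS (Mx u x)
    = (∑ i, ∑ j, sd α h u x i j - α * (u * (1 - u)) * ∑ i, ∑ j, Lam u (Mx u x) i j)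
      + α * (u * (1 - u)) * (∑ i, ∑ j, Lam u (Mx u x) i j - 2 * u * totS (Mx u x)) := by ring
  have f := (abs_add_le _ _).trans (add_le_add (a.trans c') b')
  rw [← e] at f
  rw [abs_mul]
  calc _ ≤ (δ * n ^ 2) * (α ^ 2 * (48 * n * Theta (Mx u x))
        + |α * (u * (1 - u))| * (8 * (n * Theta (Mx u x)))) := by gcongr
    _ = _ := by ring

/-- Third-order expansion of the sum of the conditional means. -/
lemma sm_sumsd : Sm u (fun n x => (∑ i, ∑ j, sd α h u x i j
    - α * (u * (1 - u)) * ∑ i, ∑ j, Lam u (Mx u x) i j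
    - α ^ 2 * (u * (1 - u)) * (1 - 2 * u) / 2 * ∑ i, ∑ j, Lam u (Mx u x) i j ^ 2) / (n : ℝ) ^ 1) := by
  refine Sm.of 1 (96 * |α| ^ 3) (by positivity) (((poly_sumsd hP).sub
    ((Poly.const _).mul (poly_sumLam hP))).sub ((Poly.const _).mul (poly_sumLam2 hP))) ?_
  intro n δ x hs hG
  have hM := cenM_Mx hP.u0 hP.u1 x
  have hδ := hs.pos
  have c := sum_Lam_sq_le hs hM
  simp only [Finset.mul_sum, ← Finset.sum_sub_distrib]
  refine (abs_sum2_le _).trans ?_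
  calc _ ≤ ∑ i, ∑ j, 2 * |α| ^ 3 * (δ * Lam u (Mx u x) i j ^ 2) := by
        refine Finset.sum_le_sum fun i _ => Finset.sum_le_sum fun j _ => ?_
        refine (sd_exp3 hP x i j).trans ?_
        gcongr
        rw [← sq_abs (Lam u (Mx u x) i j), pow_succ, mul_comm]
        gcongr
        exact hG.lam i j
    _ = 2 * |α| ^ 3 * (δ * ∑ i, ∑ j, Lam u (Mx u x) i j ^ 2) := by simp only [Finset.mul_sum]
    _ ≤ 2 * |α| ^ 3 * (δ * (48 * n * Theta (Mx u x))) := by gcongr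
    _ = _ := by ring

lemma sm_Lam2 : Sm u (fun n x => ((n : ℝ) ^ 2 * ∑ i, ∑ j, Lam u (Mx u x) i j ^ 2
    - (qq (Mx u x) - n ^ 3 * (u * (1 - u)) ^ 2 + 2 * u ^ 2 * n * dd (Mx u x)
      + 2 * u ^ 2 * totS (Mx u x) ^ 2)) / (n : ℝ) ^ 3) := by
  refine Sm.of 3 210 (by positivity) ?_ ?_
  · refine ((Poly.npow 2).mul (poly_sumLam2 hP)).sub ((((poly_qq hP.u0 hP.u1).sub
      ((Poly.npow 3).mul (Poly.const _))).add (((Poly.const _).mul (Poly.npow 1)).mul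
        (poly_dd hP.u0 hP.u1) |> fun h => by simpa using h)).add ((Poly.const _).mul ?_))
    simpa [sq] using (poly_totS hP.u0 hP.u1).mul (poly_totS hP.u0 hP.u1)
  · intro n δ x hs hG
    have hM := cenM_Mx hP.u0 hP.u1 x
    have b1 := abs_le.1 (approx_Lam2 hs hM hG)
    have b2 := abs_le.1 ((approx_VV hs hM hG).trans (sm_aux (by norm_num) hs (Mx u x)))
    rw [abs_le]
    constructor <;> linarith

end

end TriCLT

namespace TriCLT

variable {n : ℕ}

/-! ### Moment bound -/

lemma ibp_one (α h : ℝ) (H : Config n → Fin n → Fin n → ℝ)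
    (hH : ∀ x i j b, i ≠ j → H (setE x i j b) i j = H x i j) :
    Ex α h (fun x => ∑ i, ∑ j, cen α h x i j * H x i j) = 0 := by
  have := ibp α h H (fun _ => (1 : ℝ)) hH
  simpa [Ex_const] using this

lemma sum_cen (α h u : ℝ) (x : Config n) (g : Fin n → Fin n → ℝ) :
    ∑ i, ∑ j, cen α h x i j * g i j
      = ∑ i, ∑ j, Mx u x i j * g i j - ∑ i, ∑ j, sd α h u x i j * g i j := by
  simp only [cen_eq α h u, sub_mul, Finset.sum_sub_distrib]

lemma sum_M_HD {u : ℝ} (h0 : 0 < u) (h1 : u < 1) (x : Config n) :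
    ∑ i, ∑ j, Mx u x i j * HD u x i j = 2 * dd (Mx u x) - 2 * ff (Mx u x) := by
  have hM := cenM_Mx h0 h1 x
  have e : ∀ i j, Mx u x i j * HD u x i j = Mx u x i j * rowS (Mx u x) i
    + Mx u x i j * rowS (Mx u x) j - 2 * Mx u x i j ^ 2 := by
    intro i j; unfold HD; ring
  simp only [e, Finset.sum_add_distrib, Finset.sum_sub_distrib, ← Finset.mul_sum]
  have a : ∑ i, ∑ j, Mx u x i j * rowS (Mx u x) i = dd (Mx u x) := by
    unfold dd
    refine Finset.sum_congr rfl fun i _ => ?_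
    rw [← Finset.sum_mul, sq]; rfl
  have b : ∑ i, ∑ j, Mx u x i j * rowS (Mx u x) j = dd (Mx u x) := by
    unfold dd
    rw [Finset.sum_comm]
    refine Finset.sum_congr rfl fun i _ => ?_
    rw [← Finset.sum_mul, colS hM, sq]
  have c : ∑ i, ∑ j, Mx u x i j ^ 2 = ff (Mx u x) := rfl
  have a' : ∑ i, (∑ j, Mx u x i j) * rowS (Mx u x) i = dd (Mx u x) := by
    rw [← a]; simp only [Finset.sum_mul]
  rw [b, c]
  simp only [← Finset.sum_mul] at *
  rw [a']; ring

lemma totS_sq_le (M : Matrix (Fin n) (Fin n) ℝ) : totS M ^ 2 ≤ n * dd M := by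
  have := sq_sum_le_card_mul_sum_sq (s := (Finset.univ : Finset (Fin n))) (f := rowS M)
  simpa [totS, dd] using this

section
variable {α h u : ℝ} (hP : Pkg α h u) (hGP : GP α h u)
include hP hGP

/-- A priori moment bound: integration by parts against `HD` and `PP` expresses `E dd` and `E qq` in
terms of constants and of errors `O(δ E Theta)`, which are absorbed for small `δ`. -/
lemma Theta_bdd : ∃ C : ℝ, 0 ≤ C ∧ ∀ᶠ n : ℕ in atTop,
    Ex α h (fun x : Config n => Theta (Mx u x)) ≤ C := by
  obtain ⟨C1, hC1, g1⟩ := (sm_sdHD hP).ex_le hGP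
  obtain ⟨C2, hC2, g2⟩ := (sm_sdPP hP).ex_le hGP
  obtain ⟨C3, hC3, g3⟩ := (sm_MPP hP).ex_le hGP
  set κ := 2 * α * u ^ 2 * (1 - u) with hκ
  have hk1 : κ < 1 := hP.kap
  set m := min (2 - 2 * κ) 2 with hm
  have hm0 : 0 < m := lt_min (by linarith) (by norm_num)
  set D := C1 / m + C2 + C3 with hD
  have hD0 : 0 ≤ D := by positivity
  set δ := 1 / (2 * (D + 1)) with hδ
  have hδ0 : 0 < δ := by positivity
  have hδ1 : δ ≤ 1 := by rw [hδ, div_le_one (by positivity)]; linarith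
  have hDδ : D * δ ≤ 1 / 2 := by
    rw [hδ, mul_one_div, div_le_iff₀ (by positivity)]; linarith
  refine ⟨2 * (3 + 3 / m + 2), by positivity, ?_⟩
  filter_upwards [g1 δ hδ0 hδ1, g2 δ hδ0 hδ1, g3 δ hδ0 hδ1, eventually_ge_atTop 1] with n k1 k2 k3 hn
  have hn' : (1 : ℝ) ≤ n := by exact_mod_cast hn
  have hn0 : (n : ℝ) ≠ 0 := by positivity
  set X1 : Config n → ℝ := fun x => (∑ i, ∑ j, sd α h u x i j * HD u x i j
    - κ * dd (Mx u x) - κ * (totS (Mx u x) ^ 2 / n)) / (n : ℝ) ^ 2 with hX1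
  set X2 : Config n → ℝ := fun x => (∑ i, ∑ j, sd α h u x i j * PP (Mx u x) i j) / (n : ℝ) ^ 3
  set X3 : Config n → ℝ := fun x => (∑ i, ∑ j, Mx u x i j * PP (Mx u x) i j
    - (qq (Mx u x) - 2 * ((n : ℝ) ^ 3 * (u * (1 - u)) ^ 2))) / (n : ℝ) ^ 3
  have z1 := ibp_one α h (HD (n := n) u) (fun x i j b hij => HD_set u x i j b hij)
  have z2 := ibp_one α h (fun x : Config n => PP (Mx u x)) (fun x i j b hij => PP_set u x i j b hij)
  have p1 : ∀ x : Config n, dd (Mx u x) / n ^ 2 ≤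
      (1 / m) * (|X1 x| + (2 + (1 / (n : ℝ) ^ 2) * ∑ i, ∑ j, cen α h x i j * HD u x i j)) := by
    intro x
    have hf := ff_le (cenM_Mx hP.u0 hP.u1 x)
    have hx := totS_sq_le (Mx u x)
    have hd := dd_nonneg (Mx u x)
    have e : X1 x + (1 / (n : ℝ) ^ 2) * ∑ i, ∑ j, cen α h x i j * HD u x i j
      = ((2 - κ) * dd (Mx u x) - κ * (totS (Mx u x) ^ 2 / n)) / (n : ℝ) ^ 2 - 2 * (ff (Mx u x) / n ^ 2) := by
      rw [sum_cen α h u, sum_M_HD hP.u0 hP.u1, hX1]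
      ring
    have f : ff (Mx u x) / n ^ 2 ≤ 1 := by rw [div_le_one (by positivity)]; exact hf
    have g : m * dd (Mx u x) ≤ (2 - κ) * dd (Mx u x) - κ * (totS (Mx u x) ^ 2 / n) := by
      have t : totS (Mx u x) ^ 2 / n ≤ dd (Mx u x) := by
        rw [div_le_iff₀ (by positivity)]; linarith
      have t0 : 0 ≤ totS (Mx u x) ^ 2 / n := by positivity
      rcases le_total 0 κ with hk | hk
      · have : m ≤ 2 - 2 * κ := min_le_left _ _
        nlinarith [mul_le_mul_of_nonneg_left t hk]
      · have : m ≤ 2 := min_le_right _ _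
        nlinarith
    have g' : m * (dd (Mx u x) / n ^ 2) ≤ ((2 - κ) * dd (Mx u x) - κ * (totS (Mx u x) ^ 2 / n)) / (n : ℝ) ^ 2 := by
      rw [← mul_div_assoc]; gcongr
    rw [one_div_mul_eq_div, le_div_iff₀ hm0]
    have := le_abs_self (X1 x)
    linarith
  have p2 : ∀ x : Config n, qq (Mx u x) / n ^ 3 ≤ 2 + |X3 x| + |X2 x|
      + (1 / (n : ℝ) ^ 3) * ∑ i, ∑ j, cen α h x i j * PP (Mx u x) i j := by
    intro x
    have e : qq (Mx u x) / n ^ 3 = 2 * (u * (1 - u)) ^ 2 - X3 x + X2 x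
      + (1 / (n : ℝ) ^ 3) * ∑ i, ∑ j, cen α h x i j * PP (Mx u x) i j := by
      rw [sum_cen α h u]
      simp only [X3, X2]
      field_simp; ring
    have a := neg_abs_le (X3 x)
    have b := le_abs_self (X2 x)
    have c : (u * (1 - u)) ^ 2 ≤ 1 := by
      have := hP.u0; have := hP.u1
      exact pow_le_one₀ (by nlinarith) (by nlinarith)
    linarith
  have q1 := Ex_mono α h p1
  have q2 := Ex_mono α h p2
  rw [Ex_mul, Ex_add, Ex_add, Ex_const, Ex_mul, z1] at q1
  rw [Ex_add, Ex_add, Ex_add, Ex_const, Ex_mul, z2] at q2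
  have q3 : Ex α h (fun x : Config n => Theta (Mx u x))
    = 1 + Ex α h (fun x : Config n => dd (Mx u x) / n ^ 2) + Ex α h (fun x : Config n => qq (Mx u x) / n ^ 3) := by
    unfold Theta
    rw [Ex_add, Ex_add, Ex_const]
  set t := Ex α h (fun x : Config n => Theta (Mx u x))
  have ht : 0 ≤ t := Ex_nonneg α h fun x => by linarith [one_le_Theta (Mx u x)]
  have r1 : (1 / m) * (Ex α h (fun x => |X1 x|) + (2 + 1 / (n : ℝ) ^ 2 * 0))
      ≤ (1 / m) * ((C1 * δ * t + 1) + 2) := by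
    gcongr <;> linarith
  have r2 : D * δ * t ≤ 1 / 2 * t := by gcongr
  have r3 : D * δ * t = (1 / m) * (C1 * δ * t) + C2 * δ * t + C3 * δ * t := by rw [hD]; ring
  have r4 : (1 / m) * ((C1 * δ * t + 1) + 2) = (1 / m) * (C1 * δ * t) + 3 / m := by ring
  linarith

/-- Convergence to `0` in `L¹` of the Gibbs measures. -/
def L1o (α h : ℝ) (X : ∀ n : ℕ, Config n → ℝ) : Prop :=
  Tendsto (fun n => Ex α h (fun x : Config n => |X n x|)) atTop (𝓝 0)

lemma Sm.l1o {X : ∀ n : ℕ, Config n → ℝ} (hX : Sm u X) : L1o α h X := by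
  obtain ⟨C0, hC0, g0⟩ := Theta_bdd hP hGP
  obtain ⟨C, hC, g⟩ := hX.ex_le hGP
  unfold L1o
  rw [Metric.tendsto_atTop']
  intro ε hε
  set δ := min 1 (ε / (2 * (C * C0 + 1))) with hδ
  have hδ0 : 0 < δ := lt_min one_pos (by positivity)
  have hev := (g δ hδ0 (min_le_left _ _)).and g0
  obtain ⟨N, hN⟩ := eventually_atTop.1 hev
  refine ⟨N, fun n hn => ?_⟩
  obtain ⟨a, b⟩ := hN n hn.le
  rw [Real.dist_eq, sub_zero, abs_of_nonneg (Ex_nonneg α h fun x => abs_nonneg _)]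
  have c : C * δ * Ex α h (fun x : Config n => Theta (Mx u x)) ≤ C * δ * C0 := by gcongr
  have d : δ ≤ ε / (2 * (C * C0 + 1)) := min_le_right _ _
  rw [le_div_iff₀ (by positivity)] at d
  nlinarith

end

section L1
variable {α h : ℝ} {X Y : ∀ n : ℕ, Config n → ℝ}

lemma L1o.add (hX : L1o α h X) (hY : L1o α h Y) : L1o α h (fun n x => X n x + Y n x) := by
  have := Tendsto.add hX hY
  rw [add_zero] at this
  refine squeeze_zero (fun n => Ex_nonneg α h fun x => abs_nonneg _) (fun n => ?_) this
  rw [← Ex_add]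
  exact Ex_mono α h fun x => abs_add_le _ _

lemma L1o.const_mul (hX : L1o α h X) (c : ℝ) : L1o α h (fun n x => c * X n x) := by
  have := Tendsto.const_mul |c| hX
  rw [mul_zero] at this
  refine this.congr fun n => ?_
  rw [← Ex_mul]; simp only [abs_mul]

lemma L1o.of_le (hX : L1o α h X) (hXY : ∀ᶠ n in atTop, ∀ x : Config n, |Y n x| ≤ |X n x|) :
    L1o α h Y := by
  refine squeeze_zero' (Eventually.of_forall fun n => Ex_nonneg α h fun x => abs_nonneg _) ?_ hX
  filter_upwards [hXY] with n hn
  exact Ex_mono α h hn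

lemma L1o.congr (hX : L1o α h X) (hXY : ∀ n, 1 ≤ n → ∀ x : Config n, X n x = Y n x) :
    L1o α h Y :=
  hX.of_le (by filter_upwards [eventually_ge_atTop 1] with n hn x; rw [hXY n hn x])

lemma L1o.neg (hX : L1o α h X) : L1o α h (fun n x => - X n x) := by
  simpa using hX.const_mul (-1)

lemma L1o.sub (hX : L1o α h X) (hY : L1o α h Y) : L1o α h (fun n x => X n x - Y n x) := by
  simpa [sub_eq_add_neg] using hX.add hY.neg

lemma L1o.of_tendsto {c : ℕ → ℝ} (hc : Tendsto c atTop (𝓝 0)) : L1o α h (fun n _ => c n) := by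
  unfold L1o
  simp only [Ex_const]
  simpa using hc.abs

end L1

end TriCLT

namespace TriCLT

variable {n : ℕ}

/-! ### Laws of large numbers -/

/-- A bounded increasing function with the sign of its argument. -/
def chi (y : ℝ) : ℝ := y / (1 + |y|)

lemma chi_abs_le (y : ℝ) : |chi y| ≤ 1 := by
  unfold chi
  have : 0 < 1 + |y| := by positivity
  rw [abs_div, abs_of_pos this, div_le_one this]; linarith

lemma chi_lip (y z : ℝ) : |chi y - chi z| ≤ |y - z| := by
  unfold chi
  have hy : 0 < 1 + |y| := by positivity
  have hz : 0 < 1 + |z| := by positivity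
  have e : y / (1 + |y|) - z / (1 + |z|) = (y - z + (y * |z| - z * |y|)) / ((1 + |y|) * (1 + |z|)) := by
    field_simp; ring
  rw [e, abs_div, abs_of_pos (mul_pos hy hz), div_le_iff₀ (mul_pos hy hz)]
  have : y * |z| - z * |y| = (y - z) * |z| + z * (|z| - |y|) := by ring
  have h2 : abs (y * |z| - z * |y|) ≤ |y - z| * |z| + |z| * |y - z| := by
    rw [this]
    refine (abs_add_le _ _).trans ?_
    rw [abs_mul, abs_mul, abs_abs]
    refine add_le_add le_rfl (mul_le_mul_of_nonneg_left ?_ (abs_nonneg _))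
    rw [abs_sub_comm y z]; exact abs_abs_sub_abs_le z y
  have h3 : abs (y * |z| - z * |y|) ≤ |y - z| * |y| + |y| * |y - z| := by
    have : y * |z| - z * |y| = (y - z) * |y| + y * (|z| - |y|) := by ring
    rw [this]
    refine (abs_add_le _ _).trans ?_
    rw [abs_mul, abs_mul, abs_abs]
    refine add_le_add le_rfl (mul_le_mul_of_nonneg_left ?_ (abs_nonneg _))
    rw [abs_sub_comm y z]; exact abs_abs_sub_abs_le z y
  have h4 := abs_add_le (y - z) (y * |z| - z * |y|)
  have h5 : 0 ≤ |y - z| := abs_nonneg _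
  have h6 : 0 ≤ |y| * |z| := by positivity
  nlinarith [mul_nonneg h5 h6]

lemma abs_le_chi {η : ℝ} (hη : 0 < η) (y : ℝ) : |y| ≤ η + ((1 + η) / η) * (y * chi y) := by
  have hy : 0 < 1 + |y| := by positivity
  have e : y * chi y = |y| ^ 2 / (1 + |y|) := by
    unfold chi; rw [sq_abs]; ring
  rw [e]
  rcases le_total |y| η with h | h
  · have : 0 ≤ (1 + η) / η * (|y| ^ 2 / (1 + |y|)) := by positivity
    linarith
  · have : |y| ≤ (1 + η) / η * (|y| ^ 2 / (1 + |y|)) := by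
      rw [div_mul_div_comm, le_div_iff₀ (by positivity)]
      nlinarith [abs_nonneg y]
    linarith

lemma ibp_bound (α h : ℝ) (H : Config n → Fin n → Fin n → ℝ) (F : Config n → ℝ) {g : ℝ}
    (hg : 0 ≤ g) (hH : ∀ x i j b, i ≠ j → H (setE x i j b) i j = H x i j)
    (hF : ∀ x i j, i ≠ j → |F (setE x i j true) - F (setE x i j false)| ≤ g) :
    |Ex α h (fun x => (∑ i, ∑ j, cen α h x i j * H x i j) * F x)|
      ≤ Ex α h (fun x => g * ∑ i, ∑ j, |H x i j|) := by
  have := ibp α h H F hH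
  simp only [smul_eq_mul] at this
  rw [this]
  refine (abs_Ex_le α h _).trans (Ex_mono α h fun x => ?_)
  refine (abs_sum2_le _).trans ?_
  simp only [Finset.mul_sum]
  refine Finset.sum_le_sum fun i _ => Finset.sum_le_sum fun j _ => ?_
  by_cases hij : i = j
  · have : 0 ≤ g * |H x i j| := by positivity
    simpa [cvar, hij] using this
  · rw [abs_mul, abs_mul, abs_of_nonneg (cvar_nonneg α h x i j)]
    have a := cvar_le α h x i j
    have b := hF x i j hij
    calc cvar α h x i j * |H x i j| * |F (setE x i j true) - F (setE x i j false)|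
        ≤ 1 * |H x i j| * g := by gcongr
      _ = _ := by ring

/-- An observable which is, up to a negligible error, a non-zero multiple of a centred sum
`∑ (x_{ij} - σ_{ij}) H_{ij}` and which is insensitive to single flips tends to `0`. -/
lemma lln {α h : ℝ} {Y : ∀ n : ℕ, Config n → ℝ} (H : ∀ n : ℕ, Config n → Fin n → Fin n → ℝ) (k : ℕ)
    {A : ℝ} (hA : A ≠ 0) (g : ℕ → ℝ) (hg0 : ∀ n, 0 ≤ g n)
    (hH : ∀ n x i j b, i ≠ j → H n (setE x i j b) i j = H n x i j)
    (hY : ∀ n, 1 ≤ n → ∀ x i j, i ≠ j → |Y n (setE x i j true) - Y n (setE x i j false)| ≤ g n)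
    (hdec : L1o α h (fun n x => (∑ i, ∑ j, cen α h x i j * H n x i j) / (n : ℝ) ^ k - A * Y n x))
    (hg : L1o α h (fun n x => g n * (∑ i, ∑ j, |H n x i j|) / (n : ℝ) ^ k)) :
    L1o α h Y := by
  have key : ∀ n, 1 ≤ n → |A| * |Ex α h (fun x : Config n => Y n x * chi (Y n x))|
      ≤ Ex α h (fun x : Config n => |g n * (∑ i, ∑ j, |H n x i j|) / (n : ℝ) ^ k|)
        + Ex α h (fun x : Config n =>
          |(∑ i, ∑ j, cen α h x i j * H n x i j) / (n : ℝ) ^ k - A * Y n x|) := by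
    intro n hn
    have hn' : (1 : ℝ) ≤ n := by exact_mod_cast hn
    have a := ibp_bound α h (H n) (fun x => chi (Y n x)) (hg0 n) (hH n)
      (fun x i j hij => (chi_lip _ _).trans (hY n hn x i j hij))
    rw [← abs_mul, ← Ex_mul]
    have e : ∀ x : Config n, A * (Y n x * chi (Y n x))
      = (1 / (n : ℝ) ^ k) * ((∑ i, ∑ j, cen α h x i j * H n x i j) * chi (Y n x))
        - ((∑ i, ∑ j, cen α h x i j * H n x i j) / (n : ℝ) ^ k - A * Y n x) * chi (Y n x) := by
      intro x; ring
    simp only [e]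
    rw [Ex_sub]
    refine (abs_sub _ _).trans (add_le_add ?_ ?_)
    · rw [Ex_mul, abs_mul, abs_of_pos (by positivity)]
      refine (mul_le_mul_of_nonneg_left a (by positivity)).trans ?_
      rw [← Ex_mul]
      refine Ex_mono α h fun x => (le_abs_self _).trans (le_of_eq ?_)
      congr 1; ring
    · refine (abs_Ex_le α h _).trans (Ex_mono α h fun x => ?_)
      rw [abs_mul]
      exact mul_le_of_le_one_right (abs_nonneg _) (chi_abs_le _)
  have lim : Tendsto (fun n => Ex α h (fun x : Config n => Y n x * chi (Y n x))) atTop (𝓝 0) := by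
    have := (Tendsto.add hg hdec).const_mul |A|⁻¹
    rw [add_zero, mul_zero] at this
    refine squeeze_zero_norm' ?_ this
    filter_upwards [eventually_ge_atTop 1] with n hn
    rw [Real.norm_eq_abs, le_inv_mul_iff₀ (abs_pos.2 hA)]
    exact key n hn
  unfold L1o
  rw [Metric.tendsto_atTop']
  intro ε hε
  have hη : 0 < ε / 2 := by positivity
  set c := (1 + ε / 2) / (ε / 2) with hc
  have hc0 : 0 < c := by positivity
  obtain ⟨N, hN⟩ := (Metric.tendsto_atTop'.1 lim) (ε / 2 / c) (by positivity)
  refine ⟨N, fun n hn => ?_⟩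
  have b := hN n hn
  rw [Real.dist_eq, sub_zero] at b ⊢
  rw [abs_of_nonneg (Ex_nonneg α h fun x => abs_nonneg _)]
  have d := Ex_mono α h (fun x : Config n => abs_le_chi hη (Y n x))
  rw [Ex_add, Ex_const, Ex_mul] at d
  have f : c * Ex α h (fun x : Config n => Y n x * chi (Y n x)) < ε / 2 := by
    have := (le_abs_self _).trans_lt b
    rw [lt_div_iff₀ hc0] at this
    linarith
  rw [← hc] at d
  linarith

section
variable {α h u : ℝ} (hP : Pkg α h u) (hGP : GP α h u)
include hP hGP

lemma l1o_totSq : L1o α h (fun n x => totS (Mx u x) ^ 2 / (n : ℝ) ^ 3) := by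
  have hs := (sm_tot_sd hP).l1o hP hGP
  have hk : 0 < 1 - 2 * α * u ^ 2 * (1 - u) := by linarith [hP.kap]
  set κ := 2 * α * u ^ 2 * (1 - u) with hκ
  have lim := (Tendsto.add (tendsto_const_div_atTop_nhds_zero_nat (2 : ℝ)) hs).const_mul (1 - κ)⁻¹
  rw [add_zero, mul_zero] at lim
  refine squeeze_zero' (Eventually.of_forall fun n => Ex_nonneg α h fun x => abs_nonneg _) ?_ lim
  filter_upwards [eventually_ge_atTop 1] with n hn
  have hn' : (1 : ℝ) ≤ n := by exact_mod_cast hn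
  rw [le_inv_mul_iff₀ hk, ← Ex_mul]
  have a := ibp_bound α h (fun (x : Config n) i j => 1) (fun x => totS (Mx u x)) (g := 2) (by norm_num)
    (fun _ _ _ _ _ => rfl) (fun x i j hij => by rw [totS_set u x hij]; simp)
  have a' : Ex α h (fun x : Config n => 2 * ∑ i : Fin n, ∑ j : Fin n, |(1 : ℝ)|) = 2 * n ^ 2 := by
    rw [Ex_const]; simp [sq]
  rw [a'] at a
  have e : ∀ x : Config n, (1 - κ) * |totS (Mx u x) ^ 2 / (n : ℝ) ^ 3|
    = (1 / (n : ℝ) ^ 3) * ((∑ i, ∑ j, cen α h x i j * 1) * totS (Mx u x))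
      + (totS (Mx u x) * (∑ i, ∑ j, sd α h u x i j - κ * totS (Mx u x))) / (n : ℝ) ^ 3 := by
    intro x
    rw [abs_of_nonneg (by positivity), sum_cen α h u]
    simp only [mul_one]
    have : ∑ i, ∑ j, Mx u x i j = totS (Mx u x) := rfl
    rw [this]; ring
  simp only [e]
  rw [Ex_add]
  refine add_le_add ?_ (Ex_mono α h fun x => le_abs_self _)
  rw [Ex_mul]
  have := (le_abs_self _).trans a
  calc _ ≤ 1 / (n : ℝ) ^ 3 * (2 * n ^ 2) := by gcongr
    _ = 2 / n := by field_simp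

/-- Limit of `dd / n²`. -/
def d0 (α u : ℝ) : ℝ := 2 * (u * (1 - u)) / (2 - 2 * α * u ^ 2 * (1 - u))

lemma l1o_dd : L1o α h (fun n x => dd (Mx u x) / (n : ℝ) ^ 2 - d0 α u) := by
  have hk : 0 < 2 - 2 * α * u ^ 2 * (1 - u) := by linarith [hP.kap]
  have hd0 : (2 - 2 * α * u ^ 2 * (1 - u)) * d0 α u = 2 * (u * (1 - u)) := by
    unfold d0; rw [mul_div_cancel₀ _ hk.ne']
  refine lln (fun n => HD u) 2 hk.ne' (fun n => 6 / n) (fun n => by positivity)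
    (fun n x i j b hij => HD_set u x i j b hij) ?_ ?_ ?_
  · intro n hn x i j hij
    have hn' : (1 : ℝ) ≤ n := by exact_mod_cast hn
    have := dd_inc hP.u0 hP.u1 x hij
    rw [sub_sub_sub_cancel_right, ← sub_div, abs_div, abs_of_pos (by positivity : (0:ℝ) < (n:ℝ)^2)]
    calc _ ≤ 6 * n / (n : ℝ) ^ 2 := by gcongr
      _ = _ := by field_simp
  · have a := (sm_sdHD hP).l1o hP hGP
    have b := (sm_ff hP).l1o hP hGP
    have c := l1o_totSq hP hGP
    refine ((a.neg.sub (b.const_mul 2)).sub (c.const_mul (2 * α * u ^ 2 * (1 - u)))).congr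
      fun n hn x => ?_
    have hn' : (1 : ℝ) ≤ n := by exact_mod_cast hn
    have e : (2 - 2 * α * u ^ 2 * (1 - u)) * (dd (Mx u x) / (n : ℝ) ^ 2 - d0 α u)
        = (2 - 2 * α * u ^ 2 * (1 - u)) * (dd (Mx u x) / (n : ℝ) ^ 2) - 2 * (u * (1 - u)) := by
      rw [mul_sub, hd0]
    rw [sum_cen α h u, sum_M_HD hP.u0 hP.u1, e]
    field_simp
    ring
  · refine ((sm_absHD hP).l1o hP hGP |>.const_mul 6).congr fun n hn x => ?_
    have hn' : (1 : ℝ) ≤ n := by exact_mod_cast hn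
    field_simp

lemma l1o_qq : L1o α h (fun n x => qq (Mx u x) / (n : ℝ) ^ 3 - 2 * (u * (1 - u)) ^ 2) := by
  refine lln (fun n x => PP (Mx u x)) 3 one_ne_zero (fun n => 8 / n) (fun n => by positivity)
    (fun n x i j b hij => PP_set u x i j b hij) ?_ ?_ ?_
  · intro n hn x i j hij
    have hn' : (1 : ℝ) ≤ n := by exact_mod_cast hn
    have := qq_inc hP.u0 hP.u1 x hij
    rw [sub_sub_sub_cancel_right, ← sub_div, abs_div, abs_of_pos (by positivity : (0:ℝ) < (n:ℝ)^3)]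
    calc _ ≤ 8 * (n : ℝ) ^ 2 / (n : ℝ) ^ 3 := by gcongr
      _ = _ := by field_simp
  · have a := (sm_sdPP hP).l1o hP hGP
    have b := (sm_MPP hP).l1o hP hGP
    refine (b.sub a).congr fun n hn x => ?_
    have hn' : (1 : ℝ) ≤ n := by exact_mod_cast hn
    rw [sum_cen α h u]
    field_simp
    ring
  · refine ((sm_absPP hP).l1o hP hGP |>.const_mul 8).congr fun n hn x => ?_
    have hn' : (1 : ℝ) ≤ n := by exact_mod_cast hn
    field_simp

lemma l1o_tr3 : L1o α h (fun n x => tr3 (Mx u x) / (n : ℝ) ^ 2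
    - α * (u * (1 - u)) * (u * (1 - u)) ^ 2) := by
  refine lln (fun n x i j => (Mx u x * Mx u x) i j) 2 one_ne_zero (fun n => 6 / n)
    (fun n => by positivity) (fun n x i j b hij => M2_set u x i j b hij) ?_ ?_ ?_
  · intro n hn x i j hij
    have hn' : (1 : ℝ) ≤ n := by exact_mod_cast hn
    have := tr3_inc hP.u0 hP.u1 x hij
    rw [sub_sub_sub_cancel_right, ← sub_div, abs_div, abs_of_pos (by positivity : (0:ℝ) < (n:ℝ)^2)]
    calc _ ≤ 6 * n / (n : ℝ) ^ 2 := by gcongr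
      _ = _ := by field_simp
  · have a := (sm_sdM2 hP).l1o hP hGP
    have b := (l1o_qq hP hGP).const_mul (α * (u * (1 - u)))
    refine (a.neg.sub b).congr fun n hn x => ?_
    have hn' : (1 : ℝ) ≤ n := by exact_mod_cast hn
    rw [sum_cen α h u x (fun i j => (Mx u x * Mx u x) i j)]
    have : ∑ i, ∑ j, Mx u x i j * (Mx u x * Mx u x) i j = tr3 (Mx u x) := rfl
    rw [this]
    field_simp
    ring
  · refine ((sm_absM2 hP).l1o hP hGP |>.const_mul 6).congr fun n hn x => ?_
    have hn' : (1 : ℝ) ≤ n := by exact_mod_cast hn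
    field_simp

/-- The asymptotic shift of the edge count. -/
def gam (α u : ℝ) : ℝ := (α * (u * (1 - u)) * (d0 α u - u * (1 - u) - 2 * u ^ 2)
  + α ^ 2 * (u * (1 - u)) * (1 - 2 * u) / 2 * ((u * (1 - u)) ^ 2 + 2 * u ^ 2 * d0 α u))
  / (1 - 2 * α * u ^ 2 * (1 - u))

/-- The centred edge sum is, up to `o(n)`, a multiple of the recentred edge count. -/
lemma l1o_cen : L1o α h (fun n x => (∑ i, ∑ j, cen α h x i j) / (n : ℝ)
    - (1 - 2 * α * u ^ 2 * (1 - u)) * ((totS (Mx u x) - gam α u * n) / n)) := by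
  have hk : 0 < 1 - 2 * α * u ^ 2 * (1 - u) := by linarith [hP.kap]
  have hgam : (1 - 2 * α * u ^ 2 * (1 - u)) * gam α u
    = α * (u * (1 - u)) * (d0 α u - u * (1 - u) - 2 * u ^ 2)
  + α ^ 2 * (u * (1 - u)) * (1 - 2 * u) / 2 * ((u * (1 - u)) ^ 2 + 2 * u ^ 2 * d0 α u) := by
    unfold gam; field_simp
  have a1 := (sm_sumsd hP).l1o hP hGP
  have a2 := (sm_Lam2 hP).l1o hP hGP
  have a3 := l1o_qq hP hGP
  have a4 := l1o_dd hP hGP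
  have a5 := l1o_totSq hP hGP
  have a6 := (sm_tot hP).l1o hP hGP
  have a7 := (sm_ff hP).l1o hP hGP
  have a8 : L1o α h (fun n _ => 1 / (n : ℝ)) := L1o.of_tendsto (tendsto_const_div_atTop_nhds_zero_nat 1)
  set c1 := α * (u * (1 - u)) with hc1
  set c2 := α ^ 2 * (u * (1 - u)) * (1 - 2 * u) / 2 with hc2
  refine (((((((a1.neg.sub (a2.const_mul c2)).sub (a3.const_mul c2)).sub
    (a4.const_mul (c1 + 2 * u ^ 2 * c2))).sub (a5.const_mul (2 * u ^ 2 * c2))).add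
      (a6.const_mul (4 * u * c1))).add (a7.const_mul c1)).sub (a8.const_mul (2 * u ^ 2 * c1))).congr
      fun n hn x => ?_
  have hn' : (1 : ℝ) ≤ n := by exact_mod_cast hn
  have hn0 : (n : ℝ) ≠ 0 := by positivity
  have hL := sum_Lam (cenM_Mx hP.u0 hP.u1 x)
  have hc := sum_cen α h u x (fun _ _ => 1)
  simp only [mul_one] at hc
  have ht : ∑ i, ∑ j, Mx u x i j = totS (Mx u x) := rfl
  rw [ht] at hc
  rw [hc]
  have hL' : ∑ i, ∑ j, Lam u (Mx u x) i j = (dd (Mx u x) - ff (Mx u x)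
    + 2 * u * (n - 2) * totS (Mx u x) - 2 * u ^ 2 * (n * (n - 1))) / n := by
    rw [← hL]; field_simp
  rw [hL']
  have e2 : (1 - 2 * α * u ^ 2 * (1 - u)) * ((totS (Mx u x) - gam α u * n) / n)
    = (1 - 2 * u * c1) * (totS (Mx u x) / n) - (1 - 2 * α * u ^ 2 * (1 - u)) * gam α u := by
    rw [hc1]; field_simp
  rw [e2, hgam]
  field_simp
  ring

end

end TriCLT

namespace TriCLT

variable {n : ℕ}

/-! ### Central limit theorem for the edge count -/

section
variable {α h u : ℝ} (hP : Pkg α h u)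
include hP

lemma sm_absLam : Sm u (fun n x => (∑ i, ∑ j, |Lam u (Mx u x) i j|) / (n : ℝ) ^ 2) := by
  refine Sm.of 2 1 (by positivity) ?_ ?_
  · refine Poly.sum2 1 0 fun n hn x i j => ?_
    rw [abs_abs]; simpa using Lam_abs_le hP.u0 hP.u1 x i j
  · intro n δ x hs hG
    refine le_trans ?_ (sm_aux (by norm_num) hs _)
    rw [abs_of_nonneg (Finset.sum_nonneg fun i _ => Finset.sum_nonneg fun j _ => abs_nonneg _)]
    calc ∑ i, ∑ j, |Lam u (Mx u x) i j| ≤ ∑ i : Fin n, ∑ j : Fin n, δ :=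
          Finset.sum_le_sum fun i _ => Finset.sum_le_sum fun j _ => hG.lam i j
      _ = _ := by simp; ring

lemma sm_absM2Lam2 : Sm u (fun n x =>
    (∑ i, ∑ j, |(Mx u x * Mx u x) i j| * Lam u (Mx u x) i j ^ 2) / (n : ℝ) ^ 2) := by
  refine Sm.of 2 336 (by positivity) ?_ ?_
  · refine Poly.sum2 1 1 fun n hn x i j => ?_
    rw [abs_mul, abs_abs, abs_pow, one_mul, pow_one]
    exact (mul_le_of_le_one_right (abs_nonneg _) (pow_le_one₀ (abs_nonneg _)
      (Lam_abs_le hP.u0 hP.u1 x i j))).trans (M2_abs_le (cenM_Mx hP.u0 hP.u1 x) i j)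
  · intro n δ x hs hG
    have hM := cenM_Mx hP.u0 hP.u1 x
    have hδ := hs.pos
    rw [abs_of_nonneg (Finset.sum_nonneg fun i _ => Finset.sum_nonneg fun j _ => by positivity)]
    calc _ ≤ ∑ i, ∑ j, 7 * δ * n * Lam u (Mx u x) i j ^ 2 := by
          refine Finset.sum_le_sum fun i _ => Finset.sum_le_sum fun j _ => ?_
          by_cases hij : i = j
          · simp [hij, Lam]
          · exact mul_le_mul_of_nonneg_right (M2_off_le hs hM hG hij) (sq_nonneg _)
      _ = 7 * δ * n * ∑ i, ∑ j, Lam u (Mx u x) i j ^ 2 := by simp only [Finset.mul_sum]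
      _ ≤ 7 * δ * n * (48 * n * Theta (Mx u x)) := by gcongr; exact sum_Lam_sq_le hs hM
      _ = _ := by ring

lemma cvar_sub_le (x : Config n) {i j : Fin n} (hij : i ≠ j) :
    |cvar α h x i j - u * (1 - u)| ≤ |α| * |Lam u (Mx u x) i j| := by
  refine le_trans ?_ (sd_exp1 hP x i j)
  unfold cvar sd
  simp only [hij, if_false]
  have e : sig α h x i j * (1 - sig α h x i j) - u * (1 - u)
    = (sig α h x i j - u) * (1 - sig α h x i j - u) := by ring
  rw [e, abs_mul]
  refine mul_le_of_le_one_right (abs_nonneg _) ?_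
  have := Real.sigmoid_nonneg (lodds α h x i j)
  have := Real.sigmoid_le_one (lodds α h x i j)
  have := hP.u0
  have := hP.u1
  unfold sig
  rw [abs_le]; constructor <;> linarith

lemma sum_cvar_sub_le (x : Config n) :
    |∑ i, ∑ j, cvar α h x i j - n ^ 2 * (u * (1 - u))|
      ≤ |α| * ∑ i, ∑ j, |Lam u (Mx u x) i j| + n := by
  have e : ∑ i, ∑ j, cvar α h x i j - n ^ 2 * (u * (1 - u))
    = ∑ i, ∑ j, (cvar α h x i j - u * (1 - u)) := by
    simp [Finset.sum_sub_distrib]; ring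
  rw [e]
  refine (abs_sum2_le _).trans ?_
  have e2 : |α| * ∑ i, ∑ j, |Lam u (Mx u x) i j| + n
    = ∑ i, ∑ j, (|α| * |Lam u (Mx u x) i j| + if i = j then 1 else 0) := by
    simp [Finset.sum_add_distrib, Finset.mul_sum]
  rw [e2]
  refine Finset.sum_le_sum fun i _ => Finset.sum_le_sum fun j _ => ?_
  by_cases hij : i = j
  · have := hP.u0
    have := hP.u1
    have h2 : |0 - u * (1 - u)| ≤ 1 := by rw [abs_le]; constructor <;> nlinarith
    have h3 : 0 ≤ |α| * |Lam u (Mx u x) i j| := by positivity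
    simp only [cvar, hij, if_true] at *
    linarith
  · simpa [hij] using cvar_sub_le hP x hij

variable (hGP : GP α h u)
include hGP

lemma l1o_cvar : L1o α h (fun n x => (∑ i, ∑ j, cvar α h x i j) / (n : ℝ) ^ 2 - u * (1 - u)) := by
  have a := (sm_absLam hP).l1o hP hGP
  have a8 : L1o α h (fun n _ => 1 / (n : ℝ)) := L1o.of_tendsto (tendsto_const_div_atTop_nhds_zero_nat 1)
  refine ((a.const_mul |α|).add a8).of_le ?_
  filter_upwards [eventually_ge_atTop 1] with n hn x
  have hn' : (1 : ℝ) ≤ n := by exact_mod_cast hn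
  have := sum_cvar_sub_le hP x
  refine le_trans ?_ (le_abs_self _)
  have e : (∑ i, ∑ j, cvar α h x i j) / (n : ℝ) ^ 2 - u * (1 - u)
    = (∑ i, ∑ j, cvar α h x i j - n ^ 2 * (u * (1 - u))) / (n : ℝ) ^ 2 := by field_simp
  rw [e, abs_div, abs_of_pos (by positivity : (0:ℝ) < (n:ℝ)^2), div_le_iff₀ (by positivity)]
  refine this.trans (le_of_eq ?_)
  field_simp

end

/-- The recentred and rescaled edge count. -/
def Zn (α u : ℝ) (x : Config n) : ℝ := (totS (Mx u x) - gam α u * n) / (2 * n)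

/-- The unimodular observable `exp(i(τ T/n + t Z))`. -/
def Fc (α u τ t : ℝ) (x : Config n) : ℂ :=
  Complex.exp (((τ * ((triangleCount n x : ℝ) / n) + t * Zn α u x : ℝ) : ℂ) * Complex.I)

lemma norm_Fc (α u τ t : ℝ) (x : Config n) : ‖Fc α u τ t x‖ = 1 :=
  Complex.norm_exp_ofReal_mul_I _

lemma Fc_set (α u τ t : ℝ) (x : Config n) {i j : Fin n} (hij : i ≠ j) :
    Fc α u τ t (setE x i j true) = Fc α u τ t (setE x i j false)
      * Complex.exp (((τ * (codeg x i j / n) + t / n : ℝ) : ℂ) * Complex.I) := by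
  unfold Fc Zn
  rw [← Complex.exp_add, ← add_mul, ← Complex.ofReal_add, triangleCount_set x hij, totS_set u x hij]
  have : (n : ℝ) ≠ 0 := by
    have : 0 < n := i.pos
    positivity
  congr 3
  field_simp
  ring

lemma Fc_cases (α u τ t : ℝ) (x : Config n) (i j : Fin n) (hij : i ≠ j) :
    Fc α u τ t x = Fc α u τ t (setE x i j false) ∨ Fc α u τ t x = Fc α u τ t (setE x i j true) := by
  rcases hb : x ⟨s(i, j), by simpa using hij⟩ with _ | _
  · left; rw [setE_eq_self x hij hb]
  · right; rw [setE_eq_self x hij hb]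

lemma exp_sub_one_le (D : ℝ) : ‖Complex.exp ((D : ℂ) * Complex.I) - 1‖ ≤ |D| := by
  have := Real.norm_exp_I_mul_ofReal_sub_one_le (x := D)
  rwa [mul_comm, Real.norm_eq_abs] at this

lemma exp_sub_one_sub_le (D : ℝ) :
    ‖Complex.exp ((D : ℂ) * Complex.I) - 1 - (D : ℂ) * Complex.I‖ ≤ 2 * D ^ 2 := by
  have hn : ‖(D : ℂ) * Complex.I‖ = |D| := by simp
  rcases le_total |D| 1 with hD | hD
  · have := Complex.norm_exp_sub_one_sub_id_le (x := (D : ℂ) * Complex.I) (by rw [hn]; exact hD)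
    rw [hn, sq_abs] at this
    nlinarith [sq_nonneg D]
  · refine (norm_sub_le _ _).trans ?_
    rw [hn]
    have := exp_sub_one_le D
    rw [← sq_abs]; nlinarith

/-- First-order expansion of the jump of a unimodular function; `f` may be either endpoint. -/
lemma jump_err {f f0 f1 : ℂ} (hf0 : ‖f0‖ = 1) (D : ℝ)
    (h1 : f1 = f0 * Complex.exp ((D : ℂ) * Complex.I)) (hf : f = f0 ∨ f = f1) :
    ‖f1 - f0 - (D : ℂ) * Complex.I * f‖ ≤ 3 * D ^ 2 := by
  have hff : ‖f0 - f‖ ≤ |D| := by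
    rcases hf with h | h
    · simp [h]
    · rw [h, h1]
      have e : f0 - f0 * Complex.exp ((D : ℂ) * Complex.I)
        = -(f0 * (Complex.exp ((D : ℂ) * Complex.I) - 1)) := by ring
      rw [e, norm_neg, norm_mul, hf0, one_mul]
      exact exp_sub_one_le D
  have e : f1 - f0 - (D : ℂ) * Complex.I * f
    = f0 * (Complex.exp ((D : ℂ) * Complex.I) - 1 - (D : ℂ) * Complex.I)
      + (D : ℂ) * Complex.I * (f0 - f) := by rw [h1]; ring
  rw [e]
  refine (norm_add_le _ _).trans ?_
  rw [norm_mul, norm_mul, norm_mul, hf0, Complex.norm_I, Complex.norm_real, Real.norm_eq_abs]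
  have := exp_sub_one_sub_le D
  have : |D| * ‖f0 - f‖ ≤ |D| * |D| := by gcongr
  rw [← sq, sq_abs] at this
  linarith

lemma norm_sum2_le (g : Fin n → Fin n → ℂ) : ‖∑ i, ∑ j, g i j‖ ≤ ∑ i, ∑ j, ‖g i j‖ :=
  (norm_sum_le _ _).trans (Finset.sum_le_sum fun _ _ => norm_sum_le _ _)

/-- Replacing a real factor in the expectation of a unimodular observable. -/
lemma Ex_smul_sub_le (α h : ℝ) (X Y : Config n → ℝ) (F : Config n → ℂ) (hF : ∀ x, ‖F x‖ = 1) :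
    ‖Ex α h (fun x => X x • F x) - Ex α h (fun x => Y x • F x)‖
      ≤ Ex α h (fun x => |X x - Y x|) := by
  rw [← Ex_sub]
  refine (norm_Ex_le α h _).trans (Ex_mono α h fun x => ?_)
  rw [← sub_smul, norm_smul, hF, mul_one, Real.norm_eq_abs]

lemma Ex_cmul (α h : ℝ) (c : ℂ) (F : Config n → ℂ) :
    Ex α h (fun x => c * F x) = c * Ex α h F := by
  simp only [Ex, Finset.mul_sum]
  refine Finset.sum_congr rfl fun x _ => ?_
  rw [mul_smul_comm]

/-- Approximate Stein identity for the characteristic function. -/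
lemma stein_clt (α h u : ℝ) (t : ℝ) (hn : 1 ≤ n) :
    ‖((2 * (1 - 2 * α * u ^ 2 * (1 - u)) : ℝ) : ℂ) * Ex α h (fun x : Config n => Zn α u x • Fc α u 0 t x)
      - (t : ℂ) * Complex.I * ((u * (1 - u) : ℝ) : ℂ) * Ex α h (fun x : Config n => Fc α u 0 t x)‖
      ≤ Ex α h (fun x : Config n => |(∑ i, ∑ j, cen α h x i j) / (n : ℝ)
    - (1 - 2 * α * u ^ 2 * (1 - u)) * ((totS (Mx u x) - gam α u * n) / n)|)
    + |t| * Ex α h (fun x : Config n => |(∑ i, ∑ j, cvar α h x i j) / (n : ℝ) ^ 2 - u * (1 - u)|)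
    + 3 * t ^ 2 * (1 / n) := by
  have hn' : (1 : ℝ) ≤ n := by exact_mod_cast hn
  have hn0 : (n : ℝ) ≠ 0 := by positivity
  set κ := 2 * α * u ^ 2 * (1 - u)
  set F : Config n → ℂ := Fc α u 0 t with hF
  have hF1 : ∀ x, ‖F x‖ = 1 := norm_Fc α u 0 t
  have a1 := Ex_smul_sub_le α h (fun x : Config n => (∑ i, ∑ j, cen α h x i j) / (n : ℝ))
    (fun x => (1 - κ) * ((totS (Mx u x) - gam α u * n) / n)) F hF1
  have a2 := Ex_smul_sub_le α h (fun x : Config n => (∑ i, ∑ j, cvar α h x i j) / (n : ℝ) ^ 2)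
    (fun x => u * (1 - u)) F hF1
  have a3 : ‖Ex α h (fun x : Config n => (∑ i, ∑ j, cen α h x i j) • F x)
      - Ex α h (fun x : Config n => ((t : ℂ) / n * Complex.I) * ((∑ i, ∑ j, cvar α h x i j) • F x))‖
      ≤ 3 * t ^ 2 := by
    have := ibp α h (fun (x : Config n) i j => 1) F (fun _ _ _ _ _ => rfl)
    simp only [mul_one] at this
    rw [this, ← Ex_sub]
    refine (norm_Ex_le α h _).trans ?_
    refine (Ex_mono α h (G := fun _ => 3 * t ^ 2) fun x => ?_).trans (Ex_const α h _).le
    rw [Finset.sum_smul, Finset.mul_sum, ← Finset.sum_sub_distrib]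
    simp only [Finset.sum_smul, Finset.mul_sum, ← Finset.sum_sub_distrib]
    refine (norm_sum2_le _).trans ?_
    calc _ ≤ ∑ i : Fin n, ∑ j : Fin n, 3 * (t / n) ^ 2 := by
          refine Finset.sum_le_sum fun i _ => Finset.sum_le_sum fun j _ => ?_
          rw [mul_smul_comm, ← smul_sub, norm_smul, Real.norm_of_nonneg (cvar_nonneg α h x i j)]
          by_cases hij : i = j
          · simp only [cvar, hij, if_true, zero_mul]; positivity
          have b := jump_err (hF1 (setE x i j false)) (t / n)
            (by have := Fc_set α u 0 t x hij
                simpa using this) (Fc_cases α u 0 t x i j hij)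
          push_cast at b
          exact (mul_le_of_le_one_left (norm_nonneg _) (cvar_le α h x i j)).trans b
      _ = 3 * t ^ 2 := by simp; field_simp
  have e1 : Ex α h (fun x : Config n => ((∑ i, ∑ j, cen α h x i j) / (n : ℝ)) • F x)
    = (1 / (n : ℝ)) • Ex α h (fun x : Config n => (∑ i, ∑ j, cen α h x i j) • F x) := by
    rw [← Ex_smul]; simp only [smul_smul]; congr 1; funext x; congr 1; ring
  have e2 : (t : ℂ) * Complex.I * Ex α h (fun x : Config n => ((∑ i, ∑ j, cvar α h x i j) / (n : ℝ) ^ 2) • F x)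
    = (1 / (n : ℝ)) • Ex α h (fun x : Config n => ((t : ℂ) / n * Complex.I) * ((∑ i, ∑ j, cvar α h x i j) • F x)) := by
    rw [← Ex_smul, ← Ex_cmul]; congr 1; funext x
    simp only [Complex.real_smul]
    push_cast
    ring
  have e3 : Ex α h (fun x : Config n => ((1 - κ) * ((totS (Mx u x) - gam α u * n) / n)) • F x)
    = ((2 * (1 - κ) : ℝ) : ℂ) * Ex α h (fun x : Config n => Zn α u x • F x) := by
    rw [← Ex_cmul]; congr 1; funext x
    simp only [Complex.real_smul, Zn]
    push_cast
    have : (n : ℂ) ≠ 0 := by exact_mod_cast hn0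
    field_simp
  have e4 : Ex α h (fun x : Config n => (u * (1 - u)) • F x)
    = ((u * (1 - u) : ℝ) : ℂ) * Ex α h F := by
    rw [Ex_smul]; exact Complex.real_smul
  rw [e1, e3] at a1
  rw [e4] at a2
  have a3' : ‖(1 / (n : ℝ)) • Ex α h (fun x : Config n => (∑ i, ∑ j, cen α h x i j) • F x)
      - (t : ℂ) * Complex.I * Ex α h (fun x : Config n => ((∑ i, ∑ j, cvar α h x i j) / (n : ℝ) ^ 2) • F x)‖
      ≤ 3 * t ^ 2 * (1 / n) := by
    rw [e2, ← smul_sub, norm_smul, Real.norm_of_nonneg (by positivity), mul_comm]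
    gcongr
  have a2' : ‖(t : ℂ) * Complex.I * Ex α h (fun x : Config n => ((∑ i, ∑ j, cvar α h x i j) / (n : ℝ) ^ 2) • F x)
      - (t : ℂ) * Complex.I * (((u * (1 - u) : ℝ) : ℂ) * Ex α h F)‖
      ≤ |t| * Ex α h (fun x : Config n => |(∑ i, ∑ j, cvar α h x i j) / (n : ℝ) ^ 2 - u * (1 - u)|) := by
    rw [← mul_sub, norm_mul, norm_mul, Complex.norm_I, mul_one, Complex.norm_real, Real.norm_eq_abs]
    gcongr
  rw [norm_sub_rev] at a1
  set A := ((2 * (1 - κ) : ℝ) : ℂ) * Ex α h (fun x : Config n => Zn α u x • F x)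
  set B := (1 / (n : ℝ)) • Ex α h (fun x : Config n => (∑ i, ∑ j, cen α h x i j) • F x)
  set C := (t : ℂ) * Complex.I * Ex α h (fun x : Config n => ((∑ i, ∑ j, cvar α h x i j) / (n : ℝ) ^ 2) • F x)
  have fin : A - (t : ℂ) * Complex.I * ((u * (1 - u) : ℝ) : ℂ) * Ex α h F
    = (A - B) + (C - (t : ℂ) * Complex.I * (((u * (1 - u) : ℝ) : ℂ) * Ex α h F)) + (B - C) := by ring
  rw [fin]
  exact (norm_add₃_le).trans (add_le_add (add_le_add a1 a2') a3')

end TriCLT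

/-! ### The characteristic function of the edge count and uniform integrability -/

namespace TriCLT

variable {n : ℕ}

section
variable {α h u : ℝ} (hP : Pkg α h u) (hGP : GP α h u)

/-- Limiting variance of the rescaled edge count. -/
def bet (α u : ℝ) : ℝ := u * (1 - u) / (2 * (1 - 2 * α * u ^ 2 * (1 - u)))

lemma Fc_hasDeriv (α u t : ℝ) (x : Config n) :
    HasDerivAt (fun t : ℝ => Fc α u 0 t x) (Complex.I * (Zn α u x • Fc α u 0 t x)) t := by
  have h1 : HasDerivAt (fun t : ℝ => ((t * Zn α u x : ℝ) : ℂ) * Complex.I)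
      (((1 * Zn α u x : ℝ) : ℂ) * Complex.I) t :=
    (((hasDerivAt_id t).mul_const (Zn α u x)).ofReal_comp).mul_const Complex.I
  have h2 := h1.cexp
  have e : ∀ t, Fc α u 0 t x = Complex.exp (((t * Zn α u x : ℝ) : ℂ) * Complex.I) := by
    intro t; simp [Fc]
  simp only [e]
  convert h2 using 1
  rw [Complex.real_smul]; push_cast; ring

lemma Ex_Fc_hasDeriv (α h u t : ℝ) (n : ℕ) :
    HasDerivAt (fun t : ℝ => Ex α h (fun x : Config n => Fc α u 0 t x))
      (Complex.I * Ex α h (fun x : Config n => Zn α u x • Fc α u 0 t x)) t := by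
  rw [← Ex_cmul]
  unfold Ex
  exact HasDerivAt.fun_sum fun x _ => (Fc_hasDeriv α u t x).const_smul (pr α h x)

include hP hGP

/-- Asymptotic normality of the edge count, at the level of characteristic functions. -/
lemma clt (t : ℝ) : Tendsto (fun n : ℕ => Ex α h (fun x : Config n => Fc α u 0 t x)) atTop
    (𝓝 (Complex.exp (((-(bet α u * t ^ 2 / 2) : ℝ)) : ℂ))) := by
  have hk : 0 < 1 - 2 * α * u ^ 2 * (1 - u) := by linarith [hP.kap]
  have hβ : 0 ≤ bet α u := by
    have := hP.u0; have := hP.u1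
    unfold bet; exact div_nonneg (by nlinarith) (by linarith)
  set κ := 2 * α * u ^ 2 * (1 - u) with hκ
  set β := bet α u with hβd
  have hβe : u * (1 - u) = 2 * (1 - κ) * β := by
    rw [hβd, bet, ← hκ]; field_simp
  set e1 : ℕ → ℝ := fun n => Ex α h (fun x : Config n => |(∑ i, ∑ j, cen α h x i j) / (n : ℝ)
    - (1 - κ) * ((totS (Mx u x) - gam α u * n) / n)|) with he1
  set e2 : ℕ → ℝ := fun n => Ex α h (fun x : Config n =>
    |(∑ i, ∑ j, cvar α h x i j) / (n : ℝ) ^ 2 - u * (1 - u)|) with he2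
  have l1 : Tendsto e1 atTop (𝓝 0) := l1o_cen hP hGP
  have l2 : Tendsto e2 atTop (𝓝 0) := l1o_cvar hP hGP
  set c := (2 * (1 - κ))⁻¹ with hc
  have hc0 : 0 < c := by positivity
  set r : ℕ → ℝ := fun n => c * (e1 n + |t| * e2 n + 3 * t ^ 2 * (1 / n)) with hr
  have lr : Tendsto r atTop (𝓝 0) := by
    have := ((l1.add (l2.const_mul |t|)).add
      ((tendsto_const_div_atTop_nhds_zero_nat (1:ℝ)).const_mul (3 * t ^ 2))).const_mul c
    simpa [hr] using this
  -- bound along the segment from `0` to `t`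
  have key : ∀ n : ℕ, 1 ≤ n → ‖Ex α h (fun x : Config n => Fc α u 0 t x)
      * Complex.exp (((β * t ^ 2 / 2 : ℝ)) : ℂ) - 1‖ ≤ r n * Real.exp (β * t ^ 2 / 2) * |t| := by
    intro n hn
    have hd : ∀ s : ℝ, HasDerivAt (fun s : ℝ => Ex α h (fun x : Config n => Fc α u 0 s x)
        * Complex.exp (((β * s ^ 2 / 2 : ℝ)) : ℂ))
        (Complex.exp (((β * s ^ 2 / 2 : ℝ)) : ℂ) * (Complex.I *
          (Ex α h (fun x : Config n => Zn α u x • Fc α u 0 s x)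
            - s * Complex.I * β * Ex α h (fun x : Config n => Fc α u 0 s x)))) s := by
      intro s
      have a := Ex_Fc_hasDeriv α h u s n
      have b : HasDerivAt (fun s : ℝ => ((β * s ^ 2 / 2 : ℝ) : ℂ)) ((β * s : ℝ) : ℂ) s := by
        have := ((hasDerivAt_pow 2 s).const_mul β).div_const 2
        have h2 := this.ofReal_comp
        convert h2 using 2
        simp; ring
      have d := a.mul b.cexp
      refine HasDerivAt.congr_deriv d ?_
      push_cast
      linear_combination ((s : ℂ) * (β : ℂ) * (Ex α h (fun x : Config n => Fc α u 0 s x) : ℂ)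
        * Complex.exp (((β : ℂ) * (s : ℂ) ^ 2 / 2 : ℂ))) * Complex.I_sq
    have bd : ∀ s ∈ Set.uIcc 0 t, ‖Complex.exp (((β * s ^ 2 / 2 : ℝ)) : ℂ) * (Complex.I *
          (Ex α h (fun x : Config n => Zn α u x • Fc α u 0 s x)
            - s * Complex.I * β * Ex α h (fun x : Config n => Fc α u 0 s x)))‖
          ≤ r n * Real.exp (β * t ^ 2 / 2) := by
      intro s hs
      have hst : |s| ≤ |t| := by
        have := Set.abs_sub_left_of_mem_uIcc hs
        simpa using this
      have hst2 : s ^ 2 ≤ t ^ 2 := sq_le_sq.2 hst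
      rw [norm_mul, norm_mul, Complex.norm_I, one_mul, Complex.norm_exp, Complex.ofReal_re, mul_comm]
      have st := stein_clt (n := n) α h u s hn
      rw [← hκ] at st
      have st2 : ‖((2 * (1 - κ) : ℝ) : ℂ) * Ex α h (fun x : Config n => Zn α u x • Fc α u 0 s x)
        - (s : ℂ) * Complex.I * ((u * (1 - u) : ℝ) : ℂ) * Ex α h (fun x : Config n => Fc α u 0 s x)‖
        = 2 * (1 - κ) * ‖Ex α h (fun x : Config n => Zn α u x • Fc α u 0 s x)
            - s * Complex.I * β * Ex α h (fun x : Config n => Fc α u 0 s x)‖ := by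
        rw [hβe]
        have : (2 * (1 - κ)) = ‖((2 * (1 - κ) : ℝ) : ℂ)‖ := by
          rw [Complex.norm_real, Real.norm_of_nonneg (by positivity)]
        nth_rewrite 3 [this]
        rw [← norm_mul]; congr 1; push_cast; ring
      rw [st2] at st
      have he1n : 0 ≤ e1 n := Ex_nonneg α h fun x => abs_nonneg _
      have he2n : 0 ≤ e2 n := Ex_nonneg α h fun x => abs_nonneg _
      have hX : ‖Ex α h (fun x : Config n => Zn α u x • Fc α u 0 s x)
            - s * Complex.I * β * Ex α h (fun x : Config n => Fc α u 0 s x)‖ ≤ r n := by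
        rw [hr, hc]
        simp only
        rw [le_inv_mul_iff₀ (by positivity)]
        refine st.trans ?_
        gcongr
      exact mul_le_mul hX (Real.exp_le_exp.2 (by gcongr)) (Real.exp_pos _).le
        ((norm_nonneg _).trans hX)
    have mv := Convex.norm_image_sub_le_of_norm_hasDerivWithin_le
      (fun s hs => (hd s).hasDerivWithinAt) bd (convex_uIcc 0 t) Set.left_mem_uIcc Set.right_mem_uIcc
    simp only [sub_zero, Real.norm_eq_abs] at mv
    refine le_trans (le_of_eq ?_) mv
    congr 2
    simp [Fc, Ex_const]
  have lim : Tendsto (fun n : ℕ => Ex α h (fun x : Config n => Fc α u 0 t x)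
      * Complex.exp (((β * t ^ 2 / 2 : ℝ)) : ℂ)) atTop (𝓝 1) := by
    rw [tendsto_iff_norm_sub_tendsto_zero]
    have l3 : Tendsto (fun n => r n * Real.exp (β * t ^ 2 / 2) * |t|) atTop (𝓝 0) := by
      simpa using (lr.mul_const (Real.exp (β * t ^ 2 / 2))).mul_const |t|
    refine squeeze_zero' (Eventually.of_forall fun n => norm_nonneg _) ?_ l3
    filter_upwards [eventually_ge_atTop 1] with n hn using key n hn
  have := lim.mul_const (Complex.exp (((-(β * t ^ 2 / 2) : ℝ)) : ℂ))
  rw [one_mul] at this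
  refine this.congr fun n => ?_
  rw [mul_assoc, ← Complex.exp_add, ← Complex.ofReal_add]
  simp

/-- Uniform integrability of the rescaled edge count. -/
lemma zn_ui : ∃ C : ℝ, 0 ≤ C ∧ ∃ e : ℕ → ℝ, Tendsto e atTop (𝓝 0) ∧ ∀ n : ℕ, 1 ≤ n → ∀ K : ℝ, 0 < K →
    Ex α h (fun x : Config n => |Zn α u x| ^ 2 / (K + |Zn α u x|)) ≤ C / K + e n := by
  have hk : 0 < 1 - 2 * α * u ^ 2 * (1 - u) := by linarith [hP.kap]
  set κ := 2 * α * u ^ 2 * (1 - u) with hκ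
  set e1 : ℕ → ℝ := fun n => Ex α h (fun x : Config n => |(∑ i, ∑ j, cen α h x i j) / (n : ℝ)
    - (1 - κ) * ((totS (Mx u x) - gam α u * n) / n)|) with he1
  have l1 : Tendsto e1 atTop (𝓝 0) := l1o_cen hP hGP
  set c := (2 * (1 - κ))⁻¹ with hc
  have hc0 : 0 < c := by positivity
  refine ⟨c, hc0.le, fun n => c * e1 n, by simpa using l1.const_mul c, fun n hn K hK => ?_⟩
  have hn' : (1 : ℝ) ≤ n := by exact_mod_cast hn
  have a := ibp_bound α h (fun (x : Config n) i j => 1) (fun x => chi (Zn α u x / K))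
    (g := 1 / (n * K)) (by positivity) (fun _ _ _ _ _ => rfl) (fun x i j hij => by
      refine (chi_lip _ _).trans (le_of_eq ?_)
      unfold Zn
      rw [totS_set u x hij]
      have : (totS (Mx u (setE x i j false)) + 2 - gam α u * n) / (2 * n) / K
        - (totS (Mx u (setE x i j false)) - gam α u * n) / (2 * n) / K = 1 / (n * K) := by
        field_simp; ring
      rw [this, abs_of_pos (by positivity)])
  have a' : Ex α h (fun x : Config n => 1 / (n * K) * ∑ i : Fin n, ∑ j : Fin n, |(1 : ℝ)|) = n / K := by
    rw [Ex_const]; simp; field_simp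
  rw [a'] at a
  simp only [mul_one] at a
  have e : ∀ x : Config n, |Zn α u x| ^ 2 / (K + |Zn α u x|)
    = c * ((1 / n) * ((∑ i, ∑ j, cen α h x i j) * chi (Zn α u x / K))
      - ((∑ i, ∑ j, cen α h x i j) / (n : ℝ)
    - (1 - κ) * ((totS (Mx u x) - gam α u * n) / n)) * chi (Zn α u x / K)) := by
    intro x
    have e0 : |Zn α u x| ^ 2 / (K + |Zn α u x|) = Zn α u x * chi (Zn α u x / K) := by
      unfold chi
      rw [sq_abs, abs_div, abs_of_pos hK]
      have : 0 < K + |Zn α u x| := by positivity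
      field_simp
    have e1 : (totS (Mx u x) - gam α u * n) / n = 2 * Zn α u x := by unfold Zn; field_simp
    rw [e0, e1, hc]
    field_simp
    ring
  simp only [e]
  rw [Ex_mul, Ex_sub, Ex_mul]
  have b1 : 1 / (n : ℝ) * Ex α h (fun x : Config n => (∑ i, ∑ j, cen α h x i j) * chi (Zn α u x / K))
      ≤ 1 / n * (n / K) := by
    gcongr
    exact (le_abs_self _).trans a
  have b2 : -Ex α h (fun x : Config n => ((∑ i, ∑ j, cen α h x i j) / (n : ℝ)
    - (1 - κ) * ((totS (Mx u x) - gam α u * n) / n)) * chi (Zn α u x / K)) ≤ e1 n := by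
    refine (neg_le_abs _).trans ((abs_Ex_le α h _).trans (Ex_mono α h fun x => ?_))
    rw [abs_mul]
    exact mul_le_of_le_one_right (abs_nonneg _) (chi_abs_le _)
  have b3 : 1 / (n : ℝ) * (n / K) = 1 / K := by field_simp
  calc c * _ ≤ c * (1 / K + e1 n) := by
        gcongr; linarith
    _ = _ := by ring

end

end TriCLT

namespace TriCLT

variable {n : ℕ}

/-! ### Equidistribution of the rescaled triangle count modulo one -/

lemma Fc_lin (α u τ t : ℝ) (x : Config n) {i j : Fin n} (hij : i ≠ j) :
    Fc α u τ t x = Fc α u τ t (setE x i j false)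
      + adj x i j • (Fc α u τ t (setE x i j true) - Fc α u τ t (setE x i j false)) := by
  rw [adj_ne x hij]
  rcases hb : x ⟨s(i, j), by simpa using hij⟩ with _ | _
  · rw [setE_eq_self x hij hb]; simp [bv]
  · rw [setE_eq_self x hij hb]; simp [bv]

lemma Ex_Fc_pair (α h u τ t : ℝ) {i j : Fin n} (hij : i ≠ j) :
    Ex α h (fun x : Config n => Fc α u τ t x) = Ex α h (fun x : Config n => Fc α u τ t (setE x i j false)
      + sig α h x i j • (Fc α u τ t (setE x i j true) - Fc α u τ t (setE x i j false))) := by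
  have a := Ex_pair α h hij (fun x : Config n =>
    Fc α u τ t (setE x i j true) - Fc α u τ t (setE x i j false))
  simp only [setE_setE, sub_self, smul_zero] at a
  rw [Ex_const] at a
  rw [← sub_eq_zero, ← Ex_sub]
  refine Eq.trans ?_ a
  congr 1; funext x
  conv_lhs => rw [Fc_lin α u τ t x hij]
  rw [sub_smul]; ring

section
variable {α h u : ℝ} (hP : Pkg α h u)

lemma exp_phase (hP : Pkg α h u) (τ t : ℝ) (x : Config n) {i j : Fin n} (hij : i ≠ j) :
    Complex.exp (((τ * (codeg x i j / n) + t / n : ℝ) : ℂ) * Complex.I)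
      = Complex.exp (((τ * u ^ 2 : ℝ) : ℂ) * Complex.I)
        * Complex.exp (((τ * Lam u (Mx u x) i j + t / n : ℝ) : ℂ) * Complex.I) := by
  rw [← Complex.exp_add, ← add_mul, ← Complex.ofReal_add, Lam_eq hP.u0 hP.u1 x hij]
  congr 3; ring

include hP

variable (hGP : GP α h u)
include hGP

lemma l1o_cen2 : L1o α h (fun n x => (∑ i, ∑ j, cen α h x i j) / (n : ℝ) ^ 2) := by
  have a := l1o_cen hP hGP
  have b := (sm_tot hP).l1o hP hGP
  have a8 : L1o α h (fun n _ => 1 / (n : ℝ)) := L1o.of_tendsto (tendsto_const_div_atTop_nhds_zero_nat 1)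
  have c : L1o α h (fun n x => (1 / (n : ℝ)) * ((∑ i, ∑ j, cen α h x i j) / (n : ℝ)
    - (1 - 2 * α * u ^ 2 * (1 - u)) * ((totS (Mx u x) - gam α u * n) / n))) := by
    refine a.of_le ?_
    filter_upwards [eventually_ge_atTop 1] with n hn x
    have hn' : (1 : ℝ) ≤ n := by exact_mod_cast hn
    rw [abs_mul, abs_of_pos (by positivity : 0 < 1 / (n : ℝ))]
    exact mul_le_of_le_one_left (abs_nonneg _) ((div_le_one (by positivity)).2 hn')
  refine ((c.add (b.const_mul (1 - 2 * α * u ^ 2 * (1 - u)))).sub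
    (a8.const_mul ((1 - 2 * α * u ^ 2 * (1 - u)) * gam α u))).congr fun n hn x => ?_
  have hn' : (1 : ℝ) ≤ n := by exact_mod_cast hn
  field_simp
  ring

/-- Case `exp(iτu²) ≠ 1`: integration by parts against the constant function bounds
`w |z - 1|` times the mean of `Fc` with an edge removed, where `w = u(1-u)` and `z = exp(iτu²)`, by
negligible quantities, and that mean determines the mean of `Fc`. -/
lemma equi_ne (τ t : ℝ) (hz : Complex.exp (((τ * u ^ 2 : ℝ) : ℂ) * Complex.I) ≠ 1) :
    Tendsto (fun n : ℕ => Ex α h (fun x : Config n => Fc α u τ t x)) atTop (𝓝 0) := by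
  set z := Complex.exp (((τ * u ^ 2 : ℝ) : ℂ) * Complex.I) with hzd
  have hz1 : ‖z‖ = 1 := Complex.norm_exp_ofReal_mul_I _
  have hz2 : ‖z - 1‖ ≤ 2 := (norm_sub_le _ _).trans (by rw [hz1, norm_one]; norm_num)
  set w := u * (1 - u) with hw
  have hw0 : 0 < w := by have := hP.u0; have := hP.u1; nlinarith
  set A := w * ‖z - 1‖ with hA
  have hA0 : 0 < A := mul_pos hw0 (norm_pos_iff.2 (sub_ne_zero.2 hz))
  set e1 : ℕ → ℝ := fun n => Ex α h (fun x : Config n => |(∑ i, ∑ j, cen α h x i j) / (n : ℝ) ^ 2|)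
  set e2 : ℕ → ℝ := fun n => Ex α h (fun x : Config n => |(∑ i, ∑ j, |Lam u (Mx u x) i j|) / (n : ℝ) ^ 2|)
  have l1 : Tendsto e1 atTop (𝓝 0) := l1o_cen2 hP hGP
  have l2 : Tendsto e2 atTop (𝓝 0) := (sm_absLam hP).l1o hP hGP
  have l3 := tendsto_const_div_atTop_nhds_zero_nat (1:ℝ)
  set c := 2 * |α| + |τ| with hc
  have hc0 : 0 ≤ c := by positivity
  have lim : Tendsto (fun n : ℕ => (c * e2 n + |t| * (1 / n))
      + 3 * ((e1 n + (c * e2 n + |t| * (1 / n))) / A) + 1 / n) atTop (𝓝 0) := by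
    have b := (l2.const_mul c).add (l3.const_mul |t|)
    have := (b.add (((l1.add b).div_const A).const_mul 3)).add l3
    simpa using this
  refine squeeze_zero_norm' ?_ lim
  filter_upwards [eventually_ge_atTop 1] with n hn
  have hn' : (1 : ℝ) ≤ n := by exact_mod_cast hn
  set F : Config n → ℂ := Fc α u τ t with hF
  have hF1 : ∀ x, ‖F x‖ = 1 := norm_Fc α u τ t
  set X : ℂ := Ex α h (fun x : Config n => ∑ i, ∑ j, if i = j then 0 else F (setE x i j false)) with hX
  set B := c * e2 n + |t| * (1 / n) with hB
  have hEB : Ex α h (fun x : Config n => ∑ i, ∑ j, (c * |Lam u (Mx u x) i j| + |t| / n)) = n ^ 2 * B := by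
    have : ∀ x : Config n, ∑ i, ∑ j, (c * |Lam u (Mx u x) i j| + |t| / n)
      = (n ^ 2 * c) * |(∑ i, ∑ j, |Lam u (Mx u x) i j|) / (n : ℝ) ^ 2| + n * |t| := by
      intro x
      have h0 : 0 ≤ (∑ i, ∑ j, |Lam u (Mx u x) i j|) / (n : ℝ) ^ 2 := by positivity
      rw [abs_of_nonneg h0]
      simp only [Finset.sum_add_distrib, ← Finset.mul_sum]
      simp
      field_simp
    simp only [this]
    rw [Ex_add, Ex_mul, Ex_const, hB]
    simp only [e2]
    field_simp
  have jump : ∀ (x : Config n) (i j : Fin n), i ≠ j →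
      F (setE x i j true) - F (setE x i j false) = F (setE x i j false)
        * (z * Complex.exp (((τ * Lam u (Mx u x) i j + t / n : ℝ) : ℂ) * Complex.I) - 1) := by
    intro x i j hij
    rw [hF, Fc_set α u τ t x hij, exp_phase hP τ t x hij]; ring
  have err : ∀ (x : Config n) (i j : Fin n) (s v : ℝ), i ≠ j → |s| ≤ 1 →
      |s - v| ≤ |α| * |Lam u (Mx u x) i j| →
      ‖s • (F (setE x i j true) - F (setE x i j false)) - v • (z - 1) * F (setE x i j false)‖
        ≤ c * |Lam u (Mx u x) i j| + |t| / n := by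
    intro x i j s v hij hs1 hsv
    rw [jump x i j hij]
    set ζ := Complex.exp (((τ * Lam u (Mx u x) i j + t / n : ℝ) : ℂ) * Complex.I)
    have hζ : ‖ζ - 1‖ ≤ |τ| * |Lam u (Mx u x) i j| + |t| / n := by
      refine (exp_sub_one_le _).trans ((abs_add_le _ _).trans ?_)
      rw [abs_mul, abs_div, Nat.abs_cast]
    have e : s • (F (setE x i j false) * (z * ζ - 1)) - v • (z - 1) * F (setE x i j false)
      = F (setE x i j false) * ((s : ℂ) * (z * (ζ - 1)) + ((s - v : ℝ) : ℂ) * (z - 1)) := by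
      simp only [Complex.real_smul]; push_cast; ring
    rw [e, norm_mul, hF1, one_mul]
    refine (norm_add_le _ _).trans ?_
    rw [norm_mul, norm_mul, norm_mul, hz1, one_mul, Complex.norm_real, Complex.norm_real,
      Real.norm_eq_abs, Real.norm_eq_abs]
    have h1 : |s| * ‖ζ - 1‖ ≤ ‖ζ - 1‖ := mul_le_of_le_one_left (norm_nonneg _) hs1
    have h2 : |s - v| * ‖z - 1‖ ≤ (|α| * |Lam u (Mx u x) i j|) * 2 := by gcongr
    rw [hc]; linarith
  have b1 : ‖Ex α h (fun x : Config n => (∑ i, ∑ j, cen α h x i j) • F x) - w • (z - 1) * X‖ ≤ n ^ 2 * B := by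
    have := ibp α h (fun (x : Config n) i j => 1) F (fun _ _ _ _ _ => rfl)
    simp only [mul_one] at this
    rw [this, hX, ← Ex_cmul, ← Ex_sub, ← hEB]
    refine (norm_Ex_le α h _).trans (Ex_mono α h fun x => ?_)
    simp only [Finset.mul_sum, ← Finset.sum_sub_distrib]
    refine (norm_sum2_le _).trans (Finset.sum_le_sum fun i _ => Finset.sum_le_sum fun j _ => ?_)
    by_cases hij : i = j
    · simp only [hij, cvar, if_true, zero_smul, mul_zero, sub_self, norm_zero]
      positivity
    · simp only [hij, if_false]
      refine err x i j _ _ hij ?_ (cvar_sub_le hP x hij)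
      rw [abs_of_nonneg (cvar_nonneg α h x i j)]; exact cvar_le α h x i j
  have b2 : ‖((n * (n - 1) : ℝ) : ℂ) * Ex α h F - (1 + u • (z - 1)) * X‖ ≤ n ^ 2 * B := by
    have s1 : ((n * (n - 1) : ℝ) : ℂ) * Ex α h F = Ex α h (fun x : Config n => ∑ i, ∑ j,
        if i = j then 0 else (F (setE x i j false)
          + sig α h x i j • (F (setE x i j true) - F (setE x i j false)))) := by
      rw [Ex_sum]
      have : ∀ i : Fin n, Ex α h (fun x : Config n => ∑ j,
        if i = j then 0 else (F (setE x i j false)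
          + sig α h x i j • (F (setE x i j true) - F (setE x i j false))))
          = ∑ j, if i = j then 0 else Ex α h F := by
        intro i
        rw [Ex_sum]
        refine Finset.sum_congr rfl fun j _ => ?_
        by_cases hij : i = j
        · simp [hij, Ex_const]
        · simp only [hij, if_false]; exact (Ex_Fc_pair α h u τ t hij).symm
      simp only [this]
      have e0 : ∀ i j : Fin n, (if i = j then 0 else Ex α h F) = Ex α h F - if i = j then Ex α h F else 0 := by
        intro i j; split_ifs <;> ring
      simp only [e0, Finset.sum_sub_distrib]
      simp; ring
    rw [s1, hX, ← Ex_cmul, ← Ex_sub, ← hEB]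
    refine (norm_Ex_le α h _).trans (Ex_mono α h fun x => ?_)
    simp only [Finset.mul_sum, ← Finset.sum_sub_distrib]
    refine (norm_sum2_le _).trans (Finset.sum_le_sum fun i _ => Finset.sum_le_sum fun j _ => ?_)
    by_cases hij : i = j
    · simp only [hij, if_true, mul_zero, sub_self, norm_zero]
      positivity
    · simp only [hij, if_false]
      have hs : |sig α h x i j - u| ≤ |α| * |Lam u (Mx u x) i j| := by
        have := sd_exp1 hP x i j
        simpa [sd, hij] using this
      have h1 : |sig α h x i j| ≤ 1 := by
        unfold sig
        rw [abs_of_nonneg (Real.sigmoid_nonneg _)]; exact Real.sigmoid_le_one _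
      have := err x i j _ u hij h1 hs
      refine le_trans (le_of_eq ?_) this
      congr 1; ring
  have b0 : ‖Ex α h (fun x : Config n => (∑ i, ∑ j, cen α h x i j) • F x)‖ ≤ n ^ 2 * e1 n := by
    simp only [e1]
    rw [← Ex_mul]
    refine (norm_Ex_le α h _).trans (Ex_mono α h fun x => le_of_eq ?_)
    rw [norm_smul, hF1, mul_one, abs_div, abs_of_pos (by positivity : (0:ℝ) < (n:ℝ)^2), Real.norm_eq_abs]
    field_simp
  have hXb : ‖X‖ ≤ n ^ 2 * ((e1 n + B) / A) := by
    have : A * ‖X‖ ≤ n ^ 2 * (e1 n + B) := by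
      have e : A * ‖X‖ = ‖w • (z - 1) * X‖ := by
        rw [norm_mul, norm_smul, Real.norm_of_nonneg hw0.le]
      rw [e]
      have := norm_sub_le_norm_add (w • (z - 1) * X)
        (Ex α h (fun x : Config n => (∑ i, ∑ j, cen α h x i j) • F x) - w • (z - 1) * X)
      have h3 := norm_le_norm_add_norm_sub' (w • (z - 1) * X)
        (Ex α h (fun x : Config n => (∑ i, ∑ j, cen α h x i j) • F x))
      rw [norm_sub_rev] at h3
      linarith
    rw [← mul_div_assoc, le_div_iff₀ hA0]; linarith
  have h3 : ‖1 + u • (z - 1)‖ ≤ 3 := by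
    refine (norm_add_le _ _).trans ?_
    rw [norm_one, norm_smul, Real.norm_of_nonneg hP.u0.le]
    have := hP.u1
    nlinarith [norm_nonneg (z - 1), hP.u0]
  have h4 : ‖((n * (n - 1) : ℝ) : ℂ) * Ex α h F‖ ≤ n ^ 2 * B + 3 * (n ^ 2 * ((e1 n + B) / A)) := by
    have h5 := norm_le_norm_add_norm_sub' (((n * (n - 1) : ℝ) : ℂ) * Ex α h F) ((1 + u • (z - 1)) * X)
    have h6 : ‖(1 + u • (z - 1)) * X‖ ≤ 3 * (n ^ 2 * ((e1 n + B) / A)) := by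
      rw [norm_mul]; exact mul_le_mul h3 hXb (norm_nonneg _) (by norm_num)
    linarith
  rw [norm_mul, Complex.norm_real, Real.norm_of_nonneg (by nlinarith)] at h4
  have h5 : ‖Ex α h F‖ ≤ 1 := by
    refine (norm_Ex_le α h _).trans ?_
    simp only [hF1]; exact (Ex_const α h _).le
  have h6 : (n : ℝ) ^ 2 * ‖Ex α h F‖ ≤ n ^ 2 * (B + 3 * ((e1 n + B) / A) + 1 / n) := by
    have : (n : ℝ) ^ 2 * (B + 3 * ((e1 n + B) / A) + 1 / n)
      = n ^ 2 * B + 3 * (n ^ 2 * ((e1 n + B) / A)) + n := by field_simp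
    rw [this]
    nlinarith
  exact le_of_mul_le_mul_left h6 (by positivity)

/-- `tr M³` and the first-order expansion of the pairing of `σ - u` with `M²` have the same limit. -/
lemma l1o_cenM2 : L1o α h (fun n x =>
    (∑ i, ∑ j, cen α h x i j * (Mx u x * Mx u x) i j) / (n : ℝ) ^ 2) := by
  have a := (sm_sdM2 hP).l1o hP hGP
  have b := (l1o_qq hP hGP).const_mul (α * (u * (1 - u)))
  have c := l1o_tr3 hP hGP
  refine ((a.neg.sub b).add c).congr fun n hn x => ?_
  have hn' : (1 : ℝ) ≤ n := by exact_mod_cast hn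
  rw [sum_cen α h u x (fun i j => (Mx u x * Mx u x) i j)]
  have : ∑ i, ∑ j, Mx u x i j * (Mx u x * Mx u x) i j = tr3 (Mx u x) := rfl
  rw [this]
  field_simp
  ring

lemma l1o_LamM2 : L1o α h (fun n x =>
    (∑ i, ∑ j, Lam u (Mx u x) i j * (Mx u x * Mx u x) i j) / (n : ℝ) ^ 2 - (u * (1 - u)) ^ 2) := by
  have a := (sm_LamM2 hP).l1o hP hGP
  have b := l1o_qq hP hGP
  refine (a.add b).congr fun n hn x => ?_
  have hn' : (1 : ℝ) ≤ n := by exact_mod_cast hn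
  field_simp
  ring

/-- Case `exp(iτu²) = 1`: the leading phase of a flip vanishes, and integration by parts against
`M²` detects the next order, whose strength is the positive limit `w²`, `w = u(1-u)`, of the off-diagonal part of
`tr M⁴/n³`. -/
lemma equi_eq {τ : ℝ} (hτ : τ ≠ 0) (t : ℝ) (hz : Complex.exp (((τ * u ^ 2 : ℝ) : ℂ) * Complex.I) = 1) :
    Tendsto (fun n : ℕ => Ex α h (fun x : Config n => Fc α u τ t x)) atTop (𝓝 0) := by
  set w := u * (1 - u) with hw
  have hw0 : 0 < w := by have := hP.u0; have := hP.u1; nlinarith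
  have hw1 : w ≤ 1 := by have := hP.u0; have := hP.u1; nlinarith
  set e1 : ℕ → ℝ := fun n => Ex α h (fun x : Config n =>
    |(∑ i, ∑ j, cen α h x i j * (Mx u x * Mx u x) i j) / (n : ℝ) ^ 2|)
  set e2 : ℕ → ℝ := fun n => Ex α h (fun x : Config n =>
    |(∑ i, ∑ j, |(Mx u x * Mx u x) i j| * Lam u (Mx u x) i j ^ 2) / (n : ℝ) ^ 2|)
  set e3 : ℕ → ℝ := fun n => Ex α h (fun x : Config n =>
    |(∑ i, ∑ j, |(Mx u x * Mx u x) i j|) / (n : ℝ) ^ 3|)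
  set e4 : ℕ → ℝ := fun n => Ex α h (fun x : Config n =>
    |(∑ i, ∑ j, Lam u (Mx u x) i j * (Mx u x * Mx u x) i j) / (n : ℝ) ^ 2 - w ^ 2|)
  have l1 : Tendsto e1 atTop (𝓝 0) := l1o_cenM2 hP hGP
  have l2 : Tendsto e2 atTop (𝓝 0) := (sm_absM2Lam2 hP).l1o hP hGP
  have l3 : Tendsto e3 atTop (𝓝 0) := (sm_absM2 hP).l1o hP hGP
  have l4 : Tendsto e4 atTop (𝓝 0) := l1o_LamM2 hP hGP
  set A := |τ| * w with hA
  have hA0 : 0 < A := mul_pos (abs_pos.2 hτ) hw0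
  set c1 := 6 * τ ^ 2 + |α| * |τ| with hc1
  set c2 := 6 * t ^ 2 + |t| with hc2
  have hc10 : 0 ≤ c1 := by positivity
  have hc20 : 0 ≤ c2 := by positivity
  have lim : Tendsto (fun n : ℕ => ((e1 n + (c1 * e2 n + c2 * e3 n)) / A + e4 n) / w ^ 2) atTop (𝓝 0) := by
    have := (((l1.add ((l2.const_mul c1).add (l3.const_mul c2))).div_const A).add l4).div_const (w ^ 2)
    simpa using this
  refine squeeze_zero_norm' ?_ lim
  filter_upwards [eventually_ge_atTop 1] with n hn
  have hn' : (1 : ℝ) ≤ n := by exact_mod_cast hn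
  set F : Config n → ℂ := Fc α u τ t with hF
  have hF1 : ∀ x, ‖F x‖ = 1 := norm_Fc α u τ t
  have b1 : ‖Ex α h (fun x : Config n => (∑ i, ∑ j, cen α h x i j * (Mx u x * Mx u x) i j) • F x)
      - Ex α h (fun x : Config n => ((τ * w : ℝ) : ℂ) * Complex.I *
        ((∑ i, ∑ j, Lam u (Mx u x) i j * (Mx u x * Mx u x) i j) • F x))‖
      ≤ n ^ 2 * (c1 * e2 n + c2 * e3 n) := by
    have := ibp α h (fun (x : Config n) i j => (Mx u x * Mx u x) i j) F
      (fun x i j b hij => M2_set u x i j b hij)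
    rw [this, ← Ex_sub]
    have hE : n ^ 2 * (c1 * e2 n + c2 * e3 n) = Ex α h (fun x : Config n =>
      ∑ i, ∑ j, (c1 * (|(Mx u x * Mx u x) i j| * Lam u (Mx u x) i j ^ 2)
        + c2 / n * |(Mx u x * Mx u x) i j|)) := by
      have : ∀ x : Config n, ∑ i, ∑ j, (c1 * (|(Mx u x * Mx u x) i j| * Lam u (Mx u x) i j ^ 2)
        + c2 / n * |(Mx u x * Mx u x) i j|)
        = (n ^ 2 * c1) * |(∑ i, ∑ j, |(Mx u x * Mx u x) i j| * Lam u (Mx u x) i j ^ 2) / (n : ℝ) ^ 2|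
          + (n ^ 2 * c2) * |(∑ i, ∑ j, |(Mx u x * Mx u x) i j|) / (n : ℝ) ^ 3| := by
        intro x
        rw [abs_of_nonneg (by positivity), abs_of_nonneg (by positivity)]
        simp only [Finset.sum_add_distrib, ← Finset.mul_sum]
        field_simp
      simp only [this]
      rw [Ex_add, Ex_mul, Ex_mul]
      simp only [e2, e3]
      ring
    rw [hE]
    refine (norm_Ex_le α h _).trans (Ex_mono α h fun x => ?_)
    simp only [Finset.sum_smul, Finset.mul_sum, ← Finset.sum_sub_distrib]
    refine (norm_sum2_le _).trans (Finset.sum_le_sum fun i _ => Finset.sum_le_sum fun j _ => ?_)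
    set m := (Mx u x * Mx u x) i j
    by_cases hij : i = j
    · have hL : Lam u (Mx u x) i j = 0 := by simp [Lam, hij]
      have hcv : cvar α h x i j = 0 := by simp [cvar, hij]
      rw [hL, hcv]
      simp only [zero_mul, zero_smul, mul_zero, sub_self, norm_zero]
      positivity
    set L := Lam u (Mx u x) i j
    set D := τ * L + t / n with hD
    have j1 := jump_err (hF1 (setE x i j false)) D
      (by have := Fc_set α u τ t x hij
          rw [exp_phase hP τ t x hij, hz, one_mul] at this
          exact this) (Fc_cases α u τ t x i j hij)
    set J1 := F (setE x i j true) - F (setE x i j false)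
    set cv := cvar α h x i j
    have e : (cv * m) • J1 - ((τ * w : ℝ) : ℂ) * Complex.I * ((L * m) • F x)
      = (m : ℂ) * ((cv : ℂ) * (J1 - (D : ℂ) * Complex.I * F x)
        + (((cv - w) * (τ * L) + cv * (t / n) : ℝ) : ℂ) * Complex.I * F x) := by
      simp only [Complex.real_smul, hD]; push_cast; ring
    rw [e, norm_mul, Complex.norm_real, Real.norm_eq_abs]
    have h1 : |cv| ≤ 1 := by
      rw [abs_of_nonneg (cvar_nonneg α h x i j)]; exact cvar_le α h x i j
    have h2 : ‖(cv : ℂ) * (J1 - (D : ℂ) * Complex.I * F x)‖ ≤ 3 * D ^ 2 := by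
      rw [norm_mul, Complex.norm_real, Real.norm_eq_abs]
      exact (mul_le_of_le_one_left (norm_nonneg _) h1).trans j1
    have h3 : ‖(((cv - w) * (τ * L) + cv * (t / n) : ℝ) : ℂ) * Complex.I * F x‖
        ≤ |α| * |τ| * L ^ 2 + |t| / n := by
      rw [norm_mul, norm_mul, hF1, Complex.norm_I, mul_one, mul_one, Complex.norm_real, Real.norm_eq_abs]
      refine (abs_add_le _ _).trans (add_le_add ?_ ?_)
      · rw [abs_mul, abs_mul]
        calc |cv - w| * (|τ| * |L|) ≤ (|α| * |L|) * (|τ| * |L|) := by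
              gcongr; exact cvar_sub_le hP x hij
          _ = |α| * |τ| * |L| ^ 2 := by ring
          _ = _ := by rw [sq_abs]
      · rw [abs_mul, abs_div, Nat.abs_cast]
        exact mul_le_of_le_one_left (by positivity) h1
    have h4 : D ^ 2 ≤ 2 * (τ ^ 2 * L ^ 2) + 2 * (t ^ 2 / n) := by
      have a1 : D ^ 2 ≤ 2 * (τ * L) ^ 2 + 2 * (t / n) ^ 2 := by
        rw [hD]; nlinarith [sq_nonneg (τ * L - t / n)]
      have a2 : (t / n) ^ 2 ≤ t ^ 2 / n := by
        rw [div_pow]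
        gcongr
        nlinarith
      nlinarith
    calc |m| * _ ≤ |m| * (c1 * L ^ 2 + c2 / n) := by
          gcongr
          refine (norm_add_le _ _).trans ?_
          have : c1 * L ^ 2 + c2 / n = 3 * (2 * (τ ^ 2 * L ^ 2) + 2 * (t ^ 2 / n))
            + (|α| * |τ| * L ^ 2 + |t| / n) := by rw [hc1, hc2]; ring
          rw [this]; linarith
      _ = _ := by ring
  set Y := Ex α h (fun x : Config n => ((∑ i, ∑ j, Lam u (Mx u x) i j * (Mx u x * Mx u x) i j)
    / (n : ℝ) ^ 2) • F x) with hY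
  have b2 : Ex α h (fun x : Config n => ((τ * w : ℝ) : ℂ) * Complex.I *
        ((∑ i, ∑ j, Lam u (Mx u x) i j * (Mx u x * Mx u x) i j) • F x))
      = ((n ^ 2 * (τ * w) : ℝ) : ℂ) * Complex.I * Y := by
    rw [hY, ← Ex_cmul]
    congr 1; funext x
    simp only [Complex.real_smul]
    push_cast
    have : (n : ℂ) ≠ 0 := by exact_mod_cast (by positivity : (n : ℝ) ≠ 0)
    field_simp
  have b0 : ‖Ex α h (fun x : Config n => (∑ i, ∑ j, cen α h x i j * (Mx u x * Mx u x) i j) • F x)‖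
      ≤ n ^ 2 * e1 n := by
    simp only [e1]
    rw [← Ex_mul]
    refine (norm_Ex_le α h _).trans (Ex_mono α h fun x => le_of_eq ?_)
    rw [norm_smul, hF1, mul_one, abs_div, abs_of_pos (by positivity : (0:ℝ) < (n:ℝ)^2), Real.norm_eq_abs]
    field_simp
  have b3 : A * ‖Y‖ ≤ e1 n + (c1 * e2 n + c2 * e3 n) := by
    rw [b2] at b1
    have h3 := norm_le_norm_add_norm_sub' (((n ^ 2 * (τ * w) : ℝ) : ℂ) * Complex.I * Y)
      (Ex α h (fun x : Config n => (∑ i, ∑ j, cen α h x i j * (Mx u x * Mx u x) i j) • F x))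
    rw [norm_sub_rev] at h3
    have h5 : ‖((n ^ 2 * (τ * w) : ℝ) : ℂ) * Complex.I * Y‖ = n ^ 2 * (A * ‖Y‖) := by
      rw [norm_mul, norm_mul, Complex.norm_I, mul_one, Complex.norm_real, Real.norm_eq_abs, abs_mul,
        abs_mul, abs_of_pos hw0, abs_of_pos (by positivity : (0:ℝ) < (n:ℝ)^2), hA]
      ring
    rw [h5] at h3
    have : (n:ℝ) ^ 2 * (A * ‖Y‖) ≤ n ^ 2 * (e1 n + (c1 * e2 n + c2 * e3 n)) := by linarith
    exact le_of_mul_le_mul_left this (by positivity)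
  have b4 := Ex_smul_sub_le α h (fun x : Config n => (∑ i, ∑ j, Lam u (Mx u x) i j * (Mx u x * Mx u x) i j)
    / (n : ℝ) ^ 2) (fun _ => w ^ 2) F hF1
  have b5 : ‖Y‖ ≤ (e1 n + (c1 * e2 n + c2 * e3 n)) / A := by
    rw [le_div_iff₀ hA0]; linarith
  rw [Ex_smul] at b4
  have b6 := norm_le_norm_add_norm_sub' (w ^ 2 • Ex α h F) Y
  rw [norm_sub_rev] at b6
  rw [le_div_iff₀ (by positivity)]
  have b7 : ‖w ^ 2 • Ex α h F‖ = ‖Ex α h F‖ * w ^ 2 := by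
    rw [norm_smul, Real.norm_of_nonneg (by positivity)]; ring
  rw [b7] at b6
  linarith

/-- Equidistribution of `T/n` modulo one jointly with the edge fluctuation, in Fourier form. -/
lemma equi {τ : ℝ} (hτ : τ ≠ 0) (t : ℝ) :
    Tendsto (fun n : ℕ => Ex α h (fun x : Config n => Fc α u τ t x)) atTop (𝓝 0) := by
  by_cases hz : Complex.exp (((τ * u ^ 2 : ℝ) : ℂ) * Complex.I) = 1
  · exact equi_eq hP hGP hτ t hz
  · exact equi_ne hP hGP τ t hz

end

end TriCLT

/-! ### The variational problem -/

namespace TriCLT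
variable {n : ℕ}

/-- A critical point of a function with nonpositive second derivative is a maximum. -/
lemma max_of_deriv2 {a b u : ℝ} {F F' F'' : ℝ → ℝ} (hc : ContinuousOn F (Set.Icc a b))
    (hu : u ∈ Set.Ioo a b) (h1 : ∀ w ∈ Set.Ioo a b, HasDerivAt F (F' w) w)
    (h2 : ∀ w ∈ Set.Ioo a b, HasDerivAt F' (F'' w) w) (h3 : ∀ w ∈ Set.Ioo a b, F'' w ≤ 0)
    (h0 : F' u = 0) : ∀ w ∈ Set.Icc a b, F w ≤ F u := by
  have hanti : AntitoneOn F' (Set.Ioo a b) := by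
    refine antitoneOn_of_deriv_nonpos (convex_Ioo a b)
      (fun w hw => (h2 w hw).continuousAt.continuousWithinAt) ?_ ?_
    · rw [interior_Ioo]; exact fun w hw => (h2 w hw).differentiableAt.differentiableWithinAt
    · rw [interior_Ioo]; intro w hw; rw [(h2 w hw).deriv]; exact h3 w hw
  intro w hw
  rcases le_total w u with hwu | hwu
  · have hm : MonotoneOn F (Set.Icc a u) := by
      refine monotoneOn_of_deriv_nonneg (convex_Icc a u)
        (hc.mono (Set.Icc_subset_Icc_right hu.2.le)) ?_ ?_
      · rw [interior_Icc]
        exact fun y hy => (h1 y ⟨hy.1, hy.2.trans hu.2⟩).differentiableAt.differentiableWithinAt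
      · rw [interior_Icc]; intro y hy
        have hy' : y ∈ Set.Ioo a b := ⟨hy.1, hy.2.trans hu.2⟩
        rw [(h1 y hy').deriv, ← h0]
        exact hanti hy' hu hy.2.le
    exact hm ⟨hw.1, hwu⟩ ⟨hu.1.le, le_rfl⟩ hwu
  · have hm : AntitoneOn F (Set.Icc u b) := by
      refine antitoneOn_of_deriv_nonpos (convex_Icc u b)
        (hc.mono (Set.Icc_subset_Icc_left hu.1.le)) ?_ ?_
      · rw [interior_Icc]
        exact fun y hy => (h1 y ⟨hu.1.trans hy.1, hy.2⟩).differentiableAt.differentiableWithinAt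
      · rw [interior_Icc]; intro y hy
        have hy' : y ∈ Set.Ioo a b := ⟨hu.1.trans hy.1, hy.2⟩
        rw [(h1 y hy').deriv, ← h0]
        exact hanti hu hy' hy.1.le
    exact hm ⟨le_rfl, hu.2.le⟩ ⟨hwu, hw.2⟩ hwu

lemma Ifun_eq (w : ℝ) : Ifun w = -Real.binEntropy w := by
  rw [Real.binEntropy_eq_negMulLog_add_negMulLog_one_sub]; unfold Ifun Real.negMulLog; ring

lemma continuous_Ifun : Continuous Ifun := by
  have : Ifun = fun w => -Real.binEntropy w := funext Ifun_eq
  rw [this]; fun_prop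

lemma hasDerivAt_Ifun {w : ℝ} (h0 : 0 < w) (h1 : w < 1) :
    HasDerivAt Ifun (Real.log w - Real.log (1 - w)) w := by
  have := (Real.hasDerivAt_binEntropy h0.ne' h1.ne).neg
  have e : Ifun = -Real.binEntropy := funext Ifun_eq
  rw [e]; exact this.congr_deriv (by ring)

lemma hasDerivAt_logit {w : ℝ} (h0 : 0 < w) (h1 : w < 1) :
    HasDerivAt (fun w => Real.log w - Real.log (1 - w)) (1 / (w * (1 - w))) w := by
  have h1' : (1 - w) ≠ 0 := (sub_pos.2 h1).ne'
  have a := (Real.hasDerivAt_log h0.ne').sub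
    (((hasDerivAt_id w).const_sub 1).log (by simpa using h1'))
  refine a.congr_deriv ?_
  have := h0.ne'
  simp only [id_eq]
  field_simp
  ring

lemma one_add_exp_pos (t : ℝ) : 0 < 1 + Real.exp t := by positivity

lemma log_sigmoid (t : ℝ) : Real.log (Real.sigmoid t) = -Real.log (1 + Real.exp (-t)) := by
  rw [Real.sigmoid_def, Real.log_inv]

lemma logit_sigmoid (t : ℝ) : Real.log (Real.sigmoid t) - Real.log (1 - Real.sigmoid t) = t := by
  rw [← Real.sigmoid_neg, ← Real.sigmoid_mul_rexp_neg,
    Real.log_mul (Real.sigmoid_pos t).ne' (Real.exp_pos _).ne', Real.log_exp]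
  ring

/-- Gibbs' variational formula for a single bit. -/
lemma lse_eq (t : ℝ) :
    Real.log (1 + Real.exp t) = Real.sigmoid t * t - Ifun (Real.sigmoid t) := by
  have a : Real.log (1 - Real.sigmoid t) = -Real.log (1 + Real.exp t) := by
    rw [← Real.sigmoid_neg, log_sigmoid, neg_neg]
  have b := logit_sigmoid t
  have c : Real.log (Real.sigmoid t) = t - Real.log (1 + Real.exp t) := by rw [a] at b; linarith
  unfold Ifun
  rw [a, c]; ring

/-- Pinsker's inequality for a single bit. -/
lemma pinsker {l u : ℝ} (h : Real.sigmoid l = u) {w : ℝ} (hw : w ∈ Set.Icc (0 : ℝ) 1) :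
    l * w - Ifun w ≤ l * u - Ifun u - 2 * (w - u) ^ 2 := by
  have u0 : 0 < u := h ▸ Real.sigmoid_pos l
  have u1 : u < 1 := h ▸ Real.sigmoid_lt_one l
  have key := max_of_deriv2 (a := 0) (b := 1) (u := u)
    (F := fun w => l * w - Ifun w + 2 * (w - u) ^ 2)
    (F' := fun w => l - (Real.log w - Real.log (1 - w)) + 4 * (w - u))
    (F'' := fun w => -(1 / (w * (1 - w))) + 4)
    (by have := continuous_Ifun; fun_prop) ⟨u0, u1⟩
    (by
      intro w hw
      have := (((hasDerivAt_id w).const_mul l).sub (hasDerivAt_Ifun hw.1 hw.2)).add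
        ((((hasDerivAt_id w).sub_const u).pow 2).const_mul 2)
      refine this.congr_deriv ?_
      simp; ring)
    (by
      intro w hw
      have := ((hasDerivAt_logit hw.1 hw.2).const_sub l).add
        (((hasDerivAt_id w).sub_const u).const_mul 4)
      refine this.congr_deriv ?_
      simp)
    (by
      intro w hw
      have p : 0 < w * (1 - w) := mul_pos hw.1 (sub_pos.2 hw.2)
      have : 4 ≤ 1 / (w * (1 - w)) := by
        rw [le_div_iff₀ p]; nlinarith [sq_nonneg (2 * w - 1)]
      linarith)
    (by
      have := logit_sigmoid l
      rw [h] at this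
      simp only [sub_self, mul_zero, add_zero]; linarith)
    w hw
  simp only [sub_self] at key
  linarith

/-- Quantitative form of the variational problem: the maximiser `u` is nondegenerate. -/
structure VPkg (α h u c : ℝ) : Prop where
  pk : Pkg α h u
  cpos : 0 < c
  lower : -2 < α
  phi : ∀ w ∈ Set.Icc (0 : ℝ) 1, α / 3 * w ^ 3 + h * w - Ifun w
    ≤ α / 3 * u ^ 3 + h * u - Ifun u - c * (w - u) ^ 2

lemma cubic_nonneg {w b : ℝ} (hw : 0 ≤ w) (hb : 0 ≤ b) : 0 ≤ 2 * w ^ 3 - 3 * b * w ^ 2 + b ^ 3 := by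
  have : 2 * w ^ 3 - 3 * b * w ^ 2 + b ^ 3 = (w - b) ^ 2 * (2 * w + b) := by ring
  rw [this]; positivity

/-- The mean-field functional of a star is, up to an additive constant, dominated by the full
functional, with equality at `u`. -/
lemma VPkg.psi {α h u c : ℝ} (H : VPkg α h u c) (hα : 0 ≤ α) {w : ℝ} (hw : w ∈ Set.Icc (0 : ℝ) 1) :
    h * w + α * u / 2 * w ^ 2 - Ifun w ≤ h * u + α * u / 2 * u ^ 2 - Ifun u - c * (w - u) ^ 2 := by
  have := H.phi w hw
  have k := mul_nonneg hα (cubic_nonneg hw.1 H.pk.u0.le)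
  nlinarith

lemma quad_le {c d t : ℝ} (hc : 0 < c) : -c * d ^ 2 + t * d ≤ t ^ 2 / (4 * c) := by
  rw [le_div_iff₀ (by positivity)]
  nlinarith [sq_nonneg (2 * c * d - t)]

/-- Independent bits, indexed by the edges. -/
lemma sum_exp_prod {ι : Type*} [Fintype ι] [DecidableEq ι] (t : ι → ℝ) :
    ∑ b : ι → Bool, Real.exp (∑ e, t e * bv (b e)) = Real.exp (∑ e, Real.log (1 + Real.exp (t e))) := by
  rw [Real.exp_sum]
  simp_rw [Real.exp_sum, Real.exp_log (one_add_exp_pos _)]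
  have := Fintype.prod_sum (fun (e : ι) (c : Bool) => Real.exp (t e * bv c))
  rw [← this]
  refine Finset.prod_congr rfl fun e _ => ?_
  simp [bv]; ring

lemma sum_exp_pairs (t : Fin n → Fin n → ℝ) (ht : ∀ i j, t i j = t j i) :
    ∑ x : Config n, Real.exp ((∑ i, ∑ j, t i j * adj x i j) / 2)
      = Real.exp ((∑ i, ∑ j, if i = j then 0 else Real.log (1 + Real.exp (t i j))) / 2) := by
  classical
  let T : Edge n → ℝ := fun e => Sym2.lift ⟨t, ht⟩ e.1
  have e1 : ∀ x : Config n, (∑ i, ∑ j, t i j * adj x i j) / 2 = ∑ e, T e * bv (x e) := by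
    intro x
    rw [sum_pairs (fun e => T e * bv (x e)) (fun i j => t i j * adj x i j)
      (fun i => by simp [adj_diag]) (fun i j h => by rw [adj_ne x h]; rfl)]
    ring
  have e2 : (∑ i, ∑ j, if i = j then 0 else Real.log (1 + Real.exp (t i j))) / 2
      = ∑ e, Real.log (1 + Real.exp (T e)) := by
    rw [sum_pairs (fun e => Real.log (1 + Real.exp (T e)))
      (fun i j => if i = j then 0 else Real.log (1 + Real.exp (t i j)))
      (fun i => by simp) (fun i j h => by simp only [h, if_false]; rfl)]
    ring
  simp_rw [e1, e2]
  exact sum_exp_prod T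

end TriCLT

/-! ### Low-rank nets for the cubic form -/

namespace TriCLT
variable {n : ℕ}

/-- The matrix with eigenvalues `p` and eigenvectors the columns of `U`. -/
def pm (U : Matrix (Fin n) (Fin n) ℝ) (p : Fin n → ℝ) : Matrix (Fin n) (Fin n) ℝ :=
  U * Matrix.diagonal p * U.transpose

lemma pm_apply (U : Matrix (Fin n) (Fin n) ℝ) (p : Fin n → ℝ) (i j : Fin n) :
    pm U p i j = ∑ a, p a * (U i a * U j a) := by
  unfold pm
  rw [Matrix.mul_apply]
  refine Finset.sum_congr rfl fun a _ => ?_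
  rw [Matrix.mul_diagonal, Matrix.transpose_apply]; ring

lemma pm_mul {U : Matrix (Fin n) (Fin n) ℝ} (hU : U.transpose * U = 1) (p q : Fin n → ℝ) :
    pm U p * pm U q = pm U (fun a => p a * q a) := by
  unfold pm
  calc U * Matrix.diagonal p * U.transpose * (U * Matrix.diagonal q * U.transpose)
      = U * Matrix.diagonal p * (U.transpose * U) * Matrix.diagonal q * U.transpose := by
        simp only [Matrix.mul_assoc]
    _ = U * (Matrix.diagonal p * Matrix.diagonal q) * U.transpose := by
        rw [hU, Matrix.mul_one]; simp only [Matrix.mul_assoc]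
    _ = _ := by rw [Matrix.diagonal_mul_diagonal]

lemma pm_inner {U : Matrix (Fin n) (Fin n) ℝ} (hU : U.transpose * U = 1) (p q : Fin n → ℝ) :
    ∑ i, ∑ j, pm U p i j * pm U q i j = ∑ a, p a * q a := by
  have h1 : ∑ i, ∑ j, pm U p i j * pm U q i j = Matrix.trace (pm U p * pm U q) := by
    simp only [Matrix.trace, Matrix.diag, Matrix.mul_apply]
    refine Finset.sum_congr rfl fun i _ => Finset.sum_congr rfl fun j _ => ?_
    rw [pm_apply U q i j, pm_apply U q j i]
    congr 1
    exact Finset.sum_congr rfl fun a _ => by ring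
  rw [h1, pm_mul hU]
  unfold pm
  rw [Matrix.trace_mul_comm, ← Matrix.mul_assoc, hU, Matrix.one_mul, Matrix.trace_diagonal]

lemma exists_pm (K : Matrix (Fin n) (Fin n) ℝ) (hK : ∀ i j, K i j = K j i) :
    ∃ (U : Matrix (Fin n) (Fin n) ℝ) (p : Fin n → ℝ), U.transpose * U = 1 ∧ K = pm U p := by
  have hH : K.IsHermitian := by
    ext i j; simp [Matrix.conjTranspose_apply, hK i j]
  refine ⟨hH.eigenvectorUnitary, hH.eigenvalues, ?_, ?_⟩
  · have := Unitary.coe_star_mul_self hH.eigenvectorUnitary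
    simpa [Matrix.star_eq_conjTranspose, Matrix.conjTranspose_eq_transpose_of_trivial] using this
  · have := hH.spectral_theorem
    rw [Unitary.conjStarAlgAut_apply] at this
    unfold pm
    simpa [Matrix.star_eq_conjTranspose, Matrix.conjTranspose_eq_transpose_of_trivial,
      Function.comp_def] using this

/-- Re-indexing a sum over at most `k` vectors by `Fin k`, padding with zero vectors. -/
lemma reindex (F : Fin n → Fin n → ℝ) : ∀ (k : ℕ) (S : Finset (Fin n)), S.card ≤ k →
    ∃ w : Fin k → Fin n → ℝ, (∀ l, w l = 0 ∨ ∃ a ∈ S, w l = F a) ∧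
      ∀ i j, ∑ l, w l i * w l j = ∑ a ∈ S, F a i * F a j := by
  intro k
  induction k with
  | zero =>
    intro S hS
    have : S = ∅ := Finset.card_eq_zero.1 (Nat.le_zero.1 hS)
    subst this
    exact ⟨fun _ => 0, fun l => l.elim0, fun i j => by simp⟩
  | succ k ih =>
    intro S hS
    rcases S.eq_empty_or_nonempty with rfl | ⟨a, ha⟩
    · exact ⟨fun _ => 0, fun l => Or.inl rfl, fun i j => by simp⟩
    · obtain ⟨w, h1, h2⟩ := ih (S.erase a) (by rw [Finset.card_erase_of_mem ha]; omega)
      refine ⟨Fin.cons (F a) w, ?_, ?_⟩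
      · intro l
        refine Fin.cases ?_ (fun l => ?_) l
        · exact Or.inr ⟨a, ha, by simp⟩
        · rcases h1 l with h | ⟨b, hb, h⟩
          · exact Or.inl (by simpa using h)
          · exact Or.inr ⟨b, Finset.mem_of_mem_erase hb, by simpa using h⟩
      · intro i j
        rw [Fin.sum_univ_succ]
        simp only [Fin.cons_zero, Fin.cons_succ]
        rw [h2, Finset.add_sum_erase S (fun a => F a i * F a j) ha]

/-- Truncating the spectrum of `K` at level `ηn` gives a positive semidefinite matrix of bounded
rank that captures `tr K³` from above. -/
lemma low_rank {η : ℝ} (hη : 0 < η) {k : ℕ} (hk : 1 / η ^ 2 ≤ k) (hn : 1 ≤ n)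
    (K : Matrix (Fin n) (Fin n) ℝ) (hK : ∀ i j, K i j = K j i) (hK1 : ∀ i j, |K i j| ≤ 1) :
    ∃ (w : Fin k → Fin n → ℝ) (b : ℝ), (∀ l, ∑ i, w l i ^ 2 ≤ n) ∧ 0 ≤ b ∧ b ≤ n ∧
      ∑ i, ∑ j, (∑ l, w l i * w l j) ^ 2 = b ^ 2 ∧ ∑ i, ∑ j, K i j * (∑ l, w l i * w l j) = b ^ 2 ∧
      tr3 K ≤ b ^ 3 + η * n ^ 3 := by
  classical
  have hn' : (1 : ℝ) ≤ n := by exact_mod_cast hn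
  obtain ⟨U, p, hU, hKp⟩ := exists_pm K hK
  have hp2 : ∑ a, p a ^ 2 ≤ (n : ℝ) ^ 2 := by
    have := pm_inner hU p p
    rw [← hKp] at this
    have e : ∑ a, p a ^ 2 = ∑ i, ∑ j, K i j * K i j := by
      rw [this]; exact Finset.sum_congr rfl fun a _ => by ring
    rw [e]
    have : ∑ i : Fin n, ∑ j : Fin n, K i j * K i j ≤ ∑ i : Fin n, ∑ j : Fin n, (1 : ℝ) :=
      Finset.sum_le_sum fun i _ => Finset.sum_le_sum fun j _ => by
        have := abs_le.1 (hK1 i j); nlinarith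
    refine this.trans (le_of_eq ?_)
    simp; ring
  set S : Finset (Fin n) := Finset.univ.filter (fun a => η * n ≤ p a) with hS
  have hpS : ∀ a ∈ S, η * n ≤ p a := fun a ha => (Finset.mem_filter.1 ha).2
  have hηn : 0 < η * n := by positivity
  have hsub : ∑ a ∈ S, p a ^ 2 ≤ ∑ a, p a ^ 2 :=
    Finset.sum_le_sum_of_subset_of_nonneg (Finset.subset_univ _) fun _ _ _ => sq_nonneg _
  have hcard : S.card ≤ k := by
    have h1 : (S.card : ℝ) * (η * n) ^ 2 ≤ n ^ 2 := by
      refine le_trans ?_ (hsub.trans hp2)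
      rw [← nsmul_eq_mul, ← Finset.sum_const]
      exact Finset.sum_le_sum fun a ha => pow_le_pow_left₀ hηn.le (hpS a ha) 2
    have h2 : (S.card : ℝ) ≤ 1 / η ^ 2 := by
      rw [le_div_iff₀ (by positivity)]
      have : (0 : ℝ) < n ^ 2 := by positivity
      by_contra hc
      push Not at hc
      nlinarith
    exact_mod_cast h2.trans hk
  obtain ⟨w, hw1, hw2⟩ := reindex (fun a i => Real.sqrt (p a) * U i a) k S hcard
  have hpn : ∀ a, p a ≤ n := by
    intro a
    have h1 : p a ^ 2 ≤ (n : ℝ) ^ 2 :=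
      (Finset.single_le_sum (f := fun a => p a ^ 2) (fun _ _ => sq_nonneg _) (Finset.mem_univ a)).trans hp2
    exact le_of_sq_le_sq h1 (by positivity)
  set q : Fin n → ℝ := fun a => if a ∈ S then p a else 0 with hq
  have hB : ∀ i j, ∑ l, w l i * w l j = pm U q i j := by
    intro i j
    rw [hw2, pm_apply]
    simp only [hq, ite_mul, zero_mul, Finset.sum_ite_mem, Finset.univ_inter]
    refine Finset.sum_congr rfl fun a ha => ?_
    have := Real.mul_self_sqrt (hηn.le.trans (hpS a ha))
    calc √(p a) * U i a * (√(p a) * U j a) = (√(p a) * √(p a)) * (U i a * U j a) := by ring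
      _ = _ := by rw [this]
  have hqq : ∑ a, q a * q a = ∑ a ∈ S, p a ^ 2 := by
    have : ∀ a, q a * q a = if a ∈ S then p a ^ 2 else 0 := by
      intro a; simp only [hq]; split_ifs <;> ring
    simp only [this, Finset.sum_ite_mem, Finset.univ_inter]
  have hpq : ∑ a, p a * q a = ∑ a ∈ S, p a ^ 2 := by
    simp only [hq, mul_ite, mul_zero, ← pow_two]
    rw [← Finset.sum_filter]; simp
  set b := Real.sqrt (∑ a ∈ S, p a ^ 2) with hb
  have hb2 : b ^ 2 = ∑ a ∈ S, p a ^ 2 := Real.sq_sqrt (Finset.sum_nonneg fun _ _ => sq_nonneg _)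
  have hb0 : 0 ≤ b := Real.sqrt_nonneg _
  refine ⟨w, b, ?_, hb0, ?_, ?_, ?_, ?_⟩
  · intro l
    rcases hw1 l with h | ⟨a, ha, h⟩
    · rw [h]; simp
    · rw [h]
      have hcol : ∑ i, U i a * U i a = 1 := by
        have := congrFun (congrFun hU a) a
        rw [Matrix.mul_apply] at this
        simpa using this
      have : ∑ i, (√(p a) * U i a) ^ 2 = p a := by
        calc ∑ i, (√(p a) * U i a) ^ 2 = (√(p a)) ^ 2 * ∑ i, U i a * U i a := by
              rw [Finset.mul_sum]; exact Finset.sum_congr rfl fun i _ => by ring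
          _ = p a := by rw [hcol, Real.sq_sqrt (hηn.le.trans (hpS a ha)), mul_one]
      rw [this]; exact hpn a
  · refine le_of_sq_le_sq ?_ (by positivity)
    rw [hb2]; exact hsub.trans hp2
  · simp only [hB]
    rw [hb2, ← hqq, ← pm_inner hU q q]
    simp only [pow_two]
  · simp only [hB]
    rw [hb2, ← hpq, ← pm_inner hU p q, ← hKp]
  · have h3 : tr3 K = ∑ a, p a ^ 3 := by
      unfold tr3
      have : K * K = pm U (fun a => p a * p a) := by rw [hKp, pm_mul hU]
      rw [this]
      conv_lhs => rw [hKp]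
      rw [pm_inner hU]
      exact Finset.sum_congr rfl fun a _ => by ring
    rw [h3]
    have hle : ∀ a, p a ^ 3 ≤ (if a ∈ S then p a ^ 2 * b else 0) + η * n * p a ^ 2 := by
      intro a
      by_cases ha : a ∈ S
      · simp only [ha, if_true]
        have h1 : p a ≤ b := by
          refine le_of_sq_le_sq ?_ hb0
          rw [hb2]
          exact Finset.single_le_sum (f := fun a => p a ^ 2) (fun _ _ => sq_nonneg _) ha
        have h2 : p a ^ 3 ≤ p a ^ 2 * b := by
          rw [pow_succ]; exact mul_le_mul_of_nonneg_left h1 (sq_nonneg _)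
        have : 0 ≤ η * n * p a ^ 2 := by positivity
        linarith
      · simp only [ha, if_false, zero_add]
        have h1 : p a < η * n := by
          by_contra hc
          exact ha (Finset.mem_filter.2 ⟨Finset.mem_univ _, not_lt.1 hc⟩)
        rw [pow_succ, mul_comm]
        exact mul_le_mul_of_nonneg_right h1.le (sq_nonneg _)
    refine (Finset.sum_le_sum fun a _ => hle a).trans ?_
    rw [Finset.sum_add_distrib, ← Finset.mul_sum, Finset.sum_ite_mem, Finset.univ_inter,
      ← Finset.sum_mul, ← hb2]
    have : η * n * ∑ a, p a ^ 2 ≤ η * n * n ^ 2 := mul_le_mul_of_nonneg_left hp2 hηn.le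
    nlinarith

/-- The points of the grid `(1/m)ℤ ∩ [-n, n]`. -/
def gr (m n : ℕ) (c : Fin (2 * (m * n) + 1)) : ℝ := ((c : ℕ) - (m * n : ℕ) : ℝ) / m

lemma round_real {m : ℕ} (hm : 0 < m) {y : ℝ} (hy : |y| ≤ n) :
    ∃ c : Fin (2 * (m * n) + 1), |gr m n c - y| ≤ 1 / m := by
  have hm' : (0 : ℝ) < m := by exact_mod_cast hm
  have hy' := abs_le.1 hy
  set z : ℤ := ⌊m * y⌋ + (m * n : ℕ) with hz
  have h0 : 0 ≤ z := by
    have : -((m * n : ℕ) : ℤ) ≤ ⌊m * y⌋ := by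
      rw [Int.le_floor]; push_cast; nlinarith
    omega
  have h1 : z ≤ 2 * (m * n : ℕ) := by
    have : ⌊m * y⌋ ≤ ((m * n : ℕ) : ℤ) := by
      have h : (⌊m * y⌋ : ℝ) ≤ ((m * n : ℕ) : ℝ) := (Int.floor_le _).trans (by push_cast; nlinarith)
      exact_mod_cast h
    omega
  refine ⟨⟨z.toNat, by omega⟩, ?_⟩
  have hc : ((z.toNat : ℕ) : ℝ) = ⌊m * y⌋ + (m * n : ℕ) := by
    have : ((z.toNat : ℕ) : ℤ) = z := Int.toNat_of_nonneg h0
    have h2 : ((z.toNat : ℕ) : ℝ) = (z : ℝ) := by exact_mod_cast this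
    rw [h2, hz]; push_cast; ring
  unfold gr
  simp only
  rw [hc, add_sub_cancel_right]
  have f1 := Int.floor_le (m * y)
  have f2 := Int.lt_floor_add_one (m * y)
  have : (⌊m * y⌋ : ℝ) / m - y = (⌊m * y⌋ - m * y) / m := by field_simp
  rw [this, abs_div, abs_of_pos hm']
  refine div_le_div_of_nonneg_right ?_ hm'.le
  rw [abs_le]; constructor <;> linarith

/-- Rounding a vector of squared length at most `n` to the grid changes its outer square by
`O(n/m)` in Frobenius norm. -/
lemma round_vec {m : ℕ} (hm : 0 < m) (hn : 1 ≤ n) {w : Fin n → ℝ} (hw : ∑ i, w i ^ 2 ≤ n) :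
    ∃ c : Fin n → Fin (2 * (m * n) + 1),
      ∑ i, ∑ j, (gr m n (c i) * gr m n (c j) - w i * w j) ^ 2 ≤ 9 * n ^ 2 / m ^ 2 := by
  have hm' : (1 : ℝ) ≤ m := by exact_mod_cast hm
  have hn' : (1 : ℝ) ≤ n := by exact_mod_cast hn
  have hwi : ∀ i, |w i| ≤ n := by
    intro i
    have h1 : w i ^ 2 ≤ n :=
      (Finset.single_le_sum (f := fun i => w i ^ 2) (fun _ _ => sq_nonneg _) (Finset.mem_univ i)).trans hw
    refine abs_le_of_sq_le_sq (h1.trans ?_) (by positivity)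
    nlinarith
  choose c hc using fun i => round_real (n := n) hm (hwi i)
  refine ⟨c, ?_⟩
  have hij : ∀ i j, (gr m n (c i) * gr m n (c j) - w i * w j) ^ 2
      ≤ 3 * (w i ^ 2 + w j ^ 2 + 1) / m ^ 2 := by
    intro i j
    have h1 := hc i
    have h2 := hc j
    set e := gr m n (c i) - w i with he
    set f := gr m n (c j) - w j with hf
    have e1 : gr m n (c i) = w i + e := by rw [he]; ring
    have e2 : gr m n (c j) = w j + f := by rw [hf]; ring
    have r : gr m n (c i) * gr m n (c j) - w i * w j = w i * f + w j * e + e * f := by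
      rw [e1, e2]; ring
    rw [r]
    have he2 : e ^ 2 ≤ 1 / m ^ 2 := by
      rw [← sq_abs, ← one_div_pow]; exact pow_le_pow_left₀ (abs_nonneg _) h1 2
    have hf2 : f ^ 2 ≤ 1 / m ^ 2 := by
      rw [← sq_abs, ← one_div_pow]; exact pow_le_pow_left₀ (abs_nonneg _) h2 2
    have he1 : e ^ 2 ≤ 1 := he2.trans (by rw [div_le_one (by positivity)]; nlinarith)
    have a1 : w i ^ 2 * f ^ 2 ≤ w i ^ 2 * (1 / m ^ 2) := mul_le_mul_of_nonneg_left hf2 (sq_nonneg _)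
    have a2 : w j ^ 2 * e ^ 2 ≤ w j ^ 2 * (1 / m ^ 2) := mul_le_mul_of_nonneg_left he2 (sq_nonneg _)
    have a3 : e ^ 2 * f ^ 2 ≤ 1 * (1 / m ^ 2) := mul_le_mul he1 hf2 (sq_nonneg _) zero_le_one
    have a4 : (w i * f + w j * e + e * f) ^ 2
        ≤ 3 * (w i ^ 2 * f ^ 2 + w j ^ 2 * e ^ 2 + e ^ 2 * f ^ 2) := by
      nlinarith [sq_nonneg (w i * f - w j * e), sq_nonneg (w j * e - e * f), sq_nonneg (w i * f - e * f)]
    refine a4.trans ?_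
    calc 3 * (w i ^ 2 * f ^ 2 + w j ^ 2 * e ^ 2 + e ^ 2 * f ^ 2)
        ≤ 3 * (w i ^ 2 * (1 / m ^ 2) + w j ^ 2 * (1 / m ^ 2) + 1 * (1 / m ^ 2)) := by linarith
      _ = _ := by ring
  refine (Finset.sum_le_sum fun i _ => Finset.sum_le_sum fun j _ => hij i j).trans ?_
  simp only [← Finset.sum_div, ← Finset.mul_sum, Finset.sum_add_distrib]
  refine div_le_div_of_nonneg_right ?_ (by positivity)
  simp only [Finset.sum_const, Finset.card_univ, Fintype.card_fin, nsmul_eq_mul, ← Finset.mul_sum]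
  nlinarith

/-- The Frobenius norm. -/
def fro (B : Fin n → Fin n → ℝ) : ℝ := Real.sqrt (∑ i, ∑ j, B i j ^ 2)

lemma fro_nonneg (B : Fin n → Fin n → ℝ) : 0 ≤ fro B := Real.sqrt_nonneg _

lemma fro_sq (B : Fin n → Fin n → ℝ) : fro B ^ 2 = ∑ i, ∑ j, B i j ^ 2 :=
  Real.sq_sqrt (Finset.sum_nonneg fun _ _ => Finset.sum_nonneg fun _ _ => sq_nonneg _)

lemma fro_eq_norm (B : Fin n → Fin n → ℝ) :
    fro B = ‖(WithLp.toLp 2 (fun p : Fin n × Fin n => B p.1 p.2) : EuclideanSpace ℝ (Fin n × Fin n))‖ := by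
  rw [EuclideanSpace.norm_eq, Fintype.sum_prod_type]
  simp [fro]

lemma abs_fro_sub_le (B C : Fin n → Fin n → ℝ) :
    |fro B - fro C| ≤ fro (fun i j => B i j - C i j) := by
  rw [fro_eq_norm, fro_eq_norm, fro_eq_norm]
  exact abs_norm_sub_norm_le _ _

lemma abs_inner_le_fro (B C : Fin n → Fin n → ℝ) :
    |∑ i, ∑ j, B i j * C i j| ≤ fro B * fro C := by
  have h := Finset.sum_mul_sq_le_sq_mul_sq Finset.univ
    (fun p : Fin n × Fin n => B p.1 p.2) (fun p => C p.1 p.2)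
  simp only [Fintype.sum_prod_type] at h
  refine abs_le_of_sq_le_sq ?_ (mul_nonneg (fro_nonneg _) (fro_nonneg _))
  rw [mul_pow, fro_sq, fro_sq]; exact h

lemma fro_le_of_abs {K : Fin n → Fin n → ℝ} (h : ∀ i j, |K i j| ≤ 1) : fro K ≤ n := by
  refine le_of_sq_le_sq ?_ (by positivity)
  rw [fro_sq]
  have : ∑ i : Fin n, ∑ j : Fin n, K i j ^ 2 ≤ ∑ i : Fin n, ∑ j : Fin n, (1 : ℝ) :=
    Finset.sum_le_sum fun i _ => Finset.sum_le_sum fun j _ => by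
      have := abs_le.1 (h i j); nlinarith
  refine this.trans (le_of_eq ?_)
  simp; ring

/-- The matrix `∑ₗ Wₗ Wₗᵀ` attached to a family of grid vectors. -/
def netB {k m n : ℕ} (W : Fin k → Fin n → Fin (2 * (m * n) + 1)) (i j : Fin n) : ℝ :=
  ∑ l, gr m n (W l i) * gr m n (W l j)

lemma net_arith {y b N ε η S : ℝ} (hy0 : 0 ≤ y) (hb0 : 0 ≤ b) (hbn : b ≤ N) (hN : 0 ≤ N)
    (hε0 : 0 ≤ ε) (hε1 : ε ≤ 1) (hε2 : 40 * ε ≤ η) (hyb : |y - b| ≤ ε * N)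
    (hS : b ^ 2 - ε * N ^ 2 ≤ S) :
    b ^ 3 + η / 2 * N ^ 3 ≤ 3 * y * S - 2 * y ^ 3 + η * N ^ 3 := by
  have hab := abs_le.1 hyb
  have hy2 : y ≤ 2 * N := by nlinarith
  have h3 : (0 : ℝ) ≤ N ^ 3 := by positivity
  have k1 : (b - y) * (b ^ 2 - 2 * b * y - 2 * y ^ 2) ≤ (ε * N) * (13 * N ^ 2) := by
    refine (le_abs_self _).trans ?_
    rw [abs_mul, abs_sub_comm]
    refine mul_le_mul hyb ?_ (abs_nonneg _) (by positivity)
    have e1 : b ^ 2 ≤ N ^ 2 := pow_le_pow_left₀ hb0 hbn 2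
    have e2 : y ^ 2 ≤ (2 * N) ^ 2 := pow_le_pow_left₀ hy0 hy2 2
    have e3 : b * y ≤ N * (2 * N) := mul_le_mul hbn hy2 hy0 hN
    have e4 : 0 ≤ b * y := mul_nonneg hb0 hy0
    rw [abs_le]; constructor <;> nlinarith [sq_nonneg b, sq_nonneg y]
  have k3 : 3 * y * (ε * N ^ 2) ≤ 6 * ε * N ^ 3 := by
    have : (0 : ℝ) ≤ ε * N ^ 2 := by positivity
    calc 3 * y * (ε * N ^ 2) ≤ 3 * (2 * N) * (ε * N ^ 2) :=
          mul_le_mul_of_nonneg_right (by linarith) this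
      _ = _ := by ring
  have k4 : 3 * y * (b ^ 2 - ε * N ^ 2) ≤ 3 * y * S :=
    mul_le_mul_of_nonneg_left hS (by positivity)
  have k5 : 40 * ε * N ^ 3 ≤ η * N ^ 3 := mul_le_mul_of_nonneg_right hε2 h3
  have k6 : b ^ 3 = (b - y) * (b ^ 2 - 2 * b * y - 2 * y ^ 2) + 3 * y * b ^ 2 - 2 * y ^ 3 := by ring
  have k7 : 0 ≤ ε * N ^ 3 := by positivity
  rw [k6]
  linarith

/-- A subexponential family of low-rank matrices `B` linearises `tr K³` from above, up to `ηn³`,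
simultaneously for all symmetric `K` with entries in `[-1, 1]`. -/
lemma net {η : ℝ} (hη : 0 < η) : ∃ k m : ℕ, 0 < m ∧ ∀ n : ℕ, 1 ≤ n →
    ∀ K : Matrix (Fin n) (Fin n) ℝ, (∀ i j, K i j = K j i) → (∀ i j, |K i j| ≤ 1) →
    ∃ W : Fin k → Fin n → Fin (2 * (m * n) + 1),
      tr3 K ≤ 3 * fro (netB W) * (∑ i, ∑ j, K i j * netB W i j) - 2 * fro (netB W) ^ 3 + η * n ^ 3 := by
  obtain ⟨k, hk⟩ := exists_nat_ge (1 / (η / 2) ^ 2)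
  obtain ⟨m, hm⟩ := exists_nat_ge (120 * k / η + 3 * k + 1)
  have hq : (0 : ℝ) ≤ 120 * k / η := by positivity
  have hk0 : (0 : ℝ) ≤ k := by positivity
  have hm1 : (1 : ℝ) ≤ m := by linarith
  have hmp : 0 < m := by exact_mod_cast (lt_of_lt_of_le one_pos hm1)
  refine ⟨k, m, hmp, ?_⟩
  intro n hn K hK hK1
  have hn' : (1 : ℝ) ≤ n := by exact_mod_cast hn
  obtain ⟨w, b, hw, hb0, hbn, hB2, hKB, ht⟩ := low_rank (half_pos hη) hk hn K hK hK1
  choose W hW using fun l => round_vec hmp hn (hw l)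
  refine ⟨W, ?_⟩
  set B0 : Fin n → Fin n → ℝ := fun i j => ∑ l, w l i * w l j with hB0
  set ε : ℝ := 3 * k / m with hε
  have hε0 : 0 ≤ ε := by positivity
  have hε1 : ε ≤ 1 := by rw [hε, div_le_one (by positivity)]; linarith
  have hε2 : 40 * ε ≤ η := by
    have : 120 * k / η ≤ m := by linarith
    rw [div_le_iff₀ hη] at this
    rw [hε]
    have e : 40 * (3 * (k : ℝ) / m) = 120 * k / m := by ring
    rw [e, div_le_iff₀ (by positivity)]; linarith
  have hfE : fro (fun i j => netB W i j - B0 i j) ≤ ε * n := by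
    refine le_of_sq_le_sq ?_ (by positivity)
    rw [fro_sq]
    have h1 : ∀ i j, (netB W i j - B0 i j) ^ 2
        ≤ k * ∑ l, (gr m n (W l i) * gr m n (W l j) - w l i * w l j) ^ 2 := by
      intro i j
      have : netB W i j - B0 i j = ∑ l, (gr m n (W l i) * gr m n (W l j) - w l i * w l j) := by
        rw [Finset.sum_sub_distrib]; rfl
      rw [this]
      simpa using sq_sum_le_card_mul_sum_sq (s := (Finset.univ : Finset (Fin k)))
        (f := fun l => gr m n (W l i) * gr m n (W l j) - w l i * w l j)
    calc ∑ i, ∑ j, (netB W i j - B0 i j) ^ 2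
        ≤ ∑ i, ∑ j, k * ∑ l, (gr m n (W l i) * gr m n (W l j) - w l i * w l j) ^ 2 :=
          Finset.sum_le_sum fun i _ => Finset.sum_le_sum fun j _ => h1 i j
      _ = k * ∑ l, ∑ i, ∑ j, (gr m n (W l i) * gr m n (W l j) - w l i * w l j) ^ 2 := by
          simp only [← Finset.mul_sum]
          congr 1
          rw [Finset.sum_comm]
          have : ∀ i, ∑ j, ∑ l, (gr m n (W l i) * gr m n (W l j) - w l i * w l j) ^ 2
            = ∑ l, ∑ j, (gr m n (W l i) * gr m n (W l j) - w l i * w l j) ^ 2 :=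
              fun i => Finset.sum_comm
          rw [Finset.sum_comm]
          simp only [this]
          rw [Finset.sum_comm]
      _ ≤ k * ∑ l : Fin k, (9 * n ^ 2 / m ^ 2 : ℝ) :=
          mul_le_mul_of_nonneg_left (Finset.sum_le_sum fun l _ => hW l) hk0
      _ = (ε * n) ^ 2 := by simp [hε]; ring
  set y := fro (netB W) with hy
  have hb : fro B0 = b := by
    rw [fro, hB2, Real.sqrt_sq hb0]
  have hyb : |y - b| ≤ ε * n := by
    rw [← hb]; exact (abs_fro_sub_le _ _).trans hfE
  have hS : b ^ 2 - ε * n ^ 2 ≤ ∑ i, ∑ j, K i j * netB W i j := by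
    have h1 : ∑ i, ∑ j, K i j * netB W i j
        = b ^ 2 + ∑ i, ∑ j, K i j * (netB W i j - B0 i j) := by
      rw [← hKB, ← Finset.sum_add_distrib]
      refine Finset.sum_congr rfl fun i _ => ?_
      rw [← Finset.sum_add_distrib]
      exact Finset.sum_congr rfl fun j _ => by ring
    have h2 := (abs_inner_le_fro K (fun i j => netB W i j - B0 i j)).trans
      (mul_le_mul (fro_le_of_abs hK1) hfE (fro_nonneg _) (by positivity))
    have := (abs_le.1 h2).1
    rw [h1]; nlinarith
  exact ht.trans (net_arith (fro_nonneg _) hb0 hbn (by positivity) hε0 hε1 hε2 hyb hS)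

end TriCLT

/-! ### Exponential moments of linear statistics -/

namespace TriCLT
variable {n : ℕ}

/-- The adjacency matrix shifted by `r` off the diagonal and multiplied by the sign `s`. -/
def Ks (s r : ℝ) (x : Config n) : Matrix (Fin n) (Fin n) ℝ := fun i j =>
  if i = j then 0 else s * (adj x i j - r)

/-- Legendre duality for a single edge: `log (1 + eᵗ) = tw - I(w)` for `w = sigmoid t`, and `hV` applies to
this `w`. -/
lemma core_entry {a c L G s r u : ℝ} (ha : 0 ≤ a) (hc : 0 < c)
    (hV : ∀ w ∈ Set.Icc (0 : ℝ) 1, L * w - Ifun w + a / 3 * |s * (w - r)| ^ 3 ≤ G - c * (w - u) ^ 2)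
    {β : ℝ} (hβ : 0 ≤ β) (B θ : ℝ) :
    Real.log (1 + Real.exp (L + a * β * s * B + θ)) - (a * β * s * r * B + θ * u)
      ≤ G + θ ^ 2 / (4 * c) + a * β ^ 3 / 6 + a * β / 2 * B ^ 2 := by
  rw [lse_eq]
  set t := L + a * β * s * B + θ
  have hw : Real.sigmoid t ∈ Set.Icc (0 : ℝ) 1 := ⟨(Real.sigmoid_pos t).le, (Real.sigmoid_lt_one t).le⟩
  set w := Real.sigmoid t
  have h1 := hV w hw
  have h2 := quad_le (c := c) (d := w - u) (t := θ) hc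
  set d := s * (w - r) with hd
  have h3 := cubic_nonneg (abs_nonneg d) hβ
  have h4 : 0 ≤ a * (2 * |d| ^ 3 - 3 * β * |d| ^ 2 + β ^ 3) := mul_nonneg ha h3
  have h5 : 0 ≤ a * β * (B - d) ^ 2 := by positivity
  rw [sq_abs] at h4
  have e : w * t - (a * β * s * r * B + θ * u) = L * w + a * β * B * d + θ * (w - u) := by
    simp only [t, hd]; ring
  nlinarith [h1, h2, h4, h5, e]

/-- The exponential moment of the linearised cubic functional: linearising `tr K³` at the matrix `B`
makes the edges independent, and the variational inequality `hV` bounds each factor. -/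
lemma core_one {a c L G s r u : ℝ} (ha : 0 ≤ a) (hc : 0 < c)
    (hV : ∀ w ∈ Set.Icc (0 : ℝ) 1, L * w - Ifun w + a / 3 * |s * (w - r)| ^ 3 ≤ G - c * (w - u) ^ 2)
    (hn : 1 ≤ n) (B θ : Fin n → Fin n → ℝ) (hB : ∀ i j, B i j = B j i) (hθ : ∀ i j, θ i j = θ j i) :
    ∑ x : Config n, Real.exp (a / (6 * n) * (3 * fro B * (∑ i, ∑ j, Ks s r x i j * B i j)
        - 2 * fro B ^ 3) + L * edgeCount n x + (∑ i, ∑ j, θ i j * Mx u x i j) / 2)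
      ≤ Real.exp (n * (n - 1) / 2 * G + (∑ i, ∑ j, θ i j ^ 2) / (8 * c)) := by
  have hn' : (1 : ℝ) ≤ n := by exact_mod_cast hn
  set b := fro B with hb
  have hb0 : 0 ≤ b := fro_nonneg B
  set β := b / n with hβ
  have hβ0 : 0 ≤ β := by positivity
  have hbn : b = β * n := by rw [hβ]; field_simp
  set t : Fin n → Fin n → ℝ := fun i j => L + a * β * s * B i j + θ i j with ht
  have hts : ∀ i j, t i j = t j i := fun i j => by simp only [ht, hB i j, hθ i j]
  set q : Fin n → Fin n → ℝ := fun i j => if i = j then 0 else a * β * s * r * B i j + θ i j * u with hq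
  have e1 : ∀ x : Config n, a / (6 * n) * (3 * b * (∑ i, ∑ j, Ks s r x i j * B i j)
        - 2 * b ^ 3) + L * edgeCount n x + (∑ i, ∑ j, θ i j * Mx u x i j) / 2
      = (∑ i, ∑ j, t i j * adj x i j) / 2 + (-(∑ i, ∑ j, q i j) / 2 - a * β ^ 3 * n ^ 2 / 3) := by
    intro x
    have e2 : ∑ i, ∑ j, (a * β * (Ks s r x i j * B i j) + L * adj x i j + θ i j * Mx u x i j)
        = ∑ i, ∑ j, (t i j * adj x i j - q i j) := by
      refine Finset.sum_congr rfl fun i _ => Finset.sum_congr rfl fun j _ => ?_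
      simp only [Ks, Mx, hq, ht]
      by_cases hij : i = j
      · subst hij; simp [adj_diag]
      · simp only [hij, if_false]; ring
    simp only [Finset.sum_add_distrib, Finset.sum_sub_distrib, ← Finset.mul_sum] at e2
    rw [edgeCount_eq, hbn]
    have e3 : a / (6 * (n : ℝ)) * (3 * (β * n) * (∑ i, ∑ j, Ks s r x i j * B i j)
        - 2 * (β * n) ^ 3) = a * β / 2 * (∑ i, ∑ j, Ks s r x i j * B i j) - a * β ^ 3 * n ^ 2 / 3 := by
      field_simp; ring
    rw [e3]
    linear_combination e2 / 2
  simp only [e1, Real.exp_add]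
  rw [← Finset.sum_mul, sum_exp_pairs t hts, ← Real.exp_add, ← Real.exp_add, Real.exp_le_exp]
  have e4 : ∑ i, ∑ j, ((if i = j then 0 else Real.log (1 + Real.exp (t i j))) - q i j)
      ≤ ∑ i, ∑ j, ((if i = j then 0 else G) + (θ i j ^ 2 / (4 * c) + a * β ^ 3 / 6
          + a * β / 2 * B i j ^ 2)) := by
    refine Finset.sum_le_sum fun i _ => Finset.sum_le_sum fun j _ => ?_
    simp only [hq]
    split_ifs with hij
    · simp only [sub_self, zero_add]; positivity
    · have := core_entry ha hc hV hβ0 (B i j) (θ i j)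
      linarith
  have hBs : ∑ i, ∑ j, B i j ^ 2 = (β * n) ^ 2 := by rw [← fro_sq, ← hb, hbn]
  have e5 : ∑ i : Fin n, ∑ j : Fin n, (if i = j then (0 : ℝ) else G) = n * (n - 1) * G := by
    rw [offdiag_sum]; simp; ring
  simp only [Finset.sum_add_distrib, Finset.sum_sub_distrib, ← Finset.mul_sum, ← Finset.sum_div, e5, hBs] at e4
  simp only [Finset.sum_const, Finset.card_univ, Fintype.card_fin, nsmul_eq_mul] at e4
  have e6 : (∑ i, ∑ j, θ i j ^ 2) / (8 * c) = (∑ i, ∑ j, θ i j ^ 2) / (4 * c) / 2 := by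
    rw [div_div]; congr 1; ring
  rw [e6]
  linarith

lemma card_net (k m : ℕ) {η : ℝ} (hη : 0 < η) :
    ∀ᶠ n : ℕ in atTop, (((2 * (m * n) + 1) ^ (k * n) : ℕ) : ℝ) ≤ Real.exp (η * n ^ 2) := by
  have h1 : Tendsto (fun n : ℕ => (k : ℝ) * ((Real.log (2 * m + 1)) / n + Real.log n / n)) atTop (𝓝 0) := by
    have a : Tendsto (fun n : ℕ => Real.log (2 * m + 1) / (n : ℝ)) atTop (𝓝 0) :=
      tendsto_const_div_atTop_nhds_zero_nat _
    have b : Tendsto (fun n : ℕ => Real.log n / (n : ℝ)) atTop (𝓝 0) :=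
      (Real.isLittleO_log_id_atTop.tendsto_div_nhds_zero).comp tendsto_natCast_atTop_atTop
    simpa using (a.add b).const_mul (k : ℝ)
  filter_upwards [h1.eventually (gt_mem_nhds hη), eventually_ge_atTop 1] with n hn h1n
  have hn' : (1 : ℝ) ≤ n := by exact_mod_cast h1n
  push_cast
  have hpos : (0 : ℝ) < 2 * (m * n) + 1 := by positivity
  rw [← Real.exp_log hpos, ← Real.exp_nat_mul, Real.exp_le_exp]
  have h2 : Real.log (2 * (m * n) + 1) ≤ Real.log (2 * m + 1) + Real.log n := by
    rw [← Real.log_mul (by positivity) (by positivity)]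
    exact Real.log_le_log hpos (by nlinarith)
  have h3 : (k : ℝ) * (Real.log (2 * m + 1) + Real.log n) ≤ η * n := by
    have : (k : ℝ) * (Real.log (2 * m + 1) + Real.log n)
      = k * ((Real.log (2 * m + 1)) / n + Real.log n / n) * n := by field_simp
    rw [this]; exact mul_le_mul_of_nonneg_right hn.le (by positivity)
  push_cast
  calc (k : ℝ) * n * Real.log (2 * (m * n) + 1)
      ≤ k * n * (Real.log (2 * m + 1) + Real.log n) := by gcongr
    _ = (k * (Real.log (2 * m + 1) + Real.log n)) * n := by ring
    _ ≤ η * n * n := by gcongr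
    _ = _ := by ring

/-- Under the product measure of density `u`, the triangle count has its naive mean. -/
lemma Ex_triangle_prod {l u : ℝ} (hl : Real.sigmoid l = u) :
    Ex 0 l (fun x : Config n => (triangleCount n x : ℝ)) = u ^ 3 * (n * (n - 1) * (n - 2)) / 6 := by
  have u0 : 0 < u := hl ▸ Real.sigmoid_pos l
  have u1 : u < 1 := hl ▸ Real.sigmoid_lt_one l
  have hcen : ∀ (x : Config n) i j, cen 0 l x i j = Mx u x i j := by
    intro x i j
    simp [cen, Mx, sig, lodds, hl]
  set H : Config n → Fin n → Fin n → ℝ := fun x i j =>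
    3 * u ^ 2 * (n - 2) + 3 * u * (rowS (Mx u x) i - Mx u x i j) + (Mx u x * Mx u x) i j with hH
  have hinv : ∀ x i j b, i ≠ j → H (setE x i j b) i j = H x i j := by
    intro x i j b hij
    have a1 : ∀ k, k ≠ j → Mx u (setE x i j b) i k = Mx u x i k := by
      intro k hk
      apply Mx_setE_other u x hij b
      intro e; rcases Sym2.eq_iff.1 e with h | h
      · exact hk h.2
      · exact hij h.1
    have a2 : ∀ k, k ≠ i → Mx u (setE x i j b) k j = Mx u x k j := by
      intro k hk
      apply Mx_setE_other u x hij b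
      intro e; rcases Sym2.eq_iff.1 e with h | h
      · exact hk h.1
      · exact hij h.2.symm
    have b1 : rowS (Mx u (setE x i j b)) i - Mx u (setE x i j b) i j = rowS (Mx u x) i - Mx u x i j := by
      unfold rowS
      rw [← Finset.sum_erase_eq_sub (Finset.mem_univ j), ← Finset.sum_erase_eq_sub (Finset.mem_univ j)]
      exact Finset.sum_congr rfl fun k hk => a1 k (Finset.ne_of_mem_erase hk)
    have b2 : (Mx u (setE x i j b) * Mx u (setE x i j b)) i j = (Mx u x * Mx u x) i j := by
      rw [Matrix.mul_apply, Matrix.mul_apply]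
      refine Finset.sum_congr rfl fun k _ => ?_
      by_cases hk : k = j
      · subst hk; simp [Mx]
      · by_cases hk' : k = i
        · subst hk'; simp [Mx]
        · rw [a1 k hk, a2 k hk']
    simp only [hH, b1, b2]
  have key := ibp 0 l H (fun _ : Config n => (1 : ℝ)) hinv
  simp only [sub_self, smul_eq_mul, mul_zero, Finset.sum_const_zero, Ex_const, hcen, smul_eq_mul, mul_one] at key
  have e : ∀ x : Config n, (triangleCount n x : ℝ)
      = u ^ 3 * (n * (n - 1) * (n - 2)) / 6 + 1 / 6 * ∑ i, ∑ j, Mx u x i j * H x i j := by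
    intro x
    have h1 := triangle_expand u0 u1 x
    have h2 : ∑ i, ∑ j, Mx u x i j * H x i j = 3 * u ^ 2 * (n - 2) * totS (Mx u x)
        + 3 * u * (dd (Mx u x) - ff (Mx u x)) + tr3 (Mx u x) := by
      have : ∀ i j, Mx u x i j * H x i j = 3 * u ^ 2 * (n - 2) * Mx u x i j
          + 3 * u * (Mx u x i j * rowS (Mx u x) i - Mx u x i j ^ 2)
          + Mx u x i j * (Mx u x * Mx u x) i j := by
        intro i j; simp only [hH]; ring
      simp only [this, Finset.sum_add_distrib, ← Finset.mul_sum, Finset.sum_sub_distrib, totS, ff, tr3,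
        dd, rowS, sq, Finset.sum_mul]
    rw [h2]; linarith
  simp only [e]
  rw [Ex_add, Ex_const, Ex_mul, key]; ring

lemma Ex_edge_prod {l u : ℝ} (hl : Real.sigmoid l = u) :
    Ex 0 l (fun x : Config n => (edgeCount n x : ℝ)) = u * (n * (n - 1)) / 2 := by
  have hcen : ∀ (x : Config n) i j, cen 0 l x i j = Mx u x i j := by
    intro x i j
    simp [cen, Mx, sig, lodds, hl]
  have key := ibp 0 l (fun _ _ _ => (1 : ℝ)) (fun _ : Config n => (1 : ℝ)) (fun _ _ _ _ _ => rfl)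
  simp only [sub_self, smul_eq_mul, mul_zero, Finset.sum_const_zero, Ex_const, hcen, smul_eq_mul, mul_one] at key
  have e : ∀ x : Config n, (edgeCount n x : ℝ)
      = u * (n * (n - 1)) / 2 + 1 / 2 * ∑ i, ∑ j, Mx u x i j := by
    intro x
    have := edge_expand u x
    simp only [totS, rowS] at this
    linarith
  simp only [e]
  rw [Ex_add, Ex_const, Ex_mul, key]; ring

lemma Zet_prod {l u : ℝ} (hl : Real.sigmoid l = u) :
    Zet n 0 l = Real.exp (n * (n - 1) / 2 * (u * l - Ifun u)) := by
  have h := sum_exp_pairs (n := n) (fun _ _ => l) (fun _ _ => rfl)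
  have e : ∀ x : Config n, ham n 0 l x = (∑ i, ∑ j, l * adj x i j) / 2 := by
    intro x
    simp only [ham, edgeCount_eq, ← Finset.mul_sum]; ring
  unfold Zet
  simp only [e]
  rw [h, offdiag_sum, lse_eq, hl]
  congr 1
  simp; ring

lemma Jensen_Ex (α h : ℝ) (F : Config n → ℝ) :
    Real.exp (Ex α h F) ≤ Ex α h (fun x => Real.exp (F x)) := by
  set m := Ex α h F with hm
  have h1 : Ex α h (fun x => Real.exp m * (1 + (F x - m))) ≤ Ex α h (fun x => Real.exp (F x)) := by
    refine Ex_mono α h fun x => ?_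
    have := Real.add_one_le_exp (F x - m)
    calc Real.exp m * (1 + (F x - m)) ≤ Real.exp m * Real.exp (F x - m) := by
          apply mul_le_mul_of_nonneg_left _ (Real.exp_pos _).le; linarith
      _ = _ := by rw [← Real.exp_add]; congr 1; ring
  rw [Ex_mul, Ex_add, Ex_sub, Ex_const, Ex_const, ← hm] at h1
  simpa using h1

/-- Lower bound for the partition function by Gibbs' variational principle with the product measure. -/
lemma Zet_lower {α h u : ℝ} (hP : Pkg α h u) (hn : 1 ≤ n) :
    Real.exp (n * (n - 1) / 2 * (α / 3 * u ^ 3 + h * u - Ifun u) - |α| * n) ≤ Zet n α h := by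
  have hn' : (1 : ℝ) ≤ n := by exact_mod_cast hn
  set l := h + α * u ^ 2 with hl
  have hs : Real.sigmoid l = u := hP.stat
  have h1 := Jensen_Ex (n := n) 0 l (fun x => (α / n) * triangleCount n x + (h - l) * edgeCount n x)
  rw [Ex_add, Ex_mul, Ex_mul, Ex_triangle_prod hs, Ex_edge_prod hs] at h1
  have h2 : Ex 0 l (fun x : Config n => Real.exp ((α / n) * triangleCount n x + (h - l) * edgeCount n x))
      = Zet n α h / Zet n 0 l := by
    unfold Ex pr
    conv_rhs => rw [Zet, Finset.sum_div]
    refine Finset.sum_congr rfl fun x _ => ?_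
    rw [smul_eq_mul, div_mul_eq_mul_div, ← Real.exp_add]
    congr 2
    simp only [ham]; ring
  rw [h2, le_div_iff₀ (Zet_pos 0 l), Zet_prod hs, ← Real.exp_add] at h1
  refine le_trans (Real.exp_le_exp.2 ?_) h1
  have e : α / n * (u ^ 3 * (n * (n - 1) * (n - 2)) / 6) = α * u ^ 3 * ((n - 1) * (n - 2)) / 6 := by
    field_simp
  rw [e]
  have hu3 : u ^ 3 ≤ 1 := pow_le_one₀ hP.u0.le hP.u1.le
  have hu3' : 0 ≤ u ^ 3 := by have := hP.u0; positivity
  have h3 : |α * u ^ 3 * (n - 1) / 3| ≤ |α| * n := by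
    rw [abs_div, abs_mul, abs_mul, abs_of_nonneg hu3', abs_of_nonneg (by linarith : (0 : ℝ) ≤ n - 1)]
    rw [abs_of_pos (by norm_num : (0 : ℝ) < 3)]
    have : |α| * u ^ 3 * (n - 1) ≤ |α| * 1 * n := by gcongr; linarith
    have h0 : 0 ≤ |α| * (n : ℝ) := by positivity
    linarith
  have h4 := (abs_le.1 h3).2
  rw [hl]
  nlinarith [h4]

/-- Exponential moments of linear statistics, up to `exp (o(n²))`: the cubic part of the Hamiltonian
is linearised at the points of a subexponential net. -/
lemma mgf_abs {α h u c a L G s r D : ℝ} (hP : Pkg α h u) (ha : 0 ≤ a) (hc : 0 < c)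
    (hV : ∀ w ∈ Set.Icc (0 : ℝ) 1, L * w - Ifun w + a / 3 * |s * (w - r)| ^ 3 ≤ G - c * (w - u) ^ 2)
    (hK : ∀ (n : ℕ) (x : Config n) i j, |Ks s r x i j| ≤ 1)
    (hham : ∀ n : ℕ, 1 ≤ n → ∀ x : Config n, ham n α h x ≤ a / (6 * n) * tr3 (Ks s r x) + L * edgeCount n x
      + (n * (n - 1) / 2 * (α / 3 * u ^ 3 + h * u - Ifun u - G) + D * n)) :
    ∀ η : ℝ, 0 < η → ∀ᶠ n : ℕ in atTop, ∀ θ : Fin n → Fin n → ℝ, (∀ i j, θ i j = θ j i) →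
      Ex α h (fun x : Config n => Real.exp ((∑ i, ∑ j, θ i j * Mx u x i j) / 2))
        ≤ Real.exp ((∑ i, ∑ j, θ i j ^ 2) / (8 * c) + η * n ^ 2) := by
  intro η hη
  set η1 := η / (a + 1) with hη1
  have hηpos : 0 < η1 := by positivity
  obtain ⟨k, m, hm, hnet⟩ := net hηpos
  have hlin : ∀ᶠ n : ℕ in atTop, (D + |α|) * n ≤ η / 3 * n ^ 2 := by
    filter_upwards [eventually_ge_atTop ⌈(D + |α|) / (η / 3)⌉₊] with n hn
    have h1 : (D + |α|) / (η / 3) ≤ n := Nat.ceil_le.1 hn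
    rw [div_le_iff₀ (by positivity)] at h1
    nlinarith [(Nat.cast_nonneg n : (0 : ℝ) ≤ n)]
  filter_upwards [card_net k m (by positivity : 0 < η / 3), hlin, eventually_ge_atTop 1] with n hcard hlin hn
  intro θ hθ
  have hn' : (1 : ℝ) ≤ n := by exact_mod_cast hn
  set G0 := α / 3 * u ^ 3 + h * u - Ifun u with hG0
  set C0 := n * (n - 1) / 2 * (G0 - G) + D * n + a * η1 * n ^ 2 / 6 with hC0
  set X : (Fin k → Fin n → Fin (2 * (m * n) + 1)) → Config n → ℝ := fun W x =>
    a / (6 * n) * (3 * fro (netB W) * (∑ i, ∑ j, Ks s r x i j * netB W i j)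
        - 2 * fro (netB W) ^ 3) + L * edgeCount n x + (∑ i, ∑ j, θ i j * Mx u x i j) / 2 with hX
  have h1 : ∀ x : Config n, Real.exp (ham n α h x + (∑ i, ∑ j, θ i j * Mx u x i j) / 2)
      ≤ ∑ W, Real.exp (X W x) * Real.exp C0 := by
    intro x
    obtain ⟨W, hW⟩ := hnet n hn (Ks s r x) (fun i j => by
      simp only [Ks, adj_symm x i j, eq_comm]) (hK n x)
    refine le_trans ?_ (Finset.single_le_sum (f := fun W => Real.exp (X W x) * Real.exp C0)
      (fun W _ => by positivity) (Finset.mem_univ W))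
    rw [← Real.exp_add, Real.exp_le_exp]
    have h2 := hham n hn x
    have h3 : a / (6 * n) * tr3 (Ks s r x) ≤ a / (6 * n) * (3 * fro (netB W) *
        (∑ i, ∑ j, Ks s r x i j * netB W i j) - 2 * fro (netB W) ^ 3 + η1 * n ^ 3) :=
      mul_le_mul_of_nonneg_left hW (by positivity)
    have h4 : a / (6 * (n : ℝ)) * (η1 * n ^ 3) = a * η1 * n ^ 2 / 6 := by field_simp
    rw [mul_add, h4] at h3
    simp only [hX, hC0]
    linarith
  have h2 : ∑ x : Config n, Real.exp (ham n α h x + (∑ i, ∑ j, θ i j * Mx u x i j) / 2)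
      ≤ Real.exp (η / 3 * n ^ 2) * (Real.exp (n * (n - 1) / 2 * G + (∑ i, ∑ j, θ i j ^ 2) / (8 * c))
        * Real.exp C0) := by
    calc _ ≤ ∑ x, ∑ W, Real.exp (X W x) * Real.exp C0 := Finset.sum_le_sum fun x _ => h1 x
      _ = ∑ W, (∑ x, Real.exp (X W x)) * Real.exp C0 := by
          rw [Finset.sum_comm]; simp only [Finset.sum_mul]
      _ ≤ ∑ W : (Fin k → Fin n → Fin (2 * (m * n) + 1)),
          Real.exp (n * (n - 1) / 2 * G + (∑ i, ∑ j, θ i j ^ 2) / (8 * c)) * Real.exp C0 := by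
          refine Finset.sum_le_sum fun W _ => mul_le_mul_of_nonneg_right ?_ (Real.exp_pos _).le
          exact core_one ha hc hV hn (netB W) θ
            (fun i j => Finset.sum_congr rfl fun l _ => mul_comm _ _) hθ
      _ ≤ _ := by
          rw [Finset.sum_const, nsmul_eq_mul]
          refine mul_le_mul_of_nonneg_right ?_ (by positivity)
          refine le_trans (le_of_eq ?_) hcard
          simp only [Finset.card_univ, Fintype.card_fun, Fintype.card_fin]
          norm_cast
          rw [← pow_mul, mul_comm n k]
  have h3 : Ex α h (fun x : Config n => Real.exp ((∑ i, ∑ j, θ i j * Mx u x i j) / 2))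
      = (∑ x : Config n, Real.exp (ham n α h x + (∑ i, ∑ j, θ i j * Mx u x i j) / 2)) / Zet n α h := by
    unfold Ex pr
    rw [Finset.sum_div]
    refine Finset.sum_congr rfl fun x _ => ?_
    rw [smul_eq_mul, div_mul_eq_mul_div, ← Real.exp_add]
  rw [h3, div_le_iff₀ (Zet_pos α h)]
  refine h2.trans ?_
  have h4 := Zet_lower hP hn
  refine le_trans ?_ (mul_le_mul_of_nonneg_left h4 (Real.exp_pos _).le)
  rw [← Real.exp_add, ← Real.exp_add, ← Real.exp_add, Real.exp_le_exp]
  have h5 : a * η1 ≤ η := by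
    rw [hη1, mul_div_assoc', div_le_iff₀ (by positivity)]; nlinarith
  have h6 : a * η1 * n ^ 2 / 6 ≤ η / 6 * n ^ 2 := by nlinarith [sq_nonneg (n : ℝ)]
  have h7 : 0 ≤ η * (n : ℝ) ^ 2 := by positivity
  rw [hC0, ← hG0]
  linarith

/-- For `α ≤ 0` the term `dd` in the expansion of the triangle count has a favourable sign and can be
dropped, which leaves the cubic form of `-M`. -/
lemma ham_neg_le {α h u : ℝ} (hP : Pkg α h u) (hα : α ≤ 0) (hn : 1 ≤ n) (x : Config n) :
    ham n α h x ≤ (-α) / (6 * n) * tr3 (Ks (-1) u x) + (h + α * u ^ 2) * edgeCount n x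
      + (n * (n - 1) / 2 * (α / 3 * u ^ 3 + h * u - Ifun u - ((h + α * u ^ 2) * u - Ifun u))
        + 2 * |α| * n) := by
  have hn' : (1 : ℝ) ≤ n := by exact_mod_cast hn
  have hM := cenM_Mx hP.u0 hP.u1 x
  have hK : Ks (-1) u x = -Mx u x := by
    ext i j; simp only [Ks, Mx, Matrix.neg_apply]; split_ifs <;> ring
  have h3 : tr3 (-Mx u x) = - tr3 (Mx u x) := by
    simp [tr3]
  rw [hK, h3]
  have e1 := triangle_expand hP.u0 hP.u1 x
  have e2 := edge_expand u x
  set T : ℝ := (triangleCount n x : ℝ)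
  set E : ℝ := (edgeCount n x : ℝ)
  set S := totS (Mx u x)
  have hS : |S| ≤ n ^ 2 := by
    simp only [S, totS, rowS]
    calc |∑ i, ∑ j, Mx u x i j| ≤ ∑ i : Fin n, ∑ j : Fin n, (1 : ℝ) :=
          (Finset.abs_sum_le_sum_abs _ _).trans (Finset.sum_le_sum fun i _ =>
            (Finset.abs_sum_le_sum_abs _ _).trans (Finset.sum_le_sum fun j _ => hM.abs i j))
      _ = n ^ 2 := by simp; ring
  have hff : ff (Mx u x) ≤ n ^ 2 := by
    calc ff (Mx u x) ≤ ∑ i : Fin n, ∑ j : Fin n, (1 : ℝ) :=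
          Finset.sum_le_sum fun i _ => Finset.sum_le_sum fun j _ => by
            have := abs_le.1 (hM.abs i j); nlinarith
      _ = n ^ 2 := by simp; ring
  have hdd := dd_nonneg (Mx u x)
  have eT : ham n α h x = α / (6 * n) * (6 * T) + h * E := by
    simp only [ham, T, E]; field_simp
  have hS' : S = 2 * E - u * (n * (n - 1)) := by linarith
  have key : ham n α h x = (-α) / (6 * n) * (-tr3 (Mx u x)) + (h + α * u ^ 2) * E
      + (α * u ^ 3 * ((n - 1) * (n - 2)) / 6 - α * u ^ 3 * (n * (n - 1)) / 2)
      + (-α) * u ^ 2 * S / n + (-α) * u * ff (Mx u x) / (2 * n) - (-α) * u * dd (Mx u x) / (2 * n) := by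
    rw [eT, e1]
    have : E = (S + u * (n * (n - 1))) / 2 := by linarith
    rw [this]; field_simp; ring
  have hu0 := hP.u0
  have hu1 := hP.u1
  have hα' : 0 ≤ -α := by linarith
  have b1 : (-α) * u ^ 2 * S / n ≤ (-α) * n := by
    rw [div_le_iff₀ (by positivity)]
    have h1 := (abs_le.1 hS).2
    have hu2 : u ^ 2 ≤ 1 := by nlinarith
    calc (-α) * u ^ 2 * S ≤ (-α) * u ^ 2 * n ^ 2 := by gcongr
      _ ≤ (-α) * 1 * n ^ 2 := by gcongr
      _ = _ := by ring
  have b2 : (-α) * u * ff (Mx u x) / (2 * n) ≤ (-α) * n / 2 := by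
    rw [div_le_iff₀ (by positivity)]
    calc (-α) * u * ff (Mx u x) ≤ (-α) * 1 * n ^ 2 := by gcongr; unfold ff; positivity
      _ = _ := by ring
  have b3 : 0 ≤ (-α) * u * dd (Mx u x) / (2 * n) := by positivity
  have b4 : (-α) * u ^ 3 * (n - 1) / 3 ≤ (-α) * n / 3 := by
    have hu3 : u ^ 3 ≤ 1 := pow_le_one₀ hu0.le hu1.le
    have : (-α) * u ^ 3 * (n - 1) ≤ (-α) * 1 * n := by gcongr <;> linarith
    linarith
  rw [key, abs_of_nonpos hα]
  have h0 : 0 ≤ (-α) * (n : ℝ) := by positivity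
  nlinarith [b1, b2, b3, b4, h0]

/-- For `α ≥ 0` the cubic form is `tr A³`.  For `α < 0` it is `-tr M³`, and the bound
`-α/3 |w - u|³ ≤ 2/3 (w - u)²`, valid because `α > -2`, is absorbed by Pinsker's inequality. -/
lemma mgf_global {α h u c : ℝ} (H : VPkg α h u c) : ∃ C : ℝ, 0 < C ∧ ∀ η : ℝ, 0 < η →
    ∀ᶠ n : ℕ in atTop, ∀ θ : Fin n → Fin n → ℝ, (∀ i j, θ i j = θ j i) →
      Ex α h (fun x : Config n => Real.exp ((∑ i, ∑ j, θ i j * Mx u x i j) / 2))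
        ≤ Real.exp (C * (∑ i, ∑ j, θ i j ^ 2) + η * n ^ 2) := by
  have hu0 := H.pk.u0
  have hu1 := H.pk.u1
  rcases le_total 0 α with hα | hα
  · refine ⟨1 / (8 * c), by have := H.cpos; positivity, ?_⟩
    have key := mgf_abs (a := α) (L := h) (s := 1) (r := 0) (c := c) (D := 0)
      (G := α / 3 * u ^ 3 + h * u - Ifun u) H.pk hα H.cpos
      (fun w hw => by
        have := H.phi w hw
        rw [one_mul, sub_zero, abs_of_nonneg hw.1]; linarith)
      (fun n x i j => by
        simp only [Ks]
        split_ifs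
        · simp
        · rw [one_mul, sub_zero, abs_of_nonneg (adj_nonneg x i j)]; exact adj_le_one x i j)
      (fun n hn x => by
        have hn' : (1 : ℝ) ≤ n := by exact_mod_cast hn
        have hK : Ks 1 0 x = adj x := by
          ext i j; simp only [Ks]
          split_ifs with hij
          · subst hij; rw [adj_diag]
          · ring
        have h3 : tr3 (adj x) = 6 * (triangleCount n x : ℝ) := by
          rw [triangleCount_eq]
          simp only [tr3, Matrix.trace, Matrix.diag]
          rw [Finset.sum_comm]
          refine Finset.sum_congr rfl fun i _ => ?_
          rw [Matrix.mul_apply]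
          refine Finset.sum_congr rfl fun j _ => ?_
          rw [mul_comm, Matrix.mul_apply, Matrix.mul_apply]
          congr 1
          exact Finset.sum_congr rfl fun k _ => by rw [adj_symm x j k, adj_symm x k i, mul_comm]
        rw [hK, h3]
        apply le_of_eq
        simp only [ham]; field_simp; ring)
    simpa only [one_div, div_eq_inv_mul, mul_one] using key
  · refine ⟨1 / (8 * (4 / 3)), by norm_num, ?_⟩
    have key := mgf_abs (a := -α) (L := h + α * u ^ 2) (s := -1) (r := u) (c := 4 / 3) (D := 2 * |α|)
      (G := (h + α * u ^ 2) * u - Ifun u) H.pk (by linarith) (by norm_num)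
      (fun w hw => by
        have h1 := pinsker H.pk.stat hw
        have h2 : |(-1) * (w - u)| ≤ 1 := by
          rw [abs_le]; constructor <;> linarith [hw.1, hw.2]
        have h3 : |(-1) * (w - u)| ^ 3 ≤ (w - u) ^ 2 := by
          have : |(-1) * (w - u)| ^ 2 = (w - u) ^ 2 := by rw [sq_abs]; ring
          rw [pow_succ, this]
          nlinarith [sq_nonneg (w - u)]
        have h4 : -α / 3 * |(-1) * (w - u)| ^ 3 ≤ 2 / 3 * (w - u) ^ 2 := by
          have := H.lower
          exact mul_le_mul (by linarith) h3 (by positivity) (by norm_num)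
        linarith)
      (fun n x i j => by
        simp only [Ks]
        split_ifs
        · simp
        · rw [abs_le]; constructor <;> linarith [adj_nonneg x i j, adj_le_one x i j])
      (fun n hn x => ham_neg_le H.pk hα hn x)
    simpa only [one_div, div_eq_inv_mul, mul_one] using key

end TriCLT

/-! ### Concentration of the operator norm -/

namespace TriCLT
variable {n : ℕ}

/-- Indicator that the operator norm of the centred adjacency matrix exceeds `δ n`. -/
def opI (u δ : ℝ) (x : Config n) : ℝ :=
  open Classical in
  if ∀ v : Fin n → ℝ, |∑ i, ∑ j, v i * Mx u x i j * v j| ≤ δ * n * ∑ i, v i ^ 2 then 0 else 1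

/-- If the operator norm is large, this is witnessed by a vector of the net. -/
lemma op_witness {u δ : ℝ} (h0 : 0 < u) (h1 : u < 1) (hδ : 0 < δ) {m : ℕ} (hm0 : 0 < m)
    (hm : 6 / δ ≤ m) (hn : 1 ≤ n) (x : Config n)
    (hx : ¬ ∀ v : Fin n → ℝ, |∑ i, ∑ j, v i * Mx u x i j * v j| ≤ δ * n * ∑ i, v i ^ 2) :
    ∃ c : Fin n → Fin (2 * (m * n) + 1), fro (fun i j => gr m n (c i) * gr m n (c j)) ≤ 4 * n ∧
      δ * n ^ 2 / 2 ≤ |∑ i, ∑ j, (gr m n (c i) * gr m n (c j)) * Mx u x i j| := by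
  push Not at hx
  obtain ⟨v, hv⟩ := hx
  have hn' : (1 : ℝ) ≤ n := by exact_mod_cast hn
  have hm' : (1 : ℝ) ≤ m := by exact_mod_cast hm0
  set q := ∑ i, v i ^ 2 with hq
  have hq0 : 0 ≤ q := Finset.sum_nonneg fun _ _ => sq_nonneg _
  have hqpos : 0 < q := by
    rcases hq0.eq_or_lt with h | h
    · exfalso
      have hv0 : ∀ i, v i = 0 := by
        intro i
        have := (Finset.sum_eq_zero_iff_of_nonneg (fun i _ => sq_nonneg (v i))).1 (hq.symm.trans h.symm) i (Finset.mem_univ i)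
        simpa using this
      simp [hv0] at hv
      rw [← h] at hv; simp at hv
    · exact h
  set ρ := Real.sqrt (n / q) with hρ
  have hρ2 : ρ ^ 2 = n / q := Real.sq_sqrt (by positivity)
  set z : Fin n → ℝ := fun i => ρ * v i with hz
  have hz2 : ∑ i, z i ^ 2 = n := by
    simp only [hz, mul_pow, ← Finset.mul_sum]
    rw [hρ2, ← hq]; field_simp
  have hzM : ∑ i, ∑ j, (z i * z j) * Mx u x i j = n / q * ∑ i, ∑ j, v i * Mx u x i j * v j := by
    rw [← hρ2]
    simp only [Finset.mul_sum]
    refine Finset.sum_congr rfl fun i _ => Finset.sum_congr rfl fun j _ => ?_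
    simp only [hz]; ring
  have hbig : δ * n ^ 2 < |∑ i, ∑ j, (z i * z j) * Mx u x i j| := by
    rw [hzM, abs_mul, abs_of_pos (by positivity : 0 < n / q)]
    calc δ * n ^ 2 = n / q * (δ * n * q) := by field_simp
      _ < _ := mul_lt_mul_of_pos_left hv (by positivity)
  obtain ⟨c, hc⟩ := round_vec hm0 hn hz2.le
  have hm3 : (3 * n / m : ℝ) ≤ δ / 2 * n := by
    rw [div_le_iff₀ (by positivity)]
    rw [div_le_iff₀ hδ] at hm
    nlinarith
  have hm4 : (3 * n / m : ℝ) ≤ 3 * n := div_le_self (by positivity) hm'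
  set P : Fin n → Fin n → ℝ := fun i j => gr m n (c i) * gr m n (c j) with hP
  set Q : Fin n → Fin n → ℝ := fun i j => z i * z j with hQ
  have hd : fro (fun i j => P i j - Q i j) ≤ 3 * n / m := by
    refine le_of_sq_le_sq ?_ (by positivity)
    rw [fro_sq]
    refine hc.trans (le_of_eq ?_)
    rw [div_pow]; ring
  have hQn : fro Q = n := by
    have : fro Q ^ 2 = (n : ℝ) ^ 2 := by
      rw [fro_sq]
      simp only [hQ, mul_pow, ← Finset.mul_sum, ← Finset.sum_mul, hz2]; ring
    exact (pow_left_inj₀ (fro_nonneg _) (by positivity) two_ne_zero).1 this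
  refine ⟨c, ?_, ?_⟩
  · have := abs_le.1 (abs_fro_sub_le P Q)
    have h2 := this.2
    show fro P ≤ 4 * n
    linarith
  · have hM := cenM_Mx h0 h1 x
    have h2 := abs_inner_le_fro (fun i j => P i j - Q i j) (fun i j => Mx u x i j)
    have h3 : fro (fun i j => Mx u x i j) ≤ n := fro_le_of_abs hM.abs
    have h4 : |∑ i, ∑ j, (P i j - Q i j) * Mx u x i j| ≤ δ / 2 * n * n :=
      h2.trans (mul_le_mul (hd.trans hm3) h3 (fro_nonneg _) (by positivity))
    simp only [sub_mul, Finset.sum_sub_distrib] at h4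
    have h5 := abs_sub_abs_le_abs_sub (∑ i, ∑ j, Q i j * Mx u x i j) (∑ i, ∑ j, P i j * Mx u x i j)
    rw [abs_sub_comm] at h5
    show δ * n ^ 2 / 2 ≤ |∑ i, ∑ j, P i j * Mx u x i j|
    have h6 : δ * n ^ 2 < |∑ i, ∑ j, Q i j * Mx u x i j| := hbig
    nlinarith

/-- Chernoff bound for the quadratic forms `⟨v, Mv⟩`, with `v` in a net of size `exp(o(n²))`; neither the
size of the net nor the error `ηn²` of `mgf_global` matters, as the deviation is of order `n²`. -/
lemma op_ldp {α h u c : ℝ} (H : VPkg α h u c) {δ : ℝ} (hδ : 0 < δ) :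
    ∃ κ : ℝ, 0 < κ ∧ ∀ᶠ n : ℕ in atTop, Ex α h (fun x : Config n => opI u δ x) ≤ Real.exp (-(κ * n)) := by
  classical
  obtain ⟨C, hC, hmgf⟩ := mgf_global H
  set ε := δ / (256 * C) with hε
  have hεp : 0 < ε := by positivity
  set η := ε * δ / 16 with hη
  have hηp : 0 < η := by positivity
  obtain ⟨m0, hm0⟩ := exists_nat_ge (6 / δ)
  set m := m0 + 1 with hm
  have hm1 : 6 / δ ≤ (m : ℝ) := by rw [hm]; push_cast; linarith
  refine ⟨η / 2, by positivity, ?_⟩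
  have hlog : ∀ᶠ n : ℕ in atTop, Real.log 2 ≤ η / 2 * n :=
    (tendsto_natCast_atTop_atTop.const_mul_atTop (by positivity : 0 < η / 2)).eventually_ge_atTop _
  filter_upwards [hmgf η hηp, card_net 1 m hηp, hlog, eventually_ge_atTop 1] with n hmgf hcard hlog hn
  have hn' : (1 : ℝ) ≤ n := by exact_mod_cast hn
  set P : (Fin n → Fin (2 * (m * n) + 1)) → Fin n → Fin n → ℝ :=
    fun c i j => gr m n (c i) * gr m n (c j) with hP
  set S := Finset.univ.filter fun c : Fin n → Fin (2 * (m * n) + 1) => fro (P c) ≤ 4 * n with hS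
  set X : (Fin n → Fin (2 * (m * n) + 1)) → Config n → ℝ := fun c x => ∑ i, ∑ j, P c i j * Mx u x i j with hX
  have hpt : ∀ x : Config n, opI u δ x ≤ Real.exp (-(ε * (δ * n ^ 2 / 2))) *
      ∑ c ∈ S, (Real.exp (ε * X c x) + Real.exp (-ε * X c x)) := by
    intro x
    unfold opI
    split_ifs with hx
    · exact mul_nonneg (Real.exp_pos _).le (Finset.sum_nonneg fun c _ => by positivity)
    · obtain ⟨c, hc1, hc2⟩ := op_witness H.pk.u0 H.pk.u1 hδ (Nat.succ_pos m0) hm1 hn x hx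
      have h1 : Real.exp (ε * (δ * n ^ 2 / 2)) ≤ Real.exp (ε * X c x) + Real.exp (-ε * X c x) := by
        rcases le_abs.1 hc2 with h2 | h2
        · have : Real.exp (ε * (δ * n ^ 2 / 2)) ≤ Real.exp (ε * X c x) :=
            Real.exp_le_exp.2 (mul_le_mul_of_nonneg_left h2 hεp.le)
          linarith [Real.exp_pos (-ε * X c x)]
        · have : Real.exp (ε * (δ * n ^ 2 / 2)) ≤ Real.exp (-ε * X c x) := by
            rw [neg_mul, ← mul_neg]
            exact Real.exp_le_exp.2 (mul_le_mul_of_nonneg_left h2 hεp.le)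
          linarith [Real.exp_pos (ε * X c x)]
      have h2 := Finset.single_le_sum (f := fun c => Real.exp (ε * X c x) + Real.exp (-ε * X c x))
        (s := S) (fun c _ => by positivity) (Finset.mem_filter.2 ⟨Finset.mem_univ c, hc1⟩)
      rw [Real.exp_neg, inv_mul_eq_div, le_div_iff₀ (Real.exp_pos _), one_mul]
      exact h1.trans h2
  have hone : ∀ e : ℝ, e ^ 2 = ε ^ 2 → ∀ c ∈ S, Ex α h (fun x => Real.exp (e * X c x))
      ≤ Real.exp (4 * η * n ^ 2 + η * n ^ 2) := by
    intro e he c hc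
    have h1 := hmgf (fun i j => 2 * e * P c i j) (fun i j => by simp only [hP]; ring)
    have h2 : ∀ x : Config n, (∑ i, ∑ j, 2 * e * P c i j * Mx u x i j) / 2 = e * X c x := by
      intro x
      simp only [hX, mul_assoc, ← Finset.mul_sum]; ring
    simp only [h2] at h1
    refine h1.trans (Real.exp_le_exp.2 ?_)
    have h3 : ∑ i, ∑ j, (2 * e * P c i j) ^ 2 = 4 * ε ^ 2 * fro (P c) ^ 2 := by
      rw [fro_sq, ← he]
      simp only [mul_pow, ← Finset.mul_sum]; ring
    have h4 : fro (P c) ^ 2 ≤ (4 * n) ^ 2 :=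
      pow_le_pow_left₀ (fro_nonneg _) (Finset.mem_filter.1 hc).2 2
    have h5 : C * ε = δ / 256 := by rw [hε]; field_simp
    have h6 : C * (∑ i, ∑ j, (2 * e * P c i j) ^ 2) ≤ 4 * η * n ^ 2 := by
      rw [h3]
      calc C * (4 * ε ^ 2 * fro (P c) ^ 2) ≤ C * (4 * ε ^ 2 * (4 * n) ^ 2) := by gcongr
        _ = (C * ε) * ε * 64 * n ^ 2 := by ring
        _ = 4 * η * n ^ 2 := by rw [h5, hη]; ring
    linarith
  have hsum : Ex α h (fun x : Config n => opI u δ x) ≤ Real.exp (-(ε * (δ * n ^ 2 / 2))) *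
      (Real.exp (η * n ^ 2) * (2 * Real.exp (4 * η * n ^ 2 + η * n ^ 2))) := by
    refine (Ex_mono α h hpt).trans ?_
    rw [Ex_mul]
    refine mul_le_mul_of_nonneg_left ?_ (Real.exp_pos _).le
    rw [Ex_sum]
    calc _ ≤ ∑ c ∈ S, 2 * Real.exp (4 * η * n ^ 2 + η * n ^ 2) := by
          refine Finset.sum_le_sum fun c hc => ?_
          rw [Ex_add]
          have a := hone ε rfl c hc
          have b := hone (-ε) (by ring) c hc
          linarith
      _ ≤ _ := by
          rw [Finset.sum_const, nsmul_eq_mul]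
          refine mul_le_mul_of_nonneg_right ?_ (by positivity)
          refine le_trans ?_ hcard
          have : S.card ≤ (2 * (m * n) + 1) ^ (1 * n) := by
            refine (Finset.card_le_univ S).trans (le_of_eq ?_)
            simp
          exact_mod_cast this
  refine hsum.trans ?_
  rw [show (2 : ℝ) = Real.exp (Real.log 2) from (Real.exp_log two_pos).symm]
  rw [← Real.exp_add, ← Real.exp_add, ← Real.exp_add, Real.exp_le_exp, Real.exp_log two_pos]
  have : ε * (δ * n ^ 2 / 2) = 8 * η * n ^ 2 := by rw [hη]; ring
  rw [this]
  nlinarith [mul_le_mul_of_nonneg_left hn' (by positivity : (0:ℝ) ≤ η * n)]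

end TriCLT

/-! ### The mean-field star -/

namespace TriCLT
variable {n : ℕ}

/-- Number of ones of a bit vector. -/
def mB (b : Fin n → Bool) : ℝ := ∑ k, bv (b k)

/-- Mean-field Hamiltonian of the star of a vertex when the remaining graph is quasirandom of
density `u`. -/
def gS (α h u : ℝ) (b : Fin n → Bool) : ℝ := h * mB b + α * u / (2 * n) * mB b ^ 2

/-- Centred linear statistic of a bit vector. -/
def lS (u : ℝ) (ν : Fin n → ℝ) (b : Fin n → Bool) : ℝ := ∑ k, ν k * (bv (b k) - u)

lemma star_lin {L G c u : ℝ} (hc : 0 < c)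
    (hV : ∀ w ∈ Set.Icc (0 : ℝ) 1, L * w - Ifun w ≤ G - c * (w - u) ^ 2)
    (ν : Fin n → ℝ) (hν : ∀ k, |ν k| ≤ 1) (θ : ℝ) :
    ∑ b : Fin n → Bool, Real.exp (L * mB b + θ * lS u ν b) ≤ Real.exp (n * G + θ ^ 2 * n / (4 * c)) := by
  have e : ∀ b : Fin n → Bool, L * mB b + θ * lS u ν b
      = ∑ k, (L + θ * ν k) * bv (b k) + -∑ k, θ * ν k * u := by
    intro b
    simp only [mB, lS, Finset.mul_sum, ← Finset.sum_neg_distrib, ← Finset.sum_add_distrib]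
    exact Finset.sum_congr rfl fun k _ => by ring
  simp only [e]
  have e2 : ∀ b : Fin n → Bool, Real.exp (∑ k, (L + θ * ν k) * bv (b k) + -∑ k, θ * ν k * u)
      = Real.exp (∑ k, (L + θ * ν k) * bv (b k)) * Real.exp (-∑ k, θ * ν k * u) :=
    fun b => Real.exp_add _ _
  simp only [e2]
  rw [← Finset.sum_mul, sum_exp_prod, ← Real.exp_add, Real.exp_le_exp, ← sub_eq_add_neg,
    ← Finset.sum_sub_distrib]
  calc _ ≤ ∑ k : Fin n, (G + θ ^ 2 / (4 * c)) := by
        refine Finset.sum_le_sum fun k _ => ?_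
        rw [lse_eq]
        have hw : Real.sigmoid (L + θ * ν k) ∈ Set.Icc (0 : ℝ) 1 :=
          ⟨(Real.sigmoid_pos _).le, (Real.sigmoid_lt_one _).le⟩
        have h1 := hV _ hw
        set w := Real.sigmoid (L + θ * ν k)
        have h2 := quad_le (c := c) (d := w - u) (t := θ * ν k) hc
        have h3 : (θ * ν k) ^ 2 / (4 * c) ≤ θ ^ 2 / (4 * c) := by
          apply div_le_div_of_nonneg_right _ (by positivity)
          rw [mul_pow]
          have : ν k ^ 2 ≤ 1 := by have := abs_le.1 (hν k); nlinarith
          nlinarith [sq_nonneg θ]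
        linarith
    _ = _ := by simp; ring

lemma star_exact {l u : ℝ} (hl : Real.sigmoid l = u) :
    ∑ b : Fin n → Bool, Real.exp (l * mB b) = Real.exp (n * (l * u - Ifun u)) := by
  have h := sum_exp_prod (ι := Fin n) (fun _ => l)
  simp only [← Finset.mul_sum] at h
  rw [show (∑ b : Fin n → Bool, Real.exp (l * mB b))
    = ∑ b : Fin n → Bool, Real.exp (l * ∑ k, bv (b k)) from rfl, h, lse_eq, hl]
  congr 1
  simp; ring

lemma mB_nat (b : Fin n → Bool) : ∃ j ∈ Finset.range (n + 1), mB b = (j : ℝ) := by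
  refine ⟨(Finset.univ.filter fun k => b k).card, ?_, ?_⟩
  · rw [Finset.mem_range]
    have := Finset.card_le_univ (Finset.univ.filter fun k => b k)
    rw [Fintype.card_fin] at this
    omega
  · simp [mB, bv, Finset.sum_boole]

/-- For `α ≥ 0` the square in `gS` is linearised at each of the `n + 1` possible values of the degree. -/
lemma star_pos {α h u c : ℝ} (H : VPkg α h u c) (hα : 0 ≤ α) (hn : 1 ≤ n)
    (ν : Fin n → ℝ) (hν : ∀ k, |ν k| ≤ 1) (θ : ℝ) :
    ∑ b : Fin n → Bool, Real.exp (gS α h u b + θ * lS u ν b)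
      ≤ (n + 1) * Real.exp (θ ^ 2 * n / (4 * c)) * ∑ b : Fin n → Bool, Real.exp (gS α h u b) := by
  have hn' : (1 : ℝ) ≤ n := by exact_mod_cast hn
  have hu0 := H.pk.u0
  set Ψ := h * u + α * u / 2 * u ^ 2 - Ifun u with hΨ
  have hlow : Real.exp (n * Ψ) ≤ ∑ b : Fin n → Bool, Real.exp (gS α h u b) := by
    have h1 := star_exact (n := n) H.pk.stat
    calc Real.exp (n * Ψ) = (∑ b : Fin n → Bool, Real.exp ((h + α * u ^ 2) * mB b))
          * Real.exp (-(n * (α * u ^ 3 / 2))) := by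
          rw [h1, ← Real.exp_add]; congr 1; rw [hΨ]; ring
      _ ≤ _ := by
          rw [Finset.sum_mul]
          refine Finset.sum_le_sum fun b _ => ?_
          rw [← Real.exp_add, Real.exp_le_exp, gS]
          have : 0 ≤ α * u / (2 * n) * (mB b - u * n) ^ 2 := by positivity
          have e : α * u / (2 * n) * (mB b - u * n) ^ 2 = α * u / (2 * n) * mB b ^ 2 - α * u ^ 2 * mB b
            + n * (α * u ^ 3 / 2) := by field_simp; ring
          linarith
  have hup : ∑ b : Fin n → Bool, Real.exp (gS α h u b + θ * lS u ν b)
      ≤ ∑ j ∈ Finset.range (n + 1), Real.exp (n * Ψ + θ ^ 2 * n / (4 * c)) := by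
    calc _ ≤ ∑ b : Fin n → Bool, ∑ j ∈ Finset.range (n + 1),
          Real.exp ((h + α * u * (j / n)) * mB b + θ * lS u ν b) * Real.exp (-(n * (α * u * (j / n) ^ 2 / 2))) := by
          refine Finset.sum_le_sum fun b _ => ?_
          obtain ⟨j, hj, hjb⟩ := mB_nat b
          refine le_trans (le_of_eq ?_) (Finset.single_le_sum (f := fun j : ℕ =>
            Real.exp ((h + α * u * (j / n)) * mB b + θ * lS u ν b)
              * Real.exp (-(n * (α * u * (j / n) ^ 2 / 2)))) (fun _ _ => by positivity) hj)
          rw [← Real.exp_add]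
          congr 1
          rw [gS, hjb]; field_simp; ring
      _ = ∑ j ∈ Finset.range (n + 1), (∑ b : Fin n → Bool,
          Real.exp ((h + α * u * (j / n)) * mB b + θ * lS u ν b)) * Real.exp (-(n * (α * u * (j / n) ^ 2 / 2))) := by
          rw [Finset.sum_comm]; simp only [Finset.sum_mul]
      _ ≤ _ := by
          refine Finset.sum_le_sum fun j _ => ?_
          have h1 := star_lin (n := n) (L := h + α * u * (j / n)) (G := Ψ + α * u * ((j : ℝ) / n) ^ 2 / 2)
            (u := u) H.cpos (fun w hw => by
              have h2 := H.psi hα hw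
              have h3 : 0 ≤ α * u * (w - j / n) ^ 2 := by positivity
              rw [hΨ]; nlinarith) ν hν θ
          refine (mul_le_mul_of_nonneg_right h1 (Real.exp_pos _).le).trans (le_of_eq ?_)
          rw [← Real.exp_add]; congr 1; ring
  rw [Finset.sum_const, Finset.card_range, nsmul_eq_mul] at hup
  refine hup.trans ?_
  push_cast
  rw [mul_assoc, add_comm (n * Ψ), Real.exp_add]
  gcongr

lemma sq_le_exp (y : ℝ) : y ^ 2 ≤ Real.exp y + Real.exp (-y) := by
  have h1 : ∀ z : ℝ, 0 ≤ z → z ^ 2 ≤ Real.exp z + Real.exp (-z) := by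
    intro z hz
    have := Real.quadratic_le_exp_of_nonneg hz
    have h2 := Real.add_one_le_exp (-z)
    have h3 := Real.exp_pos (-z)
    rcases le_total z 2 with h | h
    · have h4 := Real.one_sub_div_pow_le_exp_neg (n := 2) (t := z) h
      norm_num at h4
      nlinarith [sq_nonneg (z - 1)]
    · have : z ^ 3 / 6 ≤ Real.exp z := by
        have := Real.pow_div_factorial_le_exp z hz 3
        simpa [Nat.factorial] using this
      have h5 := Real.sum_le_exp_of_nonneg hz 4
      simp [Finset.sum_range_succ, Nat.factorial] at h5
      nlinarith [sq_nonneg (z - 2), sq_nonneg (z - 3), mul_nonneg hz (sq_nonneg (z - 3))]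
  rcases le_total 0 y with h | h
  · exact h1 y h
  · have := h1 (-y) (by linarith)
    rw [neg_neg] at this; nlinarith

/-- For `α ≤ 0` the quadratic part of `gS`, recentred at the typical degree, is a penalty: it is dropped in
the sum on the left and costs a bounded factor in the one on the right. -/
lemma star_neg {α h u : ℝ} (hP : Pkg α h u) (hα : α ≤ 0) (hn : 1 ≤ n)
    (ν : Fin n → ℝ) (hν : ∀ k, |ν k| ≤ 1) (θ : ℝ) :
    ∑ b : Fin n → Bool, Real.exp (gS α h u b + θ * lS u ν b)
      ≤ Real.exp (θ ^ 2 * n / (4 * 2)) * Real.exp (2 * |α|) * ∑ b : Fin n → Bool, Real.exp (gS α h u b) := by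
  have hn' : (1 : ℝ) ≤ n := by exact_mod_cast hn
  have hu0 := hP.u0
  have hu1 := hP.u1
  set l := h + α * u ^ 2 with hl
  set G := l * u - Ifun u with hG
  set a := -α * u / 2 with ha
  have ha0 : 0 ≤ a := by rw [ha]; have : 0 ≤ -α := by linarith
                         positivity
  have hV : ∀ w ∈ Set.Icc (0 : ℝ) 1, l * w - Ifun w ≤ G - 2 * (w - u) ^ 2 := fun w hw => pinsker hP.stat hw
  set D := -(α * u ^ 3 * n / 2) with hD
  have hls : ∀ b : Fin n → Bool, lS u (fun _ => 1) b = mB b - u * n := by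
    intro b; simp [lS, mB]; ring
  have hg : ∀ b : Fin n → Bool, gS α h u b = l * mB b - a * (lS u (fun _ => 1) b ^ 2 / n) + D := by
    intro b; rw [gS, hls, hl, ha, hD]; field_simp; ring
  have hup : ∑ b : Fin n → Bool, Real.exp (gS α h u b + θ * lS u ν b)
      ≤ Real.exp (n * G + θ ^ 2 * n / (4 * 2)) * Real.exp D := by
    calc _ ≤ ∑ b : Fin n → Bool, Real.exp (l * mB b + θ * lS u ν b) * Real.exp D := by
          refine Finset.sum_le_sum fun b _ => ?_
          rw [← Real.exp_add, Real.exp_le_exp, hg]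
          have : 0 ≤ a * (lS u (fun _ => 1) b ^ 2 / n) := by positivity
          linarith
      _ ≤ _ := by
          rw [← Finset.sum_mul]
          exact mul_le_mul_of_nonneg_right (star_lin two_pos hV ν hν θ) (Real.exp_pos _).le
  -- the quadratic penalty costs only a constant factor, by Jensen's inequality
  have hvar : ∑ b : Fin n → Bool, Real.exp (l * mB b) * (lS u (fun _ => 1) b ^ 2 / n)
      ≤ 4 * Real.exp (n * G) := by
    have hs : ∀ e : ℝ, e ^ 2 = (1 / Real.sqrt n) ^ 2 →
        ∑ b : Fin n → Bool, Real.exp (l * mB b + e * lS u (fun _ => 1) b) ≤ 2 * Real.exp (n * G) := by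
      intro e he
      refine (star_lin two_pos hV (fun _ : Fin n => (1 : ℝ)) (fun _ => by simp) e).trans ?_
      rw [he, Real.exp_add, mul_comm]
      refine mul_le_mul_of_nonneg_right ?_ (Real.exp_pos _).le
      have : (1 / Real.sqrt n) ^ 2 * n / (4 * 2) = 1 / 8 := by
        rw [div_pow, Real.sq_sqrt (by positivity)]; field_simp; norm_num
      rw [this]
      have h1 := Real.exp_bound_div_one_sub_of_interval (x := 1 / 8) (by norm_num) (by norm_num)
      norm_num at h1 ⊢
      linarith
    have h1 := hs (1 / Real.sqrt n) rfl
    have h2 := hs (-(1 / Real.sqrt n)) (by ring)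
    have h3 : ∑ b : Fin n → Bool, Real.exp (l * mB b) * (lS u (fun _ => 1) b ^ 2 / n)
      ≤ ∑ b : Fin n → Bool, (Real.exp (l * mB b + 1 / Real.sqrt n * lS u (fun _ => 1) b)
        + Real.exp (l * mB b + -(1 / Real.sqrt n) * lS u (fun _ => 1) b)) := by
      refine Finset.sum_le_sum fun b _ => ?_
      rw [Real.exp_add, Real.exp_add, ← mul_add]
      refine mul_le_mul_of_nonneg_left ?_ (Real.exp_pos _).le
      have := sq_le_exp (1 / Real.sqrt n * lS u (fun _ => 1) b)
      rw [mul_pow, div_pow, Real.sq_sqrt (by positivity), one_pow, one_div_mul_eq_div] at this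
      rwa [neg_mul]
    rw [Finset.sum_add_distrib] at h3
    linarith
  have hlow : Real.exp (n * G) * Real.exp (-(4 * a)) * Real.exp D ≤ ∑ b : Fin n → Bool, Real.exp (gS α h u b) := by
    have h1 : ∀ b : Fin n → Bool, Real.exp (l * mB b) * (Real.exp (-(4 * a)) *
        (1 - (a * (lS u (fun _ => 1) b ^ 2 / n) - 4 * a))) * Real.exp D ≤ Real.exp (gS α h u b) := by
      intro b
      rw [hg, Real.exp_add, sub_eq_add_neg (l * mB b), Real.exp_add]
      refine mul_le_mul_of_nonneg_right (mul_le_mul_of_nonneg_left ?_ (Real.exp_pos _).le) (Real.exp_pos _).le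
      set q := a * (lS u (fun _ => 1) b ^ 2 / n)
      have := Real.add_one_le_exp (4 * a - q)
      calc Real.exp (-(4 * a)) * (1 - (q - 4 * a)) ≤ Real.exp (-(4 * a)) * Real.exp (4 * a - q) := by
            apply mul_le_mul_of_nonneg_left _ (Real.exp_pos _).le; linarith
        _ = _ := by rw [← Real.exp_add]; congr 1; ring
    refine le_trans ?_ (Finset.sum_le_sum fun b _ => h1 b)
    rw [← Finset.sum_mul]
    refine mul_le_mul_of_nonneg_right ?_ (Real.exp_pos _).le
    have e : ∑ b : Fin n → Bool, Real.exp (l * mB b) * (Real.exp (-(4 * a)) *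
        (1 - (a * (lS u (fun _ => 1) b ^ 2 / n) - 4 * a)))
        = Real.exp (-(4 * a)) * ((1 + 4 * a) * ∑ b : Fin n → Bool, Real.exp (l * mB b)
          - a * ∑ b : Fin n → Bool, Real.exp (l * mB b) * (lS u (fun _ => 1) b ^ 2 / n)) := by
      simp only [Finset.mul_sum, ← Finset.sum_sub_distrib]
      exact Finset.sum_congr rfl fun b _ => by ring
    rw [e, star_exact hP.stat, mul_comm]
    refine mul_le_mul_of_nonneg_left ?_ (Real.exp_pos _).le
    nlinarith [mul_le_mul_of_nonneg_left hvar ha0]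
  have h4 : Real.exp (-(2 * |α|)) ≤ Real.exp (-(4 * a)) := by
    rw [Real.exp_le_exp, abs_of_nonpos hα, ha]; nlinarith
  calc _ ≤ _ := hup
    _ = Real.exp (θ ^ 2 * n / (4 * 2)) * Real.exp (2 * |α|) *
        (Real.exp (n * G) * Real.exp (-(2 * |α|)) * Real.exp D) := by
        simp only [← Real.exp_add]; congr 1; ring
    _ ≤ _ := by
        refine mul_le_mul_of_nonneg_left (le_trans ?_ hlow) (by positivity)
        gcongr

/-- Sub-Gaussian moments for the mean-field star, up to `exp(o(n))`. -/
lemma star_mgf {α h u c : ℝ} (H : VPkg α h u c) : ∃ C : ℝ, 0 < C ∧ ∀ η : ℝ, 0 < η →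
    ∀ᶠ n : ℕ in atTop, ∀ ν : Fin n → ℝ, (∀ k, |ν k| ≤ 1) → ∀ θ : ℝ,
      ∑ b : Fin n → Bool, Real.exp (gS α h u b + θ * lS u ν b)
        ≤ Real.exp (C * θ ^ 2 * n + η * n) * ∑ b : Fin n → Bool, Real.exp (gS α h u b) := by
  rcases le_total 0 α with hα | hα
  · refine ⟨1 / (4 * c), by have := H.cpos; positivity, fun η hη => ?_⟩
    have hlog : Tendsto (fun n : ℕ => Real.log ((n : ℝ) + 1) / ((n : ℝ) + 1)) atTop (𝓝 0) :=
      (Real.isLittleO_log_id_atTop.tendsto_div_nhds_zero).comp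
        (tendsto_atTop_add_const_right _ 1 tendsto_natCast_atTop_atTop)
    filter_upwards [hlog.eventually (gt_mem_nhds (by positivity : 0 < η / 2)), eventually_ge_atTop 1] with n h1 hn
    intro ν hν θ
    have hn' : (1 : ℝ) ≤ n := by exact_mod_cast hn
    refine (star_pos H hα hn ν hν θ).trans ?_
    refine mul_le_mul_of_nonneg_right ?_ (Finset.sum_nonneg fun _ _ => (Real.exp_pos _).le)
    rw [div_lt_iff₀ (by positivity)] at h1
    calc ((n : ℝ) + 1) * Real.exp (θ ^ 2 * n / (4 * c))
        = Real.exp (Real.log (n + 1)) * Real.exp (θ ^ 2 * n / (4 * c)) := by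
          rw [Real.exp_log (by positivity)]
      _ ≤ _ := by
          rw [← Real.exp_add, Real.exp_le_exp]
          have : 1 / (4 * c) * θ ^ 2 * n = θ ^ 2 * n / (4 * c) := by ring
          rw [this]; nlinarith
  · refine ⟨1 / (4 * 2), by norm_num, fun η hη => ?_⟩
    have hlin : ∀ᶠ n : ℕ in atTop, 2 * |α| ≤ η * n :=
      (tendsto_natCast_atTop_atTop.const_mul_atTop hη).eventually_ge_atTop _
    filter_upwards [hlin, eventually_ge_atTop 1] with n h1 hn
    intro ν hν θ
    refine (star_neg H.pk hα hn ν hν θ).trans ?_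
    refine mul_le_mul_of_nonneg_right ?_ (Finset.sum_nonneg fun _ _ => (Real.exp_pos _).le)
    rw [← Real.exp_add, Real.exp_le_exp]
    have : 1 / (4 * 2) * θ ^ 2 * n = θ ^ 2 * n / (4 * 2) := by ring
    rw [this]; linarith

end TriCLT

/-! ### Resampling a star -/

namespace TriCLT
variable {n : ℕ}

/-- The configuration obtained from `x` by replacing the star of `i` by the bit vector `b`
(the bit `b i` is ignored). -/
def rst (x : Config n) (i : Fin n) (b : Fin n → Bool) : Config n := fun e =>
  if i ∈ (e : Sym2 (Fin n)) then decide (∃ k, (e : Sym2 (Fin n)) = s(i, k) ∧ b k = true) else x e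

lemma rst_edge (x : Config n) {i k : Fin n} (b : Fin n → Bool) (hk : i ≠ k) :
    rst x i b ⟨s(i, k), by simpa using hk⟩ = b k := by
  unfold rst
  rw [if_pos (by simp)]
  rcases hb : b k with _ | _
  · rw [decide_eq_false_iff_not]
    rintro ⟨l, hl, hbl⟩
    have : k = l := by
      have := Sym2.eq_iff.1 hl
      grind
    subst this
    simp [hb] at hbl
  · rw [decide_eq_true_eq]
    exact ⟨k, rfl, hb⟩

lemma adj_rst (x : Config n) (i : Fin n) (b : Fin n → Bool) (k l : Fin n) :
    adj (rst x i b) k l = if k = l then 0 else if k = i then bv (b l) else if l = i then bv (b k)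
      else adj x k l := by
  split_ifs with h1 h2 h3
  · rw [h1, adj_diag]
  · subst h2
    rw [adj_ne _ h1, rst_edge]
    exact h1
  · subst h3
    rw [adj_symm, adj_ne _ (Ne.symm h1), rst_edge]
    exact Ne.symm h1
  · rw [adj_ne _ h1, adj_ne _ h1]
    unfold rst
    rw [if_neg]
    simp only [Sym2.mem_iff]
    grind

/-- The bits of the star of `i` in `x`, with a free bit `c` at `i` itself. -/
def starB (x : Config n) (i : Fin n) (c : Bool) : Fin n → Bool := fun k =>
  if h : i = k then c else x ⟨s(i, k), by simpa using h⟩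

lemma rst_invol (i : Fin n) :
    Function.Involutive (fun p : Config n × (Fin n → Bool) =>
      ((rst p.1 i p.2, starB p.1 i (p.2 i)) : Config n × (Fin n → Bool))) := by
  rintro ⟨x, b⟩
  refine Prod.ext ?_ ?_
  · funext ⟨e, he⟩
    show rst (rst x i b) i (starB x i (b i)) ⟨e, he⟩ = x ⟨e, he⟩
    by_cases hi : i ∈ e
    · obtain ⟨k, rfl⟩ := hi
      have hk : i ≠ k := by simpa using he
      rw [rst_edge _ _ hk]
      simp [starB, hk]
    · simp [rst, hi]
  · funext k
    show starB (rst x i b) i (starB x i (b i) i) k = b k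
    by_cases hk : i = k
    · subst hk; simp [starB]
    · rw [starB, dif_neg hk, rst_edge _ _ hk]

/-- Resampling the star of `i` uniformly preserves the uniform measure. -/
lemma sum_rst (i : Fin n) (f : Config n → ℝ) :
    ∑ x, ∑ b : Fin n → Bool, f (rst x i b) = (2 : ℝ) ^ n * ∑ x, f x := by
  have h := Equiv.sum_comp (rst_invol i).toPerm (fun p : Config n × (Fin n → Bool) => f p.1)
  simp only [Function.Involutive.coe_toPerm] at h
  rw [Fintype.sum_prod_type, Fintype.sum_prod_type] at h
  rw [h, Finset.mul_sum]
  simp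

/-- Adjacency matrix with the star of `i` removed. -/
def adj0 (x : Config n) (i : Fin n) : Matrix (Fin n) (Fin n) ℝ := fun k l =>
  if k = i then 0 else if l = i then 0 else adj x k l

/-- The neighbourhood vector of `i` prescribed by the bits `b`. -/
def vB (i : Fin n) (b : Fin n → Bool) : Fin n → ℝ := fun k => if k = i then 0 else bv (b k)

lemma adj_rst_eq (x : Config n) (i : Fin n) (b : Fin n → Bool) :
    adj (rst x i b) = adj0 x i + Matrix.vecMulVec (Pi.single i 1) (vB i b)
      + Matrix.vecMulVec (vB i b) (Pi.single i 1) := by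
  ext k l
  rw [adj_rst]
  simp only [Matrix.add_apply, Matrix.vecMulVec_apply, adj0, vB, Pi.single_apply]
  by_cases hk : k = i <;> by_cases hl : l = i
  · simp [hk, hl]
  · have : ¬ i = l := fun e => hl e.symm
    simp [hk, hl, this]
  · simp [hk, hl]
  · by_cases hkl : k = l
    · subst hkl; simp [hk, adj_diag]
    · simp [hk, hl, hkl]

lemma trace_rst (x : Config n) (i : Fin n) (b : Fin n → Bool) :
    Matrix.trace (adj (rst x i b) * adj (rst x i b) * adj (rst x i b))
      = Matrix.trace (adj0 x i * adj0 x i * adj0 x i)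
        + 3 * ∑ k, ∑ l, vB i b k * adj x k l * vB i b l := by
  rw [adj_rst_eq]
  set A := adj0 x i with hA
  set v := vB i b with hv
  set e : Fin n → ℝ := Pi.single i 1 with he
  have hAe : Matrix.mulVec A e = 0 := by
    ext k; simp [he, hA, adj0]
  have heA : Matrix.vecMul e A = 0 := by
    ext k; simp [he, hA, adj0]
  have hve : v ⬝ᵥ e = 0 := by simp [he, hv, vB]
  have hev : e ⬝ᵥ v = 0 := by simp [he, hv, vB]
  have hee : e ⬝ᵥ e = 1 := by simp [he]
  have hq : v ⬝ᵥ Matrix.mulVec A v = ∑ k, ∑ l, v k * adj x k l * v l := by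
    simp only [dotProduct, Matrix.mulVec, Finset.mul_sum]
    refine Finset.sum_congr rfl fun k _ => Finset.sum_congr rfl fun l _ => ?_
    by_cases hk : k = i
    · simp [hv, vB, hk]
    · by_cases hl : l = i
      · simp [hv, vB, hl]
      · simp [hA, adj0, hk, hl, mul_assoc]
  set E := Matrix.vecMulVec e v with hE
  set F := Matrix.vecMulVec v e with hF
  have hAE : A * E = 0 := by rw [hE, Matrix.mul_vecMulVec, hAe, Matrix.zero_vecMulVec]
  have hFA : F * A = 0 := by rw [hF, Matrix.vecMulVec_mul, heA, Matrix.vecMulVec_zero]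
  have hEE : E * E = 0 := by rw [hE, Matrix.vecMulVec_mul_vecMulVec, hve]; simp
  have hFF : F * F = 0 := by rw [hF, Matrix.vecMulVec_mul_vecMulVec, hev]; simp
  have hAE' : ∀ X : Matrix (Fin n) (Fin n) ℝ, X * A * E = 0 := fun X => by rw [mul_assoc, hAE, mul_zero]
  have hFA' : ∀ X : Matrix (Fin n) (Fin n) ℝ, X * F * A = 0 := fun X => by rw [mul_assoc, hFA, mul_zero]
  have hEE' : ∀ X : Matrix (Fin n) (Fin n) ℝ, X * E * E = 0 := fun X => by rw [mul_assoc, hEE, mul_zero]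
  have hFF' : ∀ X : Matrix (Fin n) (Fin n) ℝ, X * F * F = 0 := fun X => by rw [mul_assoc, hFF, mul_zero]
  have t1 : Matrix.trace (A * A * F) = 0 := by rw [Matrix.trace_mul_cycle, hFA]; simp
  have t2 : Matrix.trace (E * A * A) = 0 := by rw [Matrix.trace_mul_cycle, hAE]; simp
  have t3 : Matrix.trace (E * F * E) = 0 := by rw [Matrix.trace_mul_cycle, hEE]; simp
  have t4 : Matrix.trace (F * E * F) = 0 := by rw [Matrix.trace_mul_cycle, hFF]; simp
  have t5 : Matrix.trace (E * A * F) = Matrix.trace (A * F * E) := by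
    rw [Matrix.trace_mul_cycle, Matrix.trace_mul_cycle]
  have t6 : Matrix.trace (F * E * A) = Matrix.trace (A * F * E) := by rw [Matrix.trace_mul_cycle]
  have t7 : Matrix.trace (A * F * E) = ∑ k, ∑ l, v k * adj x k l * v l := by
    rw [← hq, mul_assoc, hF, hE, Matrix.vecMulVec_mul_vecMulVec, hee, one_smul, Matrix.mul_vecMulVec,
      Matrix.trace_vecMulVec, dotProduct_comm]
  simp only [add_mul, mul_add, hAE, hFA, hEE, hFF, hAE', hFA', hEE', hFF', zero_mul, zero_add,
    add_zero, Matrix.trace_add, t1, t2, t3, t4, t5, t6, t7]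
  ring

lemma sum_adj_rst (x : Config n) (i : Fin n) (b : Fin n → Bool) :
    ∑ k, ∑ l, adj (rst x i b) k l = ∑ k, ∑ l, adj0 x i k l + 2 * ∑ k, vB i b k := by
  rw [adj_rst_eq]
  simp only [Matrix.add_apply, Matrix.vecMulVec_apply, Finset.sum_add_distrib, ← Finset.mul_sum,
    ← Finset.sum_mul]
  simp
  ring

/-- The part of the Hamiltonian that does not involve the star of `i`. -/
def ham0 (α h : ℝ) (x : Config n) (i : Fin n) : ℝ :=
  α / n * (Matrix.trace (adj0 x i * adj0 x i * adj0 x i) / 6) + h * ((∑ k, ∑ l, adj0 x i k l) / 2)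

lemma ham_rst (α h : ℝ) (x : Config n) (i : Fin n) (b : Fin n → Bool) :
    ham n α h (rst x i b) = ham0 α h x i
      + α / (2 * n) * (∑ k, ∑ l, vB i b k * adj x k l * vB i b l) + h * ∑ k, vB i b k := by
  have h1 := triangleCount_eq (rst x i b)
  have h2 := edgeCount_eq (rst x i b)
  rw [trace_rst] at h1
  rw [sum_adj_rst] at h2
  have h3 : (triangleCount n (rst x i b) : ℝ) = Matrix.trace (adj0 x i * adj0 x i * adj0 x i) / 6
    + (∑ k, ∑ l, vB i b k * adj x k l * vB i b l) / 2 := by linarith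
  unfold ham ham0
  rw [h2, h3]
  rcases eq_or_ne (n : ℝ) 0 with h0 | h0
  · simp [h0]; ring
  · field_simp; ring

lemma vB_zero_one (i : Fin n) (b : Fin n → Bool) (k : Fin n) : vB i b k = 0 ∨ vB i b k = 1 := by
  unfold vB bv; split_ifs <;> simp

lemma mB_eq_vB (i : Fin n) (b : Fin n → Bool) : mB b = ∑ k, vB i b k + bv (b i) := by
  have : ∀ k, vB i b k = bv (b k) - if k = i then bv (b i) else 0 := by
    intro k; unfold vB; split_ifs with h <;> simp [h]
  simp only [this, Finset.sum_sub_distrib, mB]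
  simp

/-- Operator-norm control away from the vertex `i`; unlike the full operator norm, it does not
depend on the star of `i`. -/
def opO (u δ : ℝ) (x : Config n) (i : Fin n) : Prop :=
  ∀ v : Fin n → ℝ, v i = 0 → |∑ k, ∑ l, v k * Mx u x k l * v l| ≤ δ * n * ∑ k, v k ^ 2

lemma Mx_rst (u : ℝ) (x : Config n) (i : Fin n) (b : Fin n → Bool) {k l : Fin n} (hk : k ≠ i)
    (hl : l ≠ i) : Mx u (rst x i b) k l = Mx u x k l := by
  unfold Mx
  rw [adj_rst]
  split_ifs <;> rfl

lemma opO_rst (u δ : ℝ) (x : Config n) (i : Fin n) (b : Fin n → Bool) :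
    opO u δ (rst x i b) i ↔ opO u δ x i := by
  unfold opO
  refine forall_congr' fun v => imp_congr_right fun hv => ?_
  have : ∑ k, ∑ l, v k * Mx u (rst x i b) k l * v l = ∑ k, ∑ l, v k * Mx u x k l * v l := by
    refine Finset.sum_congr rfl fun k _ => Finset.sum_congr rfl fun l _ => ?_
    by_cases hk : k = i
    · simp [hk, hv]
    · by_cases hl : l = i
      · simp [hl, hv]
      · rw [Mx_rst _ _ _ _ hk hl]
  rw [this]

lemma star_arith {α h u N Q m ε δ : ℝ} (hN : 1 ≤ N) (u0 : 0 < u) (u1 : u < 1) (hm0 : 0 ≤ m) (hm : m ≤ N)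
    (he0 : 0 ≤ ε) (he1 : ε ≤ 1) (hQ : |Q| ≤ δ * N * N) :
    |α / (2 * N) * (Q + u * (m ^ 2 - m)) + h * m - (h * (m + ε) + α * u / (2 * N) * (m + ε) ^ 2)|
      ≤ |α| * δ * N / 2 + 2 * |α| + |h| := by
  have e : α / (2 * N) * (Q + u * (m ^ 2 - m)) + h * m - (h * (m + ε) + α * u / (2 * N) * (m + ε) ^ 2)
      = α * ((Q / N) / 2) - α * ((u * (m + 2 * m * ε + ε ^ 2)) / N / 2) - h * ε := by
    field_simp; ring
  have q1 : |Q / N / 2| ≤ δ * N / 2 := by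
    rw [abs_div, abs_div, abs_of_pos (by linarith : 0 < N), abs_of_pos (by norm_num : (0:ℝ) < 2)]
    apply div_le_div_of_nonneg_right _ (by norm_num)
    rw [div_le_iff₀ (by linarith)]; exact hQ
  have w0 : 0 ≤ m + 2 * m * ε + ε ^ 2 := by positivity
  have w1 : m + 2 * m * ε + ε ^ 2 ≤ 4 * N := by nlinarith
  have q2 : |u * (m + 2 * m * ε + ε ^ 2) / N / 2| ≤ 2 := by
    rw [abs_of_nonneg (by positivity), div_le_iff₀ (by norm_num), div_le_iff₀ (by linarith)]
    nlinarith
  rw [e]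
  refine (abs_sub _ _).trans ?_
  have q3 : |h * ε| ≤ |h| := by
    rw [abs_mul, abs_of_nonneg he0]; exact mul_le_of_le_one_right (abs_nonneg _) he1
  have q4 := abs_sub (α * (Q / N / 2)) (α * (u * (m + 2 * m * ε + ε ^ 2) / N / 2))
  rw [abs_mul, abs_mul α] at q4
  have q5 := mul_le_mul_of_nonneg_left q1 (abs_nonneg α)
  have q6 := mul_le_mul_of_nonneg_left q2 (abs_nonneg α)
  linarith

/-- On `opO`, the star of `i` sees the mean-field Hamiltonian up to a small error. -/
lemma ham_star {α h u δ : ℝ} (u0 : 0 < u) (u1 : u < 1) (hδ : 0 ≤ δ) (x : Config n) (i : Fin n)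
    (hx : opO u δ x i) (b : Fin n → Bool) :
    |ham n α h (rst x i b) - ham0 α h x i - gS α h u b| ≤ |α| * δ * n / 2 + 2 * |α| + |h| := by
  have hn : (1 : ℝ) ≤ n := by exact_mod_cast i.pos
  set v := vB i b with hv
  set m := ∑ k, v k with hm
  have hsq : ∀ k, v k ^ 2 = v k := by
    intro k; rcases vB_zero_one i b k with h | h <;> simp [hv, h]
  have hm0 : 0 ≤ m := Finset.sum_nonneg fun k _ => by rw [← hsq]; positivity
  have hmn : m ≤ n := by
    have : m ≤ ∑ k : Fin n, (1 : ℝ) := Finset.sum_le_sum fun k _ => by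
      rcases vB_zero_one i b k with h | h <;> simp [hv, h]
    simpa using this
  have hQ := hx v (by simp [hv, vB])
  simp only [hsq] at hQ
  rw [← hm] at hQ
  set Q := ∑ k, ∑ l, v k * Mx u x k l * v l with hQdef
  have hQ' : |Q| ≤ δ * n * n := hQ.trans (mul_le_mul_of_nonneg_left hmn (by positivity))
  have hA : ∑ k, ∑ l, v k * adj x k l * v l = Q + u * (m ^ 2 - m) := by
    have e1 : ∀ k l, v k * adj x k l * v l = v k * Mx u x k l * v l + u * (v k * v l)
        - if k = l then u * v k else 0 := by
      intro k l
      rw [adj_eq_Mx u x]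
      by_cases hkl : k = l
      · subst hkl
        have := hsq k
        simp [Om]
        linear_combination (-u) * this
      · simp [Om, hkl]; ring
    simp only [e1, Finset.sum_add_distrib, Finset.sum_sub_distrib]
    simp only [Finset.sum_ite_eq, Finset.mem_univ, if_true, ← Finset.mul_sum, ← Finset.sum_mul]
    rw [← hm]; ring
  have hb : bv (b i) = 0 ∨ bv (b i) = 1 := by unfold bv; split_ifs <;> simp
  have := star_arith (α := α) (h := h) hn u0 u1 hm0 hmn (ε := bv (b i))
    (by rcases hb with h | h <;> simp [h]) (by rcases hb with h | h <;> simp [h]) hQ'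
  rw [ham_rst, ← hv, hA, ← hm]
  unfold gS
  rw [mB_eq_vB i b, ← hv, ← hm]
  refine le_trans (le_of_eq ?_) this
  congr 1
  ring

/-- Exponential moments of linear statistics of the star of `i`, with coefficients that do not
depend on that star. -/
lemma star_chernoff {α h u δ B : ℝ} (u0 : 0 < u) (u1 : u < 1) (hδ : 0 ≤ δ) (i : Fin n) (θ : ℝ)
    (ν : Config n → Fin n → ℝ) (hν : ∀ x b, ν (rst x i b) = ν x)
    (hνi : ∀ x, ν x i = 0)
    (hB : ∀ x, ∑ b : Fin n → Bool, Real.exp (gS α h u b + θ * lS u (ν x) b)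
        ≤ Real.exp B * ∑ b : Fin n → Bool, Real.exp (gS α h u b)) :
    Ex α h (fun x : Config n => open Classical in
      if opO u δ x i then Real.exp (θ * ∑ k, ν x k * Mx u x i k) else 0)
      ≤ Real.exp (2 * (|α| * δ * n / 2 + 2 * |α| + |h|) + B) := by
  classical
  set ε := |α| * δ * n / 2 + 2 * |α| + |h| with hε
  have hS : ∀ x b, ∑ k, ν x k * Mx u (rst x i b) i k = lS u (ν x) b := by
    intro x b
    refine Finset.sum_congr rfl fun k _ => ?_
    by_cases hk : k = i
    · subst hk; simp [hνi]
    · have hk' : i ≠ k := fun e => hk e.symm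
      simp [Mx, adj_rst, hk']
  have key : ∀ x, ∑ b : Fin n → Bool, (Real.exp (ham n α h (rst x i b)) *
      if opO u δ (rst x i b) i then Real.exp (θ * ∑ k, ν (rst x i b) k * Mx u (rst x i b) i k) else 0)
      ≤ Real.exp (2 * ε + B) * ∑ b : Fin n → Bool, Real.exp (ham n α h (rst x i b)) := by
    intro x
    simp only [opO_rst, hν, hS]
    by_cases hx : opO u δ x i
    · simp only [hx, if_true]
      have hb := fun b => abs_le.1 (ham_star (α := α) (h := h) u0 u1 hδ x i hx b)
      calc _ ≤ ∑ b : Fin n → Bool, Real.exp (ham0 α h x i + ε) * Real.exp (gS α h u b + θ * lS u (ν x) b) := by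
            refine Finset.sum_le_sum fun b _ => ?_
            rw [← Real.exp_add, ← Real.exp_add, Real.exp_le_exp]
            linarith [(hb b).2]
        _ = Real.exp (ham0 α h x i + ε) * ∑ b : Fin n → Bool, Real.exp (gS α h u b + θ * lS u (ν x) b) := by
            rw [Finset.mul_sum]
        _ ≤ Real.exp (ham0 α h x i + ε) * (Real.exp B * ∑ b : Fin n → Bool, Real.exp (gS α h u b)) :=
            mul_le_mul_of_nonneg_left (hB x) (Real.exp_pos _).le
        _ = Real.exp (2 * ε + B) * ∑ b : Fin n → Bool, Real.exp (ham0 α h x i - ε + gS α h u b) := by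
            rw [Finset.mul_sum, Finset.mul_sum, Finset.mul_sum]
            refine Finset.sum_congr rfl fun b _ => ?_
            rw [← Real.exp_add, ← Real.exp_add, ← Real.exp_add]
            congr 1; ring
        _ ≤ _ := by
            refine mul_le_mul_of_nonneg_left (Finset.sum_le_sum fun b _ => ?_) (Real.exp_pos _).le
            rw [Real.exp_le_exp]
            linarith [(hb b).1]
    · simp only [hx, if_false, mul_zero, Finset.sum_const_zero]
      positivity
  have h1 := sum_rst i (fun x : Config n => Real.exp (ham n α h x) *
      if opO u δ x i then Real.exp (θ * ∑ k, ν x k * Mx u x i k) else 0)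
  have h2 := sum_rst i (fun x : Config n => Real.exp (ham n α h x))
  have h3 := Finset.sum_le_sum fun x (_ : x ∈ Finset.univ) => key x
  rw [h1, ← Finset.mul_sum, h2] at h3
  have h4 : ∑ x : Config n, (Real.exp (ham n α h x) *
      if opO u δ x i then Real.exp (θ * ∑ k, ν x k * Mx u x i k) else 0)
      ≤ Real.exp (2 * ε + B) * Zet n α h := by
    have : (0 : ℝ) < 2 ^ n := by positivity
    refine le_of_mul_le_mul_left ?_ this
    unfold Zet
    linarith
  have h5 := Zet_pos (n := n) α h
  unfold Ex pr
  simp only [smul_eq_mul, div_mul_eq_mul_div]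
  rw [← Finset.sum_div, div_le_iff₀ h5]
  exact h4

end TriCLT

/-! ### Atypical configurations -/

namespace TriCLT
variable {n : ℕ}

/-- Indicator that a linear statistic of the star of `i` is atypically large while the rest of
the graph is quasirandom. -/
def starI (u δ' δ : ℝ) (i : Fin n) (ν : Config n → Fin n → ℝ) (x : Config n) : ℝ :=
  open Classical in
  if opO u δ' x i ∧ δ * n < |∑ k, ν x k * Mx u x i k| then 1 else 0

/-- Large deviations for linear statistics of the star of `i`, with coefficients determined by the
rest of the graph. -/
lemma star_ldp {α h u c : ℝ} (H : VPkg α h u c) {δ : ℝ} (hδ : 0 < δ) :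
    ∃ δ' : ℝ, 0 < δ' ∧ ∃ κ : ℝ, 0 < κ ∧ ∀ᶠ n : ℕ in atTop, ∀ i : Fin n,
      ∀ ν : Config n → Fin n → ℝ, (∀ x b, ν (rst x i b) = ν x) → (∀ x, ν x i = 0) →
      (∀ x k, |ν x k| ≤ 1) → Ex α h (starI u δ' δ i ν) ≤ Real.exp (-(κ * n)) := by
  classical
  obtain ⟨C, hC, hmgf⟩ := star_mgf H
  set q := δ ^ 2 / (4 * C) with hq
  have hq0 : 0 < q := by positivity
  set δ' := q / (4 * (|α| + 1)) with hδ'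
  have hδ'0 : 0 < δ' := by positivity
  have hαδ : |α| * δ' ≤ q / 4 := by
    rw [hδ', mul_div_assoc', div_le_iff₀ (by positivity)]
    nlinarith [abs_nonneg α]
  refine ⟨δ', hδ'0, q / 4, by positivity, ?_⟩
  filter_upwards [hmgf (q / 4) (by positivity),
    (tendsto_natCast_atTop_atTop.const_mul_atTop (by positivity : 0 < q / 4)).eventually_ge_atTop
      (4 * |α| + 2 * |h| + Real.log 2)] with n hn hbig i ν hν hνi hν1
  set θ := δ / (2 * C) with hθ
  set B := C * θ ^ 2 * n + q / 4 * n with hB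
  have hCθ : C * θ ^ 2 = q := by rw [hθ, hq]; field_simp; ring
  have hθδ : θ * δ = 2 * q := by rw [hθ, hq]; field_simp; ring
  have hθ0 : 0 < θ := by positivity
  have c1 := star_chernoff (α := α) (h := h) (B := B) H.pk.u0 H.pk.u1 hδ'0.le i θ ν hν hνi
    (fun x => hn (ν x) (hν1 x) θ)
  have c2 := star_chernoff (α := α) (h := h) (B := B) H.pk.u0 H.pk.u1 hδ'0.le i (-θ) ν hν hνi
    (fun x => by have := hn (ν x) (hν1 x) (-θ); rwa [neg_sq] at this)
  set S : Config n → ℝ := fun x => ∑ k, ν x k * Mx u x i k with hS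
  have hpt : ∀ x, starI u δ' δ i ν x ≤ Real.exp (-(θ * (δ * n))) *
      ((if opO u δ' x i then Real.exp (θ * ∑ k, ν x k * Mx u x i k) else 0)
        + (if opO u δ' x i then Real.exp (-θ * ∑ k, ν x k * Mx u x i k) else 0)) := by
    intro x
    unfold starI
    by_cases hx : opO u δ' x i ∧ δ * n < |∑ k, ν x k * Mx u x i k|
    · rw [if_pos hx, if_pos hx.1, if_pos hx.1, mul_add, ← Real.exp_add, ← Real.exp_add]
      rcases lt_abs.1 hx.2 with h1 | h1
      · have : 1 ≤ Real.exp (-(θ * (δ * n)) + θ * ∑ k, ν x k * Mx u x i k) := by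
          apply Real.one_le_exp
          nlinarith
        linarith [Real.exp_pos (-(θ * (δ * n)) + -θ * ∑ k, ν x k * Mx u x i k)]
      · have : 1 ≤ Real.exp (-(θ * (δ * n)) + -θ * ∑ k, ν x k * Mx u x i k) := by
          apply Real.one_le_exp
          nlinarith
        linarith [Real.exp_pos (-(θ * (δ * n)) + θ * ∑ k, ν x k * Mx u x i k)]
    · rw [if_neg hx]
      split_ifs <;> positivity
  refine (Ex_mono α h hpt).trans ?_
  rw [Ex_mul, Ex_add]
  have h3 := mul_le_mul_of_nonneg_left (add_le_add c1 c2) (Real.exp_pos (-(θ * (δ * n)))).le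
  refine h3.trans ?_
  rw [← two_mul, ← Real.exp_log (by norm_num : (0 : ℝ) < 2), ← Real.exp_add, ← Real.exp_add,
    Real.exp_log (by norm_num : (0 : ℝ) < 2), Real.exp_le_exp, hB, hCθ]
  have e : θ * (δ * n) = 2 * q * n := by rw [← mul_assoc, hθδ]
  rw [e]
  have hn0 : (0 : ℝ) ≤ n := n.cast_nonneg
  have := mul_le_mul_of_nonneg_right hαδ hn0
  linarith

/-- Coefficients whose linear statistic in the star of `i` is the row sum of `i`. -/
def nu1 (i : Fin n) (_ : Config n) (k : Fin n) : ℝ := if k = i then 0 else 1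

/-- Coefficients whose linear statistic in the star of `i` is the centred codegree of `i`, `j`. -/
def nu2 (i j : Fin n) (x : Config n) (k : Fin n) : ℝ := if k = i then 0 else adj x j k

lemma nu2_rst {i j : Fin n} (hij : i ≠ j) (x : Config n) (b : Fin n → Bool) :
    nu2 i j (rst x i b) = nu2 i j x := by
  funext k
  unfold nu2
  split_ifs with hk
  · rfl
  · rw [adj_rst, if_neg hij.symm, if_neg hk]
    split_ifs with h
    · rw [h, adj_diag]
    · rfl

lemma nu1_sum (u : ℝ) (i : Fin n) (x : Config n) :
    ∑ k, nu1 i x k * Mx u x i k = rowS (Mx u x) i := by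
  refine Finset.sum_congr rfl fun k _ => ?_
  by_cases hk : k = i
  · subst hk; simp [nu1, Mx]
  · simp [nu1, hk]

lemma nu2_sum {u : ℝ} {i j : Fin n} (hij : i ≠ j) (x : Config n) :
    codeg x i j = ∑ k, nu2 i j x k * Mx u x i k + u * rowS (Mx u x) j + u ^ 2 * (n - 1)
      - u * adj x i j := by
  have h1 : ∀ k, nu2 i j x k * Mx u x i k = adj x i k * adj x k j
      - u * Mx u x j k - u ^ 2 + (if k = j then u ^ 2 else 0) + (if k = i then u * adj x i j else 0) := by
    intro k
    by_cases hk : k = i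
    · subst hk
      have := hij.symm
      simp [nu2, adj_diag, Mx, hij, this, adj_symm x j k]; ring
    · have hk' : i ≠ k := fun e => hk e.symm
      by_cases hkj : k = j
      · subst hkj
        simp [nu2, adj_diag, Mx, hk]
      · have hkj' : ¬ j = k := fun e => hkj e.symm
        simp [nu2, Mx, hk, hk', hkj, hkj', adj_symm x j k]; ring
  simp only [h1, Finset.sum_add_distrib, Finset.sum_sub_distrib, ← Finset.mul_sum]
  simp [codeg, Matrix.mul_apply, rowS]
  ring

/-- Row sums and codegrees are linear statistics of a single star, with coefficients `nu1` and `nu2`. -/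
lemma good_of {u δ : ℝ} (u0 : 0 < u) (u1 : u < 1) (hδ : 0 < δ) (hn : 8 / δ ≤ n) (x : Config n)
    (hop : ∀ v : Fin n → ℝ, |∑ i, ∑ j, v i * Mx u x i j * v j| ≤ δ * n * ∑ i, v i ^ 2)
    (h1 : ∀ i, |∑ k, nu1 i x k * Mx u x i k| ≤ δ / 4 * n)
    (h2 : ∀ i j, i ≠ j → |∑ k, nu2 i j x k * Mx u x i k| ≤ δ / 4 * n) : Good u δ (Mx u x) := by
  have hn0 : (0 : ℝ) ≤ n := n.cast_nonneg
  refine ⟨hop, fun i => ?_, fun i j => ?_⟩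
  · rw [← nu1_sum]
    refine (h1 i).trans ?_
    nlinarith
  · by_cases hij : i = j
    · simp [Lam, hij, hδ.le]
    · have hnpos : (0 : ℝ) < n := by exact_mod_cast i.pos
      rw [div_le_iff₀ hδ] at hn
      rw [Lam_eq u0 u1 x hij, nu2_sum (u := u) hij x]
      have a1 := h2 i j hij
      have a2 := h1 j
      rw [nu1_sum] at a2
      set S := ∑ k, nu2 i j x k * Mx u x i k
      set R := rowS (Mx u x) j
      have e : (S + u * R + u ^ 2 * (n - 1) - u * adj x i j) / n - u ^ 2
        = (S + u * R - u ^ 2 - u * adj x i j) / n := by field_simp; ring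
      rw [e, abs_div, abs_of_pos hnpos, div_le_iff₀ hnpos]
      have a3 : |u * R| ≤ δ / 4 * n := by
        rw [abs_mul, abs_of_pos u0]
        nlinarith [abs_nonneg R]
      have b0 := adj_nonneg x i j
      have b1 := adj_le_one x i j
      have c1 : u * adj x i j ≤ 1 := by nlinarith
      have c2 : 0 ≤ u * adj x i j := by positivity
      rw [abs_le] at a1 a3 ⊢
      constructor <;> nlinarith

lemma bad_le {u δ δ' : ℝ} (u0 : 0 < u) (u1 : u < 1) (hδ : 0 < δ) (hn : 8 / δ ≤ n)
    (x : Config n) :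
    bad u δ x ≤ opI u (min δ δ') x + ∑ i, starI u δ' (δ / 4) i (nu1 i) x
      + ∑ i, ∑ j, if i = j then 0 else starI u δ' (δ / 4) i (nu2 i j) x := by
  classical
  have hs : ∀ i ν, 0 ≤ starI u δ' (δ / 4) i ν x := by
    intro i ν; unfold starI; split_ifs <;> norm_num
  have hs2 : ∀ i j, 0 ≤ (if i = j then 0 else starI u δ' (δ / 4) i (nu2 i j) x) := by
    intro i j; split_ifs
    · exact le_rfl
    · exact hs _ _
  have ho : 0 ≤ opI u (min δ δ') x := by unfold opI; split_ifs <;> norm_num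
  have p1 : 0 ≤ ∑ i, starI u δ' (δ / 4) i (nu1 i) x := Finset.sum_nonneg fun i _ => hs _ _
  have p2 : 0 ≤ ∑ i, ∑ j, (if i = j then 0 else starI u δ' (δ / 4) i (nu2 i j) x) :=
    Finset.sum_nonneg fun i _ => Finset.sum_nonneg fun j _ => hs2 _ _
  unfold bad
  split_ifs with hg
  · positivity
  by_contra hlt
  push Not at hlt
  apply hg
  have hop : ∀ v : Fin n → ℝ, |∑ i, ∑ j, v i * Mx u x i j * v j| ≤ min δ δ' * n * ∑ i, v i ^ 2 := by
    by_contra hno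
    have : opI u (min δ δ') x = 1 := by unfold opI; rw [if_neg hno]
    linarith
  have hO : ∀ i, opO u δ' x i := by
    intro i v _
    refine (hop v).trans ?_
    have : (0 : ℝ) ≤ ∑ i, v i ^ 2 := Finset.sum_nonneg fun _ _ => sq_nonneg _
    have := min_le_right δ δ'
    gcongr
  refine good_of u0 u1 hδ hn x ?_ ?_ ?_
  · intro v
    refine (hop v).trans ?_
    have : (0 : ℝ) ≤ ∑ i, v i ^ 2 := Finset.sum_nonneg fun _ _ => sq_nonneg _
    have := min_le_left δ δ'
    gcongr
  · intro i
    by_contra hno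
    push Not at hno
    have h1 : starI u δ' (δ / 4) i (nu1 i) x = 1 := by unfold starI; rw [if_pos ⟨hO i, hno⟩]
    have h2 := Finset.single_le_sum (f := fun i => starI u δ' (δ / 4) i (nu1 i) x)
      (fun i _ => hs i _) (Finset.mem_univ i)
    simp only [h1] at h2
    linarith
  · intro i j hij
    by_contra hno
    push Not at hno
    have h1 : starI u δ' (δ / 4) i (nu2 i j) x = 1 := by unfold starI; rw [if_pos ⟨hO i, hno⟩]
    have h2 := Finset.single_le_sum
      (f := fun j => if i = j then 0 else starI u δ' (δ / 4) i (nu2 i j) x)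
      (fun j _ => hs2 i j) (Finset.mem_univ j)
    have h3 := Finset.single_le_sum
      (f := fun i => ∑ j, if i = j then 0 else starI u δ' (δ / 4) i (nu2 i j) x)
      (fun i _ => Finset.sum_nonneg fun j _ => hs2 i j) (Finset.mem_univ i)
    simp only [hij, if_false, h1] at h2 h3
    linarith

/-- Atypical configurations are superpolynomially unlikely. -/
theorem gp_of_vpkg {α h u c : ℝ} (H : VPkg α h u c) : GP α h u := by
  intro δ hδ K
  obtain ⟨δ', hδ', κ, hκ, hst⟩ := star_ldp H (by positivity : 0 < δ / 4)
  obtain ⟨κ', hκ', hop⟩ := op_ldp H (lt_min hδ hδ')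
  have t1 : ∀ (κ : ℝ) (k : ℕ), 0 < κ → Tendsto (fun n : ℕ => (n : ℝ) ^ k * Real.exp (-(κ * n))) atTop (𝓝 0) := by
    intro κ k hκ
    have := (Real.tendsto_pow_mul_exp_neg_atTop_nhds_zero k).comp
      (tendsto_natCast_atTop_atTop.const_mul_atTop hκ)
    have h2 := this.const_mul ((κ ^ k)⁻¹)
    rw [mul_zero] at h2
    refine h2.congr fun n => ?_
    simp only [Function.comp_apply, mul_pow]
    field_simp
  have t2 := ((t1 κ' K hκ').add (t1 κ (K + 1) hκ)).add (t1 κ (K + 2) hκ)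
  simp only [add_zero] at t2
  filter_upwards [hst, hop, t2.eventually_le_const (by norm_num : (0 : ℝ) < 1),
    tendsto_natCast_atTop_atTop.eventually_ge_atTop (8 / δ)] with n h1 h2 h3 h4
  have hb := Ex_mono α h (fun x : Config n => bad_le (δ' := δ') H.pk.u0 H.pk.u1 hδ h4 x)
  rw [Ex_add, Ex_add, Ex_sum, Ex_sum] at hb
  have s1 : ∑ i : Fin n, Ex α h (fun x => starI u δ' (δ / 4) i (nu1 i) x) ≤ n * Real.exp (-(κ * n)) := by
    calc _ ≤ ∑ i : Fin n, Real.exp (-(κ * n)) := Finset.sum_le_sum fun i _ =>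
          h1 i (nu1 i) (fun _ _ => rfl) (fun _ => by simp [nu1])
            (fun _ k => by unfold nu1; split_ifs <;> simp)
      _ = _ := by simp
  have s2 : ∑ i : Fin n, Ex α h (fun x => ∑ j, if i = j then 0 else starI u δ' (δ / 4) i (nu2 i j) x)
      ≤ n * (n * Real.exp (-(κ * n))) := by
    calc _ ≤ ∑ i : Fin n, n * Real.exp (-(κ * n)) := by
          refine Finset.sum_le_sum fun i _ => ?_
          rw [Ex_sum]
          calc _ ≤ ∑ j : Fin n, Real.exp (-(κ * n)) := by
                refine Finset.sum_le_sum fun j _ => ?_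
                by_cases hij : i = j
                · simp only [hij, if_true]
                  rw [Ex_const]; exact (Real.exp_pos _).le
                · simp only [hij, if_false]
                  refine h1 i (nu2 i j) (nu2_rst hij) (fun _ => by simp [nu2]) (fun x k => ?_)
                  unfold nu2
                  split_ifs
                  · simp
                  · rw [abs_of_nonneg (adj_nonneg _ _ _)]; exact adj_le_one _ _ _
            _ = _ := by simp
      _ = _ := by simp
  have hnK : (0 : ℝ) ≤ (n : ℝ) ^ K := by positivity
  calc _ ≤ (n : ℝ) ^ K * (Real.exp (-(κ' * n)) + n * Real.exp (-(κ * n)) + n * (n * Real.exp (-(κ * n)))) :=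
        mul_le_mul_of_nonneg_left (by linarith) hnK
    _ = (n : ℝ) ^ K * Real.exp (-(κ' * n)) + (n : ℝ) ^ (K + 1) * Real.exp (-(κ * n))
        + (n : ℝ) ^ (K + 2) * Real.exp (-(κ * n)) := by ring
    _ ≤ 1 := h3

end TriCLT

/-! ### The maximiser and the limiting variance -/

namespace TriCLT
variable {n : ℕ}

/-- The opposite of the second derivative of `2 φ` at `w`. -/
def curv (α w : ℝ) : ℝ := 1 / (w * (1 - w)) - 2 * α * w

lemma curv_continuousAt (α : ℝ) {w : ℝ} (h0 : 0 < w) (h1 : w < 1) : ContinuousAt (curv α) w := by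
  unfold curv
  have : w * (1 - w) ≠ 0 := by have := sub_pos.2 h1; positivity
  fun_prop (disch := assumption)

lemma hasDerivAt_F (α h : ℝ) {w : ℝ} (h0 : 0 < w) (h1 : w < 1) :
    HasDerivAt (fun w => α / 3 * w ^ 3 + h * w - Ifun w)
      (α * w ^ 2 + h - (Real.log w - Real.log (1 - w))) w := by
  have := ((((hasDerivAt_id w).pow 3).const_mul (α / 3)).add ((hasDerivAt_id w).const_mul h)).sub
    (hasDerivAt_Ifun h0 h1)
  refine this.congr_deriv ?_
  simp; ring

lemma hasDerivAt_F' (α h : ℝ) {w : ℝ} (h0 : 0 < w) (h1 : w < 1) :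
    HasDerivAt (fun w => α * w ^ 2 + h - (Real.log w - Real.log (1 - w))) (-curv α w) w := by
  have := ((((hasDerivAt_id w).pow 2).const_mul α).add_const h).sub (hasDerivAt_logit h0 h1)
  refine this.congr_deriv ?_
  simp [curv]; ring

lemma exists_radius (α : ℝ) {u d : ℝ} (h0 : 0 < u) (h1 : u < 1) (hd : d < curv α u) :
    ∃ r : ℝ, 0 < r ∧ 0 < u - r ∧ u + r < 1 ∧ ∀ w ∈ Set.Icc (u - r) (u + r), d < curv α w := by
  have e1 := (curv_continuousAt α h0 h1).eventually (lt_mem_nhds hd)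
  have e2 : ∀ᶠ w in 𝓝 u, w ∈ Set.Ioo (0 : ℝ) 1 := Ioo_mem_nhds h0 h1
  obtain ⟨ε, hε, hb⟩ := Metric.eventually_nhds_iff.1 (e1.and e2)
  have hin : ∀ w ∈ Set.Icc (u - ε / 2) (u + ε / 2), dist w u < ε := by
    intro w hw
    rw [Real.dist_eq, abs_lt]
    constructor <;> linarith [hw.1, hw.2]
  refine ⟨ε / 2, by positivity, ?_, ?_, fun w hw => (hb (hin w hw)).1⟩
  · exact (hb (hin _ ⟨le_rfl, by linarith⟩)).2.1
  · exact (hb (hin _ ⟨by linarith, le_rfl⟩)).2.2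

lemma exists_radius' (α : ℝ) {u d : ℝ} (h0 : 0 < u) (h1 : u < 1) (hd : curv α u < d) :
    ∃ r : ℝ, 0 < r ∧ 0 < u - r ∧ u + r < 1 ∧ ∀ w ∈ Set.Icc (u - r) (u + r), curv α w < d := by
  have e1 := (curv_continuousAt α h0 h1).eventually (gt_mem_nhds hd)
  have e2 : ∀ᶠ w in 𝓝 u, w ∈ Set.Ioo (0 : ℝ) 1 := Ioo_mem_nhds h0 h1
  obtain ⟨ε, hε, hb⟩ := Metric.eventually_nhds_iff.1 (e1.and e2)
  have hin : ∀ w ∈ Set.Icc (u - ε / 2) (u + ε / 2), dist w u < ε := by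
    intro w hw
    rw [Real.dist_eq, abs_lt]
    constructor <;> linarith [hw.1, hw.2]
  refine ⟨ε / 2, by positivity, ?_, ?_, fun w hw => (hb (hin w hw)).1⟩
  · exact (hb (hin _ ⟨le_rfl, by linarith⟩)).2.1
  · exact (hb (hin _ ⟨by linarith, le_rfl⟩)).2.2

lemma continuous_F (α h : ℝ) : Continuous (fun w => α / 3 * w ^ 3 + h * w - Ifun w) := by
  have := continuous_Ifun
  fun_prop

/-- A unique, nondegenerate interior maximiser is a quadratic one. -/
lemma vpkg_of_max {α h u : ℝ} (hα : -2 < α) (h0 : 0 < u) (h1 : u < 1)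
    (hstat : α * u ^ 2 + h - (Real.log u - Real.log (1 - u)) = 0) (hD : curv α u ≠ 0)
    (hmax : ∀ w ∈ Set.Icc (0 : ℝ) 1, w ≠ u →
      α / 3 * w ^ 3 + h * w - Ifun w < α / 3 * u ^ 3 + h * u - Ifun u) :
    0 < curv α u ∧ ∃ c, VPkg α h u c := by
  set F : ℝ → ℝ := fun w => α / 3 * w ^ 3 + h * w - Ifun w with hF
  have hDpos : 0 < curv α u := by
    by_contra hno
    have hneg : curv α u < 0 := lt_of_le_of_ne (not_lt.1 hno) hD
    obtain ⟨r, hr, hr0, hr1, hc⟩ := exists_radius' α h0 h1 hneg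
    have := max_of_deriv2 (a := u - r) (b := u + r) (u := u) (F := fun w => -F w)
      (F' := fun w => -(α * w ^ 2 + h - (Real.log w - Real.log (1 - w))))
      (F'' := fun w => -(-curv α w)) (continuous_F α h).neg.continuousOn ⟨by linarith, by linarith⟩
      (fun w hw => (hasDerivAt_F α h (by linarith [hw.1]) (by linarith [hw.2])).neg)
      (fun w hw => (hasDerivAt_F' α h (by linarith [hw.1]) (by linarith [hw.2])).neg)
      (fun w hw => by have := hc w ⟨hw.1.le, hw.2.le⟩; linarith) (by simp [hstat])
      (u + r) ⟨by linarith, le_rfl⟩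
    have h2 := hmax (u + r) ⟨by linarith, hr1.le⟩ (by linarith)
    simp only [hF] at this
    linarith
  refine ⟨hDpos, ?_⟩
  set D := curv α u with hDdef
  obtain ⟨r, hr, hr0, hr1, hc⟩ := exists_radius α h0 h1 (show D / 2 < curv α u by linarith)
  have hnear : ∀ w ∈ Set.Icc (u - r) (u + r), F w ≤ F u - D / 4 * (w - u) ^ 2 := by
    intro w hw
    have := max_of_deriv2 (a := u - r) (b := u + r) (u := u) (F := fun w => F w + D / 4 * (w - u) ^ 2)
      (F' := fun w => (α * w ^ 2 + h - (Real.log w - Real.log (1 - w))) + D / 2 * (w - u))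
      (F'' := fun w => -curv α w + D / 2) ((continuous_F α h).add (by fun_prop)).continuousOn
      ⟨by linarith, by linarith⟩
      (fun w hw => ((hasDerivAt_F α h (by linarith [hw.1]) (by linarith [hw.2])).add
        ((((hasDerivAt_id w).sub_const u).pow 2).const_mul (D / 4))).congr_deriv (by simp; ring))
      (fun w hw => ((hasDerivAt_F' α h (by linarith [hw.1]) (by linarith [hw.2])).add
        (((hasDerivAt_id w).sub_const u).const_mul (D / 2))).congr_deriv (by simp))
      (fun w hw => by have := hc w ⟨hw.1.le, hw.2.le⟩; linarith) (by simp [hstat]) w hw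
    simp only [sub_self] at this
    linarith
  have hfar : ∃ m : ℝ, 0 < m ∧ ∀ w ∈ Set.Icc (0 : ℝ) 1, r ≤ |w - u| → F w ≤ F u - m := by
    set S : Set ℝ := {w | w ∈ Set.Icc (0 : ℝ) 1 ∧ r ≤ |w - u|} with hS
    have hScl : IsCompact S := by
      have : S = Set.Icc (0 : ℝ) 1 ∩ {w | r ≤ |w - u|} := rfl
      rw [this]
      exact isCompact_Icc.inter_right (isClosed_le continuous_const (by fun_prop))
    rcases S.eq_empty_or_nonempty with he | hne
    · refine ⟨1, one_pos, fun w hw hr => ?_⟩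
      have : w ∈ S := ⟨hw, hr⟩
      rw [he] at this; exact this.elim
    · obtain ⟨z, hz, hzmax⟩ := hScl.exists_isMaxOn hne (continuous_F α h).continuousOn
      have hzu : z ≠ u := by
        intro e; have := hz.2; rw [e, sub_self, abs_zero] at this; linarith
      refine ⟨F u - F z, sub_pos.2 (hmax z hz.1 hzu), fun w hw hr => ?_⟩
      have : F w ≤ F z := hzmax (show w ∈ S from ⟨hw, hr⟩)
      linarith
  obtain ⟨m, hm, hfar⟩ := hfar
  have hu1 : 0 < u * (1 - u) := by have := sub_pos.2 h1; positivity
  refine ⟨min (D / 4) m, ⟨⟨h0, h1, ?_, ?_⟩, by positivity, hα, ?_⟩⟩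
  · have hl : h + α * u ^ 2 = Real.log u - Real.log (1 - u) := by linarith
    rw [hl, Real.sigmoid, neg_sub, Real.exp_sub, Real.exp_log h0, Real.exp_log (sub_pos.2 h1)]
    field_simp
    ring
  · have : 0 < curv α u * (u * (1 - u)) := mul_pos hDpos hu1
    unfold curv at this
    rw [sub_mul, div_mul_cancel₀ _ hu1.ne'] at this
    nlinarith
  · intro w hw
    rcases le_or_gt r |w - u| with hr' | hr'
    · have a := hfar w hw hr'
      have b : (w - u) ^ 2 ≤ 1 := by
        have h1 : -1 ≤ w - u := by linarith [hw.1]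
        have h2 : w - u ≤ 1 := by linarith [hw.2]
        nlinarith
      have d : min (D / 4) m * (w - u) ^ 2 ≤ m := by
        have := min_le_right (D / 4) m
        have h0 : 0 < min (D / 4) m := by positivity
        nlinarith
      simp only [hF] at a
      linarith
    · have a := hnear w ⟨by linarith [(abs_lt.1 hr').1], by linarith [(abs_lt.1 hr').2]⟩
      have d : min (D / 4) m * (w - u) ^ 2 ≤ D / 4 * (w - u) ^ 2 :=
        mul_le_mul_of_nonneg_right (min_le_left _ _) (sq_nonneg _)
      simp only [hF] at a
      linarith

/-- The hypotheses on the maximiser give the quadratic variational bound, and implicit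
differentiation identifies the limiting variance. -/
lemma vpkg_of_hyp (α h : ℝ) (hα : α > -2)
    (U : Set (ℝ × ℝ)) (hUopen : IsOpen U) (hmemU : (α, h) ∈ U)
    (ustar : ℝ × ℝ → ℝ) (hC1 : ContDiffOn ℝ 1 ustar U)
    (hrange : ∀ p ∈ U, ustar p ∈ Set.Ioo (0 : ℝ) 1)
    (hmax : ∀ p ∈ U, ∀ u ∈ Set.Icc (0 : ℝ) 1, phiET p.1 p.2 u ≤ phiET p.1 p.2 (ustar p))
    (huniq : ∀ p ∈ U, ∀ u ∈ Set.Icc (0 : ℝ) 1,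
      (∀ w ∈ Set.Icc (0 : ℝ) 1, phiET p.1 p.2 w ≤ phiET p.1 p.2 u) → u = ustar p) :
    (∃ c, VPkg α h (ustar (α, h)) c) ∧
      3 * ustar (α, h) ^ 2 * deriv (fun a => ustar (a, h)) α
        = 6 * ustar (α, h) ^ 4 * bet α (ustar (α, h)) := by
  have hphi : ∀ a b w, phiET a b w = (a / 3 * w ^ 3 + b * w - Ifun w) / 2 := by
    intro a b w; unfold phiET; ring
  have hstat : ∀ p ∈ U, Real.log (ustar p) - Real.log (1 - ustar p) = p.2 + p.1 * ustar p ^ 2 := by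
    intro p hp
    obtain ⟨r0, r1⟩ := hrange p hp
    have hd := hasDerivAt_F p.1 p.2 r0 r1
    have hloc : IsLocalMax (fun w => p.1 / 3 * w ^ 3 + p.2 * w - Ifun w) (ustar p) := by
      filter_upwards [Icc_mem_nhds r0 r1] with w hw
      have := hmax p hp w hw
      rw [hphi, hphi] at this
      linarith
    have := hloc.hasDerivAt_eq_zero hd
    linarith
  set u := ustar (α, h) with hu
  obtain ⟨u0, u1⟩ := hrange _ hmemU
  rw [← hu] at u0 u1
  have hdiff : DifferentiableAt ℝ ustar (α, h) :=
    (hC1.differentiableOn (by norm_num)).differentiableAt (hUopen.mem_nhds hmemU)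
  -- implicit differentiation of the stationarity equation along the two coordinate directions
  have hb : deriv (fun b => ustar (α, b)) h * curv α u = 1 := by
    have hg : HasDerivAt (fun b => ustar (α, b)) (deriv (fun b => ustar (α, b)) h) h :=
      (hdiff.comp h (f := fun b => (α, b)) (by fun_prop)).hasDerivAt
    set g' := deriv (fun b => ustar (α, b)) h
    have e1 : (fun b => Real.log (ustar (α, b)) - Real.log (1 - ustar (α, b)))
        =ᶠ[𝓝 h] fun b => b + α * ustar (α, b) ^ 2 := by
      have : ∀ᶠ b in 𝓝 h, (α, b) ∈ U :=
        (by fun_prop : ContinuousAt (fun b : ℝ => (α, b)) h).eventually (hUopen.mem_nhds hmemU)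
      filter_upwards [this] with b hb
      exact hstat _ hb
    have d1 : HasDerivAt (fun b => Real.log (ustar (α, b)) - Real.log (1 - ustar (α, b)))
        (1 / (u * (1 - u)) * g') h := HasDerivAt.comp h (hasDerivAt_logit u0 u1) hg
    have d2 : HasDerivAt (fun b => b + α * ustar (α, b) ^ 2) (1 + α * (2 * u * g')) h := by
      refine ((hasDerivAt_id h).add ((hg.pow 2).const_mul α)).congr_deriv ?_
      simp [hu]
    have := d1.unique (d2.congr_of_eventuallyEq e1)
    unfold curv; linarith
  have ha : deriv (fun a => ustar (a, h)) α * curv α u = u ^ 2 := by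
    have hg : HasDerivAt (fun a => ustar (a, h)) (deriv (fun a => ustar (a, h)) α) α :=
      (hdiff.comp α (f := fun a => (a, h)) (by fun_prop)).hasDerivAt
    set g' := deriv (fun a => ustar (a, h)) α
    have e1 : (fun a => Real.log (ustar (a, h)) - Real.log (1 - ustar (a, h)))
        =ᶠ[𝓝 α] fun a => h + a * ustar (a, h) ^ 2 := by
      have : ∀ᶠ a in 𝓝 α, (a, h) ∈ U :=
        (by fun_prop : ContinuousAt (fun a : ℝ => (a, h)) α).eventually (hUopen.mem_nhds hmemU)
      filter_upwards [this] with a ha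
      exact hstat _ ha
    have d1 : HasDerivAt (fun a => Real.log (ustar (a, h)) - Real.log (1 - ustar (a, h)))
        (1 / (u * (1 - u)) * g') α := HasDerivAt.comp α (hasDerivAt_logit u0 u1) hg
    have d2 : HasDerivAt (fun a => h + a * ustar (a, h) ^ 2) (u ^ 2 + α * (2 * u * g')) α := by
      refine (((hasDerivAt_id α).mul (hg.pow 2)).const_add h).congr_deriv ?_
      simp [hu]
    have := d1.unique (d2.congr_of_eventuallyEq e1)
    unfold curv; linarith
  have hD : curv α u ≠ 0 := by
    intro e; rw [e, mul_zero] at hb; exact zero_ne_one hb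
  obtain ⟨hDpos, hV⟩ := vpkg_of_max (h := h) hα u0 u1 (by have := hstat _ hmemU; simp only [← hu] at this; linarith)
    hD (by
      intro w hw hne
      by_contra hno
      push Not at hno
      apply hne
      refine huniq _ hmemU w hw fun z hz => ?_
      have := hmax _ hmemU z hz
      simp only [hphi, ← hu] at this ⊢
      linarith)
  refine ⟨hV, ?_⟩
  obtain ⟨c, hV⟩ := hV
  have hk := hV.pk.kap
  have hu1 : 0 < 1 - u := sub_pos.2 u1
  have hc : curv α u = (1 - 2 * α * u ^ 2 * (1 - u)) / (u * (1 - u)) := by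
    unfold curv; field_simp
  have hk' : 0 < 1 - 2 * α * u ^ 2 * (1 - u) := by linarith
  have : deriv (fun a => ustar (a, h)) α = u ^ 2 / curv α u := by rw [eq_div_iff hD, ha]
  rw [this, hc]
  unfold bet
  have := hk'.ne'
  field_simp
  ring

end TriCLT

/-! ### Reweighting by the fractional part -/

namespace TriCLT
variable {n : ℕ}

/-- `T(x)/n` modulo one. -/
def tcirc (x : Config n) : UnitAddCircle := (((triangleCount n x : ℝ) / n : ℝ) : UnitAddCircle)

section
variable {α h u : ℝ} (hP : Pkg α h u) (hGP : GP α h u)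
include hP hGP

/-- For characters of the circle the joint limit is `equi` or `clt`, according to whether the
character is trivial. -/
lemma joint_fourier (m : ℤ) (t : ℝ) :
    Tendsto (fun n : ℕ => Ex α h (fun x : Config n => fourier m (tcirc x) * Fc α u 0 t x)) atTop
      (𝓝 ((∫ y : UnitAddCircle, fourier m y ∂AddCircle.haarAddCircle) *
        Complex.exp (((-(bet α u * t ^ 2 / 2) : ℝ)) : ℂ))) := by
  have hintg : (∫ y : UnitAddCircle, fourier m y ∂AddCircle.haarAddCircle)
      = (Pi.single m 1 : ℤ → ℂ) 0 := by
    rw [← fourierCoeff_fourier (T := 1) m]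
    simp [fourierCoeff]
  have hF : ∀ (n : ℕ) (x : Config n), fourier m (tcirc x) * Fc α u 0 t x = Fc α u (2 * Real.pi * m) t x := by
    intro n x
    unfold tcirc Fc
    rw [fourier_coe_apply, ← Complex.exp_add]
    congr 1
    push_cast
    ring
  simp only [hF]
  rw [hintg]
  by_cases hm : m = 0
  · subst hm
    simpa using clt hP hGP t
  · have h2 : 2 * Real.pi * (m : ℝ) ≠ 0 := by
      have := Real.pi_ne_zero
      have : (m : ℝ) ≠ 0 := by exact_mod_cast hm
      positivity
    have := equi hP hGP h2 t
    rw [Pi.single_apply, if_neg (fun e => hm e.symm), zero_mul]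
    exact this

/-- `T/n` modulo one is asymptotically uniform and independent of the edge fluctuation: trigonometric
polynomials are uniformly dense, so continuous test functions on the circle follow. -/
lemma joint_cont (g : C(UnitAddCircle, ℂ)) (t : ℝ) :
    Tendsto (fun n : ℕ => Ex α h (fun x : Config n => g (tcirc x) * Fc α u 0 t x)) atTop
      (𝓝 ((∫ y : UnitAddCircle, g y ∂AddCircle.haarAddCircle) *
        Complex.exp (((-(bet α u * t ^ 2 / 2) : ℝ)) : ℂ))) := by
  set c := Complex.exp (((-(bet α u * t ^ 2 / 2) : ℝ)) : ℂ) with hc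
  have hc1 : ‖c‖ ≤ 1 := by
    have hk : 0 < 1 - 2 * α * u ^ 2 * (1 - u) := by linarith [hP.kap]
    have hβ : 0 ≤ bet α u := by
      have := hP.u0; have := hP.u1
      unfold bet; exact div_nonneg (by nlinarith) (by linarith)
    rw [hc, Complex.norm_exp, Complex.ofReal_re, Real.exp_le_one_iff]
    have : 0 ≤ bet α u * t ^ 2 / 2 := by positivity
    linarith
  have hintg : ∀ g : C(UnitAddCircle, ℂ), Integrable g AddCircle.haarAddCircle := fun g =>
    g.continuous.integrable_of_hasCompactSupport (HasCompactSupport.of_compactSpace g)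
  have hspan : ∀ g ∈ Submodule.span ℂ (Set.range (@fourier 1)),
      Tendsto (fun n : ℕ => Ex α h (fun x : Config n => g (tcirc x) * Fc α u 0 t x)) atTop
      (𝓝 ((∫ y : UnitAddCircle, g y ∂AddCircle.haarAddCircle) * c)) := by
    intro g hg
    induction hg using Submodule.span_induction with
    | mem g hg =>
      obtain ⟨m, rfl⟩ := hg
      exact joint_fourier hP hGP m t
    | zero => simp [Ex]
    | add f g _ _ hf hg =>
      have := hf.add hg
      simp only [ContinuousMap.add_apply, add_mul, Ex_add]
      rw [integral_add (hintg f) (hintg g), add_mul]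
      exact this
    | smul a f _ hf =>
      have := hf.const_mul a
      simp only [ContinuousMap.smul_apply, smul_eq_mul]
      rw [integral_const_mul, mul_assoc]
      refine this.congr fun n => ?_
      unfold Ex
      rw [Finset.mul_sum]
      refine Finset.sum_congr rfl fun x _ => ?_
      simp only [Complex.real_smul]
      ring
  rw [Metric.tendsto_nhds]
  intro ε hε
  have hg : g ∈ (Submodule.span ℂ (Set.range (@fourier 1))).topologicalClosure := by
    rw [span_fourier_closure_eq_top]; trivial
  obtain ⟨f, hf, hfg⟩ := Metric.mem_closure_iff.1 hg (ε / 4) (by positivity)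
  rw [dist_comm, dist_eq_norm] at hfg
  have hpt : ∀ y, ‖f y - g y‖ ≤ ε / 4 := fun y => ((f - g).norm_coe_le_norm y).trans hfg.le
  filter_upwards [Metric.tendsto_nhds.1 (hspan f hf) (ε / 4) (by positivity)] with n hn
  have e1 : ‖Ex α h (fun x : Config n => f (tcirc x) * Fc α u 0 t x)
      - Ex α h (fun x : Config n => g (tcirc x) * Fc α u 0 t x)‖ ≤ ε / 4 := by
    rw [← Ex_sub]
    refine (norm_Ex_le α h _).trans ?_
    rw [← Ex_const (n := n) α h (ε / 4)]
    refine Ex_mono α h fun x => ?_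
    rw [← sub_mul, norm_mul, norm_Fc, mul_one]
    exact hpt _
  have e2 : ‖(∫ y : UnitAddCircle, f y ∂AddCircle.haarAddCircle) * c
      - (∫ y : UnitAddCircle, g y ∂AddCircle.haarAddCircle) * c‖ ≤ ε / 4 := by
    rw [← sub_mul, ← integral_sub (hintg f) (hintg g), norm_mul]
    have := norm_integral_le_of_norm_le_const (μ := (AddCircle.haarAddCircle : Measure UnitAddCircle))
      (Eventually.of_forall hpt)
    simp only [probReal_univ, mul_one] at this
    calc _ ≤ ε / 4 * 1 := mul_le_mul this hc1 (norm_nonneg _) (by positivity)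
      _ = _ := mul_one _
  rw [dist_eq_norm] at hn ⊢
  set A := Ex α h (fun x : Config n => f (tcirc x) * Fc α u 0 t x)
  set B := Ex α h (fun x : Config n => g (tcirc x) * Fc α u 0 t x)
  set If := (∫ y : UnitAddCircle, f y ∂AddCircle.haarAddCircle) * c
  set Ig := (∫ y : UnitAddCircle, g y ∂AddCircle.haarAddCircle) * c
  calc ‖B - Ig‖ = ‖-(A - B) + (A - If) + (If - Ig)‖ := by congr 1; ring
    _ ≤ ‖A - B‖ + ‖A - If‖ + ‖If - Ig‖ := by
        refine (norm_add_le _ _).trans (add_le_add_left ((norm_add_le _ _).trans ?_) _)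
        rw [norm_neg]
    _ < ε := by linarith

end

/-- The weight `exp(-α {y})` on the circle; it jumps at `0`. -/
def wgt (α : ℝ) (y : UnitAddCircle) : ℝ := Real.exp (-(α * (AddCircle.equivIco 1 0 y : ℝ)))

/-- Tent of width `ε` around `0`. -/
def tent (ε : ℝ) (y : UnitAddCircle) : ℝ := max 0 (1 - ‖y‖ / ε)

lemma equivIco_bd (y : UnitAddCircle) : 0 ≤ (AddCircle.equivIco 1 0 y : ℝ) ∧ (AddCircle.equivIco 1 0 y : ℝ) < 1 := by
  have := (AddCircle.equivIco (1 : ℝ) 0 y).2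
  simpa using this

lemma wgt_le (α : ℝ) (y : UnitAddCircle) : wgt α y ≤ Real.exp |α| := by
  unfold wgt
  rw [Real.exp_le_exp]
  obtain ⟨a, b⟩ := equivIco_bd y
  have h1 := neg_abs_le α
  have h2 := abs_nonneg α
  nlinarith

lemma le_wgt (α : ℝ) (y : UnitAddCircle) : Real.exp (-|α|) ≤ wgt α y := by
  unfold wgt
  rw [Real.exp_le_exp]
  obtain ⟨a, b⟩ := equivIco_bd y
  have h1 := le_abs_self α
  have h2 := abs_nonneg α
  nlinarith

lemma wgt_pos (α : ℝ) (y : UnitAddCircle) : 0 < wgt α y := Real.exp_pos _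

lemma continuous_tent (ε : ℝ) : Continuous (tent ε) := by unfold tent; fun_prop

lemma tent_nonneg (ε : ℝ) (y : UnitAddCircle) : 0 ≤ tent ε y := le_max_left _ _

lemma tent_le_one {ε : ℝ} (hε : 0 < ε) (y : UnitAddCircle) : tent ε y ≤ 1 := by
  unfold tent
  refine max_le zero_le_one ?_
  have : 0 ≤ ‖y‖ / ε := by positivity
  linarith

lemma continuous_reg (α : ℝ) {ε : ℝ} (hε : 0 < ε) :
    Continuous (fun y => wgt α y * (1 - tent ε y)) := by
  rw [continuous_iff_continuousAt]
  intro y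
  by_cases hy : y = ((0 : ℝ) : UnitAddCircle)
  · subst hy
    have h0 : tent ε ((0 : ℝ) : UnitAddCircle) = 1 := by simp [tent]
    have hlim : Tendsto (fun y => Real.exp |α| * (1 - tent ε y)) (𝓝 ((0 : ℝ) : UnitAddCircle)) (𝓝 0) := by
      have hcont : Continuous (fun y : UnitAddCircle => Real.exp |α| * (1 - tent ε y)) := by
        have := continuous_tent ε
        fun_prop
      have := hcont.tendsto ((0 : ℝ) : UnitAddCircle)
      simpa only [h0, sub_self, mul_zero] using this
    show Tendsto _ _ (𝓝 (wgt α _ * (1 - tent ε ((0 : ℝ) : UnitAddCircle))))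
    rw [h0, sub_self, mul_zero]
    refine squeeze_zero (fun y => mul_nonneg (wgt_pos α y).le (sub_nonneg.2 (tent_le_one hε y)))
      (fun y => mul_le_mul_of_nonneg_right (wgt_le α y) (sub_nonneg.2 (tent_le_one hε y))) hlim
  · have h1 := AddCircle.continuousAt_equivIco (1 : ℝ) (0 : ℝ) hy
    have h2 : ContinuousAt (wgt α) y := by
      unfold wgt
      exact (((continuousAt_subtype_val.comp h1).const_mul α).neg).rexp
    exact h2.mul (continuousAt_const.sub (continuous_tent ε).continuousAt)

lemma integral_tent {ε : ℝ} (hε : 0 < ε) :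
    ∫ y : UnitAddCircle, tent ε y ∂AddCircle.haarAddCircle ≤ 2 * ε := by
  rw [AddCircle.integral_haarAddCircle, inv_one, one_smul]
  have hle : ∀ y : UnitAddCircle, tent ε y ≤ (Metric.closedBall (0 : UnitAddCircle) ε).indicator (fun _ => (1 : ℝ)) y := by
    intro y
    by_cases hy : y ∈ Metric.closedBall (0 : UnitAddCircle) ε
    · rw [Set.indicator_of_mem hy]; exact tent_le_one hε y
    · rw [Set.indicator_of_notMem hy]
      rw [mem_closedBall_zero_iff, not_le] at hy
      unfold tent
      refine max_le le_rfl ?_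
      have : 1 < ‖y‖ / ε := by rwa [one_lt_div hε]
      linarith
  have hm : MeasurableSet (Metric.closedBall (0 : UnitAddCircle) ε) := Metric.isClosed_closedBall.measurableSet
  calc _ ≤ ∫ y : UnitAddCircle, (Metric.closedBall (0 : UnitAddCircle) ε).indicator (fun _ => (1 : ℝ)) y := by
        refine integral_mono ?_ ?_ hle
        · exact (continuous_tent ε).integrable_of_hasCompactSupport (HasCompactSupport.of_compactSpace _)
        · exact (integrable_const _).indicator hm
    _ ≤ 2 * ε := by
        rw [integral_indicator hm]
        simp only [integral_const, smul_eq_mul, mul_one, measureReal_restrict_apply_univ]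
        rw [measureReal_def, AddCircle.volume_closedBall]
        refine ENNReal.toReal_le_of_le_ofReal (by positivity) (ENNReal.ofReal_le_ofReal (min_le_right _ _))

section
variable {α h u : ℝ} (hP : Pkg α h u) (hGP : GP α h u)
include hP hGP

/-- Asymptotic decorrelation for the discontinuous weight `wgt`, which agrees with a continuous
function outside a small neighbourhood of `0`. -/
lemma joint_wgt (t : ℝ) :
    Tendsto (fun n : ℕ => Ex α h (fun x : Config n => wgt α (tcirc x) • Fc α u 0 t x)
      - (Ex α h (fun x : Config n => wgt α (tcirc x)) : ℝ) •
        Complex.exp (((-(bet α u * t ^ 2 / 2) : ℝ)) : ℂ)) atTop (𝓝 0) := by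
  set c := Complex.exp (((-(bet α u * t ^ 2 / 2) : ℝ)) : ℂ) with hc
  have hc1 : ‖c‖ ≤ 1 := by
    have hk : 0 < 1 - 2 * α * u ^ 2 * (1 - u) := by linarith [hP.kap]
    have hβ : 0 ≤ bet α u := by
      have := hP.u0; have := hP.u1
      unfold bet; exact div_nonneg (by nlinarith) (by linarith)
    rw [hc, Complex.norm_exp, Complex.ofReal_re, Real.exp_le_one_iff]
    have : 0 ≤ bet α u * t ^ 2 / 2 := by positivity
    linarith
  have hF0 : ∀ (n : ℕ) (x : Config n), Fc α u 0 0 x = 1 := by intro n x; simp [Fc]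
  have hreal : ∀ g : UnitAddCircle → ℝ, Continuous g →
      Tendsto (fun n : ℕ => Ex α h (fun x : Config n => g (tcirc x))) atTop
        (𝓝 (∫ y : UnitAddCircle, g y ∂AddCircle.haarAddCircle)) := by
    intro g hg
    have := joint_cont hP hGP ⟨fun y => (g y : ℂ), by fun_prop⟩ 0
    simp only [ContinuousMap.coe_mk, hF0, mul_one] at this
    have h2 := (Complex.continuous_re.tendsto _).comp this
    simp only [integral_complex_ofReal] at h2
    simpa [Ex, Function.comp_def] using h2
  rw [Metric.tendsto_nhds]
  intro η hη
  set K := Real.exp |α| with hK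
  have hK0 : 0 < K := Real.exp_pos _
  set ε := η / (16 * K) with hεd
  have hε : 0 < ε := by positivity
  set ρ : UnitAddCircle → ℝ := fun y => wgt α y * (1 - tent ε y) with hρ
  have hρc : Continuous ρ := continuous_reg α hε
  have l1 := hreal ρ hρc
  have l2 := joint_cont hP hGP ⟨fun y => (ρ y : ℂ), by fun_prop⟩ t
  simp only [ContinuousMap.coe_mk, integral_complex_ofReal] at l2
  have l3 := hreal (tent ε) (continuous_tent ε)
  have l4 := l2.sub ((Complex.continuous_ofReal.tendsto _).comp l1 |>.mul_const c)
  rw [sub_self] at l4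
  have l5 : ∀ᶠ n : ℕ in atTop, Ex α h (fun x : Config n => tent ε (tcirc x)) < 3 * ε :=
    l3.eventually_lt_const (by have := integral_tent hε; linarith)
  filter_upwards [Metric.tendsto_nhds.1 l4 (η / 2) (by positivity), l5] with n h1 h2
  rw [dist_zero_right] at h1 ⊢
  simp only [Function.comp_apply] at h1
  have d1 : ‖Ex α h (fun x : Config n => wgt α (tcirc x) • Fc α u 0 t x)
      - Ex α h (fun x : Config n => (ρ (tcirc x) : ℂ) * Fc α u 0 t x)‖
      ≤ K * Ex α h (fun x : Config n => tent ε (tcirc x)) := by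
    rw [← Ex_sub, ← Ex_mul]
    refine (norm_Ex_le α h _).trans (Ex_mono α h fun x => ?_)
    rw [Complex.real_smul, ← sub_mul, norm_mul, norm_Fc, mul_one, ← Complex.ofReal_sub, Complex.norm_real]
    have : wgt α (tcirc x) - ρ (tcirc x) = wgt α (tcirc x) * tent ε (tcirc x) := by simp only [hρ]; ring
    rw [this, Real.norm_of_nonneg (mul_nonneg (wgt_pos _ _).le (tent_nonneg _ _))]
    exact mul_le_mul_of_nonneg_right (wgt_le _ _) (tent_nonneg _ _)
  have d2 : |Ex α h (fun x : Config n => wgt α (tcirc x)) - Ex α h (fun x : Config n => ρ (tcirc x))|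
      ≤ K * Ex α h (fun x : Config n => tent ε (tcirc x)) := by
    rw [← Ex_sub, ← Ex_mul]
    refine (abs_Ex_le α h _).trans (Ex_mono α h fun x => ?_)
    have : wgt α (tcirc x) - ρ (tcirc x) = wgt α (tcirc x) * tent ε (tcirc x) := by simp only [hρ]; ring
    rw [this, abs_of_nonneg (mul_nonneg (wgt_pos _ _).le (tent_nonneg _ _))]
    exact mul_le_mul_of_nonneg_right (wgt_le _ _) (tent_nonneg _ _)
  have d3 : K * Ex α h (fun x : Config n => tent ε (tcirc x)) ≤ 3 * η / 16 := by
    have : K * ε = η / 16 := by rw [hεd]; field_simp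
    nlinarith
  set A := Ex α h (fun x : Config n => wgt α (tcirc x) • Fc α u 0 t x)
  set B := Ex α h (fun x : Config n => (ρ (tcirc x) : ℂ) * Fc α u 0 t x)
  set a := Ex α h (fun x : Config n => wgt α (tcirc x))
  set b := Ex α h (fun x : Config n => ρ (tcirc x))
  have d4 : ‖((a - b : ℝ) : ℂ) * c‖ ≤ 3 * η / 16 := by
    rw [norm_mul, Complex.norm_real, Real.norm_eq_abs]
    calc |a - b| * ‖c‖ ≤ |a - b| * 1 := mul_le_mul_of_nonneg_left hc1 (abs_nonneg _)
      _ ≤ _ := by linarith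
  calc ‖A - a • c‖ = ‖(A - B) + (B - b * c) - ((a - b : ℝ) : ℂ) * c‖ := by
        congr 1; rw [Complex.real_smul]; push_cast; ring
    _ ≤ ‖A - B‖ + ‖B - b * c‖ + ‖((a - b : ℝ) : ℂ) * c‖ :=
        (norm_sub_le _ _).trans (add_le_add_left (norm_add_le _ _) _)
    _ < η := by linarith

end

end TriCLT

/-! ### The modified measure and the triangle count -/

namespace TriCLT
variable {n : ℕ}

/-- The Gibbs weight of `hamHat` is that of `ham` times `exp(-α {T/n})`. -/
lemma exp_hamHat (α h : ℝ) (x : Config n) :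
    Real.exp (hamHat n α h x) = Real.exp (ham n α h x) * wgt α (tcirc x) := by
  have h1 : ((AddCircle.equivIco 1 0 (tcirc x) : Set.Ico (0 : ℝ) (0 + 1)) : ℝ)
      = Int.fract ((triangleCount n x : ℝ) / n) := by
    have := AddCircle.coe_equivIco_mk_apply (1 : ℝ) ((triangleCount n x : ℝ) / n)
    rw [div_one, mul_one] at this
    exact this
  have h2 : floorTn n x = (triangleCount n x : ℝ) / n - Int.fract ((triangleCount n x : ℝ) / n) := by
    unfold floorTn
    rw [Int.self_sub_fract, ← Nat.floor_div_eq_div (K := ℝ), natCast_floor_eq_intCast_floor (by positivity)]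
  unfold wgt
  rw [← Real.exp_add, h1]
  congr 1
  unfold hamHat ham
  rw [h2]; ring

/-- The expectation `Ê` for vector-valued observables, written as a reweighting of `Ex`. -/
def Eh (α h : ℝ) {V : Type*} [AddCommGroup V] [Module ℝ V] (F : Config n → V) : V :=
  (Ex α h (fun x : Config n => wgt α (tcirc x)))⁻¹ • Ex α h (fun x => wgt α (tcirc x) • F x)

lemma le_Ex_wgt (α h : ℝ) : Real.exp (-|α|) ≤ Ex α h (fun x : Config n => wgt α (tcirc x)) := by
  have := Ex_mono α h (F := fun _ : Config n => Real.exp (-|α|)) (fun x => le_wgt α (tcirc x))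
  rwa [Ex_const] at this

lemma Ex_wgt_pos (α h : ℝ) : 0 < Ex α h (fun x : Config n => wgt α (tcirc x)) :=
  (Real.exp_pos _).trans_le (le_Ex_wgt α h)

lemma Zhat_eq (α h : ℝ) : Zhat n α h = Zet n α h * Ex α h (fun x : Config n => wgt α (tcirc x)) := by
  unfold Zhat Ex pr
  rw [Finset.mul_sum]
  refine Finset.sum_congr rfl fun x _ => ?_
  have := (Zet_pos (n := n) α h).ne'
  rw [exp_hamHat, smul_eq_mul]
  field_simp

lemma expHat_eq (α h : ℝ) (F : Config n → ℝ) : expHat n α h F = Eh α h F := by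
  have h1 := (Zet_pos (n := n) α h).ne'
  have h2 := (Ex_wgt_pos (n := n) α h).ne'
  have h3 : ∑ x : Config n, F x * Real.exp (hamHat n α h x)
      = Zet n α h * Ex α h (fun x : Config n => wgt α (tcirc x) • F x) := by
    unfold Ex pr
    rw [Finset.mul_sum]
    refine Finset.sum_congr rfl fun x _ => ?_
    simp only [exp_hamHat, smul_eq_mul]
    field_simp
  unfold expHat Eh
  rw [h3, Zhat_eq, smul_eq_mul]
  field_simp

section
variable (α h : ℝ) {V : Type*} [NormedAddCommGroup V] [NormedSpace ℝ V]

lemma Eh_add (F G : Config n → V) : Eh α h (fun x => F x + G x) = Eh α h F + Eh α h G := by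
  unfold Eh; simp only [smul_add]; rw [Ex_add, smul_add]

lemma Eh_sub (F G : Config n → V) : Eh α h (fun x => F x - G x) = Eh α h F - Eh α h G := by
  unfold Eh; simp only [smul_sub]; rw [Ex_sub, smul_sub]

lemma Eh_smul (c : ℝ) (F : Config n → V) : Eh α h (fun x => c • F x) = c • Eh α h F := by
  unfold Eh; simp only [smul_comm _ c]; rw [Ex_smul, smul_comm]

lemma Eh_const (v : V) : Eh α h (fun _ : Config n => v) = v := by
  unfold Eh
  have : Ex α h (fun x : Config n => wgt α (tcirc x) • v)
      = Ex α h (fun x : Config n => wgt α (tcirc x)) • v := by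
    simp [Ex, Finset.sum_smul, smul_smul]
  rw [this, smul_smul, inv_mul_cancel₀ (Ex_wgt_pos α h).ne', one_smul]

lemma Eh_mono {F G : Config n → ℝ} (hFG : ∀ x, F x ≤ G x) : Eh α h F ≤ Eh α h G := by
  unfold Eh
  refine mul_le_mul_of_nonneg_left (Ex_mono α h fun x => ?_) (inv_nonneg.2 (Ex_wgt_pos α h).le)
  exact mul_le_mul_of_nonneg_left (hFG x) (wgt_pos _ _).le

lemma Eh_nonneg {F : Config n → ℝ} (hF : ∀ x, 0 ≤ F x) : 0 ≤ Eh α h F := by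
  have := Eh_mono α h hF
  rwa [Eh_const] at this

lemma norm_Eh_le (F : Config n → V) : ‖Eh α h F‖ ≤ Eh α h (fun x => ‖F x‖) := by
  unfold Eh
  rw [norm_smul, Real.norm_of_nonneg (inv_nonneg.2 (Ex_wgt_pos α h).le), smul_eq_mul]
  refine mul_le_mul_of_nonneg_left ((norm_Ex_le α h _).trans (Ex_mono α h fun x => ?_))
    (inv_nonneg.2 (Ex_wgt_pos α h).le)
  rw [norm_smul, Real.norm_of_nonneg (wgt_pos _ _).le, smul_eq_mul]

lemma Eh_le_Ex {F : Config n → ℝ} (hF : ∀ x, 0 ≤ F x) :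
    Eh α h F ≤ Real.exp |α| ^ 2 * Ex α h F := by
  unfold Eh
  have h1 : (Ex α h (fun x : Config n => wgt α (tcirc x)))⁻¹ ≤ Real.exp |α| := by
    rw [← inv_inv (Real.exp |α|), ← Real.exp_neg]
    exact inv_anti₀ (Real.exp_pos _) (le_Ex_wgt α h)
  have h2 : Ex α h (fun x => wgt α (tcirc x) • F x) ≤ Real.exp |α| * Ex α h F := by
    rw [← Ex_mul]
    exact Ex_mono α h fun x => mul_le_mul_of_nonneg_right (wgt_le _ _) (hF x)
  rw [smul_eq_mul, sq, mul_assoc]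
  exact mul_le_mul h1 h2 (Ex_nonneg α h fun x => mul_nonneg (wgt_pos _ _).le (hF x)) (Real.exp_pos _).le

end

lemma L1o.hat {α h : ℝ} {X : ∀ n : ℕ, Config n → ℝ} (hX : L1o α h X) :
    Tendsto (fun n => Eh α h (fun x : Config n => |X n x|)) atTop (𝓝 0) := by
  have := Tendsto.const_mul (Real.exp |α| ^ 2) hX
  rw [mul_zero] at this
  exact squeeze_zero (fun n => Eh_nonneg α h fun x => abs_nonneg _)
    (fun n => Eh_le_Ex α h fun x => abs_nonneg _) this

lemma abs_sub_sin_le (s : ℝ) : |s - Real.sin s| ≤ 4 * (s ^ 2 / (1 + |s|)) := by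
  have h0 := abs_nonneg s
  rw [← mul_div_assoc, le_div_iff₀ (by positivity), ← sq_abs s]
  by_cases h1 : |s| ≤ 1
  · have h2 := Real.sin_bound h1
    have h3 : |s - Real.sin s| ≤ |s| ^ 3 / 6 + |s| ^ 5 / 100 := by
      have : s - Real.sin s = s ^ 3 / 6 - (Real.sin s - (s - s ^ 3 / 6)) := by ring
      rw [this]
      refine (abs_sub _ _).trans ?_
      rw [abs_div, abs_pow, abs_of_pos (by norm_num : (0 : ℝ) < 6)]
      linarith
    have h4 : |s| ^ 3 ≤ |s| ^ 2 := pow_le_pow_of_le_one h0 h1 (by norm_num)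
    have h5 : |s| ^ 5 ≤ |s| ^ 2 := pow_le_pow_of_le_one h0 h1 (by norm_num)
    have h6 : |s - Real.sin s| ≤ |s| ^ 2 := by nlinarith [sq_nonneg |s|]
    nlinarith [abs_nonneg (s - Real.sin s), sq_nonneg |s|]
  · push Not at h1
    have h2 : |s - Real.sin s| ≤ 2 * |s| := by
      refine (abs_sub _ _).trans ?_
      have := Real.abs_sin_le_one s
      linarith
    nlinarith [abs_nonneg (s - Real.sin s)]

lemma abs_sub_sin_le' {t : ℝ} (ht : 0 < t) (z : ℝ) :
    |z - t⁻¹ * Real.sin (t * z)| ≤ 4 * (|z| ^ 2 / (t⁻¹ + |z|)) := by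
  have h := abs_sub_sin_le (t * z)
  have h1 : z - t⁻¹ * Real.sin (t * z) = t⁻¹ * (t * z - Real.sin (t * z)) := by field_simp
  rw [h1, abs_mul, abs_of_pos (inv_pos.2 ht)]
  calc _ ≤ t⁻¹ * (4 * ((t * z) ^ 2 / (1 + |t * z|))) := by gcongr
    _ = _ := by
      rw [abs_mul, abs_of_pos ht, sq_abs]
      have := abs_nonneg z
      field_simp

lemma bet_nonneg {α h u : ℝ} (hP : Pkg α h u) : 0 ≤ bet α u := by
  have hk : 0 < 1 - 2 * α * u ^ 2 * (1 - u) := by linarith [hP.kap]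
  have := hP.u0; have := hP.u1
  unfold bet; exact div_nonneg (by nlinarith) (by linarith)

section
variable {α h u : ℝ} (hP : Pkg α h u) (hGP : GP α h u)
include hP hGP

/-- Under the modified measure the edge fluctuation `Z` keeps its Gaussian limit. -/
lemma clt_hat (t : ℝ) :
    Tendsto (fun n : ℕ => Eh α h (fun x : Config n => Fc α u 0 t x)) atTop
      (𝓝 (Complex.exp (((-(bet α u * t ^ 2 / 2) : ℝ)) : ℂ))) := by
  set c := Complex.exp (((-(bet α u * t ^ 2 / 2) : ℝ)) : ℂ) with hc
  have h1 := joint_wgt hP hGP t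
  rw [tendsto_zero_iff_norm_tendsto_zero] at h1
  rw [tendsto_iff_norm_sub_tendsto_zero]
  have h2 := h1.const_mul (Real.exp |α|)
  rw [mul_zero] at h2
  refine squeeze_zero (fun n => norm_nonneg _) (fun n => ?_) h2
  have hp := Ex_wgt_pos (n := n) α h
  have e : Eh α h (fun x : Config n => Fc α u 0 t x) - c
      = (Ex α h (fun x : Config n => wgt α (tcirc x)))⁻¹ •
        (Ex α h (fun x : Config n => wgt α (tcirc x) • Fc α u 0 t x)
      - (Ex α h (fun x : Config n => wgt α (tcirc x)) : ℝ) • c) := by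
    unfold Eh
    rw [smul_sub, smul_smul, inv_mul_cancel₀ hp.ne', one_smul]
  rw [e, norm_smul, Real.norm_of_nonneg (inv_nonneg.2 hp.le)]
  refine mul_le_mul_of_nonneg_right ?_ (norm_nonneg _)
  rw [← inv_inv (Real.exp |α|), ← Real.exp_neg]
  exact inv_anti₀ (Real.exp_pos _) (le_Ex_wgt α h)

/-- Means of bounded odd functions vanish in the limit, by symmetry of the Gaussian. -/
lemma Eh_sin (t : ℝ) :
    Tendsto (fun n : ℕ => Eh α h (fun x : Config n => Real.sin (t * Zn α u x))) atTop (𝓝 0) := by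
  have h1 := (Complex.continuous_im.tendsto _).comp (clt_hat hP hGP t)
  rw [Complex.exp_ofReal_im] at h1
  refine h1.congr fun n => ?_
  simp only [Function.comp_apply, Eh, Ex, Complex.smul_im, Complex.im_sum, smul_eq_mul]
  congr 1
  refine Finset.sum_congr rfl fun x _ => ?_
  unfold Fc
  rw [Complex.exp_ofReal_mul_I_im, zero_mul, zero_add]

/-- The mean of `Z` under the modified measure vanishes asymptotically: the Gaussian limit is
centred, and `zn_ui` supplies uniform integrability. -/
lemma Eh_Zn : Tendsto (fun n : ℕ => Eh α h (fun x : Config n => Zn α u x)) atTop (𝓝 0) := by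
  obtain ⟨C, hC, e, he, hui⟩ := zn_ui hP hGP
  set K := Real.exp |α| ^ 2 with hK
  have hK0 : 0 < K := by positivity
  rw [Metric.tendsto_nhds]
  intro η hη
  set t := η / (16 * K * (C + 1)) with ht
  have ht0 : 0 < t := by positivity
  have hKt : 4 * K * (C * t) ≤ η / 4 := by
    have : t * (16 * K * (C + 1)) = η := by rw [ht]; field_simp
    nlinarith [mul_pos ht0 hK0]
  have h1 := (Eh_sin hP hGP t).const_mul t⁻¹
  rw [mul_zero] at h1
  have h2 := he.const_mul (4 * K)
  rw [mul_zero] at h2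
  filter_upwards [Metric.tendsto_nhds.1 h1 (η / 4) (by positivity),
    Metric.tendsto_nhds.1 h2 (η / 4) (by positivity), eventually_ge_atTop 1] with n g1 g2 hn
  rw [Real.dist_eq, sub_zero] at g1 g2 ⊢
  have g3 : |Eh α h (fun x : Config n => Zn α u x)
      - t⁻¹ * Eh α h (fun x : Config n => Real.sin (t * Zn α u x))| ≤ 4 * K * (C * t + e n) := by
    have e1 : Eh α h (fun x : Config n => Zn α u x)
        - t⁻¹ * Eh α h (fun x : Config n => Real.sin (t * Zn α u x))
        = Eh α h (fun x : Config n => Zn α u x - t⁻¹ * Real.sin (t * Zn α u x)) := by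
      have := Eh_smul α h t⁻¹ (fun x : Config n => Real.sin (t * Zn α u x))
      simp only [smul_eq_mul] at this
      rw [Eh_sub, this]
    rw [e1]
    have g0 := norm_Eh_le α h (fun x : Config n => Zn α u x - t⁻¹ * Real.sin (t * Zn α u x))
    simp only [Real.norm_eq_abs] at g0
    refine g0.trans ((Eh_le_Ex α h fun x => abs_nonneg _).trans ?_)
    have g4 : Ex α h (fun x : Config n => |Zn α u x - t⁻¹ * Real.sin (t * Zn α u x)|)
        ≤ 4 * (C * t + e n) := by
      have := hui n hn t⁻¹ (inv_pos.2 ht0)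
      rw [div_inv_eq_mul] at this
      refine le_trans ?_ (mul_le_mul_of_nonneg_left this (by norm_num : (0 : ℝ) ≤ 4))
      rw [← Ex_mul]
      exact Ex_mono α h fun x => abs_sub_sin_le' ht0 _
    have g7 := mul_le_mul_of_nonneg_left g4 hK0.le
    linarith
  have g5 := abs_sub_abs_le_abs_sub (Eh α h (fun x : Config n => Zn α u x))
    (t⁻¹ * Eh α h (fun x : Config n => Real.sin (t * Zn α u x)))
  have g6 := le_abs_self (4 * K * e n)
  have g8 : 4 * K * (C * t + e n) = 4 * K * (C * t) + 4 * K * e n := by ring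
  linarith

/-- The rescaled triangle count is an affine function of the edge fluctuation, up to an error
negligible in mean. -/
lemma tri_lin : ∃ a : ℕ → ℝ, L1o α h (fun n x =>
    (triangleCount n x : ℝ) / n / n - u ^ 2 * Zn α u x - a n) := by
  refine ⟨fun n => (u ^ 3 * (n * (n - 1) * (n - 2)) / (n : ℝ) ^ 2 + 3 * u ^ 2 * gam α u
    + 3 * u * d0 α u - 3 * u * (u * (1 - u)) + α * (u * (1 - u)) * (u * (1 - u)) ^ 2) / 6, ?_⟩
  have a1 := (sm_tot hP).l1o hP hGP
  have a2 := l1o_dd hP hGP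
  have a3 := (sm_ff hP).l1o hP hGP
  have a4 := l1o_tr3 hP hGP
  refine ((((a2.sub a3).const_mul (3 * u)).add a4).sub (a1.const_mul (6 * u ^ 2))
    |>.const_mul (1 / 6)).congr fun n hn x => ?_
  have hn' : (n : ℝ) ≠ 0 := by positivity
  have hT : (triangleCount n x : ℝ) = (u ^ 3 * (n * (n - 1) * (n - 2))
      + 3 * u ^ 2 * (n - 2) * totS (Mx u x) + 3 * u * (dd (Mx u x) - ff (Mx u x))
      + tr3 (Mx u x)) / 6 := by rw [← triangle_expand hP.u0 hP.u1 x]; ring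
  rw [hT]
  unfold Zn
  field_simp
  ring

/-- The centring of `Wre` by its mean is harmless because the mean of `Zn` tends to `0`. -/
lemma Wre_lin : Tendsto (fun n : ℕ => Eh α h (fun x : Config n =>
    |Wre n α h x - √6 * u ^ 2 * Zn α u x|)) atTop (𝓝 0) := by
  obtain ⟨a, ha⟩ := tri_lin hP hGP
  have l1 := ha.hat
  have l2 := (Eh_Zn hP hGP).abs
  rw [abs_zero] at l2
  have l3 := ((l2.const_mul (u ^ 2)).add (l1.const_mul 2)).const_mul √6
  rw [mul_zero, mul_zero, add_zero, mul_zero] at l3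
  refine squeeze_zero (fun n => Eh_nonneg α h fun x => abs_nonneg _) (fun n => ?_) l3
  set r : Config n → ℝ := fun x => (triangleCount n x : ℝ) / n / n - u ^ 2 * Zn α u x - a n with hr
  have hm : expHat n α h (fun y => (triangleCount n y : ℝ) / n) / n
      = u ^ 2 * Eh α h (fun x : Config n => Zn α u x) + a n + Eh α h r := by
    rw [expHat_eq]
    have e1 : Eh α h r = (n : ℝ)⁻¹ * Eh α h (fun y : Config n => (triangleCount n y : ℝ) / n)
        - u ^ 2 * Eh α h (fun x : Config n => Zn α u x) - a n := by
      rw [hr, Eh_sub, Eh_sub, Eh_const, ← smul_eq_mul, ← smul_eq_mul, ← Eh_smul, ← Eh_smul]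
      simp only [smul_eq_mul, div_eq_inv_mul]
    rw [e1]; ring
  have hW : ∀ x : Config n, Wre n α h x - √6 * u ^ 2 * Zn α u x
      = √6 * (r x - u ^ 2 * Eh α h (fun x : Config n => Zn α u x) - Eh α h r) := by
    intro x
    unfold Wre
    rw [mul_div_assoc, sub_div, hm, hr]
    ring
  have hb : ∀ x : Config n, |Wre n α h x - √6 * u ^ 2 * Zn α u x|
      ≤ √6 * (|r x| + (u ^ 2 * |Eh α h (fun x : Config n => Zn α u x)| + |Eh α h r|)) := by
    intro x
    rw [hW, abs_mul, abs_of_nonneg (Real.sqrt_nonneg 6)]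
    refine mul_le_mul_of_nonneg_left ?_ (Real.sqrt_nonneg 6)
    have h1 := abs_sub (r x - u ^ 2 * Eh α h (fun x : Config n => Zn α u x)) (Eh α h r)
    have h2 := abs_sub (r x) (u ^ 2 * Eh α h (fun x : Config n => Zn α u x))
    rw [abs_mul, abs_of_nonneg (sq_nonneg u)] at h2
    linarith
  refine (Eh_mono α h hb).trans ?_
  simp only [← smul_eq_mul (√6)]
  rw [Eh_smul, Eh_add, Eh_const]
  refine mul_le_mul_of_nonneg_left ?_ (Real.sqrt_nonneg 6)
  have := norm_Eh_le α h r
  simp only [Real.norm_eq_abs] at this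
  linarith

lemma charfun_W (s : ℝ) :
    Tendsto (fun n : ℕ => Eh α h (fun x : Config n => Complex.exp ((s * Wre n α h x : ℝ) * Complex.I)))
      atTop (𝓝 (Complex.exp ((-((6 * u ^ 4 * bet α u) * s ^ 2 / 2) : ℝ) : ℂ))) := by
  have h1 := clt_hat hP hGP (s * (√6 * u ^ 2))
  have e1 : bet α u * (s * (√6 * u ^ 2)) ^ 2 / 2 = (6 * u ^ 4 * bet α u) * s ^ 2 / 2 := by
    have : (√6 : ℝ) ^ 2 = 6 := Real.sq_sqrt (by norm_num)
    linear_combination (bet α u * s ^ 2 * u ^ 4 / 2) * this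
  rw [e1] at h1
  have h2 := (Wre_lin hP hGP).const_mul |s|
  rw [mul_zero] at h2
  refine tendsto_of_tendsto_of_dist h1 (squeeze_zero (fun n => dist_nonneg) (fun n => ?_) h2)
  rw [dist_comm, dist_eq_norm, ← Eh_sub, ← smul_eq_mul |s|, ← Eh_smul]
  refine (norm_Eh_le α h _).trans (Eh_mono α h fun x => ?_)
  have e2 : Fc α u 0 (s * (√6 * u ^ 2)) x
      = Complex.exp (Complex.I * ((s * (√6 * u ^ 2 * Zn α u x) : ℝ) : ℂ)) := by
    unfold Fc; congr 1; push_cast; ring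
  have e3 : Complex.exp ((s * Wre n α h x : ℝ) * Complex.I) - Fc α u 0 (s * (√6 * u ^ 2)) x
      = Complex.exp (Complex.I * ((s * (√6 * u ^ 2 * Zn α u x) : ℝ) : ℂ)) *
        (Complex.exp (Complex.I * ((s * (Wre n α h x - √6 * u ^ 2 * Zn α u x) : ℝ) : ℂ)) - 1) := by
    rw [e2, mul_sub, ← Complex.exp_add, mul_one]
    congr 2; push_cast; ring
  rw [e3, norm_mul, mul_comm Complex.I (((s * (√6 * u ^ 2 * Zn α u x) : ℝ)) : ℂ),
    Complex.norm_exp_ofReal_mul_I, one_mul, smul_eq_mul, ← abs_mul]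
  exact Real.norm_exp_I_mul_ofReal_sub_one_le

end

/-- The law of the normalized triangle count under the modified measure. -/
def lawW (n : ℕ) (α h : ℝ) : Measure ℝ :=
  ∑ x : Config n, ENNReal.ofReal (Real.exp (hamHat n α h x) / Zhat n α h) •
    Measure.dirac (Wre n α h x)

lemma Zhat_pos (n : ℕ) (α h : ℝ) : 0 < Zhat n α h :=
  Finset.sum_pos (fun _ _ => Real.exp_pos _) Finset.univ_nonempty

instance lawW_prob (n : ℕ) (α h : ℝ) : IsProbabilityMeasure (lawW n α h) := by
  refine ⟨?_⟩
  have hz := Zhat_pos n α h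
  unfold lawW
  rw [Measure.finsetSum_apply]
  simp only [Measure.smul_apply, measure_univ, smul_eq_mul, mul_one]
  rw [← ENNReal.ofReal_sum_of_nonneg (fun x _ => div_nonneg (Real.exp_pos _).le hz.le), ← Finset.sum_div]
  change ENNReal.ofReal (Zhat n α h / Zhat n α h) = 1
  rw [div_self hz.ne', ENNReal.ofReal_one]

lemma integral_lawW {V : Type*} [NormedAddCommGroup V] [NormedSpace ℝ V] [CompleteSpace V]
    (n : ℕ) (α h : ℝ) (f : ℝ → V) :
    ∫ y, f y ∂(lawW n α h) = Eh α h (fun x : Config n => f (Wre n α h x)) := by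
  unfold lawW
  rw [integral_finsetSum_measure]
  · unfold Eh
    rw [show Ex α h (fun x : Config n => wgt α (tcirc x) • f (Wre n α h x))
      = ∑ x : Config n, pr α h x • wgt α (tcirc x) • f (Wre n α h x) from rfl, Finset.smul_sum]
    refine Finset.sum_congr rfl fun x _ => ?_
    rw [integral_smul_measure, integral_dirac,
      ENNReal.toReal_ofReal (div_nonneg (Real.exp_pos _).le (Zhat_pos n α h).le), smul_smul, smul_smul]
    congr 1
    rw [Zhat_eq, exp_hamHat]
    have h1 := (Zet_pos (n := n) α h).ne'
    have h2 := (Ex_wgt_pos (n := n) α h).ne'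
    unfold pr
    field_simp
  · intro x _
    exact (integrable_dirac (by simp)).smul_measure ENNReal.ofReal_ne_top

end TriCLT

theorem triangle_CLT
    (α h : ℝ) (hα : α > -2)
    (U : Set (ℝ × ℝ)) (hUopen : IsOpen U) (hmemU : (α, h) ∈ U)
    (ustar : ℝ × ℝ → ℝ) (hC1 : ContDiffOn ℝ 1 ustar U)
    (hrange : ∀ p ∈ U, ustar p ∈ Set.Ioo (0 : ℝ) 1)
    (hmax : ∀ p ∈ U, ∀ u ∈ Set.Icc (0 : ℝ) 1, phiET p.1 p.2 u ≤ phiET p.1 p.2 (ustar p))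
    (huniq : ∀ p ∈ U, ∀ u ∈ Set.Icc (0 : ℝ) 1,
      (∀ w ∈ Set.Icc (0 : ℝ) 1, phiET p.1 p.2 w ≤ phiET p.1 p.2 u) → u = ustar p)
    (hanal : AnalyticOnNhd ℝ (fun p : ℝ × ℝ => freeEnergy p.1 p.2) U) :
    ∀ f : BoundedContinuousFunction ℝ ℝ,
      Tendsto (fun n : ℕ => expHat n α h (fun x => f (Wre n α h x))) atTop
        (𝓝 (∫ y, f y ∂ gaussianReal 0
          (Real.toNNReal (3 * ustar (α, h) ^ 2 * deriv (fun a => ustar (a, h)) α)))) := by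
  obtain ⟨⟨c, H⟩, hv⟩ := TriCLT.vpkg_of_hyp α h hα U hUopen hmemU ustar hC1 hrange hmax huniq
  have hP := H.pk
  have hGP := TriCLT.gp_of_vpkg H
  rw [hv]
  set u := ustar (α, h)
  have hv0 : 0 ≤ 6 * u ^ 4 * TriCLT.bet α u := by
    have := TriCLT.bet_nonneg hP
    positivity
  let μs : ℕ → ProbabilityMeasure ℝ := fun n => ⟨TriCLT.lawW n α h, inferInstance⟩
  let ν : ProbabilityMeasure ℝ :=
    ⟨gaussianReal 0 (Real.toNNReal (6 * u ^ 4 * TriCLT.bet α u)), inferInstance⟩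
  have hμ : ∀ n, (μs n : Measure ℝ) = TriCLT.lawW n α h := fun n => rfl
  have hν : (ν : Measure ℝ) = gaussianReal 0 (Real.toNNReal (6 * u ^ 4 * TriCLT.bet α u)) := rfl
  have hlim : Tendsto μs atTop (𝓝 ν) := by
    refine ProbabilityMeasure.tendsto_of_tendsto_charFun fun s => ?_
    rw [hν, charFun_gaussianReal]
    have h1 := TriCLT.charfun_W hP hGP s
    convert h1 using 1
    · funext n
      rw [hμ, charFun_apply_real, TriCLT.integral_lawW]
      simp only [Complex.ofReal_mul]
    · congr 2
      rw [Real.coe_toNNReal _ hv0]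
      push_cast; ring
  intro f
  have h2 := (ProbabilityMeasure.tendsto_iff_forall_integral_tendsto.1 hlim) f
  simp only [hμ, hν, TriCLT.integral_lawW] at h2
  simpa only [TriCLT.expHat_eq] using h2
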